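/- There exists a constant d_1 > 0 such that for every 0 < δ < 1 there exists n_0 ∈ ℕ such that for every prime number p ≥ n_0 there exist finite index sets I_k ⊆ ℕ^k (k = 1, 2, …), a function a defined on ∪_{k≥1} I_k taking prime values with a((1)) = p, and a function m : ∪_{k≥1} I_k → ℕ satisfying: (A1) I_1 = {(1)} and I_k = {(j, i) : j ∈ I_{k−1}, 1 ≤ i ≤ m(j)} for all k ≥ 2; (A2) for all k ≥ 2 and all j ∈ I_{k−1}: a(j)^3 ≤ a(j,1) < a(j,2) < ⋯ < a(j, m(j)) ≤ (a(j)+1)^3 − 1; (A3) for all k ≥ 2 and all distinct j, j' ∈ I_{k−1}: |a(j) − a(j')| ≥ 2; (A4) for all k ≥ 2 and all j ∈ I_{k−1}: m(j) ≥ d_1 · a(j)^{2−δ}. -/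

import Mathlib

/-!
The tree is built greedily: the children of an index `j` carry all primes in the window
`[a(j)³, (a(j)+1)³)`. Windows of distinct parents are disjoint and distinct odd primes differ by at
least `2`, so everything reduces, with `d₁ = 1`, to `card_primes_ge`: for large `q` there are at
least `q^(2-δ)` primes in `[q³, (q+1)³)`. This is a theorem of Ingham's type, on primes in
intervals around `x` of length about `x^(2/3)`. It is proved as follows.

* Vinogradov's mean value theorem (`VJ_bound`), by Linnik's `p`-adic iteration, bounds the sums
  `∑ n^{it}` (`zeta_sum`), hence `ζ` close to the line `Re s = 1` (`zeta_vinogradov`, `zeta_fixed`).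
* Together with the functional equation on `Re s = 0`, the three lines theorem gives a bound
  `ζ(s) ≪ |t|^(1/4 - c)` for `Re s ≥ 1/2` (`zeta_subconvex`).
* Landau's local factorisation of `ζ` and the 3-4-1 inequality give, for every `C`, a zero-free
  region of width `C log log t / log t` (`zeta_zero_free`, `zeta_region`).
* No zero-density estimate is used. With the mollifier `M(s) = ∑_{n ≤ U} μ(n) n^{-s}`, `U ≍ T`,
  one has `-ζ'/ζ - ζ = (-ζ'/ζ)(1 - ζM)² + H` (`zq_split`), where `H` has no pole off `s = 1`.
  The integral of `H` is moved almost to the critical line, where the subconvexity bound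
  suffices. For the other term the mean square of `1 - ζM` on `Re s = 1 - η` is
  `≪ T^((3-3c)η) (log T)^A`, by convexity (`l2_three_lines`) between the critical line and
  `Re s = 1`. Since `x ≥ T^(3-c)`, the gain `x^(-η)` wins as soon as `η` is a large multiple of
  `log log T / log T`, which the zero-free region permits (`FF_main`, `FF_asymp`).
* This yields `∑ (Λ(n) - 1) w(n) = o(x / T)` for a Gaussian weight of width `x / T` about `x`
  (`sum_asymp`), and hence primes in the window.
-/

namespace VMT
open Finset
open Complex (I)
open Real (log exp rpow_natCast rpow_mul rpow_add rpow_one mul_rpow norm_of_nonneg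
  rpow_le_rpow_of_exponent_le)
open scoped Real

/-! ### Power sums and Vinogradov's mean value -/

/-- Power sums `∑ xᵢ^(j+1)`, `j < k`. -/
def mom (k : ℕ) {ι : Type*} [Fintype ι] (x : ι → ℤ) : Fin k → ℤ :=
  fun j => ∑ i, x i ^ (j.1 + 1)

/-- The number of solutions of the Vinogradov system of degree `k` in `2s` variables from `S`. -/
def VJ (k s : ℕ) (S : Finset ℤ) : ℕ :=
  #{p ∈ Fintype.piFinset (fun _ : Fin s => S) ×ˢ Fintype.piFinset (fun _ : Fin s => S) |
    mom k p.1 = mom k p.2}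

lemma exists_chars (k B : ℕ) : ∃ (Ω : Type) (_ : Fintype Ω) (_ : Nonempty Ω)
    (e : Ω → AddChar (Fin k → ℤ) ℂ), (∀ ω v, ‖e ω v‖ = 1) ∧
    ∀ v : Fin k → ℤ, v ≠ 0 → (∀ j, |v j| ≤ B) → ∑ ω, e ω v = 0 := by
  classical
  have : NeZero (B + 1) := ⟨by omega⟩
  let red : (Fin k → ℤ) →+ (Fin k → ZMod (B + 1)) :=
    { toFun := fun v j => (v j : ZMod (B + 1))
      map_zero' := by ext; simp
      map_add' := by intros; ext; simp }
  refine ⟨AddChar (Fin k → ZMod (B + 1)) ℂ, inferInstance, inferInstance,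
    fun ψ => ψ.compAddMonoidHom red, ?_, ?_⟩
  · intro ψ v
    simp [AddChar.norm_apply]
  · intro v hv hB
    simp only [AddChar.compAddMonoidHom_apply]
    rw [AddChar.sum_apply_eq_ite, if_neg]
    intro h
    apply hv
    ext j
    have h1 : ((v j : ℤ) : ZMod (B + 1)) = 0 := congrFun h j
    rw [ZMod.intCast_zmod_eq_zero_iff_dvd] at h1
    have h2 := hB j
    by_contra hne
    have := Int.le_of_dvd (abs_pos.mpr hne) ((dvd_abs _ _).mpr h1)
    push_cast at this
    omega

lemma sum_chars {k B : ℕ} {Ω : Type} [Fintype Ω] {e : Ω → AddChar (Fin k → ℤ) ℂ}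
    (h1 : ∀ ω v, ‖e ω v‖ = 1)
    (h2 : ∀ v : Fin k → ℤ, v ≠ 0 → (∀ j, |v j| ≤ B) → ∑ ω, e ω v = 0)
    {α : Type*} [DecidableEq α] (A : Finset α) (w : α → Fin k → ℤ)
    (hw : ∀ a ∈ A, ∀ b ∈ A, ∀ j, |w a j - w b j| ≤ B) :
    ∑ ω, ‖∑ a ∈ A, e ω (w a)‖ ^ 2 =
      (Fintype.card Ω : ℝ) * #{p ∈ A ×ˢ A | w p.1 = w p.2} := by
  have key : ∀ ω, ((‖∑ a ∈ A, e ω (w a)‖ ^ 2 : ℝ) : ℂ) =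
      ∑ p ∈ A ×ˢ A, e ω (w p.1 - w p.2) := by
    intro ω
    push_cast
    rw [← Complex.mul_conj', map_sum, sum_mul_sum, sum_product]
    refine sum_congr rfl fun a _ => sum_congr rfl fun b _ => ?_
    rw [sub_eq_add_neg, AddChar.map_add_eq_mul, AddChar.map_neg_eq_inv]
    congr 1
    rw [Complex.inv_def, Complex.normSq_eq_norm_sq, h1]; simp
  have : ((∑ ω, ‖∑ a ∈ A, e ω (w a)‖ ^ 2 : ℝ) : ℂ) =
      ((Fintype.card Ω : ℝ) * #{p ∈ A ×ˢ A | w p.1 = w p.2} : ℝ) := by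
    rw [Complex.ofReal_sum]
    simp_rw [key]
    rw [sum_comm, Finset.card_filter]
    push_cast
    rw [mul_sum]
    refine sum_congr rfl fun p hp => ?_
    rw [mem_product] at hp
    split_ifs with h
    · simp [h]
    · rw [h2 _ (sub_ne_zero.mpr h) (fun j => by simpa using hw _ hp.1 _ hp.2 j)]; simp
  exact_mod_cast this

lemma mom_shift {k : ℕ} {ι : Type*} [Fintype ι] {x y : ι → ℤ} (h : mom k x = mom k y) (c : ℤ) :
    mom k (fun i => x i + c) = mom k (fun i => y i + c) := by
  have h0 : ∀ m, m ≤ k → ∑ i, x i ^ m = ∑ i, y i ^ m := by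
    intro m hm
    rcases m with _ | m
    · simp
    · exact congrFun h ⟨m, by omega⟩
  ext j
  simp only [mom, add_pow]
  rw [sum_comm, sum_comm (s := univ)]
  refine sum_congr rfl fun m hm => ?_
  rw [mem_range] at hm
  simp_rw [mul_assoc]
  rw [← sum_mul, ← sum_mul, h0 m (by omega)]

lemma mom_scale {k : ℕ} {ι : Type*} [Fintype ι] (x : ι → ℤ) (c : ℤ) (j : Fin k) :
    mom k (fun i => c * x i) j = c ^ (j.1 + 1) * mom k x j := by
  simp [mom, mul_pow, mul_sum]

lemma mom_sumElim {k : ℕ} {ι κ : Type*} [Fintype ι] [Fintype κ] (x : ι → ℤ) (u : κ → ℤ) :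
    mom k (Sum.elim x u) = mom k x + mom k u := by
  ext j; simp [mom]

lemma mom_abs_le {k : ℕ} {ι : Type*} [Fintype ι] (x : ι → ℤ) (P : ℕ) (hx : ∀ i, |x i| ≤ P)
    (j : Fin k) : |mom k x j| ≤ (Fintype.card ι * (P + 1) ^ k : ℕ) := by
  unfold mom
  refine (Finset.abs_sum_le_sum_abs _ _).trans ?_
  push_cast
  rw [← nsmul_eq_mul, ← card_univ]
  refine sum_le_card_nsmul _ _ _ fun i _ => ?_
  rw [abs_pow]
  calc |x i| ^ (j.1 + 1) ≤ ((P : ℤ) + 1) ^ (j.1 + 1) := by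
        gcongr; linarith [hx i]
    _ ≤ _ := pow_le_pow_right₀ (by omega) (by omega)

/-- Each translate of a solution count is at most the homogeneous count. -/
lemma card_shift_le {α G : Type*} [DecidableEq α] [AddCommGroup G] [DecidableEq G] (A : Finset α)
    (w : α → G) (g : G) :
    #{p ∈ A ×ˢ A | w p.1 = w p.2 + g} ≤ #{p ∈ A ×ˢ A | w p.1 = w p.2} := by
  set N : G → ℕ := fun h => #{a ∈ A | w a = h} with hN
  have e1 : ∀ g, #{p ∈ A ×ˢ A | w p.1 = w p.2 + g} = ∑ b ∈ A, N (w b + g) := by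
    intro g
    rw [Finset.card_filter, Finset.sum_product_right]
    refine sum_congr rfl fun b _ => ?_
    rw [hN]; simp only [Finset.card_filter]
  have e2 : ∀ F : G → ℕ, ∑ b ∈ A, F (w b) = ∑ h ∈ A.image w, N h * F h := by
    intro F
    rw [← Finset.sum_fiberwise_of_maps_to (t := A.image w) (g := w)
      (fun a ha => Finset.mem_image_of_mem _ ha)]
    refine sum_congr rfl fun h _ => ?_
    rw [sum_congr rfl (g := fun _ => F h)]
    · simp [hN]
    · intro a ha; rw [(mem_filter.mp ha).2]
  have e3 : #{p ∈ A ×ˢ A | w p.1 = w p.2} = ∑ h ∈ A.image w, N h * N h := by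
    have := e1 0
    simp only [add_zero] at this
    rw [this, e2]
  rw [e1, e2 (fun h => N (h + g)), e3]
  have e4 : ∑ h ∈ A.image w, N (h + g) * N (h + g) ≤ ∑ h ∈ A.image w, N h * N h := by
    rw [← Finset.sum_image (f := fun h => N h * N h) (g := fun h => h + g)
      (fun a _ b _ h => add_right_cancel h)]
    refine Finset.sum_le_sum_of_ne_zero fun h _ hne => ?_
    by_contra hcon
    apply hne
    have : N h = 0 := by
      rw [hN]; simp only [Finset.card_eq_zero, Finset.filter_eq_empty_iff]
      rintro a ha rfl
      exact hcon (Finset.mem_image_of_mem _ ha)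
    simp [this]
  have e5 : ∑ h ∈ A.image w, 2 * (N h * N (h + g)) ≤
      ∑ h ∈ A.image w, (N h * N h + N (h + g) * N (h + g)) := by
    refine sum_le_sum fun h _ => ?_
    zify
    nlinarith [sq_nonneg ((N h : ℤ) - N (h + g))]
  rw [← mul_sum, sum_add_distrib] at e5
  omega

/-- A system of congruences between power sums has only the trivial lift of a
nonsingular solution (Vandermonde determinant plus Hensel lifting). -/
lemma linnik {k q : ℕ} (hq : q.Prime) (hkq : k < q) {x y : Fin k → ℤ}
    (hinj : Function.Injective (fun i => (y i : ZMod q)))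
    (hxy : ∀ i, (q : ℤ) ∣ x i - y i) (n : ℕ)
    (hm : ∀ j, ((q : ℤ) ^ n) ∣ mom k x j - mom k y j) :
    ∀ i, ((q : ℤ) ^ n) ∣ x i - y i := by
  have : Fact q.Prime := ⟨hq⟩
  have hq0 : (q : ℤ) ≠ 0 := by exact_mod_cast hq.ne_zero
  have main : ∀ a, 1 ≤ a → a ≤ n → ∀ i, ((q : ℤ) ^ a) ∣ x i - y i := by
    intro a ha
    induction a, ha using Nat.le_induction with
    | base => intro _ i; simpa using hxy i
    | succ a ha ih =>
      intro han
      choose z hz using ih (by omega)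
      have hx : ∀ i, x i = y i + (q : ℤ) ^ a * z i := fun i => by linarith [hz i]
      have key : ∀ j : Fin k, (q : ℤ) ∣ ∑ i, y i ^ j.1 * z i := by
        intro j
        have h1 : ∀ i, (q : ℤ) ^ (a + 1) ∣
            x i ^ (j.1 + 1) - y i ^ (j.1 + 1) - (q : ℤ) ^ a * ((j.1 + 1 : ℕ) * (y i ^ j.1 * z i)) := by
          intro i
          obtain ⟨c, hc⟩ := Polynomial.powAddExpansion (y i) ((q : ℤ) ^ a * z i) (j.1 + 1)
          rw [hx i, hc]
          have : (q : ℤ) ^ (a + 1) ∣ ((q : ℤ) ^ a * z i) ^ 2 := by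
            rw [mul_pow, ← pow_mul]
            exact Dvd.dvd.mul_right (pow_dvd_pow _ (by omega)) _
          have h2 := Dvd.dvd.mul_left this c
          have e : y i ^ (j.1 + 1) + ((j.1 + 1 : ℕ) : ℤ) * y i ^ (j.1 + 1 - 1) * ((q : ℤ) ^ a * z i) +
              c * ((q : ℤ) ^ a * z i) ^ 2 - y i ^ (j.1 + 1) -
              (q : ℤ) ^ a * ((j.1 + 1 : ℕ) * (y i ^ j.1 * z i)) = c * ((q : ℤ) ^ a * z i) ^ 2 := by
            rw [Nat.add_sub_cancel]; ring
          rw [e]; exact h2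
        have h2 : (q : ℤ) ^ (a + 1) ∣ (q : ℤ) ^ a * ((j.1 + 1 : ℕ) * ∑ i, y i ^ j.1 * z i) := by
          have h3 := Finset.dvd_sum (s := univ) (fun i _ => h1 i)
          rw [sum_sub_distrib, sum_sub_distrib, ← mul_sum,
            ← mul_sum] at h3
          have h4 := (pow_dvd_pow (q : ℤ) han).trans (hm j)
          have h5 := dvd_sub h4 h3
          simp only [mom] at h5
          rwa [sub_sub_cancel] at h5
        rw [pow_succ, mul_dvd_mul_iff_left (pow_ne_zero _ hq0)] at h2
        have hp : Prime (q : ℤ) := Nat.prime_iff_prime_int.mp hq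
        rcases hp.dvd_or_dvd h2 with h | h
        · exfalso
          have := Nat.le_of_dvd (by omega) (Int.natCast_dvd_natCast.mp h)
          omega
        · exact h
      have hdet : (Matrix.vandermonde (fun i => (y i : ZMod q))).det ≠ 0 :=
        Matrix.det_vandermonde_ne_zero_iff.mpr hinj
      have hz0 : (fun i => (z i : ZMod q)) = 0 := by
        apply Matrix.eq_zero_of_vecMul_eq_zero hdet
        ext j
        have := (ZMod.intCast_zmod_eq_zero_iff_dvd _ _).mpr (key j)
        push_cast at this
        simp only [Matrix.vecMul, dotProduct, Matrix.vandermonde_apply, Pi.zero_apply]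
        rw [← this]
        exact sum_congr rfl fun i _ => mul_comm _ _
      intro i
      have h1 : (q : ℤ) ∣ z i := (ZMod.intCast_zmod_eq_zero_iff_dvd _ _).mp (congrFun hz0 i)
      rw [hz i, pow_succ]
      exact mul_dvd_mul_left _ h1
  rcases Nat.eq_zero_or_pos n with rfl | hn
  · simp
  · exact main n hn le_rfl

/-- Linnik's lemma: given distinct residues mod `q`, the moments mod `Q ^ k` determine the tuple
(`linnik`), and the assumed congruences leave `Q ^ (k(k-1)/2)` choices for these moments. -/
lemma linnik_count {k q m P : ℕ} (hq : q.Prime) (hkq : k < q)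
    (hP : P ≤ (q ^ m) ^ k) (a : ℤ) (ρ : Fin k → ZMod q) (hρ : Function.Injective ρ)
    (y : Fin k → ℤ) (B : Finset (Fin k → ℤ))
    (hB : ∀ x ∈ B, (∀ i, a ≤ x i ∧ x i < a + P) ∧ (∀ i, (x i : ZMod q) = ρ i) ∧
      ∀ j : Fin k, (((q ^ m : ℕ) : ℤ) ^ (j.1 + 1)) ∣ mom k x j - mom k y j) :
    #B ≤ (q ^ m) ^ (k * (k - 1) / 2) := by
  set Q : ℕ := q ^ m with hQ
  have hQ0 : 0 < Q := pow_pos hq.pos _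
  have hQz : (0 : ℤ) < Q := by exact_mod_cast hQ0
  let F : (Fin k → ℤ) → (Fin k → ℕ) := fun x j =>
    (((mom k x j - mom k y j) / (Q : ℤ) ^ (j.1 + 1)) % ((Q : ℤ) ^ (k - 1 - j.1))).toNat
  have hcard : #(Fintype.piFinset (fun j : Fin k => range (Q ^ (k - 1 - j.1)))) =
      Q ^ (k * (k - 1) / 2) := by
    rw [Fintype.card_piFinset]
    simp only [card_range]
    rw [Finset.prod_pow_eq_pow_sum, Fin.sum_univ_eq_sum_range (fun j => k - 1 - j),
      Finset.sum_range_reflect (fun j => j), Finset.sum_range_id]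
  rw [← hcard]
  apply card_le_card_of_injOn F
  · intro x _
    simp only [mem_coe, Fintype.mem_piFinset, mem_range]
    intro j
    have hpos : (0 : ℤ) < (Q : ℤ) ^ (k - 1 - j.1) := by positivity
    have h1 := Int.emod_lt_of_pos ((mom k x j - mom k y j) / (Q : ℤ) ^ (j.1 + 1)) hpos
    have h2 := Int.emod_nonneg ((mom k x j - mom k y j) / (Q : ℤ) ^ (j.1 + 1)) hpos.ne'
    zify
    simp only [F]
    rw [Int.toNat_of_nonneg h2]
    exact_mod_cast h1
  · intro x hx x' hx' hF
    obtain ⟨hx1, hx2, hx3⟩ := hB x hx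
    obtain ⟨hx1', hx2', hx3'⟩ := hB x' hx'
    have hd : ∀ j, ((q : ℤ) ^ (m * k)) ∣ mom k x j - mom k x' j := by
      intro j
      have hFj := congrFun hF j
      simp only [F] at hFj
      have hpos : (0 : ℤ) < (Q : ℤ) ^ (k - 1 - j.1) := by positivity
      have h2 := Int.emod_nonneg ((mom k x j - mom k y j) / (Q : ℤ) ^ (j.1 + 1)) hpos.ne'
      have h2' := Int.emod_nonneg ((mom k x' j - mom k y j) / (Q : ℤ) ^ (j.1 + 1)) hpos.ne'
      have h3 : ((mom k x j - mom k y j) / (Q : ℤ) ^ (j.1 + 1)) % ((Q : ℤ) ^ (k - 1 - j.1)) =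
          ((mom k x' j - mom k y j) / (Q : ℤ) ^ (j.1 + 1)) % ((Q : ℤ) ^ (k - 1 - j.1)) := by
        rw [← Int.toNat_of_nonneg h2, ← Int.toNat_of_nonneg h2', hFj]
      obtain ⟨u, hu⟩ := hx3 j
      obtain ⟨u', hu'⟩ := hx3' j
      have hne : (Q : ℤ) ^ (j.1 + 1) ≠ 0 := by positivity
      rw [hu, hu', Int.mul_ediv_cancel_left _ hne, Int.mul_ediv_cancel_left _ hne] at h3
      have h4 : (Q : ℤ) ^ (k - 1 - j.1) ∣ u - u' := Int.ModEq.dvd (Int.ModEq.symm h3)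
      have h5 : mom k x j - mom k x' j = (Q : ℤ) ^ (j.1 + 1) * (u - u') := by linarith
      rw [h5, pow_mul]
      have h6 : ((q : ℤ) ^ m) ^ k = (Q : ℤ) ^ (j.1 + 1) * (Q : ℤ) ^ (k - 1 - j.1) := by
        rw [← pow_add, hQ]; push_cast; congr 1; omega
      rw [h6]
      exact mul_dvd_mul_left _ h4
    have hres := linnik hq hkq (x := x) (y := x') (by
      intro i i' h; apply hρ; simpa [hx2'] using h) (by
      intro i
      rw [← ZMod.intCast_zmod_eq_zero_iff_dvd]
      push_cast; rw [hx2, hx2', sub_self]) (m * k) hd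
    ext i
    have h1 := hres i
    have h2 : |x i - x' i| < (q : ℤ) ^ (m * k) := by
      have : (P : ℤ) ≤ (q : ℤ) ^ (m * k) := by rw [pow_mul]; exact_mod_cast hP
      have := hx1 i; have := hx1' i
      rw [abs_lt]; constructor <;> linarith
    have := Int.eq_zero_of_abs_lt_dvd h1 h2
    linarith

/-- Pointwise broad/narrow alternative: a sum over classes is either dominated by one class or
has `k` distinct large classes. -/
lemma broad_narrow {R : Type*} [Fintype R] [DecidableEq R] (f : R → ℂ) (k s : ℕ) (hk : 1 ≤ k)
    [Nonempty R] :
    ‖∑ r, f r‖ ^ (2 * (s + k)) ≤ (2 * k : ℝ) ^ (2 * (s + k)) * ∑ r, ‖f r‖ ^ (2 * (s + k)) +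
      (2 * Fintype.card R : ℝ) ^ (2 * k) *
        ∑ ρ : Fin k ↪ R, (∏ i, ‖f (ρ i)‖ ^ 2) * ‖∑ r, f r‖ ^ (2 * s) := by
  set F := ‖∑ r, f r‖ with hF
  set q : ℝ := (Fintype.card R : ℝ) with hq
  have hq0 : 0 < q := by rw [hq]; exact_mod_cast Fintype.card_pos
  have hF0 : 0 ≤ F := norm_nonneg _
  set Big : Finset R := {r | F / (2 * q) ≤ ‖f r‖} with hBig
  by_cases hc : k ≤ #Big
  · have : ∃ ρ : Fin k ↪ R, ∀ i, ρ i ∈ Big := by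
      have h1 : Fintype.card (Fin k) ≤ Fintype.card Big := by simpa using hc
      obtain ⟨g⟩ := Function.Embedding.nonempty_of_card_le h1
      exact ⟨g.trans (Function.Embedding.subtype _), fun i => (g i).2⟩
    obtain ⟨ρ, hρ⟩ := this
    have h1 : (F / (2 * q)) ^ (2 * k) ≤ ∏ i, ‖f (ρ i)‖ ^ 2 := by
      calc (F / (2 * q)) ^ (2 * k) = ∏ i : Fin k, (F / (2 * q)) ^ 2 := by simp [pow_mul]
        _ ≤ _ := by
          refine Finset.prod_le_prod (fun _ _ => by positivity) fun i _ => ?_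
          have := (mem_filter.mp (hρ i)).2
          gcongr
    have h2 : (∏ i, ‖f (ρ i)‖ ^ 2) * F ^ (2 * s) ≤
        ∑ ρ : Fin k ↪ R, (∏ i, ‖f (ρ i)‖ ^ 2) * F ^ (2 * s) :=
      Finset.single_le_sum (f := fun ρ : Fin k ↪ R => (∏ i, ‖f (ρ i)‖ ^ 2) * F ^ (2 * s))
        (fun _ _ => by positivity) (mem_univ ρ)
    have h3 : F ^ (2 * (s + k)) = (2 * q) ^ (2 * k) * ((F / (2 * q)) ^ (2 * k) * F ^ (2 * s)) := by
      rw [div_pow]; field_simp; ring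
    rw [h3]
    refine le_add_of_nonneg_of_le (by positivity) ?_
    gcongr
    exact (mul_le_mul_of_nonneg_right h1 (by positivity)).trans h2
  · push Not at hc
    obtain ⟨r0, -, hr0⟩ := Finset.exists_max_image univ (fun r => ‖f r‖) univ_nonempty
    have h1 : F ≤ 2 * k * ‖f r0‖ := by
      have h2 : F ≤ ∑ r ∈ Big, ‖f r‖ + ∑ r ∈ univ.filter (fun r => ¬ F / (2 * q) ≤ ‖f r‖), ‖f r‖ := by
        rw [hBig, Finset.sum_filter_add_sum_filter_not]; exact norm_sum_le _ _
      have h3 : ∑ r ∈ Big, ‖f r‖ ≤ k * ‖f r0‖ := by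
        refine (sum_le_card_nsmul _ _ _ fun r _ => hr0 r (mem_univ _)).trans ?_
        rw [nsmul_eq_mul]; gcongr
      have h4 : ∑ r ∈ univ.filter (fun r => ¬ F / (2 * q) ≤ ‖f r‖), ‖f r‖ ≤ q * (F / (2 * q)) := by
        refine (sum_le_card_nsmul _ _ (F / (2 * q)) fun r hr => ?_).trans ?_
        · exact (not_le.mp (mem_filter.mp hr).2).le
        · rw [nsmul_eq_mul]; gcongr
          rw [hq]; exact_mod_cast Finset.card_le_univ _
      have h5 : q * (F / (2 * q)) = F / 2 := by field_simp
      linarith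
    have h2 : ‖f r0‖ ^ (2 * (s + k)) ≤ ∑ r, ‖f r‖ ^ (2 * (s + k)) :=
      Finset.single_le_sum (f := fun r => ‖f r‖ ^ (2 * (s + k)))
        (fun _ _ => by positivity) (mem_univ r0)
    refine le_add_of_le_of_nonneg ?_ (by positivity)
    calc F ^ (2 * (s + k)) ≤ (2 * k * ‖f r0‖) ^ (2 * (s + k)) := by gcongr
      _ = (2 * k : ℝ) ^ (2 * (s + k)) * ‖f r0‖ ^ (2 * (s + k)) := by rw [mul_pow]
      _ ≤ _ := by gcongr

/-- The moment curve. -/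
def crv (k : ℕ) (x : ℤ) : Fin k → ℤ := fun j => x ^ (j.1 + 1)

lemma mom_eq_sum {k : ℕ} {ι : Type*} [Fintype ι] (x : ι → ℤ) : mom k x = ∑ i, crv k (x i) := by
  ext j; simp [mom, crv]

lemma char_sum_eq_prod {k : ℕ} (e : AddChar (Fin k → ℤ) ℂ) {ι : Type*} (s : Finset ι)
    (g : ι → Fin k → ℤ) : e (∑ i ∈ s, g i) = ∏ i ∈ s, e (g i) := by
  classical
  induction s using Finset.induction_on with
  | empty => simp
  | insert a s ha ih => rw [Finset.sum_insert ha, Finset.prod_insert ha, AddChar.map_add_eq_mul, ih]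

lemma char_prod {k : ℕ} (e : AddChar (Fin k → ℤ) ℂ) {ι : Type*} [Fintype ι] [DecidableEq ι]
    (S : ι → Finset ℤ) :
    ∑ x ∈ Fintype.piFinset S, e (mom k x) = ∏ i, ∑ x ∈ S i, e (crv k x) := by
  rw [prod_univ_sum]
  refine sum_congr rfl fun x _ => ?_
  rw [mom_eq_sum, char_sum_eq_prod]

lemma VJ_eq {k B : ℕ} {Ω : Type} [Fintype Ω] {e : Ω → AddChar (Fin k → ℤ) ℂ}
    (h1 : ∀ ω v, ‖e ω v‖ = 1)
    (h2 : ∀ v : Fin k → ℤ, v ≠ 0 → (∀ j, |v j| ≤ B) → ∑ ω, e ω v = 0)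
    (n P : ℕ) (S : Finset ℤ) (hS : ∀ x ∈ S, |x| ≤ P) (hB : 2 * (n * (P + 1) ^ k) ≤ B) :
    ∑ ω, ‖∑ x ∈ S, e ω (crv k x)‖ ^ (2 * n) = (Fintype.card Ω : ℝ) * VJ k n S := by
  classical
  rw [VJ, ← sum_chars h1 h2 (Fintype.piFinset (fun _ : Fin n => S)) (fun x => mom k x)]
  · refine sum_congr rfl fun ω _ => ?_
    rw [char_prod]
    simp [pow_mul']
  · intro a ha b hb j
    rw [Fintype.mem_piFinset] at ha hb
    have := mom_abs_le a P (fun i => hS _ (ha i)) j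
    have := mom_abs_le b P (fun i => hS _ (hb i)) j
    have h3 := abs_sub (mom k a j) (mom k b j)
    simp only [Fintype.card_fin] at *
    have : ((2 * (n * (P + 1) ^ k) : ℕ) : ℤ) ≤ B := by exact_mod_cast hB
    push_cast at *
    linarith

/-- Translation–dilation invariance for one residue class. -/
lemma VJ_class {k s P Q : ℕ} [NeZero Q] (c : ZMod Q) :
    VJ k s ((Ico 0 (P : ℤ)).filter (fun x => (x : ZMod Q) = c)) ≤
      VJ k s (Ico 0 ((P / Q + 1 : ℕ) : ℤ)) := by
  have hQ : (0 : ℤ) < Q := by exact_mod_cast Nat.pos_of_ne_zero (NeZero.ne Q)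
  have hdiv : ∀ x : ℤ, (x : ZMod Q) = c → x = (c.val : ℤ) + Q * ((x - c.val) / Q) := by
    intro x hx
    have : (Q : ℤ) ∣ x - c.val := by
      rw [← ZMod.intCast_zmod_eq_zero_iff_dvd]; push_cast
      rw [hx, ZMod.natCast_zmod_val, sub_self]
    have := Int.mul_ediv_cancel' this
    linarith
  let D : ∀ {m : ℕ}, (Fin m → ℤ) → (Fin m → ℤ) := fun u i => (u i - c.val) / Q
  apply card_le_card_of_injOn (fun p => (D p.1, D p.2))
  · rintro ⟨u, v⟩ h
    simp only [mem_coe, mem_filter, mem_product, Fintype.mem_piFinset,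
      mem_Ico] at h ⊢
    obtain ⟨⟨hu, hv⟩, huv⟩ := h
    have bd : ∀ x : ℤ, ((0 ≤ x ∧ x < P) ∧ (x : ZMod Q) = c) →
        0 ≤ (x - c.val) / Q ∧ (x - c.val) / (Q : ℤ) < ((P / Q + 1 : ℕ) : ℤ) := by
      rintro x ⟨⟨h0, hP⟩, hc⟩
      have h1 := hdiv x hc
      have h2 : (c.val : ℤ) < Q := by exact_mod_cast ZMod.val_lt c
      constructor
      · by_contra hneg
        push Not at hneg
        have : (Q : ℤ) * ((x - c.val) / Q) ≤ Q * (-1) := by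
          apply mul_le_mul_of_nonneg_left _ hQ.le; omega
        linarith
      · push_cast
        have : (x - c.val) / (Q : ℤ) ≤ P / Q :=
          Int.ediv_le_ediv hQ (by have : (0 : ℤ) ≤ c.val := by positivity
                                  linarith)
        omega
    refine ⟨⟨fun i => bd _ (hu i), fun i => bd _ (hv i)⟩, ?_⟩
    have h1 := mom_shift huv (-(c.val : ℤ))
    have e1 : ∀ u : Fin s → ℤ, (∀ i, (u i : ZMod Q) = c) →
        (fun i => u i + -(c.val : ℤ)) = fun i => (Q : ℤ) * D u i := by
      intro u hu; ext i
      have := hdiv _ (hu i)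
      simp only [D]; linarith
    rw [e1 u fun i => (hu i).2, e1 v fun i => (hv i).2] at h1
    ext j
    have h2 := congrFun h1 j
    rw [mom_scale, mom_scale] at h2
    exact mul_left_cancel₀ (by positivity) h2
  · rintro ⟨u, v⟩ h ⟨u', v'⟩ h' heq
    simp only [mem_coe, mem_filter, mem_product, Fintype.mem_piFinset,
      mem_Ico] at h h'
    simp only [Prod.mk.injEq] at heq ⊢
    constructor
    · ext i
      rw [hdiv _ (h.1.1 i).2, hdiv _ (h'.1.1 i).2]
      have := congrFun heq.1 i
      simp only [D] at this
      rw [this]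
    · ext i
      rw [hdiv _ (h.1.2 i).2, hdiv _ (h'.1.2 i).2]
      have := congrFun heq.2 i
      simp only [D] at this
      rw [this]

/-- Residue class `c` mod `Q` in `[0, P)`. -/
noncomputable def cls (P Q : ℕ) (c : ZMod Q) : Finset ℤ := (Ico 0 (P : ℤ)).filter (fun x => (x : ZMod Q) = c)

/-- Translating by `c` makes the `s` variables divisible by `Q`, so the power sums of the `k` broad
variables agree modulo powers of `Q` and `linnik_count` applies. -/
lemma broad_count {k q m P s Q : ℕ} (hq : q.Prime) (hkq : k < q) (hQ : Q = q ^ m)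
    (hP : P ≤ Q ^ k) (ρ : Fin k ↪ ZMod q) [NeZero Q] (c : ZMod Q) :
    #{p ∈ (Fintype.piFinset (fun i => cls P q (ρ i)) ×ˢ
          Fintype.piFinset (fun _ : Fin s => cls P Q c)) ×ˢ
        (Fintype.piFinset (fun i => cls P q (ρ i)) ×ˢ
          Fintype.piFinset (fun _ : Fin s => cls P Q c)) |
        mom k p.1.1 + mom k p.1.2 = mom k p.2.1 + mom k p.2.2} ≤
      P ^ k * Q ^ (k * (k - 1) / 2) * VJ k s (Ico 0 ((P / Q + 1 : ℕ) : ℤ)) := by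
  set X := Fintype.piFinset (fun i => cls P q (ρ i)) with hX
  set U := Fintype.piFinset (fun _ : Fin s => cls P Q c) with hU
  set c' : ℤ := (c.val : ℤ) with hc'
  -- the pairs `(x, y)` compatible with the congruences modulo powers of `Q`
  set G := (X ×ˢ X).filter (fun z => ∀ j : Fin k, ((Q : ℤ) ^ (j.1 + 1)) ∣
    mom k (fun i => z.1 i + -c') j - mom k (fun i => z.2 i + -c') j) with hG
  have hstep : #{p ∈ (X ×ˢ U) ×ˢ (X ×ˢ U) |
        mom k p.1.1 + mom k p.1.2 = mom k p.2.1 + mom k p.2.2} ≤ #G * VJ k s (cls P Q c) := by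
    apply Finset.card_le_mul_card_image_of_maps_to (f := fun p => (p.1.1, p.2.1))
      (t := G) |> fun h => (h ?_ (VJ k s (cls P Q c)) ?_).trans (by rw [mul_comm])
    · rintro ⟨⟨x, u⟩, ⟨y, v⟩⟩ h
      simp only [mem_filter, mem_product] at h
      obtain ⟨⟨⟨hx, hu⟩, hy, hv⟩, heq⟩ := h
      simp only [hG, mem_filter, mem_product]
      refine ⟨⟨hx, hy⟩, fun j => ?_⟩
      rw [← mom_sumElim, ← mom_sumElim] at heq
      have h1 := mom_shift heq (-c')
      have e1 : ∀ (x : Fin k → ℤ) (u : Fin s → ℤ), (fun i => Sum.elim x u i + -c') =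
          Sum.elim (fun i => x i + -c') (fun i => u i + -c') := by
        intro x u; ext i; cases i <;> simp
      rw [e1, e1, mom_sumElim, mom_sumElim] at h1
      have h2 := congrFun h1 j
      simp only [Pi.add_apply] at h2
      have h3 : ∀ u ∈ U, ((Q : ℤ) ^ (j.1 + 1)) ∣ mom k (fun i => u i + -c') j := by
        intro u hu
        rw [hU, Fintype.mem_piFinset] at hu
        apply Finset.dvd_sum
        intro i _
        apply pow_dvd_pow_of_dvd
        have := (mem_filter.mp (hu i)).2
        rw [← ZMod.intCast_zmod_eq_zero_iff_dvd]; push_cast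
        rw [this, hc']; push_cast; rw [ZMod.natCast_zmod_val]; ring
      have h4 := dvd_sub (h3 v hv) (h3 u hu)
      have h5 : mom k (fun i => x i + -c') j - mom k (fun i => y i + -c') j =
        mom k (fun i => v i + -c') j - mom k (fun i => u i + -c') j := by linarith
      rw [h5]; exact h4
    · rintro ⟨x, y⟩ _
      have hsh : #{p ∈ U ×ˢ U | mom k p.1 = mom k p.2 + (mom k y - mom k x)} ≤
          VJ k s (cls P Q c) := card_shift_le U (fun u => mom k u) (mom k y - mom k x)
      refine le_trans ?_ hsh
      apply card_le_card_of_injOn (fun p => (p.1.2, p.2.2))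
      · rintro ⟨⟨x', u⟩, ⟨y', v⟩⟩ h
        simp only [mem_coe, mem_filter, mem_product, Prod.mk.injEq] at h ⊢
        obtain ⟨⟨⟨⟨hx, hu⟩, hy, hv⟩, heq⟩, rfl, rfl⟩ := h
        refine ⟨⟨hu, hv⟩, ?_⟩
        rw [add_sub, add_comm (mom k v), ← heq]; abel
      · rintro ⟨⟨x', u⟩, ⟨y', v⟩⟩ h ⟨⟨x'', u'⟩, ⟨y'', v'⟩⟩ h' heq
        simp only [mem_coe, mem_filter, Prod.mk.injEq] at h h' heq ⊢
        obtain ⟨-, rfl, rfl⟩ := h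
        obtain ⟨-, rfl, rfl⟩ := h'
        simp [heq.1, heq.2]
  have hXcard : #X ≤ P ^ k := by
    rw [hX, Fintype.card_piFinset]
    calc ∏ i, #(cls P q (ρ i)) ≤ ∏ _i : Fin k, P := by
          refine Finset.prod_le_prod' fun i _ => ?_
          exact (card_filter_le _ _).trans (by simp)
      _ = P ^ k := by simp
  have hGcard : #G ≤ P ^ k * Q ^ (k * (k - 1) / 2) := by
    have : #G ≤ Q ^ (k * (k - 1) / 2) * #X := by
      apply Finset.card_le_mul_card_image_of_maps_to (f := fun z => z.2)
      · rintro ⟨x, y⟩ h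
        simp only [hG, mem_filter, mem_product] at h
        exact h.1.2
      · intro y _
        rw [hQ]
        have : #((G.filter (fun z => z.2 = y)).image (fun z i => z.1 i + -c')) =
            #(G.filter (fun z => z.2 = y)) := by
          apply Finset.card_image_of_injOn
          rintro ⟨x, y1⟩ h ⟨x', y2⟩ h' heq
          simp only [mem_coe, mem_filter] at h h'
          obtain ⟨-, rfl⟩ := h
          obtain ⟨-, rfl⟩ := h'
          simp only [Prod.mk.injEq, and_true]
          ext i
          have := congrFun heq i
          simpa using this
        rw [← this]
        refine linnik_count hq hkq (hQ ▸ hP) (-c') (fun i => ρ i - (c' : ZMod q))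
          (fun i i' h => ρ.injective (by simpa using h)) (fun i => y i + -c') _ ?_
        intro x hx
        rw [Finset.mem_image] at hx
        obtain ⟨⟨x', y'⟩, hz, rfl⟩ := hx
        simp only [hG, mem_filter, mem_product] at hz
        obtain ⟨⟨⟨hx', -⟩, hd⟩, rfl⟩ := hz
        rw [hX, Fintype.mem_piFinset] at hx'
        refine ⟨fun i => ?_, fun i => ?_, fun j => by rw [← hQ]; exact hd j⟩
        · have := mem_Ico.mp (mem_filter.mp (hx' i)).1
          constructor <;> linarith
        · have := (mem_filter.mp (hx' i)).2
          push_cast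
          rw [this]; ring
    calc #G ≤ _ := this
      _ ≤ Q ^ (k * (k - 1) / 2) * P ^ k := by gcongr
      _ = _ := mul_comm _ _
  refine hstep.trans ?_
  gcongr
  exact VJ_class c

lemma sum_cls {P Q : ℕ} [NeZero Q] (g : ℤ → ℂ) :
    ∑ c : ZMod Q, ∑ x ∈ cls P Q c, g x = ∑ x ∈ Ico 0 (P : ℤ), g x := by
  unfold cls
  exact Finset.sum_fiberwise (Ico 0 (P : ℤ)) (fun x : ℤ => (x : ZMod Q)) g

lemma holder_classes {R : Type*} [Fintype R] [Nonempty R] (f : R → ℂ) (s : ℕ) :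
    (Fintype.card R : ℝ) * ‖∑ r, f r‖ ^ (2 * s) ≤
      (Fintype.card R : ℝ) ^ (2 * s) * ∑ r, ‖f r‖ ^ (2 * s) := by
  have hc : (0 : ℝ) < Fintype.card R := by exact_mod_cast Fintype.card_pos
  rcases s with _ | s
  · simp
  · have h1 := pow_sum_div_card_le_sum_pow (s := univ) (f := fun r => ‖f r‖)
      (fun _ _ => norm_nonneg _) (2 * s + 1)
    rw [div_le_iff₀ (by simpa using pow_pos hc _), card_univ] at h1
    have h2 : ‖∑ r, f r‖ ^ (2 * (s + 1)) ≤ (∑ r, ‖f r‖) ^ (2 * s + 1 + 1) := by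
      rw [show 2 * s + 1 + 1 = 2 * (s + 1) by ring]
      gcongr; exact norm_sum_le _ _
    calc (Fintype.card R : ℝ) * ‖∑ r, f r‖ ^ (2 * (s + 1))
        ≤ Fintype.card R * ((∑ r, ‖f r‖ ^ (2 * s + 1 + 1)) * (Fintype.card R : ℝ) ^ (2 * s + 1)) := by
          gcongr; exact h2.trans h1
      _ = _ := by rw [show 2 * s + 1 + 1 = 2 * (s + 1) by ring]; ring

/-- One step of the `p`-adic iteration for Vinogradov's mean value. -/
theorem VJ_rec {k q m P s Q : ℕ} (hk : 1 ≤ k) (hq : q.Prime) (hkq : k < q) (hQ : Q = q ^ m)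
    (hP : P ≤ Q ^ k) :
    (VJ k (s + k) (Ico 0 (P : ℤ)) : ℝ) ≤
      (2 * k : ℝ) ^ (2 * (s + k)) * (q * VJ k (s + k) (Ico 0 ((P / q + 1 : ℕ) : ℤ))) +
      (2 * q : ℝ) ^ (2 * k) * (q ^ k * (Q ^ (2 * s) * (P ^ k * Q ^ (k * (k - 1) / 2) *
        VJ k s (Ico 0 ((P / Q + 1 : ℕ) : ℤ))))) := by
  classical
  have : Fact q.Prime := ⟨hq⟩
  have : NeZero q := ⟨hq.ne_zero⟩
  have hQ0 : Q ≠ 0 := by rw [hQ]; exact pow_ne_zero _ hq.ne_zero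
  have : NeZero Q := ⟨hQ0⟩
  obtain ⟨Ω, _, _, e, h1, h2⟩ := exists_chars k (2 * ((s + k) * (P + 1) ^ k))
  have hΩ : (0 : ℝ) < Fintype.card Ω := by exact_mod_cast Fintype.card_pos
  set W : ℝ := P ^ k * Q ^ (k * (k - 1) / 2) * VJ k s (Ico 0 ((P / Q + 1 : ℕ) : ℤ)) with hW
  have hI : ∀ x ∈ Ico 0 (P : ℤ), |x| ≤ P := by
    intro x hx; rw [mem_Ico] at hx; rw [abs_le]; constructor <;> linarith
  have hC : ∀ (Q : ℕ) (c : ZMod Q), ∀ x ∈ cls P Q c, |x| ≤ P :=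
    fun Q c x hx => hI x (mem_filter.mp hx).1
  -- the contribution of a fixed tuple of residue classes modulo `q`
  have hbroad : ∀ ρ : Fin k ↪ ZMod q, ∑ ω, (∏ i, ‖∑ x ∈ cls P q (ρ i), e ω (crv k x)‖ ^ 2) *
      ‖∑ x ∈ Ico 0 (P : ℤ), e ω (crv k x)‖ ^ (2 * s) ≤ Q ^ (2 * s) * (Fintype.card Ω * W) := by
    intro ρ
    have hQpos : (0 : ℝ) < Q := by exact_mod_cast Nat.pos_of_ne_zero hQ0
    have key : ∀ c : ZMod Q, ∑ ω, (∏ i, ‖∑ x ∈ cls P q (ρ i), e ω (crv k x)‖ ^ 2) *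
      ‖∑ x ∈ cls P Q c, e ω (crv k x)‖ ^ (2 * s) ≤ Fintype.card Ω * W := by
      intro c
      have h3 := sum_chars h1 h2 (Fintype.piFinset (fun i => cls P q (ρ i)) ×ˢ
          Fintype.piFinset (fun _ : Fin s => cls P Q c)) (fun z => mom k z.1 + mom k z.2) (by
        rintro ⟨x, u⟩ hx ⟨y, v⟩ hy j
        simp only [mem_product, Fintype.mem_piFinset] at hx hy
        have b1 := mom_abs_le x P (fun i => hC _ _ _ (hx.1 i)) j
        have b2 := mom_abs_le u P (fun i => hC _ _ _ (hx.2 i)) j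
        have b3 := mom_abs_le y P (fun i => hC _ _ _ (hy.1 i)) j
        have b4 := mom_abs_le v P (fun i => hC _ _ _ (hy.2 i)) j
        simp only [Fintype.card_fin, Pi.add_apply, abs_le] at *
        push_cast at *
        constructor <;> linarith)
      have h4 : ∀ ω, ‖∑ z ∈ Fintype.piFinset (fun i => cls P q (ρ i)) ×ˢ
          Fintype.piFinset (fun _ : Fin s => cls P Q c), e ω (mom k z.1 + mom k z.2)‖ ^ 2 =
          (∏ i, ‖∑ x ∈ cls P q (ρ i), e ω (crv k x)‖ ^ 2) *
            ‖∑ x ∈ cls P Q c, e ω (crv k x)‖ ^ (2 * s) := by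
        intro ω
        simp_rw [AddChar.map_add_eq_mul]
        rw [sum_product]
        dsimp only
        rw [← sum_mul_sum, char_prod, char_prod, norm_mul, mul_pow,
          norm_prod, Finset.prod_pow]
        simp [pow_mul']
      simp_rw [h4] at h3
      rw [h3]
      gcongr
      have := broad_count (s := s) hq hkq hQ hP ρ c
      rw [hW]
      exact_mod_cast this
    have h5 : (Q : ℝ) * ∑ ω, (∏ i, ‖∑ x ∈ cls P q (ρ i), e ω (crv k x)‖ ^ 2) *
      ‖∑ x ∈ Ico 0 (P : ℤ), e ω (crv k x)‖ ^ (2 * s) ≤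
        Q ^ (2 * s) * ∑ c : ZMod Q, ∑ ω, (∏ i, ‖∑ x ∈ cls P q (ρ i), e ω (crv k x)‖ ^ 2) *
          ‖∑ x ∈ cls P Q c, e ω (crv k x)‖ ^ (2 * s) := by
      rw [sum_comm, mul_sum, mul_sum]
      refine sum_le_sum fun ω _ => ?_
      rw [← mul_sum, mul_left_comm, mul_left_comm ((Q : ℝ) ^ (2 * s))]
      refine mul_le_mul_of_nonneg_left ?_ (by positivity)
      have := holder_classes (fun c : ZMod Q => ∑ x ∈ cls P Q c, e ω (crv k x)) s
      rw [ZMod.card, sum_cls] at this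
      exact this
    have h6 : ∑ c : ZMod Q, ∑ ω, (∏ i, ‖∑ x ∈ cls P q (ρ i), e ω (crv k x)‖ ^ 2) *
          ‖∑ x ∈ cls P Q c, e ω (crv k x)‖ ^ (2 * s) ≤ Q * (Fintype.card Ω * W) := by
      refine (sum_le_card_nsmul _ _ _ fun c _ => key c).trans ?_
      rw [card_univ, ZMod.card, nsmul_eq_mul]
    have h7 := h5.trans (mul_le_mul_of_nonneg_left h6 (by positivity))
    rw [mul_left_comm] at h7
    exact le_of_mul_le_mul_left h7 hQpos
  have hmain : (Fintype.card Ω : ℝ) * VJ k (s + k) (Ico 0 (P : ℤ)) ≤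
      (2 * k : ℝ) ^ (2 * (s + k)) *
        (∑ r : ZMod q, (Fintype.card Ω : ℝ) * VJ k (s + k) (cls P q r)) +
      (2 * q : ℝ) ^ (2 * k) * ∑ _ρ : Fin k ↪ ZMod q, (Q ^ (2 * s) * (Fintype.card Ω * W)) := by
    rw [← VJ_eq h1 h2 (s + k) P _ hI le_rfl]
    simp_rw [← fun r => VJ_eq h1 h2 (s + k) P _ (hC q r) le_rfl]
    have : ∀ ω, _ := fun ω => broad_narrow (fun r : ZMod q => ∑ x ∈ cls P q r, e ω (crv k x)) k s hk
    simp_rw [sum_cls, ZMod.card] at this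
    refine (sum_le_sum fun ω _ => this ω).trans ?_
    rw [sum_add_distrib, ← mul_sum, ← mul_sum, sum_comm,
      sum_comm (s := univ) (t := univ) (f := fun ω (ρ : Fin k ↪ ZMod q) => _)]
    gcongr with ρ
    exact hbroad ρ
  have hcardρ : (Fintype.card (Fin k ↪ ZMod q) : ℝ) ≤ q ^ k := by
    have : Fintype.card (Fin k ↪ ZMod q) ≤ Fintype.card (Fin k → ZMod q) :=
      Fintype.card_le_of_injective _ DFunLike.coe_injective
    simp only [Fintype.card_fun, ZMod.card, Fintype.card_fin] at this
    exact_mod_cast this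
  have hW0 : 0 ≤ W := by positivity
  have hnar : ∑ r : ZMod q, (Fintype.card Ω : ℝ) * VJ k (s + k) (cls P q r) ≤
      Fintype.card Ω * (q * VJ k (s + k) (Ico 0 ((P / q + 1 : ℕ) : ℤ))) := by
    rw [← mul_sum]
    gcongr
    refine (sum_le_card_nsmul _ _ (VJ k (s + k) (Ico 0 ((P / q + 1 : ℕ) : ℤ)) : ℝ)
      fun r _ => ?_).trans ?_
    · exact_mod_cast VJ_class r
    · rw [card_univ, ZMod.card, nsmul_eq_mul]
  refine le_of_mul_le_mul_left (hmain.trans ?_) hΩ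
  rw [sum_const, card_univ, nsmul_eq_mul]
  calc _ ≤ (2 * k : ℝ) ^ (2 * (s + k)) *
        (Fintype.card Ω * (q * VJ k (s + k) (Ico 0 ((P / q + 1 : ℕ) : ℤ)))) +
        (2 * q : ℝ) ^ (2 * k) * (q ^ k * (Q ^ (2 * s) * (Fintype.card Ω * W))) := by gcongr
    _ = _ := by ring

/-- Exponent in the mean value bound after `r` steps. -/
noncomputable def expo (k r : ℕ) : ℝ :=
  2 * k * r - (k * (k + 1) / 2 : ℝ) * (1 - (1 - 1 / (k : ℝ)) ^ r)

lemma expo_ge {k : ℕ} (hk : 1 ≤ k) (r : ℕ) : (k * r : ℝ) ≤ expo k r := by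
  have hk' : (1 : ℝ) ≤ k := by exact_mod_cast hk
  have hk1 : 1 / (k : ℝ) ≤ 1 := by rw [div_le_one (by linarith)]; exact hk'
  have h := one_add_mul_le_pow (a := -(1 / (k : ℝ))) (by linarith) r
  have h2 : 1 - (1 - 1 / (k : ℝ)) ^ r ≤ r * (1 / k) := by
    rw [← sub_eq_add_neg] at h; linarith
  have h3 : (k * (k + 1) / 2 : ℝ) * (1 - (1 - 1 / (k : ℝ)) ^ r) ≤
      (k * (k + 1) / 2 : ℝ) * (r * (1 / k)) := by gcongr
  have h4 : (k * (k + 1) / 2 : ℝ) * (r * (1 / k)) = (k + 1) / 2 * r := by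
    field_simp
  have h5 : ((k : ℝ) + 1) / 2 * r ≤ k * r := by gcongr; linarith
  unfold expo
  linarith

lemma pow_mem_unit {k : ℕ} (hk : 1 ≤ k) (r : ℕ) :
    0 ≤ (1 - 1 / (k : ℝ)) ^ r ∧ (1 - 1 / (k : ℝ)) ^ r ≤ 1 := by
  have hk' : (1 : ℝ) ≤ k := by exact_mod_cast hk
  have hk1 : 1 / (k : ℝ) ≤ 1 := by rw [div_le_one (by linarith)]; exact hk'
  have hk2 : 0 < 1 / (k : ℝ) := by positivity
  exact ⟨pow_nonneg (by linarith) _, pow_le_one₀ (by linarith) (by linarith)⟩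

lemma expo_le {k : ℕ} (hk : 1 ≤ k) (r : ℕ) : expo k r ≤ 2 * k * r := by
  have := (pow_mem_unit hk r).2
  unfold expo
  have : 0 ≤ (k * (k + 1) / 2 : ℝ) * (1 - (1 - 1 / (k : ℝ)) ^ r) :=
    mul_nonneg (by positivity) (by linarith)
  linarith

lemma exists_modulus {k q P : ℕ} (hk : 1 ≤ k) (hq : 2 ≤ q) (hP : 1 ≤ P) :
    ∃ m, P ≤ (q ^ m) ^ k ∧ ((q ^ m : ℕ) : ℝ) ≤ q * (P : ℝ) ^ (1 / (k : ℝ)) := by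
  have hex : ∃ m, P ≤ (q ^ m) ^ k := by
    refine ⟨P, ?_⟩
    calc P ≤ q ^ P := (Nat.lt_pow_self (by omega)).le
      _ = (q ^ P) ^ 1 := by simp
      _ ≤ _ := Nat.pow_le_pow_right (by positivity) hk
  have hP1 : (1 : ℝ) ≤ (P : ℝ) ^ (1 / (k : ℝ)) :=
    Real.one_le_rpow (by exact_mod_cast hP) (by positivity)
  refine ⟨Nat.find hex, Nat.find_spec hex, ?_⟩
  rcases h : Nat.find hex with _ | m
  · have : (2 : ℝ) ≤ q := by exact_mod_cast hq
    simp only [pow_zero, Nat.cast_one]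
    nlinarith
  · have h1 : (q ^ m) ^ k < P := by
      by_contra hcon
      exact Nat.find_min hex (m := m) (by omega) (not_lt.mp hcon)
    have h2 : ((q : ℝ) ^ m) ≤ (P : ℝ) ^ (1 / (k : ℝ)) := by
      have h3 : (((q : ℝ) ^ m) ^ k) ^ (1 / (k : ℝ)) ≤ (P : ℝ) ^ (1 / (k : ℝ)) := by
        apply Real.rpow_le_rpow (by positivity) _ (by positivity)
        exact_mod_cast h1.le
      rwa [one_div, Real.pow_rpow_inv_natCast (by positivity) (by omega), ← one_div] at h3
    push_cast
    rw [pow_succ, mul_comm]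
    gcongr

lemma VJ_trivial (k n P : ℕ) : VJ k n (Ico 0 (P : ℤ)) ≤ P ^ (2 * n) := by
  refine (card_filter_le _ _).trans ?_
  rw [card_product, Fintype.card_piFinset]
  simp [two_mul, pow_add]

lemma VJ_zero (k : ℕ) (S : Finset ℤ) : VJ k 0 S = 1 := by
  unfold VJ
  rw [Finset.filter_true_of_mem]
  · rw [card_product, Fintype.card_piFinset]; simp
  · rintro ⟨x, y⟩ _
    have : x = y := Subsingleton.elim _ _
    simp [this]

/-- Constant exponent after `r` steps. -/
def cst (k r : ℕ) : ℕ := r * (k ^ 2 + 3 * k + 1 + 2 * k * r)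

set_option maxHeartbeats 2000000 in
/-- Iterating `VJ_rec`; the narrow term is absorbed by induction on `P`, as `q` is large. -/
theorem VJ_iter {k q : ℕ} (hk : 4 ≤ k) (hq : q.Prime) (hq1 : 2 * (2 * k) ^ 4 ≤ q)
    (hq2 : q ≤ 4 * (2 * k) ^ 4) (r : ℕ) : ∀ P : ℕ, 1 ≤ P →
    (VJ k (k * r) (Ico 0 (P : ℤ)) : ℝ) ≤ (2 * q : ℝ) ^ cst k r * (P : ℝ) ^ expo k r := by
  have hkR : (4 : ℝ) ≤ k := by exact_mod_cast hk
  have hqk : k < q := by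
    have : k ^ 1 ≤ k ^ 4 := Nat.pow_le_pow_right (by omega) (by omega)
    have : (2 * k) ^ 4 = 16 * k ^ 4 := by ring
    rw [pow_one] at *
    omega
  have hqR : (4 : ℝ) ≤ q := by exact_mod_cast (by omega : 4 ≤ q)
  have h2q : (1 : ℝ) ≤ 2 * q := by linarith
  induction r with
  | zero => intro P _; simp [VJ_zero, cst, expo]
  | succ r ihr =>
    intro P
    induction P using Nat.strong_induction_on with
    | _ P ihP =>
    intro hP
    have hPR : (1 : ℝ) ≤ P := by exact_mod_cast hP
    have he := expo_ge (show 1 ≤ k by omega) (r + 1)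
    have he0 : 0 ≤ expo k (r + 1) := le_trans (by positivity) he
    have hc : cst k r + (k ^ 2 + 3 * k + 2 * k * r) + 1 ≤ cst k (r + 1) := by
      unfold cst; nlinarith
    by_cases hPq : P < q
    · have h1 : (VJ k (k * (r + 1)) (Ico 0 (P : ℤ)) : ℝ) ≤ (P : ℝ) ^ (2 * (k * (r + 1))) := by
        exact_mod_cast VJ_trivial k (k * (r + 1)) P
      calc _ ≤ _ := h1
        _ ≤ (2 * q : ℝ) ^ (2 * (k * (r + 1))) := by
          gcongr
          have : (P : ℝ) < q := by exact_mod_cast hPq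
          linarith
        _ ≤ (2 * q : ℝ) ^ cst k (r + 1) := pow_le_pow_right₀ h2q (by
            unfold cst; have : 0 ≤ (r + 1) * (k ^ 2 + k + 1 + 2 * k * (r + 1)) := Nat.zero_le _
            nlinarith)
        _ ≤ _ := le_mul_of_one_le_right (by positivity) (Real.one_le_rpow hPR he0)
    · push Not at hPq
      obtain ⟨m, hm1, hm2⟩ := exists_modulus (k := k) (q := q) (P := P) (by omega) (by omega) hP
      set Q := q ^ m with hQ
      have hQ0 : 0 < Q := pow_pos hq.pos _
      have hQR : (0 : ℝ) < Q := by exact_mod_cast hQ0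
      have hrec := VJ_rec (s := k * r) (show 1 ≤ k by omega) hq hqk hQ hm1
      rw [show k * r + k = k * (r + 1) by ring] at hrec
      have hPqR : (q : ℝ) ≤ P := by exact_mod_cast hPq
      -- narrow part
      have hnar : (2 * k : ℝ) ^ (2 * (k * (r + 1))) *
          (q * VJ k (k * (r + 1)) (Ico 0 ((P / q + 1 : ℕ) : ℤ))) ≤
          1 / 2 * ((2 * q : ℝ) ^ cst k (r + 1) * (P : ℝ) ^ expo k (r + 1)) := by
        have hlt : P / q + 1 < P := by
          have h4 : P / q ≤ P / 4 := Nat.div_le_div_left (by omega) (by omega)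
          have h5 : 4 ≤ P := by omega
          omega
        have h1 := ihP _ hlt (Nat.le_add_left 1 _)
        have h2 : ((P / q + 1 : ℕ) : ℝ) ≤ P * (2 / q) := by
          push_cast
          have h3 : ((P / q : ℕ) : ℝ) ≤ P / q := Nat.cast_div_le
          have h4 : (1 : ℝ) ≤ P / q := by rw [le_div_iff₀ (by linarith)]; linarith
          calc _ ≤ (P : ℝ) / q + P / q := by linarith
            _ = _ := by ring
        have h3 : ((P / q + 1 : ℕ) : ℝ) ^ expo k (r + 1) ≤
            (P : ℝ) ^ expo k (r + 1) * (1 / (2 * k) ^ 4) ^ (k * (r + 1)) := by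
          have h4 : (2 : ℝ) / q ≤ 1 / (2 * k) ^ 4 := by
            rw [div_le_div_iff₀ (by linarith) (by positivity)]
            have : ((2 * (2 * k) ^ 4 : ℕ) : ℝ) ≤ q := by exact_mod_cast hq1
            push_cast at this; linarith
          have h5 : (1 : ℝ) / (2 * k) ^ 4 ≤ 1 := by
            rw [div_le_one (by positivity)]
            exact one_le_pow₀ (by linarith)
          calc _ ≤ (P * (2 / q) : ℝ) ^ expo k (r + 1) := by gcongr
            _ = (P : ℝ) ^ expo k (r + 1) * (2 / q : ℝ) ^ expo k (r + 1) :=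
              mul_rpow (by positivity) (by positivity)
            _ ≤ (P : ℝ) ^ expo k (r + 1) * (1 / (2 * k) ^ 4 : ℝ) ^ expo k (r + 1) := by gcongr
            _ ≤ _ := by
              gcongr
              rw [← rpow_natCast _ (k * (r + 1))]
              apply Real.rpow_le_rpow_of_exponent_ge (by positivity) h5
              push_cast; push_cast at he; exact he
        have h6 : (2 * k : ℝ) ^ (2 * (k * (r + 1))) * (q * (1 / (2 * k) ^ 4) ^ (k * (r + 1))) ≤ 1 / 2 := by
          have e1 : (2 * k : ℝ) ^ (2 * (k * (r + 1))) * (q * (1 / (2 * k) ^ 4) ^ (k * (r + 1))) =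
              q / (2 * k : ℝ) ^ (2 * (k * (r + 1))) := by
            rw [div_pow, one_pow, ← pow_mul, show 4 * (k * (r + 1)) = 2 * (k * (r + 1)) + 2 * (k * (r + 1)) by ring,
              pow_add]
            field_simp
          rw [e1, div_le_iff₀ (by positivity)]
          have h7 : (2 * k : ℝ) ^ 8 ≤ (2 * k : ℝ) ^ (2 * (k * (r + 1))) := by
            apply pow_le_pow_right₀ (by linarith)
            nlinarith
          have h8 : (q : ℝ) ≤ 4 * (2 * k) ^ 4 := by exact_mod_cast hq2
          have h9 : (8 : ℝ) ≤ (2 * k) ^ 4 := by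
            calc (8 : ℝ) ≤ 8 ^ 4 := by norm_num
              _ ≤ _ := by gcongr; linarith
          have h10 : (2 * k : ℝ) ^ 8 = (2 * k) ^ 4 * (2 * k) ^ 4 := by ring
          nlinarith
        calc _ ≤ (2 * k : ℝ) ^ (2 * (k * (r + 1))) * (q * ((2 * q : ℝ) ^ cst k (r + 1) *
              ((P : ℝ) ^ expo k (r + 1) * (1 / (2 * k) ^ 4) ^ (k * (r + 1))))) := by
                gcongr ?_ * (?_ * ?_)
                exact h1.trans (mul_le_mul_of_nonneg_left h3 (by positivity))
          _ = ((2 * k : ℝ) ^ (2 * (k * (r + 1))) * (q * (1 / (2 * k) ^ 4) ^ (k * (r + 1)))) *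
              ((2 * q : ℝ) ^ cst k (r + 1) * (P : ℝ) ^ expo k (r + 1)) := by ring
          _ ≤ _ := by gcongr
      have hbr : (2 * q : ℝ) ^ (2 * k) * (q ^ k * (Q ^ (2 * (k * r)) * (P ^ k * Q ^ (k * (k - 1) / 2) *
        VJ k (k * r) (Ico 0 ((P / Q + 1 : ℕ) : ℤ))))) ≤
          1 / 2 * ((2 * q : ℝ) ^ cst k (r + 1) * (P : ℝ) ^ expo k (r + 1)) := by
        have h1 := ihr (P / Q + 1) (Nat.le_add_left 1 _)
        have hroot : (P : ℝ) ^ (1 / (k : ℝ)) ≤ P := by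
          calc (P : ℝ) ^ (1 / (k : ℝ)) ≤ (P : ℝ) ^ (1 : ℝ) := by
                apply rpow_le_rpow_of_exponent_le hPR
                rw [div_le_one (by linarith)]; linarith
            _ = P := rpow_one _
        have h2 : ((P / Q + 1 : ℕ) : ℝ) ≤ (2 * q) * (P / Q) := by
          push_cast
          have h3 : ((P / Q : ℕ) : ℝ) ≤ P / Q := Nat.cast_div_le
          have h4 : (1 : ℝ) ≤ q * (P / Q) := by
            rw [mul_div_assoc', le_div_iff₀ hQR, one_mul]
            exact hm2.trans (by gcongr)
          have h5 : (P : ℝ) / Q ≤ q * (P / Q) := le_mul_of_one_le_left (by positivity) (by linarith)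
          linarith
        have her := expo_ge (show 1 ≤ k by omega) r
        have her' := expo_le (show 1 ≤ k by omega) r
        have her0 : 0 ≤ expo k r := le_trans (by positivity) her
        have h3 : ((P / Q + 1 : ℕ) : ℝ) ^ expo k r ≤
            (2 * q : ℝ) ^ (2 * k * r) * ((P : ℝ) ^ expo k r * (Q : ℝ) ^ (-expo k r)) := by
          calc _ ≤ ((2 * q) * (P / Q) : ℝ) ^ expo k r := by gcongr
            _ = (2 * q : ℝ) ^ expo k r * ((P : ℝ) ^ expo k r * (Q : ℝ) ^ (-expo k r)) := by
              rw [mul_rpow (by positivity) (by positivity),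
                Real.div_rpow (by positivity) (by positivity), Real.rpow_neg (by positivity)]
              rfl
            _ ≤ _ := by
              gcongr
              rw [← rpow_natCast]
              apply rpow_le_rpow_of_exponent_le h2q
              push_cast; exact her'
        -- the exponent of `Q` is `k² - δ_r ≥ 0`
        set t : ℝ := (1 - 1 / (k : ℝ)) ^ r with ht
        obtain ⟨ht0, ht1⟩ := pow_mem_unit (show 1 ≤ k by omega) r
        rw [← ht] at ht0 ht1
        have hex : expo k r = 2 * k * r - (k * (k + 1) / 2 : ℝ) * (1 - t) := rfl
        have hex' : expo k (r + 1) = 2 * k * (r + 1) - (k * (k + 1) / 2 : ℝ) * (1 - t * (1 - 1 / k)) := by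
          unfold expo; rw [pow_succ]; push_cast; rfl
        have hQe : (Q : ℝ) ^ (2 * (k * r)) * Q ^ (k * (k - 1) / 2) * (Q : ℝ) ^ (-expo k r) =
            (Q : ℝ) ^ ((k : ℝ) ^ 2 - (k * (k + 1) / 2 : ℝ) * t) := by
          rw [← rpow_natCast, ← rpow_natCast, ← rpow_add hQR, ← rpow_add hQR]
          congr 1
          have hdv : ((k * (k - 1) / 2 : ℕ) : ℝ) = k * (k - 1) / 2 := by
            have : 2 ∣ k * (k - 1) := (Nat.even_mul_pred_self k).two_dvd
            rw [Nat.cast_div this (by norm_num), Nat.cast_mul, Nat.cast_sub (by omega)]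
            simp
          rw [hdv, hex]; push_cast; ring
        have hexp0 : 0 ≤ (k : ℝ) ^ 2 - (k * (k + 1) / 2 : ℝ) * t := by
          have : (k * (k + 1) / 2 : ℝ) * t ≤ (k * (k + 1) / 2 : ℝ) * 1 := by gcongr
          nlinarith
        have hQb : (Q : ℝ) ^ ((k : ℝ) ^ 2 - (k * (k + 1) / 2 : ℝ) * t) ≤
            (2 * q : ℝ) ^ (k ^ 2) * (P : ℝ) ^ ((k : ℝ) - (k + 1) / 2 * t) := by
          calc _ ≤ (q * (P : ℝ) ^ (1 / (k : ℝ))) ^ ((k : ℝ) ^ 2 - (k * (k + 1) / 2 : ℝ) * t) := by gcongr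
            _ = (q : ℝ) ^ ((k : ℝ) ^ 2 - (k * (k + 1) / 2 : ℝ) * t) *
                (P : ℝ) ^ ((k : ℝ) - (k + 1) / 2 * t) := by
              rw [mul_rpow (by positivity) (by positivity), ← rpow_mul (by positivity)]
              congr 2
              field_simp
            _ ≤ (2 * q : ℝ) ^ ((k : ℝ) ^ 2) * (P : ℝ) ^ ((k : ℝ) - (k + 1) / 2 * t) := by
              gcongr
              calc _ ≤ (q : ℝ) ^ ((k : ℝ) ^ 2) := by
                    apply rpow_le_rpow_of_exponent_le (by linarith)
                    have : 0 ≤ (k * (k + 1) / 2 : ℝ) * t := by positivity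
                    linarith
                _ ≤ _ := by gcongr; linarith
            _ = _ := by norm_cast
        have hPe : (P : ℝ) ^ k * (P : ℝ) ^ expo k r * (P : ℝ) ^ ((k : ℝ) - (k + 1) / 2 * t) =
            (P : ℝ) ^ expo k (r + 1) := by
          rw [← rpow_natCast, ← rpow_add (by linarith), ← rpow_add (by linarith)]
          congr 1
          rw [hex, hex']; field_simp; ring
        calc _ ≤ (2 * q : ℝ) ^ (2 * k) * ((2 * q) ^ k * (Q ^ (2 * (k * r)) *
              (P ^ k * Q ^ (k * (k - 1) / 2) * ((2 * q : ℝ) ^ cst k r *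
              ((2 * q : ℝ) ^ (2 * k * r) * ((P : ℝ) ^ expo k r * (Q : ℝ) ^ (-expo k r))))))) := by
              gcongr ?_ * (?_ * (?_ * (?_ * ?_)))
              · gcongr; linarith
              · exact h1.trans (mul_le_mul_of_nonneg_left h3 (by positivity))
          _ = (2 * q : ℝ) ^ (2 * k) * (2 * q) ^ k * (2 * q : ℝ) ^ cst k r * (2 * q : ℝ) ^ (2 * k * r) *
              ((P : ℝ) ^ k * (P : ℝ) ^ expo k r) *
              ((Q : ℝ) ^ (2 * (k * r)) * Q ^ (k * (k - 1) / 2) * (Q : ℝ) ^ (-expo k r)) := by ring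
          _ ≤ (2 * q : ℝ) ^ (2 * k) * (2 * q) ^ k * (2 * q : ℝ) ^ cst k r * (2 * q : ℝ) ^ (2 * k * r) *
              ((P : ℝ) ^ k * (P : ℝ) ^ expo k r) *
              ((2 * q : ℝ) ^ (k ^ 2) * (P : ℝ) ^ ((k : ℝ) - (k + 1) / 2 * t)) := by
              rw [hQe]; gcongr
          _ = (2 * q : ℝ) ^ (cst k r + (k ^ 2 + 3 * k + 2 * k * r)) * (P : ℝ) ^ expo k (r + 1) := by
              rw [← hPe, show cst k r + (k ^ 2 + 3 * k + 2 * k * r) =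
                2 * k + k + cst k r + 2 * k * r + k ^ 2 by ring]
              simp only [pow_add]; ring
          _ ≤ 1 / 2 * ((2 * q : ℝ) ^ cst k (r + 1)) * (P : ℝ) ^ expo k (r + 1) := by
              gcongr
              have h5 : (2 * q : ℝ) ^ (cst k r + (k ^ 2 + 3 * k + 2 * k * r) + 1) ≤
                (2 * q : ℝ) ^ cst k (r + 1) := pow_le_pow_right₀ h2q hc
              rw [pow_succ] at h5
              have : 0 ≤ (2 * q : ℝ) ^ (cst k r + (k ^ 2 + 3 * k + 2 * k * r)) := by positivity
              nlinarith
          _ = _ := by ring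
      linarith

/-- Vinogradov's mean value theorem with `s = k³` and an explicit constant. -/
theorem VJ_bound {k : ℕ} (hk : 10 ≤ k) (P : ℕ) (hP : 1 ≤ P) :
    (VJ k (k ^ 3) (Ico 0 (P : ℤ)) : ℝ) ≤
      (k : ℝ) ^ (28 * k ^ 5) * (P : ℝ) ^ (2 * k ^ 3 - k * (k + 1) / 2 + 1 / 8 : ℝ) := by
  obtain ⟨q, hq, hq1, hq2⟩ := Nat.exists_prime_lt_and_le_two_mul (2 * (2 * k) ^ 4) (by positivity)
  have h := VJ_iter (show 4 ≤ k by omega) hq hq1.le (by omega) (k ^ 2) P hP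
  have hkR : (10 : ℝ) ≤ k := by exact_mod_cast hk
  rw [show k * k ^ 2 = k ^ 3 by ring] at h
  refine h.trans ?_
  gcongr ?_ * ?_
  · have h1 : (2 * q : ℝ) ≤ (k : ℝ) ^ 7 := by
      have h2 : (q : ℝ) ≤ 2 * (2 * (2 * k) ^ 4) := by exact_mod_cast hq2
      have h3 : (10 : ℝ) ^ 3 ≤ (k : ℝ) ^ 3 := by gcongr
      have h4 : (k : ℝ) ^ 7 = k ^ 3 * k ^ 4 := by ring
      have h5 : (2 * k : ℝ) ^ 4 = 16 * k ^ 4 := by ring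
      have h6 : 0 < (k : ℝ) ^ 4 := by positivity
      nlinarith
    calc (2 * q : ℝ) ^ cst k (k ^ 2) ≤ ((k : ℝ) ^ 7) ^ cst k (k ^ 2) := by gcongr
      _ = (k : ℝ) ^ (7 * cst k (k ^ 2)) := by rw [pow_mul]
      _ ≤ _ := by
        apply pow_le_pow_right₀ (by linarith)
        have : cst k (k ^ 2) ≤ 4 * k ^ 5 := by
          unfold cst
          have : k ^ 2 + 3 * k + 1 + 2 * k * k ^ 2 ≤ 4 * k ^ 3 := by nlinarith
          calc _ ≤ k ^ 2 * (4 * k ^ 3) := by gcongr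
            _ = _ := by ring
        omega
  · apply rpow_le_rpow_of_exponent_le (by exact_mod_cast hP)
    have h1 : (1 - 1 / (k : ℝ)) ^ (k ^ 2) ≤ exp (-k) := by
      have h2 := Real.one_sub_div_pow_le_exp_neg (n := k) (t := 1) (by linarith)
      have h3 : 0 ≤ 1 - 1 / (k : ℝ) := by
        rw [sub_nonneg, div_le_one (by linarith)]; linarith
      calc (1 - 1 / (k : ℝ)) ^ (k ^ 2) = ((1 - 1 / (k : ℝ)) ^ k) ^ k := by rw [← pow_mul]; ring_nf
        _ ≤ (exp (-1)) ^ k := by gcongr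
        _ = _ := by rw [← Real.exp_nat_mul]; ring_nf
    have h2 : (k * (k + 1) / 2 : ℝ) * exp (-k) ≤ 1 / 8 := by
      have h3 := Real.pow_div_factorial_le_exp (k : ℝ) (by linarith) 5
      rw [Real.exp_neg, ← div_eq_mul_inv, div_le_iff₀ (Real.exp_pos _)]
      norm_num [Nat.factorial] at h3
      have h5 : (10 : ℝ) ^ 3 ≤ (k : ℝ) ^ 3 := by gcongr
      have h6 : (k : ℝ) ^ 5 = k ^ 3 * (k * k) := by ring
      nlinarith [mul_pos (show (0 : ℝ) < k by linarith) (show (0 : ℝ) < k by linarith)]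
    have h3 : (k * (k + 1) / 2 : ℝ) * (1 - 1 / (k : ℝ)) ^ (k ^ 2) ≤
      (k * (k + 1) / 2 : ℝ) * exp (-k) := by gcongr
    unfold expo
    push_cast
    have : (2 * k * (k : ℝ) ^ 2) = 2 * k ^ 3 := by ring
    linarith

/-! ### Bilinear sums and the sums of `n^{it}` -/

lemma norm_sum_pow_le {ι : Type*} (I : Finset ι) (z : ι → ℝ) (hz : ∀ i ∈ I, 0 ≤ z i) (n : ℕ) :
    (∑ i ∈ I, z i) ^ (n + 1) ≤ (#I : ℝ) ^ n * ∑ i ∈ I, z i ^ (n + 1) := by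
  rcases I.eq_empty_or_nonempty with rfl | hI
  · simp
  · have h1 := pow_sum_div_card_le_sum_pow (s := I) (f := z) hz n
    have hc : (0 : ℝ) < #I := by exact_mod_cast hI.card_pos
    rw [div_le_iff₀ (by positivity)] at h1
    linarith

/-- The character `w ↦ exp(i ∑ θⱼ wⱼ)` of `ℤᵏ`. -/
noncomputable def chi {k : ℕ} (θ : Fin k → ℝ) : AddChar (Fin k → ℤ) ℂ where
  toFun w := Complex.exp (I * ((∑ j, θ j * w j : ℝ) : ℂ))
  map_zero_eq_one' := by simp
  map_add_eq_mul' := by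
    intro a b
    rw [← Complex.exp_add]
    congr 1
    rw [← mul_add, ← Complex.ofReal_add, ← sum_add_distrib]
    congr 2
    refine sum_congr rfl fun j _ => ?_
    simp only [Pi.add_apply]; push_cast; ring

lemma chi_apply {k : ℕ} (θ : Fin k → ℝ) (w : Fin k → ℤ) :
    chi θ w = Complex.exp (I * ((∑ j, θ j * w j : ℝ) : ℂ)) := rfl

lemma norm_chi {k : ℕ} (θ : Fin k → ℝ) (w : Fin k → ℤ) : ‖chi θ w‖ = 1 := by
  rw [chi_apply, mul_comm, Complex.norm_exp_ofReal_mul_I]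

lemma chi_pow_eq {k : ℕ} (θ : Fin k → ℝ) (S : Finset ℤ) (s : ℕ) :
    ((‖∑ x ∈ S, chi θ (crv k x)‖ ^ (2 * s) : ℝ) : ℂ) =
      ∑ p ∈ Fintype.piFinset (fun _ : Fin s => S) ×ˢ Fintype.piFinset (fun _ : Fin s => S),
        chi θ (mom k p.1 - mom k p.2) := by
  have h : ∑ x ∈ Fintype.piFinset (fun _ : Fin s => S), chi θ (mom k x) =
      (∑ x ∈ S, chi θ (crv k x)) ^ s := by rw [char_prod]; simp
  rw [pow_mul', ← norm_pow, ← h]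
  push_cast
  rw [← Complex.mul_conj', map_sum, sum_mul_sum, sum_product]
  refine sum_congr rfl fun a _ => sum_congr rfl fun b _ => ?_
  rw [sub_eq_add_neg, AddChar.map_add_eq_mul, AddChar.map_neg_eq_inv]
  congr 1
  rw [Complex.inv_def, Complex.normSq_eq_norm_sq, norm_chi]; simp

lemma sum_mom_le {k s : ℕ} (S : Finset ℤ) (V : Finset (Fin k → ℤ)) (F : (Fin k → ℤ) → ℝ)
    (hF : ∀ v, 0 ≤ F v)
    (hV : ∀ x ∈ Fintype.piFinset (fun _ : Fin s => S), ∀ y ∈ Fintype.piFinset (fun _ : Fin s => S),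
      mom k x - mom k y ∈ V) :
    ∑ p ∈ Fintype.piFinset (fun _ : Fin s => S) ×ˢ Fintype.piFinset (fun _ : Fin s => S),
      F (mom k p.1 - mom k p.2) ≤ VJ k s S * ∑ v ∈ V, F v := by
  rw [← Finset.sum_fiberwise_of_maps_to (t := V) (g := fun p => mom k p.1 - mom k p.2)
    (fun p hp => hV _ (mem_product.mp hp).1 _ (mem_product.mp hp).2), mul_sum]
  refine sum_le_sum fun v _ => ?_
  rw [sum_congr rfl (g := fun _ => F v)]
  · rw [sum_const, nsmul_eq_mul]
    refine mul_le_mul_of_nonneg_right ?_ (hF v)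
    have h1 := card_shift_le (Fintype.piFinset (fun _ : Fin s => S)) (fun u => mom k u) v
    have h2 : #{p ∈ Fintype.piFinset (fun _ : Fin s => S) ×ˢ Fintype.piFinset (fun _ : Fin s => S) |
        mom k p.1 - mom k p.2 = v} ≤ VJ k s S := by
      refine le_trans (le_of_eq ?_) h1
      congr 1
      ext p
      simp only [mem_filter, and_congr_right_iff]
      intro _
      rw [sub_eq_iff_eq_add, add_comm]
    exact_mod_cast h2
  · intro p hp
    rw [(mem_filter.mp hp).2]

/-- The integers of absolute value at most `s A^(j+1)`. -/
noncomputable def rng (s A j : ℕ) : Finset ℤ :=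
  Finset.Icc (-((s * A ^ (j + 1) : ℕ) : ℤ)) ((s * A ^ (j + 1) : ℕ) : ℤ)

/-- Sum over `w` of the linear exponential sums with frequency `γ w`. -/
noncomputable def linS (γ : ℝ) (s A j : ℕ) : ℝ :=
  ∑ w ∈ rng s A j, ‖∑ v ∈ rng s A j, Complex.exp (I * ((γ * v * w : ℝ) : ℂ))‖

lemma mom_mem_rng {k s A : ℕ} (x y : Fin s → ℤ)
    (hx : x ∈ Fintype.piFinset (fun _ : Fin s => Ico 0 (A : ℤ)))
    (hy : y ∈ Fintype.piFinset (fun _ : Fin s => Ico 0 (A : ℤ))) :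
    mom k x - mom k y ∈ Fintype.piFinset (fun j : Fin k => rng s A j.1) := by
  have h : ∀ x ∈ Fintype.piFinset (fun _ : Fin s => Ico 0 (A : ℤ)), ∀ j : Fin k,
      0 ≤ mom k x j ∧ mom k x j ≤ (s * A ^ (j.1 + 1) : ℕ) := by
    intro x hx j
    rw [Fintype.mem_piFinset] at hx
    constructor
    · exact sum_nonneg fun i _ => pow_nonneg (mem_Ico.mp (hx i)).1 _
    · have : ∀ i ∈ (univ : Finset (Fin s)), x i ^ (j.1 + 1) ≤ (A : ℤ) ^ (j.1 + 1) := by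
        intro i _
        have := mem_Ico.mp (hx i)
        exact pow_le_pow_left₀ this.1 this.2.le _
      have := sum_le_card_nsmul _ _ _ this
      simp only [card_univ, Fintype.card_fin, nsmul_eq_mul] at this
      unfold mom; push_cast; exact this
  rw [Fintype.mem_piFinset]
  intro j
  rw [rng, mem_Icc, Pi.sub_apply]
  have := h x hx j; have := h y hy j
  constructor <;> linarith

/-- Vinogradov's double Hölder argument for the bilinear sum. -/
theorem bilinear_bound {k s A : ℕ} (hs : 1 ≤ s) (Γ : Fin k → ℝ) :
    ‖∑ a ∈ Ico 0 (A : ℤ), ∑ b ∈ Ico 0 (A : ℤ),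
      Complex.exp (I * ((∑ j : Fin k, Γ j * ((a : ℝ) ^ (j.1 + 1) * (b : ℝ) ^ (j.1 + 1)) : ℝ) : ℂ))‖
      ^ (2 * s * (2 * s)) ≤
    (A : ℝ) ^ (4 * s * (2 * s - 1)) * (VJ k s (Ico 0 (A : ℤ)) : ℝ) ^ 2 *
      ∏ j : Fin k, linS (Γ j) s A j.1 := by
  set S := Ico 0 (A : ℤ) with hS
  have hcardS : (#S : ℝ) = A := by simp [hS]
  set X := Fintype.piFinset (fun _ : Fin s => S) with hX
  have hcardX : (#(X ×ˢ X) : ℝ) = (A : ℝ) ^ (2 * s) := by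
    rw [card_product, hX, Fintype.card_piFinset]
    simp [hcardS, two_mul, pow_add]
  set V := Fintype.piFinset (fun j : Fin k => rng s A j.1) with hV
  set J : ℝ := (VJ k s S : ℝ) with hJ
  have hmem : ∀ x ∈ X, ∀ y ∈ X, mom k x - mom k y ∈ V := fun x hx y hy => mom_mem_rng x y hx hy
  -- `tb b v = (Γ_j b^{j+1})`, `tv v = (Γ_j v_j)`
  set H : (Fin k → ℤ) → ℂ := fun v => ∑ b ∈ S, chi (fun j => Γ j * v j) (crv k b) with hH
  have hsw : ∀ (b : ℤ) (v : Fin k → ℤ),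
      chi (fun j => Γ j * (b : ℝ) ^ (j.1 + 1)) v = chi (fun j => Γ j * v j) (crv k b) := by
    intro b v
    rw [chi_apply, chi_apply]
    congr 3
    refine sum_congr rfl fun j _ => ?_
    simp only [crv]; push_cast; ring
  have hT : ∑ a ∈ S, ∑ b ∈ S,
      Complex.exp (I * ((∑ j : Fin k, Γ j * ((a : ℝ) ^ (j.1 + 1) * (b : ℝ) ^ (j.1 + 1)) : ℝ) : ℂ))
      = ∑ b ∈ S, ∑ a ∈ S, chi (fun j => Γ j * (b : ℝ) ^ (j.1 + 1)) (crv k a) := by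
    rw [sum_comm]
    refine sum_congr rfl fun b _ => sum_congr rfl fun a _ => ?_
    rw [chi_apply]
    congr 3
    refine sum_congr rfl fun j _ => ?_
    simp only [crv]; push_cast; ring
  rw [hT]
  obtain ⟨m, hm⟩ : ∃ m, 2 * s = m + 1 := ⟨2 * s - 1, by omega⟩
  have step1 : ‖∑ b ∈ S, ∑ a ∈ S, chi (fun j => Γ j * (b : ℝ) ^ (j.1 + 1)) (crv k a)‖ ^ (2 * s) ≤
      (A : ℝ) ^ m * ∑ p ∈ X ×ˢ X, ‖H (mom k p.1 - mom k p.2)‖ := by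
    calc _ ≤ (∑ b ∈ S, ‖∑ a ∈ S, chi (fun j => Γ j * (b : ℝ) ^ (j.1 + 1)) (crv k a)‖) ^ (2 * s) := by
          gcongr; exact norm_sum_le _ _
      _ ≤ (A : ℝ) ^ m *
          ∑ b ∈ S, ‖∑ a ∈ S, chi (fun j => Γ j * (b : ℝ) ^ (j.1 + 1)) (crv k a)‖ ^ (2 * s) := by
          rw [hm, ← hcardS]
          exact norm_sum_pow_le _ _ (fun _ _ => norm_nonneg _) _
      _ ≤ _ := by
          gcongr
          rw [← Complex.norm_of_nonneg (sum_nonneg fun b _ => by positivity), Complex.ofReal_sum]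
          simp_rw [chi_pow_eq]
          rw [sum_comm]
          simp_rw [hsw]
          exact norm_sum_le _ _
  have step2 : (∑ p ∈ X ×ˢ X, ‖H (mom k p.1 - mom k p.2)‖) ^ (2 * s) ≤
      ((A : ℝ) ^ (2 * s)) ^ m * (J * ∑ v ∈ V, ‖H v‖ ^ (2 * s)) := by
    calc _ ≤ ((A : ℝ) ^ (2 * s)) ^ m * ∑ p ∈ X ×ˢ X, ‖H (mom k p.1 - mom k p.2)‖ ^ (2 * s) := by
          rw [← hcardX, hm]
          exact norm_sum_pow_le _ _ (fun _ _ => norm_nonneg _) _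
      _ ≤ _ := by
          gcongr
          exact sum_mom_le S V (fun v => ‖H v‖ ^ (2 * s)) (fun _ => by positivity) hmem
  have step3 : ∑ v ∈ V, ‖H v‖ ^ (2 * s) ≤ J * ∏ j : Fin k, linS (Γ j) s A j.1 := by
    have e1 : ∑ v ∈ V, ‖H v‖ ^ (2 * s) ≤ ∑ p ∈ X ×ˢ X,
        ‖∑ v ∈ V, chi (fun j => Γ j * v j) (mom k p.1 - mom k p.2)‖ := by
      rw [← Complex.norm_of_nonneg (sum_nonneg fun b _ => by positivity), Complex.ofReal_sum]
      simp_rw [hH, chi_pow_eq]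
      rw [sum_comm]
      exact norm_sum_le _ _
    refine e1.trans ((sum_mom_le S V
      (fun w => ‖∑ v ∈ V, chi (fun j => Γ j * v j) w‖) (fun _ => norm_nonneg _) hmem).trans ?_)
    gcongr
    have e2 : ∀ w : Fin k → ℤ, ‖∑ v ∈ V, chi (fun j => Γ j * v j) w‖ =
        ∏ j : Fin k, ‖∑ v ∈ rng s A j.1, Complex.exp (I * ((Γ j * v * w j : ℝ) : ℂ))‖ := by
      intro w
      rw [← norm_prod, prod_univ_sum]
      congr 1
      refine sum_congr rfl fun v _ => ?_
      rw [chi_apply, ← Complex.exp_sum, ← mul_sum]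
      push_cast; rfl
    simp_rw [e2]
    unfold linS
    rw [prod_univ_sum]
  calc _ = (‖∑ b ∈ S, ∑ a ∈ S, chi (fun j => Γ j * (b : ℝ) ^ (j.1 + 1)) (crv k a)‖ ^ (2 * s)) ^ (2 * s) := by
        rw [← pow_mul]
    _ ≤ ((A : ℝ) ^ m * ∑ p ∈ X ×ˢ X, ‖H (mom k p.1 - mom k p.2)‖) ^ (2 * s) := by gcongr
    _ = (A : ℝ) ^ (m * (2 * s)) * (∑ p ∈ X ×ˢ X, ‖H (mom k p.1 - mom k p.2)‖) ^ (2 * s) := by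
        rw [mul_pow, ← pow_mul]
    _ ≤ (A : ℝ) ^ (m * (2 * s)) * (((A : ℝ) ^ (2 * s)) ^ m * (J * (J *
        ∏ j : Fin k, linS (Γ j) s A j.1))) := by
        gcongr; refine step2.trans ?_; gcongr
    _ = _ := by
        have : 4 * s * (2 * s - 1) = m * (2 * s) + 2 * s * m := by
          rw [hm, Nat.add_sub_cancel, ← hm]; ring
        rw [this, pow_add, ← pow_mul]; ring

lemma norm_geom_le (φ : ℝ) (h0 : φ ≠ 0) (h1 : |φ| ≤ π) (X : ℤ) (hX : 0 ≤ X) :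
    ‖∑ v ∈ Icc (-X) X, Complex.exp (I * ((φ * v : ℝ) : ℂ))‖ ≤ π / |φ| := by
  have hpos : 0 < |φ| := abs_pos.2 h0
  have htel : ∀ n : ℕ, (Complex.exp (I * φ) - 1) *
      ∑ v ∈ Ico (-X) (-X + n), Complex.exp (I * ((φ * v : ℝ) : ℂ)) =
      Complex.exp (I * ((φ * (-X + n : ℤ) : ℝ) : ℂ)) -
        Complex.exp (I * ((φ * (-X : ℤ) : ℝ) : ℂ)) := by
    intro n
    induction n with
    | zero => simp
    | succ n ih =>
      have : Ico (-X) (-X + (n + 1 : ℕ)) = insert (-X + (n : ℤ)) (Ico (-X) (-X + n)) := by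
        ext v; simp only [mem_Ico, Finset.mem_insert]; push_cast; omega
      rw [this, Finset.sum_insert (by simp), mul_add, ih]
      have e : Complex.exp (I * ((φ * (-X + (n + 1 : ℕ) : ℤ) : ℝ) : ℂ)) =
        Complex.exp (I * φ) * Complex.exp (I * ((φ * (-X + n : ℤ) : ℝ) : ℂ)) := by
        rw [← Complex.exp_add]; congr 1; push_cast; ring
      rw [e]; ring
  have hset : Icc (-X) X = Ico (-X) (-X + ((2 * X + 1).toNat : ℕ)) := by
    ext v; simp only [mem_Ico, mem_Icc]; omega
  have h := htel (2 * X + 1).toNat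
  rw [← hset] at h
  have hn := congrArg norm h
  rw [norm_mul] at hn
  have hle : ‖Complex.exp (I * ((φ * (-X + ((2 * X + 1).toNat : ℕ) : ℤ) : ℝ) : ℂ)) -
        Complex.exp (I * ((φ * (-X : ℤ) : ℝ) : ℂ))‖ ≤ 2 := by
    refine (norm_sub_le _ _).trans ?_
    rw [Complex.norm_exp_I_mul_ofReal, Complex.norm_exp_I_mul_ofReal]; norm_num
  have hlow : 2 * |φ| / π ≤ ‖Complex.exp (I * φ) - 1‖ := by
    rw [Complex.norm_exp_I_mul_ofReal_sub_one, norm_mul, Real.norm_eq_abs, Real.norm_eq_abs]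
    have hs : 2 / π * (|φ| / 2) ≤ Real.sin (|φ| / 2) :=
      Real.mul_le_sin (by positivity) (by linarith)
    have h2 : |Real.sin (φ / 2)| = |Real.sin (|φ| / 2)| := by
      rcases abs_cases φ with ⟨h, _⟩ | ⟨h, _⟩ <;> rw [h]
      rw [neg_div, Real.sin_neg, abs_neg]
    rw [h2]
    have h3 := le_abs_self (Real.sin (|φ| / 2))
    calc 2 * |φ| / π = 2 * (2 / π * (|φ| / 2)) := by ring
      _ ≤ 2 * |Real.sin (|φ| / 2)| := by linarith
      _ = _ := by norm_num
  set S := ‖∑ v ∈ Icc (-X) X, Complex.exp (I * ((φ * v : ℝ) : ℂ))‖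
  have h4 : 2 * |φ| / π * S ≤ 2 := by
    refine le_trans (mul_le_mul_of_nonneg_right hlow (norm_nonneg _)) ?_
    rw [hn]; exact hle
  rw [le_div_iff₀ hpos]
  have hp := Real.pi_pos
  have : 2 * |φ| / π * S = 2 * (S * |φ|) / π := by ring
  rw [this, div_le_iff₀ hp] at h4
  linarith

lemma card_rng_le (s A j : ℕ) (h : 1 ≤ s * A ^ (j + 1)) :
    ((rng s A j).card : ℝ) ≤ 3 * (s * A ^ (j + 1) : ℕ) := by
  unfold rng
  have h' : (1 : ℤ) ≤ s * A ^ (j + 1) := by exact_mod_cast h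
  have : ((Icc (-((s * A ^ (j + 1) : ℕ) : ℤ)) ((s * A ^ (j + 1) : ℕ) : ℤ)).card : ℤ) ≤ 3 * (s * A ^ (j + 1) : ℕ) := by
    rw [Int.card_Icc]; push_cast; omega
  exact_mod_cast this

lemma norm_inner_le (γ : ℝ) (s A j : ℕ) (h : 1 ≤ s * A ^ (j + 1)) (w : ℤ) :
    ‖∑ v ∈ rng s A j, Complex.exp (I * ((γ * v * w : ℝ) : ℂ))‖ ≤
      3 * (s * A ^ (j + 1) : ℕ) := by
  refine (norm_sum_le _ _).trans ?_
  simp_rw [Complex.norm_exp_I_mul_ofReal]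
  simpa using card_rng_le s A j h

lemma linS_nonneg (γ : ℝ) (s A j : ℕ) : 0 ≤ linS γ s A j :=
  sum_nonneg fun _ _ => norm_nonneg _

lemma linS_le (γ : ℝ) (s A j : ℕ) (h : 1 ≤ s * A ^ (j + 1)) :
    linS γ s A j ≤ (3 * (s * A ^ (j + 1) : ℕ)) ^ 2 := by
  unfold linS
  refine (sum_le_card_nsmul _ _ _ fun w _ => norm_inner_le γ s A j h w).trans ?_
  rw [nsmul_eq_mul, sq]
  gcongr
  exact card_rng_le s A j h

/-- The inner sum is bounded trivially for `|w| ≤ |γ|^(-1/2)` and as a geometric sum otherwise. -/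
lemma linS_gain (γ : ℝ) (s A j : ℕ) (h : 1 ≤ s * A ^ (j + 1)) (h0 : γ ≠ 0)
    (h1 : |γ| * (s * A ^ (j + 1) : ℕ) ≤ 1) :
    linS γ s A j ≤ 21 * (s * A ^ (j + 1) : ℕ) / √|γ| := by
  set X : ℕ := s * A ^ (j + 1) with hX
  have hXr : (1 : ℝ) ≤ X := by exact_mod_cast h
  have hg : 0 < |γ| := abs_pos.2 h0
  have hg1 : |γ| ≤ 1 := by nlinarith
  set r := √|γ| with hr
  have hr0 : 0 < r := Real.sqrt_pos.2 hg
  have hr2 : r * r = |γ| := Real.mul_self_sqrt hg.le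
  have hr1 : r ≤ 1 := by nlinarith
  have hW : 1 ≤ 1 / r := by rw [le_div_iff₀ hr0]; linarith
  unfold linS
  rw [← Finset.sum_filter_add_sum_filter_not _ (fun w : ℤ => (|w| : ℝ) ≤ 1 / r)]
  have p1 : ∑ w ∈ (rng s A j).filter (fun w : ℤ => (|w| : ℝ) ≤ 1 / r),
      ‖∑ v ∈ rng s A j, Complex.exp (I * ((γ * v * w : ℝ) : ℂ))‖ ≤ 9 * X / r := by
    refine (sum_le_card_nsmul _ _ _ fun w _ => norm_inner_le γ s A j h w).trans ?_
    rw [nsmul_eq_mul]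
    have hc : ((((rng s A j).filter (fun w : ℤ => (|w| : ℝ) ≤ 1 / r)).card : ℕ) : ℝ) ≤ 3 * (1 / r) := by
      set F := ⌊1 / r⌋ with hF
      have hsub : (rng s A j).filter (fun w : ℤ => (|w| : ℝ) ≤ 1 / r) ⊆ Icc (-F) F := by
        intro w hw
        have hw := (mem_filter.1 hw).2
        have : |w| ≤ F := Int.le_floor.2 (by push_cast; exact hw)
        rw [mem_Icc]; exact abs_le.1 this
      have h2 := card_le_card hsub
      rw [Int.card_Icc] at h2
      have hF1 : 1 ≤ F := Int.le_floor.2 (by simpa using hW)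
      have hFl : (F : ℝ) ≤ 1 / r := Int.floor_le _
      have h3 : ((((rng s A j).filter (fun w : ℤ => (|w| : ℝ) ≤ 1 / r)).card : ℕ) : ℤ) ≤ 3 * F := by omega
      have h4 : ((((rng s A j).filter (fun w : ℤ => (|w| : ℝ) ≤ 1 / r)).card : ℕ) : ℝ) ≤ 3 * F := by
        exact_mod_cast h3
      linarith
    calc _ ≤ 3 * (1 / r) * (3 * (X : ℝ)) := by gcongr
      _ = 9 * X / r := by ring
  have p2 : ∑ w ∈ (rng s A j).filter (fun w : ℤ => ¬ (|w| : ℝ) ≤ 1 / r),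
      ‖∑ v ∈ rng s A j, Complex.exp (I * ((γ * v * w : ℝ) : ℂ))‖ ≤ 12 * X / r := by
    have hb : ∀ w ∈ (rng s A j).filter (fun w : ℤ => ¬ (|w| : ℝ) ≤ 1 / r),
        ‖∑ v ∈ rng s A j, Complex.exp (I * ((γ * v * w : ℝ) : ℂ))‖ ≤ 4 / r := by
      intro w hw
      obtain ⟨hw1, hw2⟩ := mem_filter.1 hw
      rw [not_le] at hw2
      have hwX : |w| ≤ X := by
        unfold rng at hw1
        exact abs_le.2 (mem_Icc.1 hw1)
      have hwX' : (|w| : ℝ) ≤ X := by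
        have : ((|w| : ℤ) : ℝ) ≤ ((X : ℤ) : ℝ) := by exact_mod_cast hwX
        simpa using this
      have hw0 : (0 : ℝ) < |(w : ℝ)| := lt_trans (by positivity) hw2
      have hφ : |γ * w| ≤ 1 := by
        rw [abs_mul]; exact (mul_le_mul_of_nonneg_left hwX' hg.le).trans h1
      have := norm_geom_le (γ * w) (mul_ne_zero h0 (abs_pos.1 hw0)) (hφ.trans (by linarith [Real.pi_gt_three])) X (by positivity)
      have e : ∑ v ∈ rng s A j, Complex.exp (I * ((γ * v * w : ℝ) : ℂ)) =
          ∑ v ∈ Icc (-(X : ℤ)) X, Complex.exp (I * ((γ * w * v : ℝ) : ℂ)) := by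
        unfold rng
        refine sum_congr (by rw [hX]) fun v _ => ?_
        congr 3; ring
      rw [e]
      refine this.trans ?_
      rw [abs_mul, ← hr2]
      rw [div_lt_iff₀ hr0] at hw2
      rw [div_le_div_iff₀ (by positivity) hr0]
      nlinarith [Real.pi_le_four, mul_pos hr0 hr0, mul_pos (mul_pos hr0 hr0) hw0, Real.pi_pos]
    refine (sum_le_card_nsmul _ _ _ hb).trans ?_
    rw [nsmul_eq_mul]
    have hc : ((((rng s A j).filter (fun w : ℤ => ¬ (|w| : ℝ) ≤ 1 / r)).card : ℕ) : ℝ) ≤ 3 * X :=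
      le_trans (by exact_mod_cast card_filter_le _ _) (card_rng_le s A j h)
    calc _ ≤ 3 * (X : ℝ) * (4 / r) := by gcongr
      _ = _ := by ring
  calc _ ≤ 9 * X / r + 12 * X / r := add_le_add p1 p2
    _ = _ := by ring

/-- The bilinear sum estimate obtained by exploiting cancellation in the single degree `j0` only. -/
lemma bilinear_gain {k A : ℕ} (hk : 10 ≤ k) (hA : 1 ≤ A) (Γ : Fin k → ℝ) (j0 : Fin k)
    (h0 : Γ j0 ≠ 0) (h1 : |Γ j0| * (k ^ 3 * A ^ (j0.1 + 1) : ℕ) ≤ 1) :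
    ‖∑ a ∈ Ico 0 (A : ℤ), ∑ b ∈ Ico 0 (A : ℤ),
      Complex.exp (I * ((∑ j, Γ j * ((a : ℝ) ^ (j.1 + 1) * (b : ℝ) ^ (j.1 + 1)) : ℝ) : ℂ))‖
        ^ (4 * k ^ 6) ≤
      (A : ℝ) ^ (8 * k ^ 6) * ((A : ℝ) ^ (1 / 4 : ℝ) * ((k : ℝ) ^ (28 * k ^ 5)) ^ 2 *
        (3 * (k : ℝ) ^ 3) ^ (2 * k) * (3 / (√|Γ j0| * (k ^ 3 * A ^ (j0.1 + 1) : ℕ)))) := by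
  have hA0 : (0 : ℝ) < A := by exact_mod_cast hA
  have hk0 : (0 : ℝ) < k := by exact_mod_cast (by omega : 0 < k)
  set s := k ^ 3 with hs
  have hs1 : 1 ≤ s := Nat.one_le_pow _ _ (by omega)
  have hb := bilinear_bound (A := A) hs1 Γ
  have e4 : 2 * s * (2 * s) = 4 * k ^ 6 := by rw [hs]; ring
  rw [e4] at hb
  refine hb.trans ?_
  have hX : ∀ j : ℕ, 1 ≤ s * A ^ (j + 1) := fun j => Nat.one_le_iff_ne_zero.2 (by positivity)
  have hprod : ∏ j : Fin k, linS (Γ j) s A j.1 ≤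
      (∏ j : Fin k, (3 * (s * A ^ (j.1 + 1) : ℕ) : ℝ) ^ 2) *
        (3 / (√|Γ j0| * (s * A ^ (j0.1 + 1) : ℕ))) := by
    rw [← Finset.mul_prod_erase _ _ (mem_univ j0), ← Finset.mul_prod_erase _ _ (mem_univ j0)]
    have hP : ∏ x ∈ univ.erase j0, linS (Γ x) s A x.1 ≤
        ∏ x ∈ univ.erase j0, (3 * (s * A ^ (x.1 + 1) : ℕ) : ℝ) ^ 2 :=
      Finset.prod_le_prod (fun _ _ => linS_nonneg _ _ _ _) fun j _ => linS_le _ _ _ _ (hX _)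
    have hg := linS_gain (Γ j0) s A j0.1 (hX _) h0 h1
    have hXp : (0 : ℝ) < (s * A ^ (j0.1 + 1) : ℕ) := by exact_mod_cast hX j0.1
    have hr : 0 < √|Γ j0| := Real.sqrt_pos.2 (abs_pos.2 h0)
    have hg' : linS (Γ j0) s A j0.1 ≤ (3 * (s * A ^ (j0.1 + 1) : ℕ) : ℝ) ^ 2 *
        (3 / (√|Γ j0| * (s * A ^ (j0.1 + 1) : ℕ))) := by
      refine hg.trans ?_
      have : (3 * (s * A ^ (j0.1 + 1) : ℕ) : ℝ) ^ 2 * (3 / (√|Γ j0| * (s * A ^ (j0.1 + 1) : ℕ))) =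
        27 * (s * A ^ (j0.1 + 1) : ℕ) / √|Γ j0| := by field_simp; norm_num
      rw [this]; gcongr; norm_num
    calc _ ≤ ((3 * (s * A ^ (j0.1 + 1) : ℕ) : ℝ) ^ 2 *
        (3 / (√|Γ j0| * (s * A ^ (j0.1 + 1) : ℕ)))) * ∏ x ∈ univ.erase j0, (3 * (s * A ^ (x.1 + 1) : ℕ) : ℝ) ^ 2 :=
          mul_le_mul hg' hP (Finset.prod_nonneg fun _ _ => linS_nonneg _ _ _ _) (by positivity)
      _ = _ := by ring
  have hpe : ∏ j : Fin k, (3 * (s * A ^ (j.1 + 1) : ℕ) : ℝ) ^ 2 =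
      (3 * (k : ℝ) ^ 3) ^ (2 * k) * (A : ℝ) ^ (k * (k + 1)) := by
    rw [Fin.prod_univ_eq_prod_range (fun j => (3 * (s * A ^ (j + 1) : ℕ) : ℝ) ^ 2)]
    have : ∀ j : ℕ, (3 * (s * A ^ (j + 1) : ℕ) : ℝ) ^ 2 = (3 * (k : ℝ) ^ 3) ^ 2 * (A : ℝ) ^ (2 * (j + 1)) := by
      intro j; rw [hs]; push_cast; ring
    simp_rw [this]
    rw [Finset.prod_mul_distrib, Finset.prod_const, Finset.card_range, ← pow_mul,
      Finset.prod_pow_eq_pow_sum]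
    congr 2
    clear * -
    induction k with
    | zero => simp
    | succ n ih => rw [sum_range_succ, ih]; ring
  have hV := VJ_bound hk A hA
  have hVsq : (VJ k s (Ico 0 (A : ℤ)) : ℝ) ^ 2 ≤ ((k : ℝ) ^ (28 * k ^ 5)) ^ 2 *
      (A : ℝ) ^ (4 * (k : ℝ) ^ 3 - k * (k + 1) + 1 / 4 : ℝ) := by
    calc _ ≤ ((k : ℝ) ^ (28 * k ^ 5) * (A : ℝ) ^ (2 * (k : ℝ) ^ 3 - k * (k + 1) / 2 + 1 / 8 : ℝ)) ^ 2 := by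
          gcongr
      _ = _ := by
          rw [mul_pow, ← rpow_natCast ((A : ℝ) ^ (_ : ℝ)), ← rpow_mul hA0.le]
          congr 2; push_cast; ring
  calc (A : ℝ) ^ (4 * s * (2 * s - 1)) * (VJ k s (Ico 0 (A : ℤ)) : ℝ) ^ 2 * ∏ j : Fin k, linS (Γ j) s A j.1
      ≤ (A : ℝ) ^ (4 * s * (2 * s - 1)) * (((k : ℝ) ^ (28 * k ^ 5)) ^ 2 *
      (A : ℝ) ^ (4 * (k : ℝ) ^ 3 - k * (k + 1) + 1 / 4 : ℝ)) * ((3 * (k : ℝ) ^ 3) ^ (2 * k) * (A : ℝ) ^ (k * (k + 1)) *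
        (3 / (√|Γ j0| * (s * A ^ (j0.1 + 1) : ℕ)))) := by
        rw [hpe] at hprod
        exact mul_le_mul (mul_le_mul_of_nonneg_left hVsq (by positivity)) hprod
          (Finset.prod_nonneg fun _ _ => linS_nonneg _ _ _ _) (by positivity)
    _ = ((A : ℝ) ^ (4 * s * (2 * s - 1)) * (A : ℝ) ^ (4 * (k : ℝ) ^ 3 - k * (k + 1) + 1 / 4 : ℝ) *
        (A : ℝ) ^ (k * (k + 1))) * (((k : ℝ) ^ (28 * k ^ 5)) ^ 2 * (3 * (k : ℝ) ^ 3) ^ (2 * k) *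
        (3 / (√|Γ j0| * (s * A ^ (j0.1 + 1) : ℕ)))) := by ring
    _ = ((A : ℝ) ^ (8 * k ^ 6) * (A : ℝ) ^ (1 / 4 : ℝ)) * (((k : ℝ) ^ (28 * k ^ 5)) ^ 2 * (3 * (k : ℝ) ^ 3) ^ (2 * k) *
        (3 / (√|Γ j0| * (s * A ^ (j0.1 + 1) : ℕ)))) := by
        congr 1
        rw [← rpow_natCast (A : ℝ) (4 * s * (2 * s - 1)), ← rpow_natCast (A : ℝ) (k * (k + 1)),
          ← rpow_natCast (A : ℝ) (8 * k ^ 6), ← rpow_add hA0,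
          ← rpow_add hA0, ← rpow_add hA0]
        congr 1
        have : ((4 * s * (2 * s - 1) : ℕ) : ℝ) = 8 * (k : ℝ) ^ 6 - 4 * (k : ℝ) ^ 3 := by
          rw [Nat.cast_mul, Nat.cast_sub (by omega), hs]; push_cast; ring
        rw [this]; push_cast; ring
    _ = _ := by ring

/-- Replacing `log (1 + u)` by its Taylor polynomial. -/
lemma log_taylor (k : ℕ) (u : ℝ) (h0 : 0 ≤ u) (h1 : u ≤ 1 / 2) :
    |log (1 + u) - ∑ j : Fin k, (-1 : ℝ) ^ j.1 / (j.1 + 1) * u ^ (j.1 + 1)| ≤ 2 * u ^ (k + 1) := by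
  have h := Real.abs_log_sub_add_sum_range_le (x := -u) (by rw [abs_neg, abs_of_nonneg h0]; linarith) k
  rw [abs_neg, abs_of_nonneg h0, sub_neg_eq_add] at h
  rw [Fin.sum_univ_eq_sum_range (fun j => (-1 : ℝ) ^ j / (j + 1) * u ^ (j + 1))]
  have e : ∑ i ∈ range k, (-u) ^ (i + 1) / ((i : ℝ) + 1) = - ∑ j ∈ range k, (-1 : ℝ) ^ j / (j + 1) * u ^ (j + 1) := by
    rw [← Finset.sum_neg_distrib]
    refine sum_congr rfl fun i _ => ?_
    rw [neg_pow u, pow_succ (-1 : ℝ)]; ring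
  rw [e, neg_add_eq_sub] at h
  refine h.trans ?_
  rw [div_le_iff₀ (by linarith)]
  have := pow_nonneg h0 (k + 1)
  nlinarith

lemma norm_exp_sub_le (x y : ℝ) :
    ‖Complex.exp (I * (x : ℂ)) - Complex.exp (I * (y : ℂ))‖ ≤ |x - y| := by
  have : Complex.exp (I * (x : ℂ)) - Complex.exp (I * (y : ℂ)) =
      Complex.exp (I * (y : ℂ)) * (Complex.exp (I * ((x - y : ℝ) : ℂ)) - 1) := by
    rw [mul_sub, ← Complex.exp_add, mul_one]; congr 2; push_cast; ring
  rw [this, norm_mul, Complex.norm_exp_I_mul_ofReal, one_mul]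
  exact Real.norm_exp_I_mul_ofReal_sub_one_le

lemma const_le {k : ℕ} (hk : 10 ≤ k) :
    ((k : ℝ) ^ (28 * k ^ 5)) ^ 2 * (3 * (k : ℝ) ^ 3) ^ (2 * k) * (3 * 8 ^ k) ≤ (k : ℝ) ^ (62 * k ^ 5) := by
  have hk1 : (10 : ℝ) ≤ k := by exact_mod_cast hk
  have h1 : (3 * (k : ℝ) ^ 3) ^ (2 * k) ≤ (k : ℝ) ^ (4 * (2 * k)) := by
    rw [pow_mul (k : ℝ) 4]; refine pow_le_pow_left₀ (by positivity) ?_ _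
    calc 3 * (k : ℝ) ^ 3 ≤ k * (k : ℝ) ^ 3 := by gcongr; linarith
      _ = _ := by ring
  have h2 : (3 * 8 ^ k : ℝ) ≤ (k : ℝ) ^ (k + 1) := by
    rw [pow_succ']; gcongr <;> linarith
  calc _ ≤ ((k : ℝ) ^ (28 * k ^ 5)) ^ 2 * (k : ℝ) ^ (4 * (2 * k)) * (k : ℝ) ^ (k + 1) := by gcongr
    _ = (k : ℝ) ^ (56 * k ^ 5 + 9 * k + 1) := by rw [← pow_mul, ← pow_add, ← pow_add]; congr 1; ring
    _ ≤ _ := by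
        apply pow_le_pow_right₀ (by linarith)
        have h4 : 10 ≤ k ^ 4 := hk.trans (Nat.le_self_pow (by norm_num) k)
        have : k * 10 ≤ k * k ^ 4 := Nat.mul_le_mul_left _ h4
        have e : k * k ^ 4 = k ^ 5 := by ring
        omega

set_option maxHeartbeats 2000000 in
/-- The inner bilinear sum over shifts for a single `n ∈ (N, 2N]`. -/
lemma shift_bound {k : ℕ} (hk : 10 ≤ k) {N : ℕ} (hN : k ^ (5000 * k ^ 5) ≤ N) {t : ℝ}
    (ht1 : (N : ℝ) ^ (3 / 4 : ℝ) ≤ |t|) (ht2 : |t| ≤ (N : ℝ) ^ (((k : ℝ) - 5) / 5))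
    {n : ℕ} (hn1 : N < n) (hn2 : n ≤ 2 * N) {A : ℕ} (hA1 : 1 ≤ A) (hAl : (N : ℝ) ^ (2 / 5 : ℝ) ≤ 2 * A)
    (hAu : (A : ℝ) ≤ (N : ℝ) ^ (2 / 5 : ℝ)) :
    ‖∑ a ∈ Ico 0 (A : ℤ), ∑ b ∈ Ico 0 (A : ℤ),
      Complex.exp (I * ((t * log (1 + a * b / n) : ℝ) : ℂ))‖ ≤
      3 * (A : ℝ) ^ 2 * (N : ℝ) ^ (-(1 / (320 * (k : ℝ) ^ 6))) := by
  have hk1 : (10 : ℝ) ≤ k := by exact_mod_cast hk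
  have hNk : (k : ℝ) ^ (5000 * k ^ 5) ≤ N := by exact_mod_cast hN
  have hk51 : 1 ≤ k ^ 5 := Nat.one_le_pow _ _ (by omega)
  have hNk2 : (k : ℝ) ^ (20 : ℕ) ≤ N := le_trans (pow_le_pow_right₀ (by linarith) (by omega)) hNk
  have hN1 : (1 : ℝ) < N := lt_of_lt_of_le (one_lt_pow₀ (by linarith) (by norm_num)) hNk2
  have hN0 : (0 : ℝ) < N := by linarith
  have hA0 : (0 : ℝ) < A := by exact_mod_cast hA1
  have hnN : (N : ℝ) < n := by exact_mod_cast hn1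
  have hn2N : (n : ℝ) ≤ 2 * N := by exact_mod_cast hn2
  have hn0 : (0 : ℝ) < n := by linarith
  have ht0 : 0 < |t| := lt_of_lt_of_le (by positivity) ht1
  set κ := log |t| / log N with hκ
  have hlogN : 0 < log N := Real.log_pos hN1
  have htκ : (N : ℝ) ^ κ = |t| := by
    rw [Real.rpow_def_of_pos hN0, hκ, mul_div_cancel₀ _ hlogN.ne', Real.exp_log ht0]
  have hκ1 : 3 / 4 ≤ κ := by rwa [← htκ, Real.rpow_le_rpow_left_iff hN1] at ht1
  have hκ2 : κ ≤ ((k : ℝ) - 5) / 5 := by rwa [← htκ, Real.rpow_le_rpow_left_iff hN1] at ht2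
  set J := ⌈2 * κ⌉₊ with hJ
  have hJl : 2 * κ ≤ J := Nat.le_ceil _
  have hJu : (J : ℝ) < 2 * κ + 1 := Nat.ceil_lt_add_one (by linarith)
  have hJk : J ≤ k := by
    have : (J : ℝ) ≤ k := by linarith
    exact_mod_cast this
  have hJ1 : 1 ≤ J := by
    have : (0 : ℝ) < J := by linarith
    exact_mod_cast this
  have hJ1r : (1 : ℝ) ≤ J := by exact_mod_cast hJ1
  set Γ : Fin k → ℝ := fun j => t * ((-1 : ℝ) ^ j.1 / (j.1 + 1)) / (n : ℝ) ^ (j.1 + 1) with hΓ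
  set j0 : Fin k := ⟨J - 1, by omega⟩ with hj0
  have hj0J : j0.1 + 1 = J := by simp only [hj0]; omega
  have hΓj0 : |Γ j0| = |t| / (J * (n : ℝ) ^ J) := by
    simp only [hΓ]
    rw [abs_div, abs_mul, abs_div, abs_pow, abs_neg, abs_one, one_pow, hj0J]
    have : ((j0.1 : ℝ) + 1) = J := by exact_mod_cast hj0J
    rw [this, abs_of_pos (by positivity : (0 : ℝ) < J), abs_of_pos (by positivity : (0 : ℝ) < (n : ℝ) ^ J)]
    field_simp
  have hΓne : Γ j0 ≠ 0 := by
    rw [← abs_pos, hΓj0]; positivity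
  -- size of the frequency
  have hAn : (A : ℝ) / n ≤ (N : ℝ) ^ (-(3 / 5) : ℝ) := by
    calc (A : ℝ) / n ≤ (N : ℝ) ^ (2 / 5 : ℝ) / N := by gcongr
      _ = (N : ℝ) ^ (2 / 5 - 1 : ℝ) := by rw [Real.rpow_sub hN0, rpow_one]
      _ = _ := by norm_num
  have h1 : |Γ j0| * (k ^ 3 * A ^ (j0.1 + 1) : ℕ) ≤ 1 := by
    rw [hΓj0, hj0J]; push_cast
    calc |t| / (J * (n : ℝ) ^ J) * ((k : ℝ) ^ 3 * (A : ℝ) ^ J) = |t| * (k : ℝ) ^ 3 * ((A : ℝ) / n) ^ J / J := by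
          rw [div_pow]; field_simp
      _ ≤ |t| * (k : ℝ) ^ 3 * ((A : ℝ) / n) ^ J := div_le_self (by positivity) hJ1r
      _ ≤ |t| * (k : ℝ) ^ 3 * ((N : ℝ) ^ (-(3 / 5) : ℝ)) ^ J := by gcongr
      _ = (k : ℝ) ^ 3 * (N : ℝ) ^ (κ - 3 / 5 * J) := by
          rw [← htκ, ← rpow_natCast ((N : ℝ) ^ (_ : ℝ)), ← rpow_mul hN0.le, sub_eq_add_neg,
            rpow_add hN0]
          ring_nf
      _ ≤ (k : ℝ) ^ 3 * (N : ℝ) ^ (-(3 / 20) : ℝ) := by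
          gcongr
          · exact hN1.le
          · linarith
      _ ≤ (k : ℝ) ^ 3 * ((k : ℝ) ^ (20 : ℕ)) ^ (-(3 / 20) : ℝ) := by
          gcongr (k : ℝ) ^ 3 * ?_
          exact Real.rpow_le_rpow_of_nonpos (by positivity) hNk2 (by norm_num)
      _ = 1 := by
          rw [← rpow_natCast, ← rpow_natCast, ← rpow_mul (by linarith), ← rpow_add (by linarith)]
          norm_num
  have hgain := bilinear_gain hk hA1 Γ j0 hΓne h1
  set Tm := ‖∑ a ∈ Ico 0 (A : ℤ), ∑ b ∈ Ico 0 (A : ℤ),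
      Complex.exp (I * ((∑ j, Γ j * ((a : ℝ) ^ (j.1 + 1) * (b : ℝ) ^ (j.1 + 1)) : ℝ) : ℂ))‖ with hTm
  set X : ℝ := ((k ^ 3 * A ^ (j0.1 + 1) : ℕ) : ℝ) with hX
  have hX0 : 0 < X := by rw [hX]; push_cast; positivity
  have hlow : (1 / 8 : ℝ) ^ k * (N : ℝ) ^ (1 / 8 : ℝ) ≤ √|Γ j0| * X := by
    have e : √|Γ j0| * X = √(|Γ j0| * X ^ 2) := by
      rw [Real.sqrt_mul (abs_nonneg _), Real.sqrt_sq hX0.le]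
    rw [e]
    apply Real.le_sqrt_of_sq_le
    have q1 : ((1 / 8 : ℝ) ^ k * (N : ℝ) ^ (1 / 8 : ℝ)) ^ 2 ≤ (1 / 8 : ℝ) ^ k * (N : ℝ) ^ (1 / 4 : ℝ) := by
      rw [mul_pow, ← rpow_natCast ((N : ℝ) ^ (_ : ℝ)), ← rpow_mul hN0.le]
      have : ((1 / 8 : ℝ) ^ k) ^ 2 ≤ (1 / 8 : ℝ) ^ k := by
        rw [sq]; exact mul_le_of_le_one_left (by positivity) (pow_le_one₀ (by norm_num) (by norm_num))
      norm_num at this ⊢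
      gcongr
    refine q1.trans ?_
    rw [hΓj0, hX, hj0J]; push_cast
    have q2 : 1 / 8 * (N : ℝ) ^ (-(1 / 5) : ℝ) ≤ (A : ℝ) ^ 2 / n := by
      rw [le_div_iff₀ hn0]
      calc 1 / 8 * (N : ℝ) ^ (-(1 / 5) : ℝ) * n ≤ 1 / 8 * (N : ℝ) ^ (-(1 / 5) : ℝ) * (2 * N) := by gcongr
        _ = 1 / 4 * ((N : ℝ) ^ (-(1 / 5) : ℝ) * (N : ℝ) ^ (1 : ℝ)) := by rw [rpow_one]; ring
        _ = 1 / 4 * ((N : ℝ) ^ (2 / 5 : ℝ)) ^ 2 := by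
            rw [← rpow_add hN0, ← rpow_natCast ((N : ℝ) ^ (_ : ℝ)), ← rpow_mul hN0.le]; norm_num
        _ ≤ 1 / 4 * (2 * (A : ℝ)) ^ 2 := by gcongr
        _ = _ := by ring
    calc (1 / 8 : ℝ) ^ k * (N : ℝ) ^ (1 / 4 : ℝ) ≤ (1 / 8 : ℝ) ^ J * (N : ℝ) ^ (κ - 1 / 5 * J) := by
          apply mul_le_mul
          · exact pow_le_pow_of_le_one (by norm_num) (by norm_num) hJk
          · exact rpow_le_rpow_of_exponent_le hN1.le (by linarith)
          · positivity
          · positivity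
      _ = |t| * (1 / 8 * (N : ℝ) ^ (-(1 / 5) : ℝ)) ^ J := by
          rw [← htκ, mul_pow, ← rpow_natCast ((N : ℝ) ^ (_ : ℝ)), ← rpow_mul hN0.le, sub_eq_add_neg,
            rpow_add hN0]
          ring_nf
      _ ≤ |t| * ((A : ℝ) ^ 2 / n) ^ J := by gcongr
      _ ≤ |t| * ((A : ℝ) ^ 2 / n) ^ J * ((k : ℝ) ^ 6 / J) := by
          apply le_mul_of_one_le_right (by positivity)
          rw [le_div_iff₀ (by positivity), one_mul]
          have : (J : ℝ) ≤ k := by exact_mod_cast hJk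
          exact this.trans (le_self_pow₀ (by linarith) (by norm_num))
      _ = _ := by rw [div_pow]; field_simp; rw [← pow_mul, ← pow_mul, mul_comm]
  have hmain : Tm ^ (4 * k ^ 6) ≤ ((A : ℝ) ^ 2 * (N : ℝ) ^ (-(1 / (320 * (k : ℝ) ^ 6)))) ^ (4 * k ^ 6) := by
    refine hgain.trans ?_
    rw [mul_pow ((A : ℝ) ^ 2), ← pow_mul (A : ℝ) 2, ← rpow_natCast ((N : ℝ) ^ (_ : ℝ)), ← rpow_mul hN0.le]
    have e1 : 2 * (4 * k ^ 6) = 8 * k ^ 6 := by ring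
    have e2 : -(1 / (320 * (k : ℝ) ^ 6)) * ((4 * k ^ 6 : ℕ) : ℝ) = -(1 / 80) := by
      push_cast; field_simp; norm_num
    rw [e1, e2]
    gcongr
    have r1 : (A : ℝ) ^ (1 / 4 : ℝ) ≤ (N : ℝ) ^ (1 / 10 : ℝ) := by
      calc _ ≤ ((N : ℝ) ^ (2 / 5 : ℝ)) ^ (1 / 4 : ℝ) := by gcongr
        _ = _ := by rw [← rpow_mul hN0.le]; norm_num
    have r2 : 3 / (√|Γ j0| * X) ≤ 3 * 8 ^ k * (N : ℝ) ^ (-(1 / 8) : ℝ) := by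
      calc 3 / (√|Γ j0| * X) ≤ 3 / ((1 / 8 : ℝ) ^ k * (N : ℝ) ^ (1 / 8 : ℝ)) := by gcongr
        _ = _ := by rw [Real.rpow_neg hN0.le, one_div_pow]; field_simp
    have r3 : (k : ℝ) ^ (62 * k ^ 5) ≤ (N : ℝ) ^ (1 / 80 : ℝ) := by
      calc (k : ℝ) ^ (62 * k ^ 5) ≤ ((k : ℝ) ^ (5000 * k ^ 5)) ^ (1 / 80 : ℝ) := by
            rw [← rpow_natCast, ← rpow_natCast, ← rpow_mul (by linarith)]
            apply rpow_le_rpow_of_exponent_le (by linarith)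
            push_cast
            have : (0 : ℝ) ≤ (k : ℝ) ^ 5 := by positivity
            linarith
        _ ≤ _ := by gcongr
    calc _ ≤ (N : ℝ) ^ (1 / 10 : ℝ) * ((k : ℝ) ^ (28 * k ^ 5)) ^ 2 * (3 * (k : ℝ) ^ 3) ^ (2 * k) *
          (3 * 8 ^ k * (N : ℝ) ^ (-(1 / 8) : ℝ)) := by gcongr
      _ = (((k : ℝ) ^ (28 * k ^ 5)) ^ 2 * (3 * (k : ℝ) ^ 3) ^ (2 * k) * (3 * 8 ^ k)) *
          ((N : ℝ) ^ (1 / 10 : ℝ) * (N : ℝ) ^ (-(1 / 8) : ℝ)) := by ring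
      _ ≤ (N : ℝ) ^ (1 / 80 : ℝ) * ((N : ℝ) ^ (1 / 10 : ℝ) * (N : ℝ) ^ (-(1 / 8) : ℝ)) := by
          gcongr; exact (const_le hk).trans r3
      _ = _ := by rw [← rpow_add hN0, ← rpow_add hN0]; norm_num
  have hTle : Tm ≤ (A : ℝ) ^ 2 * (N : ℝ) ^ (-(1 / (320 * (k : ℝ) ^ 6))) :=
    le_of_pow_le_pow_left₀ (by positivity) (by positivity) hmain
  -- Taylor error
  have herr : ∀ a ∈ Ico 0 (A : ℤ), ∀ b ∈ Ico 0 (A : ℤ),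
      ‖Complex.exp (I * ((t * log (1 + a * b / n) : ℝ) : ℂ)) -
        Complex.exp (I * ((∑ j, Γ j * ((a : ℝ) ^ (j.1 + 1) * (b : ℝ) ^ (j.1 + 1)) : ℝ) : ℂ))‖ ≤
        2 * (N : ℝ) ^ (-(1 / (320 * (k : ℝ) ^ 6))) := by
    intro a ha b hb
    rw [mem_Ico] at ha hb
    have ha0 : (0 : ℝ) ≤ a := by exact_mod_cast ha.1
    have hb0 : (0 : ℝ) ≤ b := by exact_mod_cast hb.1
    have haA : (a : ℝ) ≤ A := by exact_mod_cast ha.2.le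
    have hbA : (b : ℝ) ≤ A := by exact_mod_cast hb.2.le
    set u : ℝ := a * b / n with hu
    have hu0 : 0 ≤ u := by positivity
    have hu1 : u ≤ (N : ℝ) ^ (-(1 / 5) : ℝ) := by
      calc u ≤ A * A / n := by rw [hu]; gcongr
        _ = A * (A / n) := by ring
        _ ≤ (N : ℝ) ^ (2 / 5 : ℝ) * (N : ℝ) ^ (-(3 / 5) : ℝ) := by gcongr
        _ = _ := by rw [← rpow_add hN0]; norm_num
    have hu2 : u ≤ 1 / 2 := by
      refine hu1.trans ?_
      calc (N : ℝ) ^ (-(1 / 5) : ℝ) ≤ ((k : ℝ) ^ (20 : ℕ)) ^ (-(1 / 5) : ℝ) :=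
            Real.rpow_le_rpow_of_nonpos (by positivity) hNk2 (by norm_num)
        _ ≤ ((10 : ℝ) ^ (20 : ℕ)) ^ (-(1 / 5) : ℝ) :=
            Real.rpow_le_rpow_of_nonpos (by positivity) (by gcongr) (by norm_num)
        _ = (10 : ℝ) ^ (-4 : ℝ) := by
            rw [← rpow_natCast, ← rpow_mul (by norm_num)]; norm_num
        _ ≤ _ := by
            rw [show (-4 : ℝ) = ((-4 : ℤ) : ℝ) by norm_num, Real.rpow_intCast]; norm_num
    have hsum : ∑ j, Γ j * ((a : ℝ) ^ (j.1 + 1) * (b : ℝ) ^ (j.1 + 1)) =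
        t * ∑ j : Fin k, (-1 : ℝ) ^ j.1 / (j.1 + 1) * u ^ (j.1 + 1) := by
      rw [mul_sum]
      refine sum_congr rfl fun j _ => ?_
      simp only [hΓ, hu]
      rw [div_pow, mul_pow]; field_simp
    rw [hsum]
    refine (norm_exp_sub_le _ _).trans ?_
    rw [← mul_sub, abs_mul]
    calc |t| * |log (1 + u) - ∑ j : Fin k, (-1 : ℝ) ^ j.1 / (j.1 + 1) * u ^ (j.1 + 1)|
        ≤ |t| * (2 * u ^ (k + 1)) := by gcongr; exact log_taylor k u hu0 hu2
      _ ≤ (N : ℝ) ^ (((k : ℝ) - 5) / 5) * (2 * ((N : ℝ) ^ (-(1 / 5) : ℝ)) ^ (k + 1)) := by gcongr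
      _ = 2 * (N : ℝ) ^ (-(6 / 5) : ℝ) := by
          rw [← rpow_natCast ((N : ℝ) ^ (_ : ℝ)), ← rpow_mul hN0.le, mul_left_comm,
            ← rpow_add hN0]
          congr 2; push_cast; ring
      _ ≤ _ := by
          gcongr 2 * ?_
          apply rpow_le_rpow_of_exponent_le hN1.le
          have : 1 / (320 * (k : ℝ) ^ 6) ≤ 1 := by
            rw [div_le_one (by positivity)]
            have : (1 : ℝ) ≤ (k : ℝ) ^ 6 := one_le_pow₀ (by linarith)
            linarith
          linarith
  have hdiff : ‖∑ a ∈ Ico 0 (A : ℤ), ∑ b ∈ Ico 0 (A : ℤ),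
      Complex.exp (I * ((t * log (1 + a * b / n) : ℝ) : ℂ)) -
      ∑ a ∈ Ico 0 (A : ℤ), ∑ b ∈ Ico 0 (A : ℤ),
      Complex.exp (I * ((∑ j, Γ j * ((a : ℝ) ^ (j.1 + 1) * (b : ℝ) ^ (j.1 + 1)) : ℝ) : ℂ))‖ ≤
      A * (A * (2 * (N : ℝ) ^ (-(1 / (320 * (k : ℝ) ^ 6))))) := by
    simp_rw [← sum_sub_distrib]
    have hc : ∀ c : ℝ, ∑ _a ∈ Ico 0 (A : ℤ), c = A * c := by intro c; simp
    rw [← hc, ← hc]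
    exact norm_sum_le_of_le _ fun a ha => norm_sum_le_of_le _ fun b hb => herr a ha b hb
  have := norm_le_norm_add_norm_sub' (∑ a ∈ Ico 0 (A : ℤ), ∑ b ∈ Ico 0 (A : ℤ),
      Complex.exp (I * ((t * log (1 + a * b / n) : ℝ) : ℂ)))
      (∑ a ∈ Ico 0 (A : ℤ), ∑ b ∈ Ico 0 (A : ℤ),
      Complex.exp (I * ((∑ j, Γ j * ((a : ℝ) ^ (j.1 + 1) * (b : ℝ) ^ (j.1 + 1)) : ℝ) : ℂ)))
  rw [← hTm] at this
  nlinarith [this, hdiff, hTle]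

lemma sum_Ioc_succ_sub (f : ℕ → ℂ) {N M : ℕ} (h : N ≤ M) :
    ∑ n ∈ Ioc N M, (f (n + 1) - f n) = f (M + 1) - f (N + 1) := by
  induction M, h using Nat.le_induction with
  | base => simp
  | succ m hm ih => rw [sum_Ioc_succ_top (by omega), ih]; ring

lemma shift_sum (f : ℕ → ℂ) (hf : ∀ n, ‖f n‖ ≤ 1) {N M : ℕ} (h : N ≤ M) (c : ℕ) :
    ‖∑ n ∈ Ioc N M, f n - ∑ n ∈ Ioc N M, f (n + c)‖ ≤ 2 * c := by
  induction c with
  | zero => simp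
  | succ c ih =>
    have h1 := sum_Ioc_succ_sub (fun n => f (n + c)) h
    rw [sum_sub_distrib] at h1
    have : ∑ n ∈ Ioc N M, f n - ∑ n ∈ Ioc N M, f (n + (c + 1)) =
      (∑ n ∈ Ioc N M, f n - ∑ n ∈ Ioc N M, f (n + c)) - (f (M + 1 + c) - f (N + 1 + c)) := by
      rw [← h1]; simp only [add_assoc, add_comm 1 c]; ring
    rw [this]
    refine (norm_sub_le _ _).trans ?_
    have := norm_sub_le (f (M + 1 + c)) (f (N + 1 + c))
    have := hf (M + 1 + c)
    have := hf (N + 1 + c)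
    push_cast
    linarith

/-- Vinogradov's estimate for the sums `∑ n^{it}` over dyadic blocks. -/
theorem zeta_sum {k : ℕ} (hk : 10 ≤ k) {N M : ℕ} (hN : k ^ (5000 * k ^ 5) ≤ N) (hNM : N ≤ M)
    (hM : M ≤ 2 * N) {t : ℝ}
    (ht1 : (N : ℝ) ^ (3 / 4 : ℝ) ≤ |t|) (ht2 : |t| ≤ (N : ℝ) ^ (((k : ℝ) - 5) / 5)) :
    ‖∑ n ∈ Ioc N M, Complex.exp (I * ((t * log n : ℝ) : ℂ))‖ ≤
      5 * (N : ℝ) ^ (1 - 1 / (320 * (k : ℝ) ^ 6)) := by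
  have hk1 : (10 : ℝ) ≤ k := by exact_mod_cast hk
  have hN1' : 1 ≤ N := le_trans (Nat.one_le_pow _ _ (by omega)) hN
  have hN1 : (1 : ℝ) ≤ N := by exact_mod_cast hN1'
  have hN0 : (0 : ℝ) < N := by linarith
  set A := ⌊(N : ℝ) ^ (2 / 5 : ℝ)⌋₊ with hA
  have hy : 1 ≤ (N : ℝ) ^ (2 / 5 : ℝ) := Real.one_le_rpow hN1 (by norm_num)
  have hA1 : 1 ≤ A := Nat.one_le_floor_iff _ |>.2 hy
  have hA1r : (1 : ℝ) ≤ A := by exact_mod_cast hA1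
  have hAu : (A : ℝ) ≤ (N : ℝ) ^ (2 / 5 : ℝ) := Nat.floor_le (by positivity)
  have hAl : (N : ℝ) ^ (2 / 5 : ℝ) ≤ 2 * A := by
    have := Nat.lt_floor_add_one ((N : ℝ) ^ (2 / 5 : ℝ)); rw [← hA] at this; linarith
  set f : ℕ → ℂ := fun n => Complex.exp (I * ((t * log n : ℝ) : ℂ)) with hf
  have hf1 : ∀ n, ‖f n‖ = 1 := fun n => Complex.norm_exp_I_mul_ofReal _
  set S := ∑ n ∈ Ioc N M, f n with hS
  set ρ : ℝ := 1 / (320 * (k : ℝ) ^ 6) with hρ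
  have hc : ∀ c : ℝ, ∑ _a ∈ Ico 0 (A : ℤ), c = A * c := by intro c; simp
  have hcS : ∀ c : ℂ, ∑ _a ∈ Ico 0 (A : ℤ), c = A * c := by intro c; simp
  have hfac : ∀ n ∈ Ioc N M, ∀ a ∈ Ico 0 (A : ℤ), ∀ b ∈ Ico 0 (A : ℤ),
      f (n + (a * b).toNat) = f n * Complex.exp (I * ((t * log (1 + a * b / n) : ℝ) : ℂ)) := by
    intro n hn a ha b hb
    rw [mem_Ico] at ha hb
    rw [mem_Ioc] at hn
    have hn0 : (0 : ℝ) < n := by exact_mod_cast (by omega : 0 < n)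
    have hab : (0 : ℤ) ≤ a * b := mul_nonneg ha.1 hb.1
    have habr : (0 : ℝ) ≤ (a : ℝ) * b := by exact_mod_cast hab
    have e : (((n + (a * b).toNat : ℕ)) : ℝ) = n * (1 + a * b / n) := by
      have : (((a * b).toNat : ℕ) : ℝ) = ((a * b : ℤ) : ℝ) := by
        exact_mod_cast congrArg (fun z : ℤ => (z : ℝ)) (Int.toNat_of_nonneg hab)
      push_cast at this ⊢
      rw [this]; field_simp
    simp only [hf]
    rw [e, Real.log_mul hn0.ne' (by positivity), ← Complex.exp_add]
    congr 1; push_cast; ring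
  have hmain : ‖∑ a ∈ Ico 0 (A : ℤ), ∑ b ∈ Ico 0 (A : ℤ), ∑ n ∈ Ioc N M, f (n + (a * b).toNat)‖ ≤
      N * (3 * (A : ℝ) ^ 2 * (N : ℝ) ^ (-ρ)) := by
    have e : ∑ a ∈ Ico 0 (A : ℤ), ∑ b ∈ Ico 0 (A : ℤ), ∑ n ∈ Ioc N M, f (n + (a * b).toNat) =
        ∑ n ∈ Ioc N M, f n * ∑ a ∈ Ico 0 (A : ℤ), ∑ b ∈ Ico 0 (A : ℤ),
          Complex.exp (I * ((t * log (1 + a * b / n) : ℝ) : ℂ)) := by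
      have : ∀ a ∈ Ico 0 (A : ℤ), ∑ b ∈ Ico 0 (A : ℤ), ∑ n ∈ Ioc N M, f (n + (a * b).toNat) =
          ∑ n ∈ Ioc N M, ∑ b ∈ Ico 0 (A : ℤ), f (n + (a * b).toNat) := fun a _ => sum_comm
      rw [sum_congr rfl this, sum_comm]
      refine sum_congr rfl fun n hn => ?_
      rw [mul_sum]
      refine sum_congr rfl fun a ha => ?_
      rw [mul_sum]
      exact sum_congr rfl fun b hb => hfac n hn a ha b hb
    rw [e]
    have h1 : ∀ n ∈ Ioc N M, ‖f n * ∑ a ∈ Ico 0 (A : ℤ), ∑ b ∈ Ico 0 (A : ℤ),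
          Complex.exp (I * ((t * log (1 + a * b / n) : ℝ) : ℂ))‖ ≤ 3 * (A : ℝ) ^ 2 * (N : ℝ) ^ (-ρ) := by
      intro n hn
      rw [mem_Ioc] at hn
      rw [norm_mul, hf1, one_mul]
      exact shift_bound hk hN ht1 ht2 hn.1 (hn.2.trans hM) hA1 hAl hAu
    refine (norm_sum_le_of_le _ h1).trans ?_
    rw [sum_const, nsmul_eq_mul, Nat.card_Ioc]
    have : ((M - N : ℕ) : ℝ) ≤ N := by exact_mod_cast (by omega : M - N ≤ N)
    gcongr
  have hshift : ‖(A : ℂ) * (A * S) - ∑ a ∈ Ico 0 (A : ℤ), ∑ b ∈ Ico 0 (A : ℤ), ∑ n ∈ Ioc N M, f (n + (a * b).toNat)‖ ≤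
      A * (A * (2 * (A : ℝ) ^ 2)) := by
    rw [← hcS, ← hcS, ← hc, ← hc, ← sum_sub_distrib]
    simp_rw [← sum_sub_distrib]
    refine norm_sum_le_of_le _ fun a ha => norm_sum_le_of_le _ fun b hb => ?_
    refine (shift_sum f (fun n => (hf1 n).le) hNM _).trans ?_
    rw [mem_Ico] at ha hb
    have h1 : a * b ≤ A * A := mul_le_mul ha.2.le hb.2.le hb.1 (by positivity)
    have h2 : (a * b).toNat ≤ A * A := by
      have : ((A * A : ℕ) : ℤ) = A * A := by push_cast; ring
      omega
    have h3 : (((a * b).toNat : ℕ) : ℝ) ≤ A * A := by exact_mod_cast h2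
    nlinarith
  have htot : (A : ℝ) * (A * ‖S‖) ≤ N * (3 * (A : ℝ) ^ 2 * (N : ℝ) ^ (-ρ)) + A * (A * (2 * (A : ℝ) ^ 2)) := by
    have e : ‖(A : ℂ) * (A * S)‖ = A * (A * ‖S‖) := by simp
    rw [← e]
    exact (norm_le_norm_add_norm_sub' _ _).trans (add_le_add hmain hshift)
  have h5 : ‖S‖ ≤ 3 * (N * (N : ℝ) ^ (-ρ)) + 2 * (A : ℝ) ^ 2 := by
    have hA2 : (0 : ℝ) < (A : ℝ) * A := by positivity
    refine le_of_mul_le_mul_left ?_ hA2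
    nlinarith [htot]
  have h6 : (N : ℝ) * (N : ℝ) ^ (-ρ) = (N : ℝ) ^ (1 - ρ) := by
    rw [sub_eq_add_neg, rpow_add hN0, rpow_one]
  have h7 : (A : ℝ) ^ 2 ≤ (N : ℝ) ^ (1 - ρ) := by
    calc (A : ℝ) ^ 2 ≤ ((N : ℝ) ^ (2 / 5 : ℝ)) ^ 2 := by gcongr
      _ = (N : ℝ) ^ (4 / 5 : ℝ) := by
          rw [← rpow_natCast ((N : ℝ) ^ (_ : ℝ)), ← rpow_mul hN0.le]; norm_num
      _ ≤ _ := by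
          apply rpow_le_rpow_of_exponent_le hN1
          have : ρ ≤ 1 / 5 := by
            rw [hρ, div_le_div_iff₀ (by positivity) (by norm_num)]
            have : (1 : ℝ) ≤ (k : ℝ) ^ 6 := one_le_pow₀ (by linarith)
            linarith
          linarith
  rw [h6] at h5
  linarith

end VMT

namespace VMT
open Finset Filter Topology
open Complex (I)
open Real (log exp rpow_natCast rpow_mul rpow_add rpow_one mul_rpow norm_of_nonneg
  rpow_le_rpow_of_exponent_le)
open scoped Real

/-! ### Approximating `ζ` by its partial sums -/

/-- The entire function `(s - 1) ζ(s)`. -/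
noncomputable def Zet : ℂ → ℂ := Function.update (fun s => (s - 1) * riemannZeta s) 1 1

lemma Zet_of_ne {s : ℂ} (hs : s ≠ 1) : Zet s = (s - 1) * riemannZeta s := by
  simp [Zet, Function.update_of_ne hs]

lemma Zet_one : Zet 1 = 1 := by simp [Zet]

lemma analyticAt_Zet (s : ℂ) : AnalyticAt ℂ Zet s := by
  have hd : ∀ z : ℂ, z ≠ 1 → DifferentiableAt ℂ Zet z := by
    intro z hz
    have h1 : DifferentiableAt ℂ (fun s => (s - 1) * riemannZeta s) z :=
      (differentiableAt_id.sub_const 1).mul (differentiableAt_riemannZeta hz)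
    refine h1.congr_of_eventuallyEq ?_
    filter_upwards [isOpen_ne.mem_nhds hz] with w hw using Zet_of_ne hw
  by_cases hs : s = 1
  · subst hs
    apply Complex.analyticAt_of_differentiable_on_punctured_nhds_of_continuousAt
    · filter_upwards [self_mem_nhdsWithin] with z hz using hd z hz
    · exact continuousAt_update_same.2 riemannZeta_residue_one
  · rw [Complex.analyticAt_iff_eventually_differentiableAt]
    filter_upwards [isOpen_ne.mem_nhds hs] with w hw using hd w hw

/-- The Euler–Maclaurin remainder on `[n, n + 1]`, multiplied by `s - 1`. -/
noncomputable def remT (n : ℕ) (s : ℂ) : ℂ :=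
  (s - 1) * ((n : ℂ) + 1) ^ (-s) + ((n : ℂ) + 1) ^ (1 - s) - (n : ℂ) ^ (1 - s)

lemma remT_aux {n : ℕ} (hn : 1 ≤ n) {s : ℂ} (hs : 0 < s.re) (hs1 : s ≠ 1) (x : ℝ) (hx : (n : ℝ) ≤ x) :
    HasDerivAt (fun u : ℝ => (s - 1) * ((u : ℂ) - n) * (u : ℂ) ^ (-s) + (u : ℂ) ^ (1 - s))
      (-(s * (s - 1) * ((x : ℂ) - n) * (x : ℂ) ^ (-s - 1))) x ∧
    (x ≤ n + 1 → ‖-(s * (s - 1) * ((x : ℂ) - n) * (x : ℂ) ^ (-s - 1))‖ ≤ ‖s‖ * ‖s - 1‖ * x ^ (-s.re - 1)) := by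
  have hn1 : (1 : ℝ) ≤ n := by exact_mod_cast hn
  have hx0 : 0 < x := by linarith
  have hs0 : s ≠ 0 := by rintro rfl; simp at hs
  constructor
  · have h1 := hasDerivAt_ofReal_cpow_const (x := x) hx0.ne' (r := -s) (neg_ne_zero.2 hs0)
    have h2 := hasDerivAt_ofReal_cpow_const (x := x) hx0.ne' (r := 1 - s) (sub_ne_zero.2 hs1.symm)
    have h3 : HasDerivAt (fun u : ℝ => (s - 1) * ((u : ℂ) - n)) (s - 1) x := by
      have h4 : HasDerivAt (fun u : ℝ => (u : ℂ)) 1 x := Complex.ofRealCLM.hasDerivAt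
      simpa using (h4.sub_const (n : ℂ)).const_mul (s - 1)
    refine ((h3.mul h1).add h2).congr_deriv ?_
    have : (1 - s - 1 : ℂ) = -s := by ring
    rw [this]; ring
  · intro hxn
    have h5 : ‖(x : ℂ) - n‖ ≤ 1 := by
      have : (x : ℂ) - n = ((x - n : ℝ) : ℂ) := by push_cast; ring
      rw [this, Complex.norm_real, Real.norm_eq_abs, abs_le]; constructor <;> linarith
    rw [norm_neg, norm_mul, norm_mul, norm_mul, Complex.norm_cpow_eq_rpow_re_of_pos hx0]
    have : (-s - 1).re = -s.re - 1 := by simp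
    rw [this]
    gcongr ?_ * _
    exact mul_le_of_le_one_right (by positivity) h5

lemma remT_eq (n : ℕ) (s : ℂ) : remT n s =
    ((s - 1) * ((((n : ℝ) + 1 : ℝ) : ℂ) - n) * (((n : ℝ) + 1 : ℝ) : ℂ) ^ (-s) + (((n : ℝ) + 1 : ℝ) : ℂ) ^ (1 - s)) -
    ((s - 1) * (((n : ℝ) : ℂ) - n) * ((n : ℝ) : ℂ) ^ (-s) + ((n : ℝ) : ℂ) ^ (1 - s)) := by
  unfold remT; push_cast; ring

lemma remT_one (n : ℕ) : remT n 1 = 0 := by simp [remT]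

lemma norm_remT_le {n : ℕ} (hn : 1 ≤ n) {s : ℂ} (hs : 0 < s.re) :
    ‖remT n s‖ ≤ ‖s‖ * ‖s - 1‖ * (n : ℝ) ^ (-s.re - 1) := by
  have hn1 : (1 : ℝ) ≤ n := by exact_mod_cast hn
  by_cases hs1 : s = 1
  · subst hs1; rw [remT_one]; simp
  rw [remT_eq]
  have := norm_image_sub_le_of_norm_deriv_le_segment' (a := (n : ℝ)) (b := n + 1)
    (C := ‖s‖ * ‖s - 1‖ * (n : ℝ) ^ (-s.re - 1))
    (fun x hx => (remT_aux hn hs hs1 x hx.1).1.hasDerivWithinAt)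
    (fun x hx => ((remT_aux hn hs hs1 x hx.1).2 hx.2.le).trans (by
      gcongr ‖s‖ * ‖s - 1‖ * ?_
      exact Real.rpow_le_rpow_of_nonpos (by linarith) hx.1 (by linarith)))
    (n + 1) (by simp)
  simpa using this

lemma norm_remT_le' {n : ℕ} (hn : 1 ≤ n) {s : ℂ} (hs : 0 < s.re) :
    ‖remT n s‖ ≤ ‖s‖ * ‖s - 1‖ / s.re * ((n : ℝ) ^ (-s.re) - ((n + 1 : ℕ) : ℝ) ^ (-s.re)) := by
  have hn1 : (1 : ℝ) ≤ n := by exact_mod_cast hn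
  by_cases hs1 : s = 1
  · subst hs1; rw [remT_one]; simp
  rw [remT_eq]
  set φ : ℝ → ℂ := fun u : ℝ => (s - 1) * ((u : ℂ) - n) * (u : ℂ) ^ (-s) + (u : ℂ) ^ (1 - s) with hφ
  set B : ℝ → ℝ := fun u => ‖s‖ * ‖s - 1‖ / s.re * ((n : ℝ) ^ (-s.re) - u ^ (-s.re)) with hB
  have key := image_norm_le_of_norm_deriv_right_le_deriv_boundary' (f := fun u => φ u - φ n)
    (a := (n : ℝ)) (b := n + 1) (f' := fun x => -(s * (s - 1) * ((x : ℂ) - n) * (x : ℂ) ^ (-s - 1)))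
    (B := B) (B' := fun x => ‖s‖ * ‖s - 1‖ * x ^ (-s.re - 1))
    (fun x hx => ((remT_aux hn hs hs1 x hx.1).1.sub_const _).continuousAt.continuousWithinAt)
    (fun x hx => ((remT_aux hn hs hs1 x hx.1).1.sub_const _).hasDerivWithinAt)
    (by simp [hB])
    (by
      intro x hx
      have hx0 : 0 < x := by linarith [hx.1]
      have : ContinuousAt B x := by
        simp only [hB]
        exact continuousAt_const.mul (continuousAt_const.sub (Real.continuousAt_rpow_const _ _ (Or.inl hx0.ne')))
      exact this.continuousWithinAt)
    (by
      intro x hx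
      have hx0 : 0 < x := by linarith [hx.1]
      have h := ((Real.hasDerivAt_rpow_const (x := x) (p := -s.re) (Or.inl hx0.ne')).const_sub
        ((n : ℝ) ^ (-s.re))).const_mul (‖s‖ * ‖s - 1‖ / s.re)
      refine (h.congr_deriv ?_).hasDerivWithinAt
      field_simp)
    (fun x hx => (remT_aux hn hs hs1 x hx.1).2 hx.2.le)
    (x := (n : ℝ) + 1) (by simp)
  simpa [hB, hφ] using key

lemma sum_remT_le {N : ℕ} (hN : 1 ≤ N) {s : ℂ} (hs : 0 < s.re) (M : ℕ) :
    ∑ n ∈ range M, ‖remT (N + n) s‖ ≤ ‖s‖ * ‖s - 1‖ / s.re * (N : ℝ) ^ (-s.re) := by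
  have h : ∑ n ∈ range M, ‖remT (N + n) s‖ ≤ ‖s‖ * ‖s - 1‖ / s.re *
      ((N : ℝ) ^ (-s.re) - ((N + M : ℕ) : ℝ) ^ (-s.re)) := by
    induction M with
    | zero => simp
    | succ M ih =>
      rw [sum_range_succ]
      have := norm_remT_le' (n := N + M) (by omega) hs
      have e : N + (M + 1) = N + M + 1 := by ring
      rw [e]
      linarith
  refine h.trans ?_
  gcongr
  have : 0 ≤ ((N + M : ℕ) : ℝ) ^ (-s.re) := by positivity
  linarith

lemma summable_remT {N : ℕ} (hN : 1 ≤ N) {s : ℂ} (hs : 0 < s.re) :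
    Summable fun n => remT (N + n) s :=
  Summable.of_norm (summable_of_sum_range_le (fun _ => norm_nonneg _) (sum_remT_le hN hs))

lemma norm_tsum_remT_le {N : ℕ} (hN : 1 ≤ N) {s : ℂ} (hs : 0 < s.re) :
    ‖∑' n, remT (N + n) s‖ ≤ ‖s‖ * ‖s - 1‖ / s.re * (N : ℝ) ^ (-s.re) := by
  have hsum := summable_of_sum_range_le (fun _ => norm_nonneg _) (sum_remT_le hN hs)
  exact (norm_tsum_le_tsum_norm hsum).trans
    (Real.tsum_le_of_sum_range_le (fun _ => norm_nonneg _) (sum_remT_le hN hs))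

lemma differentiable_remT {n : ℕ} (hn : 1 ≤ n) : Differentiable ℂ (remT n) := by
  have h0 : (n : ℂ) ≠ 0 := by exact_mod_cast (by omega : n ≠ 0)
  have h1 : (n : ℂ) + 1 ≠ 0 := by exact_mod_cast (by omega : n + 1 ≠ 0)
  intro s
  unfold remT
  refine (((differentiableAt_id.sub_const 1).mul ?_).add ?_).sub ?_
  · exact (differentiableAt_id.neg).const_cpow (Or.inl h1)
  · exact (differentiableAt_id.const_sub 1).const_cpow (Or.inl h1)
  · exact (differentiableAt_id.const_sub 1).const_cpow (Or.inl h0)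

lemma differentiableAt_tsum_remT {N : ℕ} (hN : 1 ≤ N) {s : ℂ} (hs : 0 < s.re) :
    DifferentiableAt ℂ (fun s => ∑' n, remT (N + n) s) s := by
  set δ := s.re / 2 with hδ
  set R := ‖s‖ + 1 with hR
  set U : Set ℂ := {z | δ < z.re} ∩ Metric.ball 0 R with hU
  have hUo : IsOpen U := (isOpen_lt continuous_const Complex.continuous_re).inter Metric.isOpen_ball
  have hsU : s ∈ U := by
    refine ⟨?_, ?_⟩
    · simp only [Set.mem_ofPred_eq, hδ]; linarith
    · simp [hR]
  have hsm : Summable fun n : ℕ => R * (R + 1) * ((N + n : ℕ) : ℝ) ^ (-δ - 1) := by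
    apply Summable.mul_left
    have h := (Real.summable_nat_rpow (p := -δ - 1)).2 (by linarith)
    have := (summable_nat_add_iff (f := fun n : ℕ => (n : ℝ) ^ (-δ - 1)) N).2 h
    simpa [add_comm] using this
  have := Complex.differentiableOn_tsum_of_summable_norm (U := U) (F := fun n s => remT (N + n) s) hsm
    (fun n => (differentiable_remT (by omega)).differentiableOn) hUo (fun n w hw => by
      have hw1 : δ < w.re := hw.1
      have hw2 : ‖w‖ < R := by simpa using hw.2
      have hn1 : (1 : ℝ) ≤ ((N + n : ℕ) : ℝ) := by exact_mod_cast (by omega : 1 ≤ N + n)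
      refine (norm_remT_le (by omega) (by linarith)).trans ?_
      have : ‖w - 1‖ ≤ R + 1 := (norm_sub_le _ _).trans (by simp; linarith)
      gcongr)
  exact this.differentiableAt (hUo.mem_nhds hsU)

/-- First order Euler–Maclaurin formula for `(s - 1) ζ(s)` in `re s > 0`. -/
lemma Zet_eq {N : ℕ} (hN : 1 ≤ N) {s : ℂ} (hs : 0 < s.re) :
    Zet s = (s - 1) * ∑ n ∈ range N, ((n : ℂ) + 1) ^ (-s) + (N : ℂ) ^ (1 - s) + ∑' n, remT (N + n) s := by
  set g : ℂ → ℂ := fun s => (s - 1) * ∑ n ∈ range N, ((n : ℂ) + 1) ^ (-s) + (N : ℂ) ^ (1 - s) +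
    ∑' n, remT (N + n) s with hg
  set U : Set ℂ := {z | 0 < z.re} with hU
  have hUo : IsOpen U := isOpen_lt continuous_const Complex.continuous_re
  have hN0 : (N : ℂ) ≠ 0 := by exact_mod_cast (by omega : N ≠ 0)
  have hgd : DifferentiableOn ℂ g U := by
    intro z hz
    refine DifferentiableAt.differentiableWithinAt ?_
    refine (((differentiableAt_id.sub_const 1).mul ?_).add ?_).add (differentiableAt_tsum_remT hN hz)
    · refine DifferentiableAt.fun_sum fun n _ => ?_
      have h1 : (n : ℂ) + 1 ≠ 0 := by exact_mod_cast (by omega : n + 1 ≠ 0)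
      exact (differentiableAt_id.neg).const_cpow (Or.inl h1)
    · exact (differentiableAt_id.const_sub 1).const_cpow (Or.inl hN0)
  have h2U : (2 : ℂ) ∈ U := by simp [hU]
  have hev : Zet =ᶠ[𝓝 2] g := by
    have : {z : ℂ | 1 < z.re} ∈ 𝓝 (2 : ℂ) :=
      (isOpen_lt continuous_const Complex.continuous_re).mem_nhds (by simp)
    filter_upwards [this] with z hz
    have hz1 : 1 < z.re := hz
    have hzne : z ≠ 1 := by rintro rfl; simp at hz1
    rw [Zet_of_ne hzne, zeta_eq_tsum_one_div_nat_add_one_cpow hz1]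
    -- partial sums
    have hsumz : Summable fun n : ℕ => 1 / ((n : ℂ) + 1) ^ z := by
      have := (summable_nat_add_iff (f := fun n : ℕ => 1 / (n : ℂ) ^ z) 1).2
        (Complex.summable_one_div_nat_cpow.2 hz1)
      simpa using this
    have t1 : Tendsto (fun M : ℕ => (z - 1) * ∑ n ∈ range (N + M), 1 / ((n : ℂ) + 1) ^ z) atTop
        (𝓝 ((z - 1) * ∑' n : ℕ, 1 / ((n : ℂ) + 1) ^ z)) := by
      refine Tendsto.const_mul _ ?_
      have := hsumz.hasSum.tendsto_sum_nat.comp (tendsto_add_atTop_nat N)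
      simpa [Function.comp_def, add_comm] using this
    have hpart : ∀ M : ℕ, (z - 1) * ∑ n ∈ range (N + M), 1 / ((n : ℂ) + 1) ^ z =
        (z - 1) * ∑ n ∈ range N, ((n : ℂ) + 1) ^ (-z) + (N : ℂ) ^ (1 - z) + ∑ n ∈ range M, remT (N + n) z -
          ((N + M : ℕ) : ℂ) ^ (1 - z) := by
      intro M
      induction M with
      | zero => simp [Complex.cpow_neg]
      | succ M ih =>
        rw [← add_assoc, sum_range_succ, mul_add, ih, sum_range_succ]
        unfold remT
        rw [Complex.cpow_neg (((N + M : ℕ) : ℂ) + 1)]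
        push_cast; ring
    have t2 : Tendsto (fun M : ℕ => ((N + M : ℕ) : ℂ) ^ (1 - z)) atTop (𝓝 0) := by
      rw [tendsto_zero_iff_norm_tendsto_zero]
      have h1 : Tendsto (fun x : ℝ => x ^ (-(z.re - 1))) atTop (𝓝 0) := tendsto_rpow_neg_atTop (by linarith)
      have h2 : Tendsto (fun M : ℕ => ((N + M : ℕ) : ℝ)) atTop atTop :=
        tendsto_natCast_atTop_atTop.comp (tendsto_atTop_mono (fun M => Nat.le_add_left M N) tendsto_id)
      refine (h1.comp h2).congr fun M => ?_
      rw [Complex.norm_natCast_cpow_of_pos (by omega)]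
      simp
    have t3 := (((summable_remT hN (by linarith : 0 < z.re)).hasSum.tendsto_sum_nat.const_add
      ((z - 1) * ∑ n ∈ range N, ((n : ℂ) + 1) ^ (-z) + (N : ℂ) ^ (1 - z))).sub t2)
    rw [sub_zero] at t3
    exact tendsto_nhds_unique t1 (t3.congr fun M => (hpart M).symm)
  exact AnalyticOnNhd.eqOn_of_preconnected_of_eventuallyEq (fun z _ => analyticAt_Zet z)
    (hgd.analyticOnNhd hUo) (convex_halfSpace_re_gt 0).isPreconnected h2U hev hs

lemma zeta_approx {N : ℕ} (hN : 1 ≤ N) {s : ℂ} (hs : 0 < s.re) (hs1 : s ≠ 1) :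
    ‖riemannZeta s - ∑ n ∈ Ioc 0 N, (n : ℂ) ^ (-s)‖ ≤
      (N : ℝ) ^ (1 - s.re) / ‖s - 1‖ + ‖s‖ / s.re * (N : ℝ) ^ (-s.re) := by
  have h := Zet_eq hN hs
  rw [Zet_of_ne hs1] at h
  have h0 : s - 1 ≠ 0 := sub_ne_zero.2 hs1
  have e : ∑ n ∈ Ioc 0 N, (n : ℂ) ^ (-s) = ∑ n ∈ range N, ((n : ℂ) + 1) ^ (-s) := by
    have h1 := Finset.sum_Ico_add' (fun n : ℕ => (n : ℂ) ^ (-s)) 0 N 1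
    have h2 : Ioc 0 N = Ico (0 + 1) (N + 1) := by ext x; simp; omega
    rw [h2, ← h1, Finset.range_eq_Ico]
    push_cast; rfl
  have h2 : riemannZeta s - ∑ n ∈ Ioc 0 N, (n : ℂ) ^ (-s) =
      ((N : ℂ) ^ (1 - s) + ∑' n, remT (N + n) s) / (s - 1) := by
    rw [e, eq_div_iff h0, sub_mul, mul_comm, h]; ring
  have hn0 : 0 < ‖s - 1‖ := norm_pos_iff.2 h0
  rw [h2, norm_div]
  calc _ ≤ ((N : ℝ) ^ (1 - s.re) + ‖s‖ * ‖s - 1‖ / s.re * (N : ℝ) ^ (-s.re)) / ‖s - 1‖ := by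
        gcongr
        refine (norm_add_le _ _).trans (add_le_add ?_ (norm_tsum_remT_le hN hs))
        rw [Complex.norm_natCast_cpow_of_pos (by omega)]; simp
    _ = _ := by field_simp

/-! ### Bounds for `ζ` near the line `Re s = 1` -/

/-- Abel summation with decreasing non-negative weights. -/
lemma abel_le {f : ℕ → ℂ} {w : ℕ → ℝ} {N M : ℕ} {S : ℝ} (hNM : N ≤ M)
    (hw : ∀ n, N ≤ n → w (n + 1) ≤ w n) (hw0 : ∀ n, N ≤ n → 0 ≤ w n)
    (hS : ∀ m, N ≤ m → m ≤ M → ‖∑ n ∈ Ioc N m, f n‖ ≤ S) :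
    ‖∑ n ∈ Ioc N M, (w n : ℂ) * f n‖ ≤ w N * S := by
  have key : ∀ m, N ≤ m → m ≤ M →
      ‖∑ n ∈ Ioc N m, (w n : ℂ) * f n - w m * ∑ n ∈ Ioc N m, f n‖ ≤ (w N - w m) * S := by
    intro m hm
    induction m, hm using Nat.le_induction with
    | base => simp
    | succ m hm ih =>
      intro hM
      have e : ∑ n ∈ Ioc N (m + 1), (w n : ℂ) * f n - w (m + 1) * ∑ n ∈ Ioc N (m + 1), f n =
          (∑ n ∈ Ioc N m, (w n : ℂ) * f n - w m * ∑ n ∈ Ioc N m, f n) +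
          ((w m - w (m + 1) : ℝ) : ℂ) * ∑ n ∈ Ioc N m, f n := by
        rw [sum_Ioc_succ_top hm, sum_Ioc_succ_top hm]
        push_cast; ring
      rw [e]
      refine (norm_add_le _ _).trans ?_
      rw [norm_mul, Complex.norm_real, norm_of_nonneg (sub_nonneg.2 (hw m hm))]
      have h1 := ih (by omega)
      have h2 := mul_le_mul_of_nonneg_left (hS m hm (by omega)) (sub_nonneg.2 (hw m hm))
      linarith
  have h1 := key M hNM le_rfl
  have h2 : ‖(w M : ℂ) * ∑ n ∈ Ioc N M, f n‖ ≤ w M * S := by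
    rw [norm_mul, Complex.norm_real, norm_of_nonneg (hw0 M hNM)]
    exact mul_le_mul_of_nonneg_left (hS M hNM le_rfl) (hw0 M hNM)
  have h3 := norm_add_le (∑ n ∈ Ioc N M, (w n : ℂ) * f n - w M * ∑ n ∈ Ioc N M, f n)
    ((w M : ℂ) * ∑ n ∈ Ioc N M, f n)
  rw [sub_add_cancel] at h3
  linarith

lemma dyadic_le {f : ℕ → ℂ} {N X : ℕ} {B : ℝ} (hB : 0 ≤ B)
    (h : ∀ n m, N ≤ n → n ≤ m → m ≤ 2 * n → m ≤ X → ‖∑ i ∈ Ioc n m, f i‖ ≤ B) (j : ℕ) :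
    ∀ Y ≤ X, Y ≤ 2 ^ j * N → ‖∑ i ∈ Ioc N Y, f i‖ ≤ j * B := by
  induction j with
  | zero => intro Y _ hY; rw [Finset.Ioc_eq_empty (by omega)]; simp
  | succ j ih =>
    intro Y hYX hY
    have hj : (0 : ℝ) ≤ j * B := by positivity
    by_cases h1 : Y ≤ N
    · rw [Finset.Ioc_eq_empty (by omega)]; simp; positivity
    by_cases h2 : Y ≤ 2 * N
    · have := h N Y le_rfl (by omega) h2 hYX
      push_cast; linarith
    · have e : ∑ i ∈ Ioc N Y, f i = ∑ i ∈ Ioc N ((Y + 1) / 2), f i + ∑ i ∈ Ioc ((Y + 1) / 2) Y, f i := by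
        rw [Finset.sum_Ioc_consecutive _ (by omega) (by omega)]
      have h3 := ih ((Y + 1) / 2) (by omega) (by rw [pow_succ] at hY; ring_nf at hY ⊢; omega)
      have h4 := h ((Y + 1) / 2) Y (by omega) (by omega) (by omega) hYX
      rw [e]
      refine (norm_add_le _ _).trans ?_
      push_cast; linarith

lemma natCast_cpow_eq {n : ℕ} (hn : 0 < n) (s : ℂ) :
    (n : ℂ) ^ (-s) = (((n : ℝ) ^ (-s.re) : ℝ) : ℂ) *
      Complex.exp (I * ((-s.im * log n : ℝ) : ℂ)) := by
  have hn0 : (n : ℂ) ≠ 0 := by exact_mod_cast hn.ne'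
  rw [Complex.cpow_def_of_ne_zero hn0, Real.rpow_def_of_pos (by exact_mod_cast hn), Complex.ofReal_exp,
    ← Complex.exp_add, ← Complex.natCast_log]
  congr 1
  conv_lhs => rw [← Complex.re_add_im s]
  push_cast; ring

lemma block_le {k : ℕ} (hk : 10 ≤ k) {N M : ℕ} (hN : k ^ (5000 * k ^ 5) ≤ N) (hNM : N ≤ M) (hM : M ≤ 2 * N)
    {s : ℂ} (ht1 : (N : ℝ) ^ (3 / 4 : ℝ) ≤ |s.im|) (ht2 : |s.im| ≤ (N : ℝ) ^ (((k : ℝ) - 5) / 5))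
    (hs : 0 ≤ s.re) (hs1 : 1 - s.re ≤ 1 / (320 * (k : ℝ) ^ 6)) :
    ‖∑ n ∈ Ioc N M, (n : ℂ) ^ (-s)‖ ≤ 5 := by
  have hN1 : 1 ≤ N := le_trans (Nat.one_le_pow _ _ (by omega)) hN
  have hN1' : (1 : ℝ) ≤ N := by exact_mod_cast hN1
  have e : ∑ n ∈ Ioc N M, (n : ℂ) ^ (-s) = ∑ n ∈ Ioc N M, (((n : ℝ) ^ (-s.re) : ℝ) : ℂ) *
      Complex.exp (I * ((-s.im * log n : ℝ) : ℂ)) :=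
    sum_congr rfl fun n hn => natCast_cpow_eq (by rw [mem_Ioc] at hn; omega) s
  rw [e]
  have := abel_le (f := fun n : ℕ => Complex.exp (I * ((-s.im * log n : ℝ) : ℂ)))
    (w := fun n : ℕ => (n : ℝ) ^ (-s.re)) (N := N) (M := M)
    (S := 5 * (N : ℝ) ^ (1 - 1 / (320 * (k : ℝ) ^ 6))) hNM
    (fun n hn => Real.rpow_le_rpow_of_nonpos (by exact_mod_cast (by omega : 0 < n)) (by push_cast; linarith)
      (by linarith)) (fun n hn => by positivity)
    (fun m hm hmM => zeta_sum hk hN hm (by omega) (by rwa [abs_neg]) (by rwa [abs_neg]))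
  refine this.trans ?_
  have h2 : (N : ℝ) ^ (-s.re) * (5 * (N : ℝ) ^ (1 - 1 / (320 * (k : ℝ) ^ 6))) =
      5 * (N : ℝ) ^ (1 - s.re - 1 / (320 * (k : ℝ) ^ 6)) := by
    rw [mul_left_comm, ← rpow_add (by positivity)]; congr 2; ring
  rw [h2]
  have := Real.rpow_le_one_of_one_le_of_nonpos hN1' (by linarith : 1 - s.re - 1 / (320 * (k : ℝ) ^ 6) ≤ 0)
  linarith

lemma sum_inv_le (N : ℕ) : ∑ n ∈ Ioc 0 N, ((n : ℝ))⁻¹ ≤ 1 + log N := by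
  have h := harmonic_le_one_add_log N
  rw [harmonic_eq_sum_Icc] at h
  push_cast at h
  exact h

lemma trivial_sum_le {N : ℕ} {s : ℂ} {θ : ℝ} (hθ : 0 ≤ θ) (hs : 1 - θ ≤ s.re) {X : ℕ} (hX : X ≤ N) :
    ‖∑ n ∈ Ioc 0 X, (n : ℂ) ^ (-s)‖ ≤ (N : ℝ) ^ θ * (1 + log N) := by
  calc _ ≤ ∑ n ∈ Ioc 0 X, (N : ℝ) ^ θ * ((n : ℝ))⁻¹ := by
        refine norm_sum_le_of_le _ fun n hn => ?_
        rw [mem_Ioc] at hn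
        have hn1 : (1 : ℝ) ≤ n := by exact_mod_cast hn.1
        rw [Complex.norm_natCast_cpow_of_pos hn.1, Complex.neg_re]
        calc (n : ℝ) ^ (-s.re) ≤ (n : ℝ) ^ (θ + (-1)) := rpow_le_rpow_of_exponent_le hn1 (by linarith)
          _ = (n : ℝ) ^ θ * ((n : ℝ))⁻¹ := by
            rw [rpow_add (by positivity), Real.rpow_neg_one]
          _ ≤ _ := by
            gcongr
            exact_mod_cast hn.2.trans hX
    _ ≤ ∑ n ∈ Ioc 0 N, (N : ℝ) ^ θ * ((n : ℝ))⁻¹ := by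
        refine Finset.sum_le_sum_of_subset_of_nonneg (Finset.Ioc_subset_Ioc_right hX) fun i _ _ => by positivity
    _ = (N : ℝ) ^ θ * ∑ n ∈ Ioc 0 N, ((n : ℝ))⁻¹ := by rw [mul_sum]
    _ ≤ _ := by gcongr; exact sum_inv_le N

/-- Bound for `ζ` near the line `re s = 1`: terms up to `N` are estimated trivially, the rest by
dyadic blocks and Vinogradov's method. -/
lemma zeta_le {k : ℕ} (hk : 10 ≤ k) {N : ℕ} (hN : k ^ (5000 * k ^ 5) ≤ N) {s : ℂ}
    (ht : 1 ≤ |s.im|) (ht2 : |s.im| ≤ (N : ℝ) ^ (((k : ℝ) - 5) / 5)) {θ : ℝ} (hθ : 0 ≤ θ)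
    (hθ1 : θ ≤ 1 / (320 * (k : ℝ) ^ 6)) (hs : 1 - θ ≤ s.re) :
    ‖riemannZeta s‖ ≤ (N : ℝ) ^ θ * (1 + log N) + 10 * log |s.im| + 15 := by
  have hN1 : 1 ≤ N := le_trans (Nat.one_le_pow _ _ (by omega)) hN
  have hN1' : (1 : ℝ) ≤ N := by exact_mod_cast hN1
  have hk6 : (1 : ℝ) ≤ (k : ℝ) ^ 6 := one_le_pow₀ (by exact_mod_cast (by omega : 1 ≤ k))
  have hθ4 : θ ≤ 1 / 4 := hθ1.trans (by
    apply one_div_le_one_div_of_le <;> linarith)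
  have hre : 3 / 4 ≤ s.re := by linarith
  set t := |s.im| with htdef
  set X := ⌊t ^ (4 / 3 : ℝ)⌋₊ with hX
  have ht43 : (1 : ℝ) ≤ t ^ (4 / 3 : ℝ) := Real.one_le_rpow ht (by norm_num)
  have hX1 : 1 ≤ X := Nat.le_floor (by simpa using ht43)
  have hX1' : (1 : ℝ) ≤ X := by exact_mod_cast hX1
  have hXle : (X : ℝ) ≤ t ^ (4 / 3 : ℝ) := Nat.floor_le (by positivity)
  have hXge : t ^ (4 / 3 : ℝ) ≤ 2 * X := by
    have := Nat.lt_floor_add_one (t ^ (4 / 3 : ℝ))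
    linarith
  have ht0 : 0 < t := by linarith
  have hX34 : (X : ℝ) ^ (3 / 4 : ℝ) ≤ t := by
    calc (X : ℝ) ^ (3 / 4 : ℝ) ≤ (t ^ (4 / 3 : ℝ)) ^ (3 / 4 : ℝ) := by gcongr
      _ = t := by rw [← rpow_mul ht0.le]; norm_num
  have hX34' : t ≤ 2 * (X : ℝ) ^ (3 / 4 : ℝ) := by
    calc t = (t ^ (4 / 3 : ℝ)) ^ (3 / 4 : ℝ) := by rw [← rpow_mul ht0.le]; norm_num
      _ ≤ (2 * X) ^ (3 / 4 : ℝ) := by gcongr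
      _ = 2 ^ (3 / 4 : ℝ) * (X : ℝ) ^ (3 / 4 : ℝ) := by rw [mul_rpow (by norm_num) (by positivity)]
      _ ≤ 2 ^ (1 : ℝ) * (X : ℝ) ^ (3 / 4 : ℝ) := by gcongr <;> norm_num
      _ = _ := by rw [rpow_one]
  have hs1 : s ≠ 1 := by rintro rfl; simp at htdef; linarith
  have hn1 : t ≤ ‖s - 1‖ := by
    have := Complex.abs_im_le_norm (s - 1); simpa using this
  have hA := zeta_approx hX1 (by linarith : 0 < s.re) hs1
  have hA1 : (X : ℝ) ^ (1 - s.re) / ‖s - 1‖ ≤ 1 := by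
    rw [div_le_one (by linarith)]
    refine le_trans ?_ (hX34.trans hn1)
    exact rpow_le_rpow_of_exponent_le hX1' (by linarith)
  have hA2 : ‖s‖ / s.re * (X : ℝ) ^ (-s.re) ≤ 4 := by
    have h1 : ‖s‖ / s.re ≤ 1 + 4 / 3 * t := by
      rw [div_le_iff₀ (by linarith)]
      have := Complex.norm_le_abs_re_add_abs_im s
      rw [abs_of_nonneg (by linarith : (0:ℝ) ≤ s.re)] at this
      nlinarith
    have h2 : (X : ℝ) ^ (-s.re) ≤ (X : ℝ) ^ (-(3 / 4) : ℝ) :=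
      rpow_le_rpow_of_exponent_le hX1' (by linarith)
    have h0 : 0 < (X : ℝ) ^ (3 / 4 : ℝ) := by positivity
    have h01 : 1 ≤ (X : ℝ) ^ (3 / 4 : ℝ) := Real.one_le_rpow hX1' (by norm_num)
    calc ‖s‖ / s.re * (X : ℝ) ^ (-s.re) ≤ (1 + 4 / 3 * t) * (X : ℝ) ^ (-(3 / 4) : ℝ) := by gcongr
      _ ≤ 4 := by
        rw [Real.rpow_neg (by positivity), ← div_eq_mul_inv, div_le_iff₀ h0]
        linarith
  have hlogt : 0 ≤ log t := Real.log_nonneg ht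
  have hmain : ‖∑ n ∈ Ioc 0 X, (n : ℂ) ^ (-s)‖ ≤
      (N : ℝ) ^ θ * (1 + log N) + 10 * log t + 10 := by
    by_cases hXN : X ≤ N
    · have := trivial_sum_le hθ hs hXN
      linarith
    push Not at hXN
    rw [← Finset.sum_Ioc_consecutive _ (Nat.zero_le N) hXN.le]
    refine (norm_add_le _ _).trans ?_
    have h1 := trivial_sum_le hθ hs le_rfl (N := N)
    have h2 := dyadic_le (f := fun n : ℕ => (n : ℂ) ^ (-s)) (N := N) (X := X) (B := 5) (by norm_num)
      (fun n m hn hnm hm2 hmX => block_le hk (hN.trans hn) hnm hm2 (by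
          refine le_trans ?_ hX34
          gcongr
          exact hnm.trans hmX) (ht2.trans (by
          gcongr
          have : (10 : ℝ) ≤ k := by exact_mod_cast hk
          apply div_nonneg <;> linarith)) (by linarith) (by linarith)) (Nat.log 2 X + 1) X le_rfl (by
        have := (Nat.lt_pow_succ_log_self (b := 2) (by norm_num) X).le
        exact this.trans (Nat.le_mul_of_pos_right _ hN1))
    have h3 : (Nat.log 2 X : ℝ) ≤ 2 * log t := by
      have h4 : ((2 : ℝ)) ^ (Nat.log 2 X) ≤ X := by exact_mod_cast Nat.pow_log_le_self 2 (by omega)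
      have h5 : log ((2 : ℝ) ^ (Nat.log 2 X)) ≤ log (t ^ (4 / 3 : ℝ)) :=
        Real.log_le_log (by positivity) (h4.trans hXle)
      rw [Real.log_pow, Real.log_rpow ht0] at h5
      have := Real.log_two_gt_d9
      have h6 : (0 : ℝ) ≤ (Nat.log 2 X : ℝ) := by positivity
      nlinarith
    push_cast at h2
    nlinarith
  have := norm_add_le (riemannZeta s - ∑ n ∈ Ioc 0 X, (n : ℂ) ^ (-s)) (∑ n ∈ Ioc 0 X, (n : ℂ) ^ (-s))
  rw [sub_add_cancel] at this
  linarith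

lemma exists_pow_le_exp (B : ℝ) (n : ℕ) : ∃ u₀ : ℝ, ∀ u ≥ u₀, B * u ^ n ≤ exp u := by
  have h : Tendsto (fun u : ℝ => B * (u ^ n * exp (-u))) atTop (𝓝 (B * 0)) :=
    (Real.tendsto_pow_mul_exp_neg_atTop_nhds_zero n).const_mul B
  rw [mul_zero] at h
  have := h.eventually (ge_mem_nhds (zero_lt_one))
  obtain ⟨u₀, hu⟩ := eventually_atTop.1 this
  refine ⟨u₀, fun u hu' => ?_⟩
  have h1 := hu u hu'
  rw [← mul_assoc, Real.exp_neg, ← div_eq_mul_inv, div_le_one (Real.exp_pos u)] at h1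
  exact h1

/-- `ζ` is at most a power of `log t` in a region reaching `C (log log t)² / log t` to the left of
`re s = 1`, for arbitrary `C`. -/
lemma zeta_vinogradov {C : ℝ} (hC : 0 < C) : ∃ t₀ : ℝ, 1 ≤ t₀ ∧ ∀ s : ℂ, t₀ ≤ |s.im| →
    1 - C * log (log |s.im|) ^ 2 / log |s.im| ≤ s.re →
    ‖riemannZeta s‖ ≤ log |s.im| ^ 3 := by
  set A : ℝ := 5 * C + 11 with hA
  obtain ⟨u1, hu1⟩ := exists_pow_le_exp (5000 * A ^ 6 * C) 7
  obtain ⟨u2, hu2⟩ := exists_pow_le_exp (320 * C * A ^ 6) 8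
  set u₀ := max (max u1 u2) (max 10 (1 / C)) with hu₀
  refine ⟨exp (exp u₀), Real.one_le_exp (Real.exp_pos _).le, fun s hs hσ => ?_⟩
  set t := |s.im| with ht
  set L := log t with hL
  set u := log L with hu
  have htpos : 0 < t := (Real.exp_pos _).trans_le hs
  have hLge : exp u₀ ≤ L := by
    rw [hL, Real.le_log_iff_exp_le htpos]; exact hs
  have hLpos : 0 < L := (Real.exp_pos _).trans_le hLge
  have huge : u₀ ≤ u := by rw [hu, Real.le_log_iff_exp_le hLpos]; exact hLge
  have hexpu : exp u = L := Real.exp_log hLpos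
  have htexp : t = exp L := (Real.exp_log htpos).symm
  have h10 : 10 ≤ u := le_trans (by simp [hu₀]) huge
  have hCu : 1 ≤ C * u := by
    have : 1 / C ≤ u := le_trans (by simp [hu₀]) huge
    rw [div_le_iff₀ hC] at this; linarith
  have e1 := hu1 u (le_trans (by simp [hu₀]) huge)
  have e2 := hu2 u (le_trans (by simp [hu₀]) huge)
  rw [hexpu] at e1 e2
  have hL11 : 11 ≤ L := by rw [← hexpu]; have := Real.add_one_le_exp u; linarith
  set k : ℕ := ⌊5 * C * u⌋₊ + 11 with hk
  have hkpos : (0 : ℝ) < k := by positivity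
  have hk1 : (k : ℝ) ≤ A * u := by
    have : (⌊5 * C * u⌋₊ : ℝ) ≤ 5 * C * u := Nat.floor_le (by positivity)
    rw [hk, hA]; push_cast; nlinarith
  have hk2 : C * u ≤ ((k : ℝ) - 5) / 5 := by
    have := Nat.lt_floor_add_one (5 * C * u)
    rw [hk]; push_cast; linarith
  have hA0 : 0 < A := by positivity
  have hu0 : 0 < u := by linarith
  set N : ℕ := ⌈exp (L / (C * u))⌉₊ with hN
  have hN1 : exp (L / (C * u)) ≤ N := Nat.le_ceil _
  have hLK : 0 ≤ L / (C * u) := by positivity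
  have hLK1 : L / (C * u) ≤ L := div_le_self hLpos.le hCu
  have hN2 : (N : ℝ) ≤ 2 * exp (L / (C * u)) := by
    have h1 := Nat.ceil_lt_add_one (Real.exp_pos (L / (C * u))).le
    have h2 := Real.one_le_exp hLK
    linarith
  have hNpos : (0 : ℝ) < N := (Real.exp_pos _).trans_le hN1
  set θ := C * u ^ 2 / L with hθ
  have hθ0 : 0 ≤ θ := by positivity
  have hk6 : (k : ℝ) ^ 6 ≤ (A * u) ^ 6 := by gcongr
  have hθ1 : θ ≤ 1 / (320 * (k : ℝ) ^ 6) := by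
    rw [hθ, div_le_div_iff₀ hLpos (by positivity)]
    calc C * u ^ 2 * (320 * (k : ℝ) ^ 6) ≤ C * u ^ 2 * (320 * (A * u) ^ 6) := by gcongr
      _ = 320 * C * A ^ 6 * u ^ 8 := by ring
      _ ≤ 1 * L := by linarith
  have hkN : k ^ (5000 * k ^ 5) ≤ N := by
    have : ((k ^ (5000 * k ^ 5) : ℕ) : ℝ) ≤ N := by
      refine le_trans ?_ hN1
      push_cast
      rw [← Real.exp_log (pow_pos hkpos (5000 * k ^ 5)), Real.exp_le_exp, Real.log_pow,
        le_div_iff₀ (by positivity)]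
      push_cast
      calc (5000 * (k : ℝ) ^ 5) * log k * (C * u) ≤ (5000 * (k : ℝ) ^ 5) * k * (C * u) := by
            gcongr
            exact Real.log_le_self hkpos.le
        _ = 5000 * (k : ℝ) ^ 6 * (C * u) := by ring
        _ ≤ 5000 * (A * u) ^ 6 * (C * u) := by gcongr
        _ = 5000 * A ^ 6 * C * u ^ 7 := by ring
        _ ≤ L := e1
    exact_mod_cast this
  have hmain := zeta_le (k := k) (by omega) hkN (s := s) (by
      rw [← ht, htexp]; exact Real.one_le_exp hLpos.le) (by
      rw [← ht]
      calc t = exp (L / (C * u)) ^ (C * u) := by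
            rw [← Real.exp_mul, htexp]; congr 1; field_simp
        _ ≤ (N : ℝ) ^ (C * u) := by gcongr
        _ ≤ _ := rpow_le_rpow_of_exponent_le (le_trans (Real.one_le_exp hLK) hN1) hk2) hθ0 hθ1 hσ
  refine hmain.trans ?_
  rw [← ht, ← hL]
  have hθle : θ ≤ 1 := hθ1.trans (by
    rw [div_le_one (by positivity)]
    have : (1 : ℝ) ≤ (k : ℝ) ^ 6 := one_le_pow₀ (by exact_mod_cast (by omega : 1 ≤ k))
    linarith)
  have hNθ : (N : ℝ) ^ θ ≤ 2 * L := by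
    calc (N : ℝ) ^ θ ≤ (2 * exp (L / (C * u))) ^ θ := by gcongr
      _ = 2 ^ θ * exp u := by
          rw [mul_rpow (by norm_num) (Real.exp_pos _).le, ← Real.exp_mul]
          congr 2; rw [hθ]; field_simp
      _ ≤ 2 ^ (1 : ℝ) * L := by
          rw [hexpu]; gcongr; norm_num
      _ = 2 * L := by norm_num
  have hlogN : log N ≤ L + 1 := by
    calc log N ≤ log (2 * exp (L / (C * u))) := Real.log_le_log hNpos hN2
      _ = log 2 + L / (C * u) := by
          rw [Real.log_mul (by norm_num) (Real.exp_pos _).ne', Real.log_exp]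
      _ ≤ _ := by have := Real.log_two_lt_d9; linarith
  have hlogN0 : 0 ≤ log N := Real.log_nonneg (le_trans (Real.one_le_exp hLK) hN1)
  calc (N : ℝ) ^ θ * (1 + log N) + 10 * L + 15 ≤ 2 * L * (1 + (L + 1)) + 10 * L + 15 := by gcongr
    _ ≤ L ^ 3 := by nlinarith [mul_nonneg (sub_nonneg.2 hL11) (sub_nonneg.2 hL11), mul_nonneg (mul_nonneg (sub_nonneg.2 hL11) (sub_nonneg.2 hL11)) hLpos.le]

/-- A bound for `ζ` on a fixed vertical line close to `1`, strictly better than convexity. -/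
lemma zeta_fixed : ∃ ρ : ℝ, 0 < ρ ∧ ρ ≤ 1 / 4 ∧ ∃ C : ℝ, 0 < C ∧ ∀ s : ℂ, 1 ≤ |s.im| → 1 - ρ ≤ s.re →
    ‖riemannZeta s‖ ≤ C * |s.im| ^ (ρ / 3) := by
  obtain ⟨k, hk⟩ : ∃ k : ℕ, k = 25 := ⟨_, rfl⟩
  obtain ⟨D, hD⟩ : ∃ D : ℕ, D = k ^ (5000 * k ^ 5) := ⟨_, rfl⟩
  have hkr : (k : ℝ) = 25 := by exact_mod_cast hk
  set ρ : ℝ := 1 / (320 * (k : ℝ) ^ 6) with hρ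
  have hρ0 : 0 < ρ := by rw [hρ, hkr]; positivity
  refine ⟨ρ, hρ0, by rw [hρ, hkr]; norm_num, (1 + 3 / ρ) * ((D : ℝ) + 2) ^ (4 * ρ / 3) + 30 / ρ + 15,
    by positivity, fun s hs hσ => ?_⟩
  set t := |s.im| with ht
  have ht0 : 0 < t := by linarith
  set N : ℕ := ⌈t ^ (1 / 4 : ℝ)⌉₊ + D with hN
  have h14 : 1 ≤ t ^ (1 / 4 : ℝ) := Real.one_le_rpow hs (by norm_num)
  have hN1 : t ^ (1 / 4 : ℝ) ≤ N := by
    have := Nat.le_ceil (t ^ (1 / 4 : ℝ)); rw [hN]; push_cast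
    have : (0 : ℝ) ≤ D := by positivity
    linarith
  have hN2 : (N : ℝ) ≤ (D + 2) * t ^ (1 / 4 : ℝ) := by
    have h1 := Nat.ceil_lt_add_one (by linarith : 0 ≤ t ^ (1 / 4 : ℝ))
    rw [hN]; push_cast
    have : (0 : ℝ) ≤ D := by positivity
    nlinarith
  have hNpos : (0 : ℝ) < N := by linarith
  have hmain := zeta_le (k := k) (by omega) (N := N) (by rw [← hD]; omega) (s := s) hs (by
      rw [← ht, hkr]
      calc t = (t ^ (1 / 4 : ℝ)) ^ (4 : ℝ) := by rw [← rpow_mul ht0.le]; norm_num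
        _ ≤ (N : ℝ) ^ (4 : ℝ) := by gcongr
        _ = _ := by norm_num) hρ0.le le_rfl hσ
  refine hmain.trans ?_
  rw [← ht]
  have h1 : 1 ≤ t ^ (ρ / 3) := Real.one_le_rpow hs (by positivity)
  have h2 : log t ≤ t ^ (ρ / 3) / (ρ / 3) := Real.log_le_rpow_div ht0.le (by positivity)
  have h3 : log N ≤ (N : ℝ) ^ (ρ / 3) / (ρ / 3) := Real.log_le_rpow_div hNpos.le (by positivity)
  have h4 : 1 ≤ (N : ℝ) ^ (ρ / 3) := Real.one_le_rpow (by linarith) (by positivity)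
  have h5 : (N : ℝ) ^ ρ * (1 + log N) ≤ (1 + 3 / ρ) * ((D : ℝ) + 2) ^ (4 * ρ / 3) * t ^ (ρ / 3) := by
    calc (N : ℝ) ^ ρ * (1 + log N) ≤ (N : ℝ) ^ ρ * ((1 + 3 / ρ) * (N : ℝ) ^ (ρ / 3)) := by
          gcongr
          have : (N : ℝ) ^ (ρ / 3) / (ρ / 3) = 3 / ρ * (N : ℝ) ^ (ρ / 3) := by field_simp
          linarith
      _ = (1 + 3 / ρ) * (N : ℝ) ^ (4 * ρ / 3) := by
          rw [mul_left_comm, ← rpow_add hNpos]; congr 2; ring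
      _ ≤ (1 + 3 / ρ) * ((D + 2) * t ^ (1 / 4 : ℝ)) ^ (4 * ρ / 3) := by gcongr
      _ = _ := by
          rw [mul_rpow (by positivity) (by positivity), ← rpow_mul ht0.le, ← mul_assoc]
          congr 2; ring
  have h6 : 10 * log t ≤ 30 / ρ * t ^ (ρ / 3) := by
    have : t ^ (ρ / 3) / (ρ / 3) * 10 = 30 / ρ * t ^ (ρ / 3) := by field_simp; norm_num
    linarith
  nlinarith

/-! ### Functional equation and subconvexity -/

lemma norm_Gamma_le {s : ℂ} (hs : 0 < s.re) : ‖Complex.Gamma s‖ ≤ Real.Gamma s.re := by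
  rw [Complex.Gamma_eq_integral hs, Real.Gamma_eq_integral hs, Complex.GammaIntegral]
  refine (MeasureTheory.norm_integral_le_integral_norm _).trans (le_of_eq ?_)
  refine MeasureTheory.setIntegral_congr_fun measurableSet_Ioi fun x hx => ?_
  have hx : 0 < x := hx
  simp only [norm_mul, Complex.norm_real, norm_of_nonneg (Real.exp_pos _).le]
  rw [Complex.norm_cpow_eq_rpow_re_of_pos hx]; simp

lemma norm_cos_le (w : ℂ) : ‖Complex.cos w‖ ≤ exp |w.im| := by
  rw [Complex.cos]
  have h1 : ‖Complex.exp (w * I)‖ ≤ exp |w.im| := by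
    rw [Complex.norm_exp]; simp [neg_le_abs]
  have h2 : ‖Complex.exp (-w * I)‖ ≤ exp |w.im| := by
    rw [Complex.norm_exp]; simp [le_abs_self]
  rw [norm_div]
  have := norm_add_le (Complex.exp (w * I)) (Complex.exp (-w * I))
  simp only [Complex.norm_ofNat]
  linarith

/-- The size of the gamma factor of the functional equation on the line `re s = 1`. -/
lemma norm_Gamma_mul_cos {t : ℝ} (ht : t ≠ 0) :
    (‖Complex.Gamma (1 - t * I)‖ * ‖Complex.cos (π * (1 - t * I) / 2)‖) ^ 2 ≤
      π * |t| / 2 := by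
  set z : ℂ := t * I with hz
  have hz0 : z ≠ 0 := by simp [hz, ht]
  have h1 : ‖Complex.Gamma (1 - z)‖ = ‖Complex.Gamma (1 + z)‖ := by
    have : 1 + z = (starRingEnd ℂ) (1 - z) := by simp [hz]
    rw [this, Complex.Gamma_conj, Complex.norm_conj]
  have h2 : ‖Complex.Gamma (1 - z)‖ ^ 2 = |t| * (π / |Real.sinh (π * t)|) := by
    rw [sq]
    nth_rewrite 2 [h1]
    rw [add_comm, Complex.Gamma_add_one z hz0, norm_mul, mul_left_comm, ← norm_mul, mul_comm (Complex.Gamma (1 - z)),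
      Complex.Gamma_mul_Gamma_one_sub, norm_div]
    have e : (π : ℂ) * z = ((π * t : ℝ) : ℂ) * I := by rw [hz]; push_cast; ring
    rw [e, Complex.sin_mul_I, ← Complex.ofReal_sinh, hz]
    simp only [norm_mul, Complex.norm_I, mul_one, Complex.norm_real, Real.norm_eq_abs, abs_of_pos Real.pi_pos]
  have h3 : ‖Complex.cos (π * (1 - z) / 2)‖ = |Real.sinh (π * t / 2)| := by
    have e : (π : ℂ) * (1 - z) / 2 = π / 2 - ((π * t / 2 : ℝ) : ℂ) * I := by
      rw [hz]; push_cast; ring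
    rw [e, Complex.cos_pi_div_two_sub, Complex.sin_mul_I, norm_mul, Complex.norm_I, mul_one, ← Complex.ofReal_sinh,
      Complex.norm_real, Real.norm_eq_abs]
  have h4 : Real.sinh (π * t) = 2 * Real.sinh (π * t / 2) * Real.cosh (π * t / 2) := by
    rw [← Real.sinh_two_mul]; congr 1; ring
  have hne : Real.sinh (π * t / 2) ≠ 0 := by
    rw [Ne, Real.sinh_eq_zero]; have := Real.pi_pos.ne'; simp [ht, this]
  have hs : |Real.sinh (π * t / 2)| ≤ Real.cosh (π * t / 2) := by
    rw [abs_le]; constructor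
    · have := Real.sinh_lt_cosh (-(π * t / 2))
      rw [Real.sinh_neg, Real.cosh_neg] at this; linarith
    · exact (Real.sinh_lt_cosh _).le
  have hc : 0 < Real.cosh (π * t / 2) := Real.cosh_pos _
  rw [mul_pow, h2, h3, h4, abs_mul, abs_mul, abs_of_pos hc, abs_of_pos (by norm_num : (0:ℝ) < 2)]
  have habs : 0 < |Real.sinh (π * t / 2)| := abs_pos.2 hne
  have : |t| * (π / (2 * |Real.sinh (π * t / 2)| * Real.cosh (π * t / 2))) *
      |Real.sinh (π * t / 2)| ^ 2 =
      (π * |t| / 2) * (|Real.sinh (π * t / 2)| / Real.cosh (π * t / 2)) := by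
    field_simp
  rw [this]
  refine mul_le_of_le_one_right (by positivity) ?_
  rw [div_le_one hc]; exact hs

lemma norm_two_mul_cpow (s : ℂ) : ‖(2 : ℂ) * (2 * π) ^ (-s)‖ = 2 * (2 * π) ^ (-s.re) := by
  have : (2 * π : ℂ) = ((2 * π : ℝ) : ℂ) := by push_cast; ring
  rw [norm_mul, this, Complex.norm_cpow_eq_rpow_re_of_pos (by positivity)]; simp

lemma zeta_line_zero {t : ℝ} (ht : 1 ≤ |t|) :
    ‖riemannZeta (t * I)‖ ≤ |t| ^ (1 / 2 : ℝ) * ‖riemannZeta (1 - t * I)‖ := by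
  have ht0 : t ≠ 0 := by rintro rfl; norm_num at ht
  have h := riemannZeta_one_sub (s := 1 - t * I) (by
      intro n h; have := congrArg Complex.im h; simp at this; exact ht0 this) (by
      intro h; have := congrArg Complex.im h; simp at this; exact ht0 this)
  rw [sub_sub_cancel] at h
  rw [h, norm_mul, norm_mul, norm_mul, norm_two_mul_cpow]
  refine mul_le_mul_of_nonneg_right ?_ (norm_nonneg _)
  have h1 := norm_Gamma_mul_cos ht0
  set G := ‖Complex.Gamma (1 - t * I)‖ * ‖Complex.cos (π * (1 - t * I) / 2)‖ with hG
  have hG0 : 0 ≤ G := by positivity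
  have hre : (1 - t * I : ℂ).re = 1 := by simp
  rw [hre, mul_assoc, ← hG, Real.rpow_neg_one, ← Real.sqrt_eq_rpow]
  have h2 : G ≤ Real.sqrt (π * |t| / 2) := Real.le_sqrt_of_sq_le h1
  have h3 : Real.sqrt (π * |t| / 2) ≤ 2 * Real.sqrt |t| := by
    rw [Real.sqrt_le_left (by positivity), mul_pow, Real.sq_sqrt (abs_nonneg t)]
    nlinarith [Real.pi_lt_d2]
  have h4 : 2 * (2 * π)⁻¹ ≤ 1 / 2 := by
    rw [mul_inv];
    have : π⁻¹ ≤ 1 / 2 := by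
      rw [inv_le_comm₀ Real.pi_pos (by norm_num)]; norm_num; linarith [Real.pi_gt_three]
    linarith
  have h5 : 0 ≤ Real.sqrt |t| := Real.sqrt_nonneg _
  calc 2 * (2 * π)⁻¹ * G ≤ 1 / 2 * (2 * Real.sqrt |t|) := by gcongr; exact h2.trans h3
    _ = _ := by ring

lemma zeta_line_one {s : ℂ} (hs : s.re = 1) (ht : 1 ≤ |s.im|) : ‖riemannZeta s‖ ≤ log |s.im| + 5 := by
  set t := |s.im| with htdef
  set N := ⌈t⌉₊ with hN
  have hN1 : t ≤ N := Nat.le_ceil t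
  have hN2 : (N : ℝ) ≤ 2 * t := by have := Nat.ceil_lt_add_one (by linarith : 0 ≤ t); linarith
  have hNpos : 1 ≤ N := by
    have : (1 : ℝ) ≤ N := by linarith
    exact_mod_cast this
  have hs1 : s ≠ 1 := by rintro rfl; simp at htdef; linarith
  have hn1 : t ≤ ‖s - 1‖ := by
    have := Complex.abs_im_le_norm (s - 1); simpa using this
  have hA := zeta_approx hNpos (by linarith : 0 < s.re) hs1
  rw [hs, sub_self, Real.rpow_zero, div_one, Real.rpow_neg_one] at hA
  have h1 : 1 / ‖s - 1‖ ≤ 1 := by rw [div_le_one (by linarith)]; linarith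
  have h2 : ‖s‖ * (N : ℝ)⁻¹ ≤ 2 := by
    rw [← div_eq_mul_inv, div_le_iff₀ (by linarith)]
    have := Complex.norm_le_abs_re_add_abs_im s
    rw [hs, abs_one] at this
    linarith
  have h3 := trivial_sum_le (N := N) (s := s) (θ := 0) le_rfl (by linarith) le_rfl
  rw [Real.rpow_zero, one_mul] at h3
  have h4 : log N ≤ log t + 1 := by
    calc log N ≤ log (2 * t) := Real.log_le_log (by linarith) hN2
      _ = log 2 + log t := Real.log_mul (by norm_num) (by linarith)
      _ ≤ _ := by have := Real.log_two_lt_d9; linarith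
  have := norm_add_le (riemannZeta s - ∑ n ∈ Ioc 0 N, (n : ℂ) ^ (-s)) (∑ n ∈ Ioc 0 N, (n : ℂ) ^ (-s))
  rw [sub_add_cancel] at this
  linarith

lemma zeta_crude_right {s : ℂ} (hs : 1 / 2 ≤ s.re) (ht : 1 ≤ |s.im|) :
    ‖riemannZeta s‖ ≤ 5 * |s.im| := by
  have hs1 : s ≠ 1 := by rintro rfl; simp at ht; linarith
  have hn1 : |s.im| ≤ ‖s - 1‖ := by
    have := Complex.abs_im_le_norm (s - 1); simpa using this
  have hA := zeta_approx le_rfl (by linarith : 0 < s.re) hs1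
  simp only [Nat.cast_one, Real.one_rpow, mul_one, Nat.Ioc_succ_singleton, zero_add, Finset.sum_singleton,
    Complex.one_cpow] at hA
  have h1 : 1 / ‖s - 1‖ ≤ 1 := by rw [div_le_one (by linarith)]; linarith
  have h2 : ‖s‖ / s.re ≤ 1 + 2 * |s.im| := by
    rw [div_le_iff₀ (by linarith)]
    have := Complex.norm_le_abs_re_add_abs_im s
    rw [abs_of_nonneg (by linarith : (0:ℝ) ≤ s.re)] at this
    nlinarith
  have := norm_add_le (riemannZeta s - 1) 1
  rw [sub_add_cancel, norm_one] at this
  linarith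

lemma zeta_crude : ∃ C : ℝ, 1 ≤ C ∧ ∀ s : ℂ, 0 ≤ s.re → 1 ≤ |s.im| →
    ‖riemannZeta s‖ ≤ C * exp (3 * |s.im|) := by
  have hcont : ContinuousOn Real.Gamma (Set.Icc (1 / 2) 1) := fun x hx =>
    (Real.differentiableAt_Gamma (fun m => by
      have := hx.1; have h2 : (0 : ℝ) ≤ m := by positivity
      intro h; linarith)).continuousAt.continuousWithinAt
  obtain ⟨C, hC⟩ := (isCompact_Icc.bddAbove_image hcont)
  have hC' : ∀ x : ℝ, 1 / 2 ≤ x → x ≤ 1 → Real.Gamma x ≤ C := fun x h1 h2 => hC ⟨x, ⟨h1, h2⟩, rfl⟩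
  have hC1 : 1 ≤ C := by simpa using hC' 1 (by norm_num) le_rfl
  refine ⟨10 * C, by linarith, fun s hs ht => ?_⟩
  set t := |s.im| with htdef
  have hte : t ≤ exp t := by have := Real.add_one_le_exp t; linarith
  have he1 : 1 ≤ exp t := by linarith
  have hE : exp (3 * t) = exp (2 * t) * exp t := by rw [← Real.exp_add]; congr 1; ring
  have he2 : 1 ≤ exp (2 * t) := Real.one_le_exp (by linarith)
  by_cases h : 1 / 2 ≤ s.re
  · refine (zeta_crude_right h ht).trans ?_
    rw [← htdef, hE]
    have : exp t ≤ exp (2 * t) * exp t := le_mul_of_one_le_left (by linarith) he2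
    nlinarith
  · push Not at h
    have him : s.im ≠ 0 := by intro h0; rw [htdef, h0] at ht; norm_num at ht
    have hf := riemannZeta_one_sub (s := 1 - s) (by
      intro n h; have := congrArg Complex.im h; simp at this; exact him this) (by
      intro h; have := congrArg Complex.im h; simp at this; exact him this)
    rw [sub_sub_cancel] at hf
    rw [hf, norm_mul, norm_mul, norm_mul, norm_two_mul_cpow]
    have hre : (1 - s).re = 1 - s.re := by simp
    have him' : |(1 - s).im| = t := by simp [htdef]
    have a1 : 2 * (2 * π) ^ (-(1 - s).re) ≤ 2 * 1 := by
      gcongr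
      refine Real.rpow_le_one_of_one_le_of_nonpos (by linarith [Real.pi_gt_three]) (by rw [hre]; linarith)
    have a2 : ‖Complex.Gamma (1 - s)‖ ≤ C :=
      (norm_Gamma_le (by rw [hre]; linarith)).trans (hC' _ (by rw [hre]; linarith) (by rw [hre]; linarith))
    have a3 : ‖Complex.cos (π * (1 - s) / 2)‖ ≤ exp (2 * t) := by
      refine (norm_cos_le _).trans (Real.exp_le_exp.2 ?_)
      have e : (π * (1 - s) / 2 : ℂ) = ((π / 2 : ℝ) : ℂ) * (1 - s) := by push_cast; ring
      rw [e, Complex.im_ofReal_mul, abs_mul, him', abs_of_pos (by positivity)]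
      nlinarith [Real.pi_lt_d2]
    have a4 : ‖riemannZeta (1 - s)‖ ≤ 5 * exp t := by
      refine (zeta_crude_right (by rw [hre]; linarith) (by rw [him']; exact ht)).trans ?_
      rw [him']; linarith
    calc _ ≤ 2 * 1 * C * exp (2 * t) * (5 * exp t) := by gcongr
      _ = _ := by rw [hE]; ring

lemma norm_exp_gauss (s : ℂ) (t₀ : ℝ) :
    ‖Complex.exp ((s - t₀ * I) ^ 2)‖ = exp (s.re ^ 2 - (s.im - t₀) ^ 2) := by
  rw [Complex.norm_exp]; congr 1; simp [sq]

lemma norm_Zet_div_le {s : ℂ} (hs : 0 ≤ s.re) (ht : 1 ≤ |s.im|) : ‖Zet s / (s + 2)‖ ≤ ‖riemannZeta s‖ := by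
  have hs1 : s ≠ 1 := by rintro rfl; simp at ht; linarith
  have h0 : s + 2 ≠ 0 := by
    intro h; have := congrArg Complex.re h; simp at this; linarith
  rw [Zet_of_ne hs1, norm_div, norm_mul, div_le_iff₀ (norm_pos_iff.2 h0), mul_comm]
  gcongr
  rw [Complex.norm_def, Complex.norm_def]
  apply Real.sqrt_le_sqrt
  simp only [Complex.normSq_apply, Complex.sub_re, Complex.sub_im, Complex.add_re, Complex.add_im,
    Complex.one_re, Complex.one_im, Complex.re_ofNat, Complex.im_ofNat]
  nlinarith

lemma continuousOn_Zet_div : ContinuousOn (fun s => Zet s / (s + 2)) {s : ℂ | 0 ≤ s.re} := by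
  intro s hs
  have hs : 0 ≤ s.re := hs
  refine ContinuousAt.continuousWithinAt ((analyticAt_Zet s).continuousAt.div (by fun_prop) ?_)
  intro h; have := congrArg Complex.re h; simp at this; linarith

lemma Zet_div_bdd : ∃ C : ℝ, 1 ≤ C ∧ ∀ s : ℂ, 0 ≤ s.re → s.re ≤ 1 → |s.im| ≤ 1 → ‖Zet s / (s + 2)‖ ≤ C := by
  have hK : IsCompact (Set.Icc (0 : ℝ) 1 ×ℂ Set.Icc (-1 : ℝ) 1) := isCompact_Icc.reProdIm isCompact_Icc
  have hc : ContinuousOn (fun s => ‖Zet s / (s + 2)‖) (Set.Icc (0 : ℝ) 1 ×ℂ Set.Icc (-1 : ℝ) 1) :=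
    (continuousOn_Zet_div.mono fun s hs => hs.1.1).norm
  obtain ⟨C, hC⟩ := hK.bddAbove_image hc
  refine ⟨max C 1, le_max_right _ _, fun s h0 h1 h2 => le_trans (hC ⟨s, ⟨⟨h0, h1⟩, abs_le.1 h2⟩, rfl⟩) (le_max_left _ _)⟩

/-- The Gaussian factor localises at height `t₀`, turning a power bound on an edge into a bound
uniform on the whole line. -/
lemma edge_le {C a σ₀ : ℝ} (ha : 0 ≤ a) (ha1 : a ≤ 1) (hσ : 0 ≤ σ₀) (hσ1 : σ₀ ≤ 1)
    (h : ∀ s : ℂ, s.re = σ₀ → 1 ≤ |s.im| → ‖riemannZeta s‖ ≤ C * |s.im| ^ a) :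
    ∃ C' : ℝ, 0 < C' ∧ ∀ t₀ : ℝ, ∀ s : ℂ, s.re = σ₀ →
      ‖Zet s / (s + 2) * Complex.exp ((s - t₀ * I) ^ 2)‖ ≤ C' * (1 + |t₀|) ^ a := by
  obtain ⟨C0, hC0, hb⟩ := Zet_div_bdd
  set D := max C C0 with hD
  have hDpos : 0 < D := lt_of_lt_of_le (by linarith) (le_max_right _ _)
  have hQ : ∀ s : ℂ, s.re = σ₀ → ‖Zet s / (s + 2)‖ ≤ D * (1 + |s.im|) ^ a := by
    intro s hs
    have h1 : 1 ≤ (1 + |s.im|) ^ a := Real.one_le_rpow (by linarith [abs_nonneg s.im]) ha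
    by_cases ht : 1 ≤ |s.im|
    · refine (norm_Zet_div_le (by linarith) ht).trans ((h s hs ht).trans ?_)
      calc C * |s.im| ^ a ≤ D * |s.im| ^ a := by gcongr; exact le_max_left _ _
        _ ≤ _ := by gcongr; linarith
    · refine (hb s (by linarith) (by linarith) (by linarith)).trans ?_
      calc C0 ≤ D * 1 := by rw [mul_one]; exact le_max_right _ _
        _ ≤ _ := by gcongr
  refine ⟨D * 8, by positivity, fun t₀ s hs => ?_⟩
  set v := |s.im - t₀| with hv
  have hv0 : 0 ≤ v := abs_nonneg _
  rw [norm_mul, norm_exp_gauss, hs]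
  have h1 : 1 + |s.im| ≤ (1 + |t₀|) * (1 + v) := by
    have := abs_add_le (s.im - t₀) t₀
    rw [sub_add_cancel] at this
    nlinarith [abs_nonneg t₀]
  have h2 : (1 + |s.im|) ^ a ≤ (1 + |t₀|) ^ a * (1 + v) := by
    calc (1 + |s.im|) ^ a ≤ ((1 + |t₀|) * (1 + v)) ^ a := by gcongr
      _ = (1 + |t₀|) ^ a * (1 + v) ^ a := mul_rpow (by positivity) (by positivity)
      _ ≤ (1 + |t₀|) ^ a * (1 + v) ^ (1 : ℝ) := by
          gcongr; linarith
      _ = _ := by rw [rpow_one]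
  have h3 : (1 + v) * exp (σ₀ ^ 2 - (s.im - t₀) ^ 2) ≤ 8 := by
    have e : (s.im - t₀) ^ 2 = v ^ 2 := (sq_abs _).symm
    have : 1 + v ≤ exp v := by have := Real.add_one_le_exp v; linarith
    calc (1 + v) * exp (σ₀ ^ 2 - (s.im - t₀) ^ 2) ≤ exp v * exp (σ₀ ^ 2 - (s.im - t₀) ^ 2) := by gcongr
      _ = exp (v + (σ₀ ^ 2 - v ^ 2)) := by rw [← Real.exp_add, e]
      _ ≤ exp 2 := Real.exp_le_exp.2 (by nlinarith [sq_nonneg (v - 1 / 2)])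
      _ = exp 1 * exp 1 := by rw [← Real.exp_add]; norm_num
      _ ≤ 8 := by nlinarith [Real.exp_one_lt_d9, Real.exp_pos 1]
  calc ‖Zet s / (s + 2)‖ * exp (σ₀ ^ 2 - (s.im - t₀) ^ 2)
      ≤ (D * ((1 + |t₀|) ^ a * (1 + v))) * exp (σ₀ ^ 2 - (s.im - t₀) ^ 2) := by
        gcongr; exact (hQ s hs).trans (by gcongr)
    _ = D * (1 + |t₀|) ^ a * ((1 + v) * exp (σ₀ ^ 2 - (s.im - t₀) ^ 2)) := by ring
    _ ≤ D * (1 + |t₀|) ^ a * 8 := by gcongr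
    _ = _ := by ring

lemma strip_bdd (t₀ : ℝ) : ∃ B : ℝ, ∀ s : ℂ, 0 ≤ s.re → s.re ≤ 1 →
    ‖Zet s / (s + 2) * Complex.exp ((s - t₀ * I) ^ 2)‖ ≤ B := by
  obtain ⟨C0, hC0, hb⟩ := Zet_div_bdd
  obtain ⟨C1, hC1, hb1⟩ := zeta_crude
  refine ⟨C0 * exp 1 + C1 * exp (3 * |t₀| + 10), fun s h0 h1 => ?_⟩
  rw [norm_mul, norm_exp_gauss]
  have hsq : s.re ^ 2 ≤ 1 := by nlinarith
  by_cases ht : 1 ≤ |s.im|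
  · have h2 := (norm_Zet_div_le h0 ht).trans (hb1 s h0 ht)
    calc _ ≤ C1 * exp (3 * |s.im|) * exp (s.re ^ 2 - (s.im - t₀) ^ 2) := by gcongr
      _ = C1 * exp (3 * |s.im| + (s.re ^ 2 - (s.im - t₀) ^ 2)) := by rw [mul_assoc, ← Real.exp_add]
      _ ≤ C1 * exp (3 * |t₀| + 10) := by
          refine mul_le_mul_of_nonneg_left (Real.exp_le_exp.2 ?_) (by linarith)
          have := abs_add_le (s.im - t₀) t₀
          rw [sub_add_cancel] at this
          rw [← sq_abs (s.im - t₀)]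
          nlinarith [sq_nonneg (|s.im - t₀| - 3 / 2)]
      _ ≤ _ := by have : 0 ≤ C0 * exp 1 := by positivity
                  linarith
  · have h2 := hb s h0 h1 (by linarith)
    calc _ ≤ C0 * exp 1 := by
          gcongr; nlinarith [sq_nonneg (s.im - t₀)]
      _ ≤ _ := by have : 0 ≤ C1 * exp (3 * |t₀| + 10) := by positivity
                  linarith

/-- A subconvexity bound for `ζ`. -/
lemma zeta_subconvex : ∃ c : ℝ, 0 < c ∧ c ≤ 1 / 8 ∧ ∃ C : ℝ, 0 < C ∧ ∀ s : ℂ, 1 / 2 ≤ s.re → 1 ≤ |s.im| →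
    ‖riemannZeta s‖ ≤ C * |s.im| ^ (1 / 4 - c) := by
  obtain ⟨ρ, hρ, hρ4, C1, hC1, hfix⟩ := zeta_fixed
  set δ := ρ / 96 with hδ
  have hδ0 : 0 < δ := by positivity
  obtain ⟨A, hA, hedge0⟩ := edge_le (C := 1 / δ + 5) (a := 1 / 2 + δ) (σ₀ := 0) (by positivity) (by linarith)
    le_rfl (by norm_num) (fun s hs ht => by
      have e : s = s.im * I := by
        conv_lhs => rw [← Complex.re_add_im s, hs]
        simp
      have hz := zeta_line_zero ht
      rw [← e] at hz
      have h1 := zeta_line_one (s := 1 - s) (by simp [hs]) (by simpa using ht)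
      have e2 : |(1 - s).im| = |s.im| := by simp
      rw [e2] at h1
      have ht0 : 0 < |s.im| := by linarith
      have h2 : log |s.im| ≤ |s.im| ^ δ / δ := Real.log_le_rpow_div ht0.le hδ0
      have h3 : 1 ≤ |s.im| ^ δ := Real.one_le_rpow ht hδ0.le
      calc _ ≤ |s.im| ^ (1 / 2 : ℝ) * ((1 / δ + 5) * |s.im| ^ δ) := by
            refine hz.trans ?_
            gcongr
            refine h1.trans ?_
            have : |s.im| ^ δ / δ = 1 / δ * |s.im| ^ δ := by ring
            linarith
        _ = _ := by rw [mul_left_comm, ← rpow_add ht0])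
  obtain ⟨B, hB, hedge1⟩ := edge_le (C := C1) (a := ρ / 3) (σ₀ := 1 - ρ) (by positivity) (by linarith)
    (by linarith) (by linarith) (fun s hs ht => hfix s ht (by linarith))
  refine ⟨ρ / 48, by positivity, by linarith, 4 * (max A 1 * max B 1) * 2 + C1, by positivity, fun s hs ht => ?_⟩
  have ht0 : 0 < |s.im| := by linarith
  by_cases hσ : 1 - ρ ≤ s.re
  · refine (hfix s ht hσ).trans ?_
    have : |s.im| ^ (ρ / 3) ≤ |s.im| ^ (1 / 4 - ρ / 48) :=
      rpow_le_rpow_of_exponent_le ht (by linarith)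
    gcongr
    have : 0 ≤ 4 * (max A 1 * max B 1) * 2 := by positivity
    linarith
  push Not at hσ
  set t₀ := s.im with ht₀
  set f : ℂ → ℂ := fun z => Zet z / (z + 2) * Complex.exp ((z - t₀ * I) ^ 2) with hf
  have hdiff : DiffContOnCl ℂ f (Complex.HadamardThreeLines.verticalStrip 0 (1 - ρ)) := by
    have hd : DifferentiableOn ℂ f {z : ℂ | -1 < z.re} := by
      intro z hz
      have hz : -1 < z.re := hz
      refine DifferentiableAt.differentiableWithinAt ?_
      refine ((analyticAt_Zet z).differentiableAt.div (by fun_prop) ?_).mul (by fun_prop)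
      intro h; have := congrArg Complex.re h; simp at this; linarith
    refine DifferentiableOn.diffContOnCl (hd.mono ?_)
    refine closure_minimal (t := {z : ℂ | 0 ≤ z.re}) (fun z hz => ?_)
      (isClosed_le continuous_const Complex.continuous_re) |>.trans (fun z hz => ?_)
    · exact (le_of_lt hz.1 : (0 : ℝ) ≤ z.re)
    · have : 0 ≤ z.re := hz
      show -1 < z.re
      linarith
  obtain ⟨Bd, hBd⟩ := strip_bdd t₀
  have key := Complex.HadamardThreeLines.norm_le_interp_of_mem_verticalClosedStrip' (f := f) (z := s)
    (l := 0) (u := 1 - ρ) (a := A * (1 + |t₀|) ^ (1 / 2 + δ)) (b := B * (1 + |t₀|) ^ (ρ / 3))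
    (by linarith) ⟨by linarith, hσ.le⟩ hdiff
    (by
      refine ⟨Bd, ?_⟩
      rintro _ ⟨z, hz, rfl⟩
      have h1 : 0 ≤ z.re := hz.1
      have h2 : z.re ≤ 1 - ρ := hz.2
      exact hBd z h1 (by linarith))
    (fun z hz => hedge0 t₀ z hz) (fun z hz => hedge1 t₀ z hz)
  set lam := (s.re - 0) / (1 - ρ - 0) with hlam
  have hlam1 : lam ≤ 1 := by rw [hlam, div_le_one (by linarith)]; linarith
  have hlam0 : 1 / (2 * (1 - ρ)) ≤ lam := by
    rw [hlam, sub_zero, sub_zero, div_le_div_iff₀ (by linarith) (by linarith)]; nlinarith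
  have hlam00 : 0 ≤ lam := le_trans (by apply div_nonneg <;> linarith) hlam0
  have hs1 : s ≠ 1 := by
    intro h; have := congrArg Complex.re h; simp at this; linarith
  -- lower bound for the left side
  have hlow : ‖riemannZeta s‖ / 4 ≤ ‖f s‖ := by
    rw [hf]
    simp only
    rw [norm_mul, norm_exp_gauss, Zet_of_ne hs1, norm_div, norm_mul]
    have h0 : 0 < ‖s + 2‖ := by
      rw [norm_pos_iff]; intro h; have := congrArg Complex.re h; simp at this; linarith
    have h1 : ‖s + 2‖ ≤ 4 * ‖s - 1‖ := by
      have e1 := Complex.abs_im_le_norm (s - 1)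
      have e2 := Complex.norm_le_abs_re_add_abs_im (s + 2)
      simp only [Complex.sub_im, Complex.one_im, sub_zero, Complex.add_im, Complex.im_ofNat, add_zero,
        Complex.add_re, Complex.re_ofNat] at e1 e2
      rw [abs_of_nonneg (by linarith : 0 ≤ s.re + 2)] at e2
      linarith
    have h2 : 1 ≤ exp (s.re ^ 2 - (s.im - t₀) ^ 2) := by
      rw [ht₀, sub_self]; exact Real.one_le_exp (by nlinarith)
    calc ‖riemannZeta s‖ / 4 ≤ ‖s - 1‖ * ‖riemannZeta s‖ / ‖s + 2‖ := by
          rw [div_le_div_iff₀ (by norm_num) h0]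
          nlinarith [norm_nonneg (riemannZeta s)]
      _ ≤ _ := le_mul_of_one_le_right (by positivity) h2
  have hAB : ∀ (A y : ℝ), 0 < A → 0 ≤ y → y ≤ 1 → A ^ y ≤ max A 1 := by
    intro A y hA hy hy1
    calc A ^ y ≤ (max A 1) ^ y := by gcongr; exact le_max_left _ _
      _ ≤ (max A 1) ^ (1 : ℝ) := rpow_le_rpow_of_exponent_le (le_max_right _ _) hy1
      _ = _ := rpow_one _
  have hup : ‖f s‖ ≤ (max A 1 * max B 1) * (1 + |t₀|) ^ (1 / 4 - ρ / 48) := by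
    refine key.trans ?_
    have hT : 1 ≤ 1 + |t₀| := by linarith [abs_nonneg t₀]
    have hT0 : 0 < 1 + |t₀| := by linarith
    rw [mul_rpow hA.le (by positivity), mul_rpow hB.le (by positivity), ← rpow_mul hT0.le,
      ← rpow_mul hT0.le]
    have e1 := hAB A (1 - lam) hA (by linarith) (by linarith)
    have e2 := hAB B lam hB hlam00 hlam1
    have hexp : (1 / 2 + δ) * (1 - lam) + ρ / 3 * lam ≤ 1 / 4 - ρ / 48 := by
      -- the exponent is decreasing in `lam`
      have h3 : (1 / 2 + δ) * (1 - lam) + ρ / 3 * lam ≤ 1 / 2 + δ - (1 / 2 - ρ / 3) * lam := by nlinarith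
      have h4 : 1 / 2 * (1 + ρ) ≤ lam := by
        refine le_trans ?_ hlam0
        rw [le_div_iff₀ (by linarith)]; nlinarith
      have h5 : (1 / 2 - ρ / 3) * (1 / 2 * (1 + ρ)) ≤ (1 / 2 - ρ / 3) * lam :=
        mul_le_mul_of_nonneg_left h4 (by linarith)
      have h6 : ρ * ρ ≤ ρ * (1 / 4) := mul_le_mul_of_nonneg_left hρ4 hρ.le
      rw [hδ] at h3 ⊢
      nlinarith
    calc A ^ (1 - lam) * (1 + |t₀|) ^ ((1 / 2 + δ) * (1 - lam)) * (B ^ lam * (1 + |t₀|) ^ (ρ / 3 * lam))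
        = (A ^ (1 - lam) * B ^ lam) * (1 + |t₀|) ^ ((1 / 2 + δ) * (1 - lam) + ρ / 3 * lam) := by
          rw [rpow_add hT0]; ring
      _ ≤ (max A 1 * max B 1) * (1 + |t₀|) ^ (1 / 4 - ρ / 48) := by
          gcongr
  have hT2 : (1 + |t₀|) ^ (1 / 4 - ρ / 48) ≤ 2 * |t₀| ^ (1 / 4 - ρ / 48) := by
    calc (1 + |t₀|) ^ (1 / 4 - ρ / 48) ≤ (2 * |t₀|) ^ (1 / 4 - ρ / 48) := by
          gcongr <;> linarith
      _ = 2 ^ (1 / 4 - ρ / 48) * |t₀| ^ (1 / 4 - ρ / 48) := mul_rpow (by norm_num) (by positivity)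
      _ ≤ 2 ^ (1 : ℝ) * |t₀| ^ (1 / 4 - ρ / 48) := by gcongr <;> linarith
      _ = _ := by rw [rpow_one]
  have hfin : ‖riemannZeta s‖ ≤ 4 * ((max A 1 * max B 1) * (2 * |t₀| ^ (1 / 4 - ρ / 48))) := by
    have : (max A 1 * max B 1) * (1 + |t₀|) ^ (1 / 4 - ρ / 48) ≤ (max A 1 * max B 1) * (2 * |t₀| ^ (1 / 4 - ρ / 48)) := by gcongr
    linarith
  refine hfin.trans ?_
  have : 0 ≤ C1 * |t₀| ^ (1 / 4 - ρ / 48) := by positivity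
  nlinarith

/-! ### Landau's factorisation lemma -/

lemma multiset_prod_le_of {Z : Multiset ℂ} {a b : ℂ → ℝ} (h0 : ∀ z ∈ Z, 0 ≤ a z) (h : ∀ z ∈ Z, a z ≤ b z) :
    (Z.map a).prod ≤ (Z.map b).prod := by
  induction Z using Multiset.induction_on with
  | empty => simp
  | cons x Z ih =>
    simp only [Multiset.map_cons, Multiset.prod_cons]
    have h1 := h x (Multiset.mem_cons_self x Z)
    have h2 := h0 x (Multiset.mem_cons_self x Z)
    have h3 := ih (fun z hz => h0 z (Multiset.mem_cons_of_mem hz)) (fun z hz => h z (Multiset.mem_cons_of_mem hz))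
    have h4 : 0 ≤ (Z.map a).prod := Multiset.prod_nonneg (by
      intro y hy; obtain ⟨z, hz, rfl⟩ := Multiset.mem_map.1 hy
      exact h0 z (Multiset.mem_cons_of_mem hz))
    exact mul_le_mul h1 h3 h4 (h2.trans h1)

lemma norm_multiset_prod (Z : Multiset ℂ) (s : ℂ) :
    ‖(Z.map fun ρ => s - ρ).prod‖ = (Z.map fun ρ => ‖s - ρ‖).prod := by
  induction Z using Multiset.induction_on with
  | empty => simp
  | cons x Z ih => simp [ih]

/-- Removing factors `s - ρ` with `|ρ - s₀| ≤ r / 3` gains a factor `2` each time. -/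
lemma factor_bound {f g : ℂ → ℂ} {s₀ : ℂ} {r M : ℝ} (hr : 0 < r) {U : Set ℂ}
    (hU : Metric.closedBall s₀ r ⊆ U) (hg : DifferentiableOn ℂ g U) (hf0 : f s₀ ≠ 0)
    (hM : ∀ s, ‖s - s₀‖ ≤ r → ‖f s‖ ≤ exp M * ‖f s₀‖) {Z : Multiset ℂ}
    (hZ : ∀ ρ ∈ Z, ‖ρ - s₀‖ ≤ r / 3) (hfg : ∀ s ∈ U, f s = (Z.map fun ρ => s - ρ).prod * g s)
    {s : ℂ} (hs : ‖s - s₀‖ ≤ r) : 2 ^ (Multiset.card Z) * ‖g s‖ ≤ exp M * ‖g s₀‖ := by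
  set P₀ := (Z.map fun ρ => ‖s₀ - ρ‖).prod with hP₀
  have hmem : ∀ s, ‖s - s₀‖ ≤ r → s ∈ U := fun s hs => hU (by simpa [dist_eq_norm] using hs)
  have hf0' := hfg s₀ (hmem s₀ (by simp [hr.le]))
  have hP0 : 0 < P₀ := by
    rw [hP₀, ← norm_multiset_prod, norm_pos_iff]
    intro h; rw [h, zero_mul] at hf0'; exact hf0 hf0'
  have hfs0 : ‖f s₀‖ = P₀ * ‖g s₀‖ := by rw [hf0', norm_mul, norm_multiset_prod]
  have hsphere : ∀ z ∈ Metric.sphere s₀ r, ‖g z‖ ≤ exp M * ‖g s₀‖ / 2 ^ (Multiset.card Z) := by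
    intro z hz
    have hz' : ‖z - s₀‖ = r := by simpa [dist_eq_norm] using hz
    rw [le_div_iff₀ (by positivity)]
    have h1 : 2 ^ (Multiset.card Z) * P₀ ≤ (Z.map fun ρ => ‖z - ρ‖).prod := by
      have e : 2 ^ (Multiset.card Z) * P₀ = (Z.map fun ρ => 2 * ‖s₀ - ρ‖).prod := by
        rw [Multiset.prod_map_mul, Multiset.map_const', Multiset.prod_replicate]
      rw [e]
      refine multiset_prod_le_of (fun ρ _ => by positivity) fun ρ hρ => ?_
      have h2 := hZ ρ hρ
      have h3 := norm_sub_norm_le (z - s₀) (ρ - s₀)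
      rw [sub_sub_sub_cancel_right, hz'] at h3
      rw [norm_sub_rev s₀ ρ]; linarith
    have h4 := hM z hz'.le
    rw [hfg z (hmem z hz'.le), norm_mul, norm_multiset_prod, hfs0] at h4
    have h5 : P₀ * (‖g z‖ * 2 ^ (Multiset.card Z)) ≤ P₀ * (exp M * ‖g s₀‖) := by
      calc P₀ * (‖g z‖ * 2 ^ (Multiset.card Z)) = 2 ^ (Multiset.card Z) * P₀ * ‖g z‖ := by ring
        _ ≤ (Z.map fun ρ => ‖z - ρ‖).prod * ‖g z‖ := by gcongr
        _ ≤ _ := by linarith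
    exact le_of_mul_le_mul_left h5 hP0
  have hd : DiffContOnCl ℂ g (Metric.ball s₀ r) := by
    refine DifferentiableOn.diffContOnCl (hg.mono ?_)
    rw [closure_ball _ hr.ne']; exact hU
  have := Complex.norm_le_of_forall_mem_frontier_norm_le Metric.isBounded_ball hd
    (C := exp M * ‖g s₀‖ / 2 ^ (Multiset.card Z)) (by rw [frontier_ball _ hr.ne']; exact hsphere) (z := s)
    (by rw [closure_ball _ hr.ne']; simpa [dist_eq_norm] using hs)
  rw [le_div_iff₀ (by positivity)] at this
  linarith

/-- All zeros in a smaller disc can be factored out, and their number is controlled. -/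
lemma exists_factor {f : ℂ → ℂ} {s₀ : ℂ} {r M : ℝ} (hr : 0 < r) {U : Set ℂ} (hUo : IsOpen U)
    (hU : Metric.closedBall s₀ r ⊆ U) (hf : DifferentiableOn ℂ f U) (hf0 : f s₀ ≠ 0)
    (hM : ∀ s, ‖s - s₀‖ ≤ r → ‖f s‖ ≤ exp M * ‖f s₀‖) :
    ∃ (Z : Multiset ℂ) (g : ℂ → ℂ), (∀ ρ ∈ Z, ‖ρ - s₀‖ ≤ r / 3) ∧ DifferentiableOn ℂ g U ∧
      (∀ s ∈ U, f s = (Z.map fun ρ => s - ρ).prod * g s) ∧ (∀ s, ‖s - s₀‖ ≤ r / 3 → g s ≠ 0) ∧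
      (2 : ℝ) ^ (Multiset.card Z) ≤ exp M := by
  classical
  have hmem : ∀ s, ‖s - s₀‖ ≤ r → s ∈ U := fun s hs => hU (by simpa [dist_eq_norm] using hs)
  let Pr : ℕ → Prop := fun n => ∃ (Z : Multiset ℂ) (g : ℂ → ℂ), Multiset.card Z = n ∧
    (∀ ρ ∈ Z, ‖ρ - s₀‖ ≤ r / 3) ∧ DifferentiableOn ℂ g U ∧
      (∀ s ∈ U, f s = (Z.map fun ρ => s - ρ).prod * g s)
  have hbd : ∀ n, Pr n → (2 : ℝ) ^ n ≤ exp M := by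
    rintro n ⟨Z, g, rfl, hZ, hg, hfg⟩
    have h := factor_bound hr hU hg hf0 hM hZ hfg (s := s₀) (by simp [hr.le])
    have h0 : 0 < ‖g s₀‖ := by
      rw [norm_pos_iff]; intro h; have := hfg s₀ (hmem s₀ (by simp [hr.le])); rw [h, mul_zero] at this
      exact hf0 this
    exact le_of_mul_le_mul_right h h0
  obtain ⟨B, hB⟩ := pow_unbounded_of_one_lt (exp M) (by norm_num : (1 : ℝ) < 2)
  have hle : ∀ n, Pr n → n ≤ B := by
    intro n hn
    by_contra hlt
    push Not at hlt
    have h1 := hbd n hn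
    have h2 : (2 : ℝ) ^ B ≤ 2 ^ n := pow_le_pow_right₀ (by norm_num) hlt.le
    linarith
  have h0 : Pr 0 := ⟨0, f, by simp, by simp, hf, by simp⟩
  have hmax := Nat.findGreatest_spec (P := Pr) (Nat.zero_le B) h0
  set n := Nat.findGreatest Pr B with hn
  obtain ⟨Z, g, hcard, hZ, hg, hfg⟩ := hmax
  refine ⟨Z, g, hZ, hg, hfg, ?_, by rw [hcard]; exact hbd n ⟨Z, g, hcard, hZ, hg, hfg⟩⟩
  intro ρ hρ hgρ
  have hρU : ρ ∈ U := hmem ρ (by linarith)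
  have hnext : Pr (n + 1) := by
    refine ⟨ρ ::ₘ Z, dslope g ρ, by simp [hcard], ?_, ?_, ?_⟩
    · intro z hz
      rcases Multiset.mem_cons.1 hz with rfl | hz
      · exact hρ
      · exact hZ z hz
    · exact (Complex.differentiableOn_dslope (hUo.mem_nhds hρU)).2 hg
    · intro s hs
      rw [hfg s hs]
      have := sub_smul_dslope g ρ s
      rw [hgρ, sub_zero, smul_eq_mul] at this
      rw [← this]
      simp only [Multiset.map_cons, Multiset.prod_cons]; ring
  have := Nat.le_findGreatest (hle _ hnext) hnext
  omega

/-- A non-vanishing function whose growth in a disc is controlled has small logarithmic derivative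
(Borel–Carathéodory). -/
lemma logDeriv_bound {g : ℂ → ℂ} {s₀ : ℂ} {R M : ℝ} (hR : 0 < R) (hM : 0 < M)
    (hg : DifferentiableOn ℂ g (Metric.ball s₀ R)) (hg0 : ∀ s, ‖s - s₀‖ < R → g s ≠ 0)
    (hb : ∀ s, ‖s - s₀‖ < R → ‖g s‖ ≤ exp M * ‖g s₀‖) {s : ℂ} (hs : ‖s - s₀‖ ≤ R / 4) :
    ‖deriv g s / g s‖ ≤ 8 * M / R := by
  have hmem : ∀ s, ‖s - s₀‖ < R ↔ s ∈ Metric.ball s₀ R := fun s => by simp [dist_eq_norm]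
  have hq : DifferentiableOn ℂ (fun z => deriv g z / g z) (Metric.ball s₀ R) :=
    (hg.deriv Metric.isOpen_ball).div hg fun z hz => hg0 z ((hmem z).2 hz)
  obtain ⟨h, hh0, hh⟩ := hq.isExactOn_ball.with_val_at s₀ 0
  have hs₀ : s₀ ∈ Metric.ball s₀ R := Metric.mem_ball_self hR
  have hconst : ∀ z ∈ Metric.ball s₀ R, g z * Complex.exp (-h z) = g s₀ := by
    intro z hz
    have hder : ∀ w ∈ Metric.ball s₀ R, HasDerivAt (fun w => g w * Complex.exp (-h w)) 0 w := by
      intro w hw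
      have h1 := (hg.differentiableAt (Metric.isOpen_ball.mem_nhds hw)).hasDerivAt
      have h2 := h1.mul ((hh w hw).neg.cexp)
      refine h2.congr_deriv ?_
      have := hg0 w ((hmem w).2 hw)
      have e : g w * (deriv g w / g w) = deriv g w := mul_div_cancel₀ _ this
      linear_combination -Complex.exp (-h w) * e
    have := Metric.isOpen_ball.is_const_of_deriv_eq_zero (convex_ball s₀ R).isPreconnected
      (fun w hw => (hder w hw).differentiableAt.differentiableWithinAt) (fun w hw => (hder w hw).deriv) hz hs₀
    rw [this, hh0]; simp
  have hgs0 := hg0 s₀ (by simpa using hR)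
  have hre : ∀ z ∈ Metric.ball s₀ R, (h z).re ≤ M := by
    intro z hz
    have h1 := hb z ((hmem z).2 hz)
    have h2 : g z = g s₀ * Complex.exp (h z) := by
      rw [← hconst z hz, mul_assoc, ← Complex.exp_add]; simp
    rw [h2, norm_mul, Complex.norm_exp, mul_comm] at h1
    exact Real.exp_le_exp.1 (le_of_mul_le_mul_right h1 (norm_pos_iff.2 hgs0))
  have hBC : ∀ z, ‖z - s₀‖ ≤ R / 2 → ‖h z‖ ≤ 2 * M := by
    intro z hz
    have hd : DifferentiableOn ℂ (fun w => h (s₀ + w)) (Metric.ball 0 R) := by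
      intro w hw
      have hw' : s₀ + w ∈ Metric.ball s₀ R := by simpa using hw
      exact (DifferentiableAt.comp w (hh _ hw').differentiableAt
        (by fun_prop : DifferentiableAt ℂ (fun w => s₀ + w) w)).differentiableWithinAt
    have := Complex.borelCaratheodory_zero (f := fun w => h (s₀ + w)) (z := z - s₀) hM hd
      (fun w hw => hre _ (by simpa using hw)) hR (by simp; linarith) (by simp [hh0])
    simp only [add_sub_cancel] at this
    refine this.trans ?_
    rw [div_le_iff₀ (by linarith)]
    nlinarith
  have hds : deriv h s = deriv g s / g s := (hh s ((hmem s).1 (by linarith))).deriv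
  rw [← hds]
  have hcb : ∀ z, ‖z - s‖ ≤ R / 4 → ‖z - s₀‖ ≤ R / 2 := fun z hz => by
    have := norm_add_le (z - s) (s - s₀)
    rw [sub_add_sub_cancel] at this
    linarith
  have := Complex.norm_deriv_le_of_forall_mem_sphere_norm_le (f := h) (c := s) (R := R / 4) (C := 2 * M) (by positivity)
    (by
      refine DifferentiableOn.diffContOnCl (fun z hz => ?_)
      rw [closure_ball _ (by positivity)] at hz
      have h1 := hcb z (by simpa [dist_eq_norm] using hz)
      exact (hh z ((hmem z).1 (by linarith))).differentiableAt.differentiableWithinAt)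
    (fun z hz => hBC z (hcb z (by
      have : ‖z - s‖ = R / 4 := by simpa [dist_eq_norm] using hz
      linarith)))
  refine this.trans (le_of_eq ?_)
  field_simp; norm_num

lemma hasDerivAt_multiset_prod (Z : Multiset ℂ) {s : ℂ} (hs : ∀ ρ ∈ Z, s ≠ ρ) :
    HasDerivAt (fun s => (Z.map fun ρ => s - ρ).prod)
      ((Z.map fun ρ => s - ρ).prod * (Z.map fun ρ => 1 / (s - ρ)).sum) s := by
  induction Z using Multiset.induction_on with
  | empty => simpa using hasDerivAt_const s (1 : ℂ)
  | cons x Z ih =>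
    simp only [Multiset.map_cons, Multiset.prod_cons, Multiset.sum_cons]
    have h1 := ih fun ρ hρ => hs ρ (Multiset.mem_cons_of_mem hρ)
    have h2 := ((hasDerivAt_id s).sub_const x).mul h1
    refine h2.congr_deriv ?_
    have : s - x ≠ 0 := sub_ne_zero.2 (hs x (Multiset.mem_cons_self x Z))
    simp only [id]
    field_simp

/-- Landau's local formula for the logarithmic derivative. -/
lemma landau {f : ℂ → ℂ} {s₀ : ℂ} {r M : ℝ} (hr : 0 < r) (hM0 : 0 < M) {U : Set ℂ} (hUo : IsOpen U)
    (hU : Metric.closedBall s₀ r ⊆ U) (hf : DifferentiableOn ℂ f U) (hf0 : f s₀ ≠ 0)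
    (hM : ∀ s, ‖s - s₀‖ ≤ r → ‖f s‖ ≤ exp M * ‖f s₀‖) :
    ∃ Z : Multiset ℂ, (2 : ℝ) ^ (Multiset.card Z) ≤ exp M ∧
      (∀ ρ, ρ ∈ Z ↔ ‖ρ - s₀‖ ≤ r / 3 ∧ f ρ = 0) ∧
      ∀ s, ‖s - s₀‖ ≤ r / 12 → f s ≠ 0 →
        ‖deriv f s / f s - (Z.map fun ρ => 1 / (s - ρ)).sum‖ ≤ 24 * M / r := by
  obtain ⟨Z, g, hZ, hg, hfg, hg0, hcard⟩ := exists_factor hr hUo hU hf hf0 hM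
  have hmem : ∀ s, ‖s - s₀‖ ≤ r → s ∈ U := fun s hs => hU (by simpa [dist_eq_norm] using hs)
  refine ⟨Z, hcard, fun ρ => ⟨fun hρ => ⟨hZ ρ hρ, ?_⟩, fun hρ => ?_⟩, fun s hs hfs => ?_⟩
  · rw [hfg ρ (hmem ρ (by linarith [hZ ρ hρ])),
      Multiset.prod_eq_zero (Multiset.mem_map.2 ⟨ρ, hρ, sub_self ρ⟩), zero_mul]
  · have h1 := hfg ρ (hmem ρ (by linarith [hρ.1]))
    rw [hρ.2] at h1
    rcases mul_eq_zero.1 h1.symm with h | h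
    · obtain ⟨z, hz, hz0⟩ := Multiset.mem_map.1 (Multiset.prod_eq_zero_iff.1 h)
      rw [sub_eq_zero.1 hz0]; exact hz
    · exact absurd h (hg0 ρ hρ.1)
  · have hsU : s ∈ U := hmem s (by linarith)
    have hne : ∀ ρ ∈ Z, s ≠ ρ := by
      rintro ρ hρ rfl
      apply hfs
      rw [hfg s hsU, Multiset.prod_eq_zero (Multiset.mem_map.2 ⟨s, hρ, sub_self s⟩), zero_mul]
    have hgs : g s ≠ 0 := hg0 s (by linarith)
    have hder : HasDerivAt f _ s := HasDerivAt.congr_of_eventuallyEq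
      ((hasDerivAt_multiset_prod Z hne).mul (hg.differentiableAt (hUo.mem_nhds hsU)).hasDerivAt)
      (by filter_upwards [hUo.mem_nhds hsU] with z hz; exact hfg z hz)
    have hP : (Z.map fun ρ => s - ρ).prod ≠ 0 := by
      intro h; apply hfs; rw [hfg s hsU, h, zero_mul]
    have e : deriv f s / f s - (Z.map fun ρ => 1 / (s - ρ)).sum = deriv g s / g s := by
      rw [hder.deriv, hfg s hsU]; field_simp; ring
    rw [e]
    have := logDeriv_bound (g := g) (s₀ := s₀) (R := r / 3) (M := M) (by positivity) hM0
      (hg.mono fun z hz => hmem z (by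
        have : ‖z - s₀‖ < r / 3 := by simpa [dist_eq_norm] using hz
        linarith)) (fun z hz => hg0 z hz.le) (fun z hz => by
        have h1 := factor_bound hr hU hg hf0 hM hZ hfg (s := z) (by linarith)
        have h2 : (1 : ℝ) ≤ 2 ^ (Multiset.card Z) := one_le_pow₀ (by norm_num)
        nlinarith [norm_nonneg (g z)]) (s := s) (by linarith)
    refine this.trans (le_of_eq ?_)
    field_simp; norm_num

end VMT

namespace VMT
open Finset Filter Topology
open ArithmeticFunction (vonMangoldt moebius)
open Complex (I)
open Real (log exp rpow_natCast rpow_mul rpow_add rpow_one mul_rpow norm_of_nonneg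
  rpow_le_rpow_of_exponent_le)
open scoped Real

/-! ### The logarithmic derivative of `ζ` -/


/-- `-ζ'/ζ`. -/
noncomputable def zq (s : ℂ) : ℂ := -deriv riemannZeta s / riemannZeta s

lemma hasSum_zq {s : ℂ} (hs : 1 < s.re) :
    HasSum (fun n : ℕ => (vonMangoldt n : ℂ) * (n : ℂ) ^ (-s)) (zq s) := by
  have h1 := (ArithmeticFunction.LSeriesSummable_vonMangoldt hs).LSeriesHasSum
  rw [ArithmeticFunction.LSeries_vonMangoldt_eq_deriv_riemannZeta_div hs] at h1
  have e : (fun n : ℕ => (vonMangoldt n : ℂ) * (n : ℂ) ^ (-s)) =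
      LSeries.term (fun n => (vonMangoldt n : ℂ)) s := by
    funext n
    rcases eq_or_ne n 0 with rfl | hn
    · simp
    · rw [LSeries.term_of_ne_zero hn, Complex.cpow_neg, div_eq_mul_inv]
  rw [e]; exact h1

lemma re_natCast_cpow {n : ℕ} (hn : 0 < n) (s : ℂ) :
    ((n : ℂ) ^ (-s)).re = (n : ℝ) ^ (-s.re) * Real.cos (s.im * log n) := by
  rw [natCast_cpow_eq hn, mul_comm I, Complex.re_ofReal_mul, Complex.exp_ofReal_mul_I_re, neg_mul, Real.cos_neg]

lemma zq_341 {σ : ℝ} (hσ : 1 < σ) (t : ℝ) :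
    0 ≤ 3 * (zq σ).re + 4 * (zq (σ + t * I)).re + (zq (σ + 2 * t * I)).re := by
  have h0 := Complex.hasSum_re (hasSum_zq (s := σ) (by simpa using hσ))
  have h1 := Complex.hasSum_re (hasSum_zq (s := σ + t * I) (by simpa using hσ))
  have h2 := Complex.hasSum_re (hasSum_zq (s := σ + 2 * t * I) (by simpa using hσ))
  refine ((h0.mul_left 3).add (h1.mul_left 4)).add h2 |>.nonneg fun n => ?_
  rcases Nat.eq_zero_or_pos n with rfl | hn
  · simp
  · simp only [Complex.re_ofReal_mul, re_natCast_cpow hn]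
    have h3 : 0 ≤ (vonMangoldt n : ℝ) * (n : ℝ) ^ (-σ) := mul_nonneg ArithmeticFunction.vonMangoldt_nonneg (by positivity)
    have e : (2 * t) * log n = 2 * (t * log n) := by ring
    simp only [Complex.add_re, Complex.ofReal_re, Complex.mul_re, Complex.I_re, Complex.ofReal_im, Complex.I_im,
      Complex.add_im, Complex.mul_im, mul_zero, mul_one, sub_self, sub_zero, add_zero, zero_add, zero_mul, Real.cos_zero,
      Complex.re_ofNat, Complex.im_ofNat, e, Real.cos_two_mul]
    nlinarith [mul_nonneg h3 (sq_nonneg (Real.cos (t * log n) + 1))]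

lemma norm_zq_le {s : ℂ} (hs : 1 < s.re) : ‖zq s‖ ≤ (zq (s.re : ℂ)).re := by
  have h0 := Complex.hasSum_re (hasSum_zq (s := (s.re : ℂ)) (by simpa using hs))
  have h1 := hasSum_zq hs
  rw [← h1.tsum_eq, ← h0.tsum_eq]
  refine tsum_of_norm_bounded h0.summable.hasSum fun n => ?_
  rcases Nat.eq_zero_or_pos n with rfl | hn
  · simp
  · rw [norm_mul, Complex.norm_natCast_cpow_of_pos hn, Complex.re_ofReal_mul, re_natCast_cpow hn, Complex.norm_real,
      norm_of_nonneg ArithmeticFunction.vonMangoldt_nonneg]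
    simp

lemma Zet_ne_zero {s : ℂ} (hs : 1 ≤ s.re) : Zet s ≠ 0 := by
  rcases eq_or_ne s 1 with rfl | h
  · rw [Zet_one]; exact one_ne_zero
  · rw [Zet_of_ne h]
    exact mul_ne_zero (sub_ne_zero.2 h) (riemannZeta_ne_zero_of_one_le_re hs)

lemma differentiable_Zet : Differentiable ℂ Zet := fun s => (analyticAt_Zet s).differentiableAt

lemma zq_eq {s : ℂ} (hs : s ≠ 1) (h0 : riemannZeta s ≠ 0) : zq s = 1 / (s - 1) - deriv Zet s / Zet s := by
  have hs' : s - 1 ≠ 0 := sub_ne_zero.2 hs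
  have h : HasDerivAt Zet (1 * riemannZeta s + (s - 1) * deriv riemannZeta s) s := by
    refine HasDerivAt.congr_of_eventuallyEq (((hasDerivAt_id s).sub_const 1).mul
      (differentiableAt_riemannZeta hs).hasDerivAt) ?_
    filter_upwards [isOpen_ne.mem_nhds hs] with z hz
    exact Zet_of_ne hz
  rw [zq, h.deriv, Zet_of_ne hs]
  field_simp
  ring

lemma zq_real_le : ∃ C₁ : ℝ, 0 < C₁ ∧ ∀ σ : ℝ, 1 < σ → σ ≤ 3 → (zq σ).re ≤ 1 / (σ - 1) + C₁ := by
  have hc : ContinuousOn (fun σ : ℝ => ‖deriv Zet σ / Zet σ‖) (Set.Icc 1 3) := by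
    refine ContinuousOn.norm (ContinuousOn.div ?_ ?_ fun σ hσ => Zet_ne_zero (by simpa using hσ.1))
    · have : Continuous (deriv Zet) := (differentiable_Zet.contDiff (n := 1)).continuous_deriv le_rfl
      exact (this.comp Complex.continuous_ofReal).continuousOn
    · exact (differentiable_Zet.continuous.comp Complex.continuous_ofReal).continuousOn
  obtain ⟨B, hB⟩ := (isCompact_Icc.image_of_continuousOn hc).bddAbove
  refine ⟨max B 1, by positivity, fun σ h1 h3 => ?_⟩
  have hne : (σ : ℂ) ≠ 1 := by
    intro h; have := congrArg Complex.re h; simp at this; linarith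
  rw [zq_eq hne (riemannZeta_ne_zero_of_one_le_re (by simpa using h1.le)), Complex.sub_re]
  have h4 : ‖deriv Zet σ / Zet σ‖ ≤ B := hB ⟨σ, ⟨h1.le, h3⟩, rfl⟩
  have h5 := Complex.abs_re_le_norm (deriv Zet σ / Zet σ)
  have h6 : (1 / ((σ : ℂ) - 1)).re = 1 / (σ - 1) := by
    rw [← Complex.ofReal_one, ← Complex.ofReal_sub, ← Complex.ofReal_div, Complex.ofReal_re]
  rw [h6]
  have := neg_abs_le (deriv Zet σ / Zet σ).re
  have := le_max_left B 1
  linarith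

lemma inv_zeta_le {s : ℂ} (hs : 1 < s.re) : 1 ≤ (2 + 1 / (s.re - 1)) * ‖riemannZeta s‖ := by
  have hprod := LSeries_one_mul_Lseries_moebius hs
  rw [LSeries_one_eq_riemannZeta hs] at hprod
  set σ := s.re with hσ
  have hz : HasSum (fun n : ℕ => LSeries.term 1 (σ : ℂ) n) (riemannZeta σ) := by
    have := (LSeriesSummable_one_iff.2 (by simpa using hs : 1 < (σ : ℂ).re)).LSeriesHasSum
    rwa [LSeries_one_eq_riemannZeta (by simpa using hs)] at this
  have hre := Complex.hasSum_re hz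
  have hmu : ‖LSeries (fun n => ((moebius n : ℤ) : ℂ)) s‖ ≤ (riemannZeta σ).re := by
    rw [LSeries, ← hre.tsum_eq]
    refine tsum_of_norm_bounded hre.summable.hasSum fun n => ?_
    rcases eq_or_ne n 0 with rfl | hn
    · simp
    · rw [LSeries.term_of_ne_zero hn, LSeries.term_of_ne_zero hn, norm_div, Complex.norm_natCast_cpow_of_pos (Nat.pos_of_ne_zero hn),
        ← Complex.ofReal_natCast, ← Complex.ofReal_cpow (by positivity), Pi.one_apply, ← Complex.ofReal_one, ← Complex.ofReal_div,
        Complex.ofReal_re]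
      gcongr
      have := ArithmeticFunction.abs_moebius_le_one (n := n)
      rw [Complex.norm_intCast]; exact_mod_cast this
  have hne : (σ : ℂ) ≠ 1 := by
    intro h; have := congrArg Complex.re h; simp at this; linarith
  have happ := zeta_approx (N := 1) le_rfl (s := (σ : ℂ)) (by simp; linarith) hne
  simp only [Nat.cast_one, Real.one_rpow, Complex.ofReal_re] at happ
  have e1 : ∑ n ∈ Finset.Ioc (0 : ℕ) 1, (n : ℂ) ^ (-(σ : ℂ)) = 1 := by
    rw [show Finset.Ioc (0 : ℕ) 1 = {1} by rfl]; simp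
  have e2 : ‖(σ : ℂ) - 1‖ = σ - 1 := by
    rw [← Complex.ofReal_one, ← Complex.ofReal_sub, Complex.norm_real, norm_of_nonneg (by linarith)]
  have e3 : ‖(σ : ℂ)‖ = σ := by rw [Complex.norm_real, norm_of_nonneg (by linarith)]
  rw [e1, e2, e3, div_self (by linarith), mul_one] at happ
  have h7 : (riemannZeta σ).re ≤ 2 + 1 / (σ - 1) := by
    have := (Complex.abs_re_le_norm _).trans happ
    have := (abs_le.1 this).2
    simp at this; simp; linarith
  have h8 := congrArg norm hprod
  rw [norm_mul, norm_one] at h8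
  have h9 := mul_le_mul_of_nonneg_left (hmu.trans h7) (norm_nonneg (riemannZeta s))
  linarith

/-! ### The zero-free region -/

lemma ev_log_pow (B : ℝ) (n : ℕ) : ∀ᶠ y : ℝ in atTop, B * log y ^ n ≤ y := by
  have h := (Real.isLittleO_pow_log_id_atTop (n := n)).bound (c := 1 / (|B| + 1)) (by positivity)
  filter_upwards [h, eventually_ge_atTop 1] with y hy h1
  have hl := Real.log_nonneg h1
  rw [norm_of_nonneg (by positivity), id, norm_of_nonneg (by linarith), div_mul_eq_mul_div, one_mul,
    le_div_iff₀ (by positivity)] at hy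
  nlinarith [le_abs_self B, pow_nonneg hl n]

lemma ev_loglog (B : ℝ) (n : ℕ) : ∀ᶠ u : ℝ in atTop, B * log (log u) ^ n ≤ log u :=
  Real.tendsto_log_atTop.eventually (ev_log_pow B n)

lemma ev_log_ge (B : ℝ) : ∀ᶠ u : ℝ in atTop, B ≤ log u :=
  Real.tendsto_log_atTop.eventually (eventually_ge_atTop B)

lemma ev_loglog_ge (B : ℝ) : ∀ᶠ u : ℝ in atTop, B ≤ log (log u) :=
  Real.tendsto_log_atTop.eventually (ev_log_ge B)

/-- Comparison of `log` and `loglog` at heights of comparable size. -/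
lemma log_compare {u v : ℝ} (hu : 55 ≤ u) (hL : 4 ≤ log u) (h1 : u / 2 ≤ v) (h2 : v ≤ 4 * u) :
    log u / 2 ≤ log v ∧ log v ≤ 2 * log u ∧ log (log u) / 2 ≤ log (log v) := by
  have hv : 0 < v := by linarith
  have a1 : log u / 2 ≤ log v := by
    have : log u ≤ log (v ^ 2) := Real.log_le_log (by linarith) (by nlinarith)
    rw [Real.log_pow] at this; push_cast at this; linarith
  have a2 : log v ≤ 2 * log u := by
    have : log v ≤ log (u ^ 2) := Real.log_le_log hv (by nlinarith)
    rw [Real.log_pow] at this; push_cast at this; linarith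
  refine ⟨a1, a2, ?_⟩
  have : log (log u) ≤ log ((log v) ^ 2) := Real.log_le_log (by linarith) (by nlinarith)
  rw [Real.log_pow] at this; push_cast at this; linarith

/-- Landau's lemma on the disc of radius `K (log log u)² / log u` about a point right of `1 + it`,
where `zeta_vinogradov` bounds `ζ` by a power of `log u`. -/
lemma zeta_landau {K : ℝ} (hK : 0 < K) : ∀ᶠ u : ℝ in atTop, ∀ t : ℝ, u ≤ |t| → |t| ≤ 2 * u → ∀ a : ℝ,
    1 / log u ≤ a → a ≤ 1 → ∃ Z : Multiset ℂ, (2 : ℝ) ^ (Multiset.card Z) ≤ exp (5 * log (log u)) ∧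
      (∀ ρ, ρ ∈ Z ↔ ‖ρ - ((1 + a : ℝ) + t * I)‖ ≤ K * log (log u) ^ 2 / log u / 3 ∧ riemannZeta ρ = 0) ∧
      ∀ s, ‖s - ((1 + a : ℝ) + t * I)‖ ≤ K * log (log u) ^ 2 / log u / 12 → riemannZeta s ≠ 0 →
        ‖deriv riemannZeta s / riemannZeta s - (Z.map fun ρ => 1 / (s - ρ)).sum‖ ≤
          120 / K * (log u / log (log u)) := by
  obtain ⟨t₀, ht₀, hV⟩ := zeta_vinogradov (C := 8 * K) (by positivity)
  filter_upwards [ev_loglog K 2, ev_log_ge 10, ev_loglog_ge 1, eventually_ge_atTop (2 * t₀ + 55)] with u hu1 hu2 hu3 hu4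
  intro t ht1 ht2 a ha1 ha2
  set L := log u with hL
  set l := log L with hl
  set r := K * l ^ 2 / L with hr
  have hr0 : 0 < r := by positivity
  have hr1 : r ≤ 1 := by rw [hr, div_le_one (by linarith)]; exact hu1
  have ha0 : 0 < a := lt_of_lt_of_le (by positivity) ha1
  set s₀ : ℂ := (1 + a : ℝ) + t * I with hs₀
  have hs₀re : s₀.re = 1 + a := by simp [hs₀]
  have hs₀im : s₀.im = t := by simp [hs₀]
  have him : ∀ s : ℂ, ‖s - s₀‖ ≤ r → u / 2 ≤ |s.im| ∧ |s.im| ≤ 4 * u := by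
    intro s hs
    have h1 := (Complex.abs_im_le_norm (s - s₀)).trans hs
    rw [Complex.sub_im, hs₀im] at h1
    have h2 := abs_sub_abs_le_abs_sub s.im t
    have h3 := abs_sub_abs_le_abs_sub t s.im
    rw [abs_sub_comm] at h3
    constructor <;> linarith
  have hbd : ∀ s : ℂ, ‖s - s₀‖ ≤ r → ‖riemannZeta s‖ ≤ 8 * L ^ 3 := by
    intro s hs
    obtain ⟨h1, h2⟩ := him s hs
    obtain ⟨c1, c2, c3⟩ := log_compare (by linarith) (by linarith) h1 h2
    have h4 := (Complex.abs_re_le_norm (s - s₀)).trans hs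
    rw [Complex.sub_re, hs₀re] at h4
    have h5 := (abs_le.1 h4).1
    rw [← hL] at c1 c2 c3
    rw [← hl] at c3
    have hv := hV s (by linarith) (by
      have : r ≤ 8 * K * log (log |s.im|) ^ 2 / log |s.im| := by
        rw [hr, div_le_div_iff₀ (by linarith) (by linarith)]
        have e1 : (l / 2) ^ 2 ≤ log (log |s.im|) ^ 2 := by gcongr
        calc K * l ^ 2 * log |s.im| ≤ K * l ^ 2 * (2 * L) := by gcongr
          _ = 8 * K * (l / 2) ^ 2 * L := by ring
          _ ≤ _ := by gcongr
      linarith)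
    refine hv.trans ?_
    calc log |s.im| ^ 3 ≤ (2 * L) ^ 3 := by gcongr; linarith
      _ = _ := by ring
  have hexp : exp (5 * l) = L ^ 5 := by
    rw [show (5 : ℝ) * l = ((5 : ℕ) : ℝ) * l by norm_num, Real.exp_nat_mul, hl, Real.exp_log (by linarith)]
  have hne1 : (1 : ℂ) ∉ Metric.closedBall s₀ r := by
    intro h
    have := (him 1 (by simpa [dist_eq_norm] using h)).1
    simp at this; linarith
  have hl24 : 24 * (5 * l) / r = 120 / K * (L / l) := by rw [hr]; field_simp; norm_num
  have := landau (f := riemannZeta) (s₀ := s₀) (r := r) (M := 5 * l) hr0 (by linarith) (U := {1}ᶜ) isOpen_compl_singleton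
    (by intro z hz h; rw [Set.mem_singleton_iff] at h; exact hne1 (h ▸ hz))
    (fun z hz => (differentiableAt_riemannZeta hz).differentiableWithinAt)
    (riemannZeta_ne_zero_of_one_le_re (by rw [hs₀re]; linarith)) (by
      intro s hs
      have h1 := inv_zeta_le (s := s₀) (by rw [hs₀re]; linarith)
      rw [hs₀re, add_sub_cancel_left] at h1
      have h2 : 1 / a ≤ L := by rw [div_le_iff₀ ha0]; rwa [div_le_iff₀' (by linarith)] at ha1
      calc ‖riemannZeta s‖ ≤ 8 * L ^ 3 * 1 := by rw [mul_one]; exact hbd s hs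
        _ ≤ 8 * L ^ 3 * ((2 + 1 / a) * ‖riemannZeta s₀‖) := by gcongr
        _ ≤ 8 * L ^ 3 * ((2 + L) * ‖riemannZeta s₀‖) := by gcongr
        _ = L ^ 3 * (8 * (2 + L)) * ‖riemannZeta s₀‖ := by ring
        _ ≤ L ^ 3 * L ^ 2 * ‖riemannZeta s₀‖ := by gcongr; nlinarith
        _ = _ := by rw [hexp]; ring)
  rw [hl24] at this
  exact this

/-- The real part of `∑ 1 / (s - ρ)` is non-negative to the right of all `ρ`. -/
lemma re_sum_nonneg {Z : Multiset ℂ} {s : ℂ} (h : ∀ ρ ∈ Z, ρ.re ≤ s.re) : 0 ≤ ((Z.map fun ρ => 1 / (s - ρ)).sum).re := by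
  induction Z using Multiset.induction_on with
  | empty => simp
  | cons x Z ih =>
    rw [Multiset.map_cons, Multiset.sum_cons, Complex.add_re]
    have h1 := ih fun ρ hρ => h ρ (Multiset.mem_cons_of_mem hρ)
    have h2 := h x (Multiset.mem_cons_self x Z)
    have : 0 ≤ (1 / (s - x)).re := by
      rw [one_div, Complex.inv_re]
      exact div_nonneg (by rw [Complex.sub_re]; linarith) (Complex.normSq_nonneg _)
    linarith

lemma zeta_zero_free {C : ℝ} (hC : 0 < C) : ∃ t₀ : ℝ, 100 ≤ t₀ ∧ ∀ s : ℂ, t₀ ≤ |s.im| →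
    1 - C * log (log |s.im|) / log |s.im| ≤ s.re → riemannZeta s ≠ 0 := by
  obtain ⟨C₁, hC₁, hq⟩ := zq_real_le
  have hK : 0 < 16800 * C := by positivity
  have hev := (zeta_landau hK).and ((ev_loglog (3 * C₁ * 28 * C + 6 * C) 1).and ((ev_log_ge 10).and ((ev_loglog_ge 1).and (ev_loglog_ge (1 / (6 * C))))))
  obtain ⟨t₀, ht₀⟩ := eventually_atTop.1 hev
  refine ⟨max t₀ 100, le_max_right _ _, fun s hs hre hz => ?_⟩
  obtain ⟨hlan, hl1, hL10, hl0, hl6⟩ := ht₀ |s.im| ((le_max_left _ _).trans hs)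
  have h100 := (le_max_right t₀ 100).trans hs
  set L := log |s.im| with hL
  set l := log L with hl
  have hβ : s.re < 1 := by
    by_contra h
    exact riemannZeta_ne_zero_of_one_le_re (not_lt.1 h) hz
  set γ := s.im with hγ
  set η := C * l / L with hη
  have hη0 : 0 < η := by positivity
  rw [pow_one] at hl1
  have hη1 : 6 * η ≤ 1 := by
    rw [hη, mul_div_assoc', div_le_one (by linarith)]
    have : 0 ≤ 3 * C₁ * 28 * C * l := by positivity
    linarith
  have hηL : 1 / L ≤ 6 * η := by
    rw [hη, mul_div_assoc']
    gcongr
    rw [div_le_iff₀ (by positivity)] at hl6; linarith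
  obtain ⟨Z, -, hZ, hZb⟩ := hlan γ le_rfl (by linarith [abs_nonneg γ]) (6 * η) hηL hη1
  obtain ⟨Z', -, hZ', hZb'⟩ := hlan (2 * γ) (by rw [abs_mul, abs_two]; linarith [abs_nonneg γ])
    (by rw [abs_mul, abs_two]) (6 * η) hηL hη1
  set s₁ : ℂ := (1 + 6 * η : ℝ) + γ * I with hs₁
  set s₂ : ℂ := (1 + 6 * η : ℝ) + (2 * γ : ℝ) * I with hs₂
  have hr0 : 0 ≤ 16800 * C * l ^ 2 / L / 12 := by positivity
  have hs₁re : s₁.re = 1 + 6 * η := by simp [hs₁]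
  have hs₂re : s₂.re = 1 + 6 * η := by simp [hs₂]
  have b1 := hZb s₁ (by simpa using hr0) (riemannZeta_ne_zero_of_one_le_re (by rw [hs₁re]; linarith))
  have b2 := hZb' s₂ (by simpa using hr0) (riemannZeta_ne_zero_of_one_le_re (by rw [hs₂re]; linarith))
  have hρre : ∀ ρ : ℂ, riemannZeta ρ = 0 → ρ.re ≤ 1 := fun ρ h => by
    by_contra h'
    exact riemannZeta_ne_zero_of_one_le_re (not_le.1 h').le h
  have n2 := re_sum_nonneg (Z := Z') (s := s₂) fun ρ hρ => by
    have := hρre ρ ((hZ' ρ).1 hρ).2; rw [hs₂re]; linarith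
  -- the zero `s` itself contributes `1 / (1 + 6η - β)`
  have hs₁s : s₁ - s = ((1 + 6 * η - s.re : ℝ) : ℂ) := by
    apply Complex.ext <;> simp [hs₁, hγ]
  have hsZ : s ∈ Z := by
    refine (hZ s).2 ⟨?_, hz⟩
    rw [norm_sub_rev, hs₁s, Complex.norm_real, norm_of_nonneg (by linarith)]
    have h7 : 1 + 6 * η - s.re ≤ 7 * η := by linarith
    refine h7.trans ?_
    have e : 16800 * C * l ^ 2 / L / 3 = 5600 * (l * η) := by rw [hη]; field_simp; norm_num
    rw [e]
    nlinarith [mul_le_mul_of_nonneg_right hl0 hη0.le]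
  obtain ⟨Z₁, hZ₁⟩ := Multiset.exists_cons_of_mem hsZ
  have n1 : 1 / (7 * η) ≤ ((Z.map fun ρ => 1 / (s₁ - ρ)).sum).re := by
    have h2 := re_sum_nonneg (Z := Z₁) (s := s₁) fun ρ hρ => by
      have := hρre ρ ((hZ ρ).1 (by rw [hZ₁]; exact Multiset.mem_cons_of_mem hρ)).2; rw [hs₁re]; linarith
    rw [hZ₁, Multiset.map_cons, Multiset.sum_cons, Complex.add_re, hs₁s]
    have e : (1 / ((1 + 6 * η - s.re : ℝ) : ℂ)).re = 1 / (1 + 6 * η - s.re) := by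
      rw [← Complex.ofReal_one, ← Complex.ofReal_div, Complex.ofReal_re]
    rw [e]
    have : 1 / (7 * η) ≤ 1 / (1 + 6 * η - s.re) := by
      apply one_div_le_one_div_of_le <;> linarith
    linarith
  have hzq : ∀ w, deriv riemannZeta w / riemannZeta w = - zq w := fun w => by rw [zq]; ring
  have c1 := (abs_le.1 ((Complex.abs_re_le_norm _).trans b1)).1
  have c2 := (abs_le.1 ((Complex.abs_re_le_norm _).trans b2)).1
  rw [hzq, Complex.sub_re, Complex.neg_re] at c1 c2
  have h341 := zq_341 (σ := 1 + 6 * η) (by linarith) γ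
  have e1 : ((1 + 6 * η : ℝ) : ℂ) + γ * I = s₁ := rfl
  have e2 : ((1 + 6 * η : ℝ) : ℂ) + 2 * γ * I = s₂ := by rw [hs₂]; push_cast; ring
  rw [e1, e2] at h341
  have hq1 := hq (1 + 6 * η) (by linarith) (by linarith)
  rw [add_sub_cancel_left] at hq1
  -- `4/(7η) ≤ 3/(6η) + 3 C₁ + 600 L / (K l)`, `K = 16800 C`
  have f1 : 120 / (16800 * C) * (L / l) = 1 / (140 * η) := by rw [hη]; field_simp; norm_num
  rw [f1] at c1 c2
  have k1 : 1 / (7 * η) = (20 / 140) / η := by field_simp; norm_num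
  have k2 : 1 / (6 * η) = (1 / 6) / η := by field_simp
  have k3 : 1 / (140 * η) = (1 / 140) / η := by field_simp
  rw [k1] at n1; rw [k2] at hq1; rw [k3] at c1 c2
  have k4 : 3 * C₁ * η * 28 + 1 * η ≤ 1 := by
    rw [hη]
    have : 3 * C₁ * (C * l / L) * 28 + 1 * (C * l / L) = (3 * C₁ * 28 * C * l + C * l) / L := by field_simp
    rw [this, div_le_one (by linarith)]
    nlinarith [mul_pos hC (by linarith : 0 < l)]
  have k5 : 3 * C₁ < (1 / 28) / η := by rw [lt_div_iff₀ hη0]; linarith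
  have g : ∀ c : ℝ, c / η = c * (1 / η) := fun c => by ring
  rw [g] at *
  linarith

lemma norm_sum_inv_le {Z : Multiset ℂ} {s : ℂ} {d : ℝ} (hd : 0 < d) (h : ∀ ρ ∈ Z, d ≤ ‖s - ρ‖) :
    ‖(Z.map fun ρ => 1 / (s - ρ)).sum‖ ≤ Multiset.card Z * (1 / d) := by
  induction Z using Multiset.induction_on with
  | empty => simp
  | cons x Z ih =>
    rw [Multiset.map_cons, Multiset.sum_cons, Multiset.card_cons]
    have h1 := ih fun ρ hρ => h ρ (Multiset.mem_cons_of_mem hρ)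
    have h2 := h x (Multiset.mem_cons_self x Z)
    have h3 : ‖1 / (s - x)‖ ≤ 1 / d := by
      rw [norm_div, norm_one]; exact one_div_le_one_div_of_le hd h2
    have := norm_add_le (1 / (s - x)) ((Z.map fun ρ => 1 / (s - ρ)).sum)
    push_cast; linarith

lemma zq_bound {C : ℝ} (hC : 0 < C) : ∃ t₀ : ℝ, 100 ≤ t₀ ∧ ∀ s : ℂ, t₀ ≤ |s.im| →
    1 - C * log (log |s.im|) / log |s.im| ≤ s.re → s.re ≤ 2 →
    riemannZeta s ≠ 0 ∧ ‖zq s‖ ≤ log |s.im| ^ 2 := by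
  obtain ⟨C₁, hC₁, hq⟩ := zq_real_le
  obtain ⟨t₁, ht₁, hzf⟩ := zeta_zero_free (C := 16 * C) (by positivity)
  have hev := (zeta_landau one_pos).and ((ev_loglog (6 * C) 1).and ((ev_log_ge (120 + 3 / C + C₁ + 10)).and
    ((ev_loglog_ge 1).and ((ev_loglog_ge (1 / (6 * C))).and ((ev_loglog_ge (84 * C)).and (ev_loglog 1 2))))))
  obtain ⟨t₀, ht₀⟩ := eventually_atTop.1 hev
  refine ⟨max t₀ (2 * t₁), by linarith [le_max_right t₀ (2 * t₁)], fun s hs hre hre2 => ?_⟩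
  obtain ⟨hlan, hl1, hL10, hl0, hl6, hl84, hl2⟩ := ht₀ |s.im| ((le_max_left _ _).trans hs)
  have ht1 := (le_max_right t₀ (2 * t₁)).trans hs
  set L := log |s.im| with hL
  set l := log L with hl
  have hC3 : 0 < 3 / C := by positivity
  have hL0 : 0 < L := by linarith
  have hl00 : 0 < l := by linarith
  set η := C * l / L with hη
  have hη0 : 0 < η := by positivity
  rw [pow_one] at hl1
  have hη1 : 6 * η ≤ 1 := by
    rw [hη, mul_div_assoc', div_le_one (by linarith)]; linarith
  have hηL : 1 / L ≤ 6 * η := by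
    rw [hη, mul_div_assoc']
    gcongr
    rw [div_le_iff₀ (by positivity)] at hl6; linarith
  have hz0 : riemannZeta s ≠ 0 := by
    refine hzf s (by linarith) (le_trans ?_ hre)
    have : 16 * C * l / L = 16 * η := by rw [hη]; ring
    rw [this]; linarith
  refine ⟨hz0, ?_⟩
  rcases le_total (1 + 6 * η) s.re with hbig | hsmall
  · have h1 := norm_zq_le (s := s) (by linarith)
    have h2 := hq s.re (by linarith) (by linarith)
    have h3 : 1 / (s.re - 1) ≤ L := by
      have : 1 / (s.re - 1) ≤ 1 / (1 / L) := one_div_le_one_div_of_le (by positivity) (by linarith)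
      simpa using this
    nlinarith
  set γ := s.im with hγ
  obtain ⟨Z, hcard, hZ, hZb⟩ := hlan γ le_rfl (by linarith [abs_nonneg γ]) (6 * η) hηL hη1
  set s₁ : ℂ := (1 + 6 * η : ℝ) + γ * I with hs₁
  have hs₁s : s₁ - s = ((1 + 6 * η - s.re : ℝ) : ℂ) := by
    apply Complex.ext <;> simp [hs₁, hγ]
  have b1 := hZb s (by
    rw [norm_sub_rev, hs₁s, Complex.norm_real, norm_of_nonneg (by linarith)]
    have h7 : 1 + 6 * η - s.re ≤ 7 * η := by linarith
    refine h7.trans ?_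
    have e : 7 * η = (84 * C) * l / L / 12 := by rw [hη]; field_simp; norm_num
    rw [e, one_mul, sq]
    gcongr) hz0
  have hsep : ∀ ρ ∈ Z, 3 * η ≤ ‖s - ρ‖ := by
    intro ρ hρ
    obtain ⟨h1, h2⟩ := (hZ ρ).1 hρ
    have h3 : ρ.re < 1 - 4 * η := by
      by_contra hcon
      push Not at hcon
      have h4 := (Complex.abs_im_le_norm (ρ - s₁)).trans h1
      have hs₁im : s₁.im = γ := by simp [hs₁]
      rw [Complex.sub_im, hs₁im] at h4
      have h5 : 1 * l ^ 2 / L / 3 ≤ 1 := by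
        rw [div_div, div_le_one (by linarith)]; linarith
      have h6 := abs_sub_abs_le_abs_sub ρ.im γ
      have h7 := abs_sub_abs_le_abs_sub γ ρ.im
      rw [abs_sub_comm] at h7
      obtain ⟨c1, c2, c3⟩ := log_compare (u := |γ|) (v := |ρ.im|) (by linarith) (by linarith) (by linarith) (by linarith)
      refine hzf ρ (by linarith) ?_ h2
      have : 4 * η ≤ 16 * C * log (log |ρ.im|) / log |ρ.im| := by
        rw [hη, mul_div_assoc', div_le_div_iff₀ (by linarith) (by linarith)]
        calc 4 * (C * l) * log |ρ.im| ≤ 4 * (C * l) * (2 * L) := by gcongr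
          _ = 16 * C * (l / 2) * L := by ring
          _ ≤ _ := by gcongr
      linarith
    have h4 := (Complex.re_le_norm (s - ρ))
    rw [Complex.sub_re] at h4
    linarith
  have hsum := norm_sum_inv_le (by positivity) hsep
  have hcard' : (Multiset.card Z : ℝ) ≤ 8 * l := by
    have h1 := Real.log_le_log (by positivity) hcard
    rw [Real.log_exp, Real.log_pow] at h1
    have := Real.log_two_gt_d9
    nlinarith [(Nat.cast_nonneg (Multiset.card Z) : (0 : ℝ) ≤ _)]
  have hzq : deriv riemannZeta s / riemannZeta s = - zq s := by rw [zq]; ring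
  rw [hzq] at b1
  have hfin : ‖zq s‖ ≤ 120 / 1 * (L / l) + 8 * l * (1 / (3 * η)) := by
    have h1 := norm_le_norm_add_norm_sub ((Z.map fun ρ => 1 / (s - ρ)).sum) (- zq s)
    rw [norm_neg] at h1
    rw [norm_sub_rev] at b1
    have : (Multiset.card Z : ℝ) * (1 / (3 * η)) ≤ 8 * l * (1 / (3 * η)) := by gcongr
    linarith
  have e : 8 * l * (1 / (3 * η)) ≤ 3 / C * L := by
    have : 8 * l * (1 / (3 * η)) = (8 / 9) * (3 / C * L) := by rw [hη]; field_simp; norm_num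
    rw [this]
    nlinarith [mul_pos hC3 (by linarith : 0 < L)]
  have e2 : L / l ≤ L := div_le_self (by linarith) hl0
  nlinarith

/-- The holomorphic continuation of `-ζ'/ζ - ζ` to a neighbourhood of `1`. -/
noncomputable def FF (s : ℂ) : ℂ := -dslope Zet 1 s - deriv Zet s / Zet s

lemma FF_eq {s : ℂ} (hs : s ≠ 1) (h0 : Zet s ≠ 0) : FF s = zq s - riemannZeta s := by
  have hs' : s - 1 ≠ 0 := sub_ne_zero.2 hs
  have hz : riemannZeta s ≠ 0 := by
    intro h; rw [Zet_of_ne hs, h, mul_zero] at h0; exact h0 rfl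
  rw [FF, zq_eq hs hz, dslope_of_ne _ hs, slope_def_field, Zet_one, Zet_of_ne hs]
  field_simp
  ring

lemma differentiable_dslope_Zet : Differentiable ℂ (dslope Zet 1) := by
  rw [← differentiableOn_univ]
  exact (Complex.differentiableOn_dslope univ_mem).2 differentiable_Zet.differentiableOn

lemma differentiable_deriv_Zet : Differentiable ℂ (deriv Zet) := by
  rw [← differentiableOn_univ]
  exact differentiable_Zet.differentiableOn.deriv isOpen_univ

lemma differentiableAt_FF {s : ℂ} (h0 : Zet s ≠ 0) : DifferentiableAt ℂ FF s :=
  (differentiable_dslope_Zet s).neg.sub ((differentiable_deriv_Zet s).div (differentiable_Zet s) h0)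

lemma compact_region (t₀ : ℝ) : ∃ η : ℝ, 0 < η ∧ ∃ B : ℝ, 0 < B ∧ ∀ s : ℂ, |s.im| ≤ t₀ → 1 - η ≤ s.re → s.re ≤ 2 →
    Zet s ≠ 0 ∧ ‖deriv Zet s / Zet s‖ ≤ B ∧ ‖FF s‖ ≤ B := by
  set S : Set ℂ := Set.Icc (1 : ℝ) 2 ×ℂ Set.Icc (-t₀) t₀ with hS
  have hc : IsCompact S := isCompact_Icc.reProdIm isCompact_Icc
  have ho : IsOpen {s : ℂ | Zet s ≠ 0} := isOpen_ne_fun differentiable_Zet.continuous continuous_const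
  obtain ⟨η, hη, hsub⟩ := hc.exists_cthickening_subset_open ho (fun s hs => Zet_ne_zero hs.1.1)
  have hc' : IsCompact (Metric.cthickening η S) := hc.cthickening
  have c1 : ContinuousOn (fun s => ‖deriv Zet s / Zet s‖) (Metric.cthickening η S) :=
    (differentiable_deriv_Zet.continuous.continuousOn.div differentiable_Zet.continuous.continuousOn fun s hs => hsub hs).norm
  have c2 : ContinuousOn (fun s => ‖FF s‖) (Metric.cthickening η S) :=
    ContinuousOn.norm fun s hs => (differentiableAt_FF (hsub hs)).continuousAt.continuousWithinAt
  obtain ⟨B₁, hB₁⟩ := (hc'.image_of_continuousOn c1).bddAbove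
  obtain ⟨B₂, hB₂⟩ := (hc'.image_of_continuousOn c2).bddAbove
  refine ⟨η, hη, max 1 (max B₁ B₂), by positivity, fun s h1 h2 h3 => ?_⟩
  have hmem : s ∈ Metric.cthickening η S := by
    have h1' := abs_le.1 h1
    refine Metric.mem_cthickening_of_dist_le s (max 1 s.re + s.im * I : ℂ) η S ?_ ?_
    · have e : (max 1 s.re + s.im * I : ℂ).re = max 1 s.re := by
        rw [Complex.add_re]; simp
      refine ⟨?_, ?_⟩
      · simp only [Set.mem_preimage, Complex.add_re, Complex.ofReal_re, Complex.mul_re, Complex.I_re, Complex.ofReal_im, Complex.I_im]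
        simp [h3]
      · simp [h1'.1, h1'.2]
    · rw [dist_eq_norm]
      have e : s - (max 1 s.re + s.im * I : ℂ) = ((s.re - max 1 s.re : ℝ) : ℂ) := by
        apply Complex.ext <;> simp
      rw [e, Complex.norm_real, Real.norm_eq_abs, abs_le]
      constructor
      · have : max 1 s.re ≤ s.re + η := max_le (by linarith) (by linarith)
        linarith
      · linarith [le_max_right 1 s.re]
  refine ⟨hsub hmem, ?_, ?_⟩
  · exact (hB₁ ⟨s, hmem, rfl⟩).trans ((le_max_left _ _).trans (le_max_right _ _))
  · exact (hB₂ ⟨s, hmem, rfl⟩).trans ((le_max_right _ _).trans (le_max_right _ _))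

/-- The zero-free region for all heights up to `T`: `zq_bound` above a fixed height, compactness below. -/
lemma zeta_region {C : ℝ} (hC : 0 < C) : ∃ B : ℝ, 0 < B ∧ ∀ᶠ T : ℝ in atTop, ∀ s : ℂ, |s.im| ≤ T →
    1 - C * log (log T) / log T ≤ s.re → s.re ≤ 2 →
    Zet s ≠ 0 ∧ (1 ≤ |s.im| → ‖zq s‖ ≤ B * log T ^ 2) ∧ (|s.im| ≤ 2 → ‖FF s‖ ≤ B) := by
  obtain ⟨t₀, ht₀, hb⟩ := zq_bound hC
  obtain ⟨η, hη, B, hB, hcomp⟩ := compact_region t₀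
  refine ⟨1 + B, by positivity, ?_⟩
  filter_upwards [ev_log_ge 3, ev_loglog (C / η) 1, eventually_ge_atTop t₀] with T hT1 hT2 hT3
  intro s hs hre hre2
  rw [pow_one, div_mul_eq_mul_div, div_le_iff₀ hη] at hT2
  set L := log T with hL
  have hL1 : 1 ≤ L ^ 2 := by nlinarith
  rcases le_total |s.im| t₀ with h | h
  · obtain ⟨h1, h2, h3⟩ := hcomp s h (by
      refine le_trans ?_ hre
      have : C * log L / L ≤ η := by rw [div_le_iff₀ (by linarith)]; linarith
      linarith) hre2
    refine ⟨h1, fun him => ?_, fun _ => by linarith⟩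
    have hs1 : s ≠ 1 := by rintro rfl; norm_num at him
    have hz : riemannZeta s ≠ 0 := by
      intro h; rw [Zet_of_ne hs1, h, mul_zero] at h1; exact h1 rfl
    rw [zq_eq hs1 hz]
    have h4 : ‖1 / (s - 1)‖ ≤ 1 := by
      rw [norm_div, norm_one, div_le_one (norm_pos_iff.2 (sub_ne_zero.2 hs1))]
      have := Complex.abs_im_le_norm (s - 1)
      rw [Complex.sub_im, Complex.one_im, sub_zero] at this
      linarith
    have := norm_sub_le (1 / (s - 1)) (deriv Zet s / Zet s)
    nlinarith
  · have h100 : (1 : ℝ) ≤ |s.im| := by linarith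
    have hs1 : s ≠ 1 := by rintro rfl; norm_num at h100
    have hlog3 : 3 ≤ log |s.im| := by
      rw [Real.le_log_iff_exp_le (by linarith)]
      have := Real.exp_one_lt_d9
      have e : exp 3 = exp 1 ^ 3 := by rw [← Real.exp_nat_mul]; norm_num
      rw [e]
      have : exp 1 ^ 3 ≤ 3 ^ 3 := by gcongr; linarith
      linarith
    have hmono : log |s.im| ≤ L := Real.log_le_log (by linarith) hs
    have hanti := Real.log_div_self_antitoneOn (a := log |s.im|) (b := L)
      (by have := Real.exp_one_lt_d9; show exp 1 ≤ _; linarith)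
      (by have := Real.exp_one_lt_d9; show exp 1 ≤ _; linarith) hmono
    obtain ⟨h1, h2⟩ := hb s h (by
      refine le_trans ?_ hre
      have := mul_le_mul_of_nonneg_left hanti hC.le
      rw [← mul_div_assoc, ← mul_div_assoc] at this
      linarith) hre2
    refine ⟨?_, fun _ => ?_, fun h => by linarith⟩
    · rw [Zet_of_ne hs1]; exact mul_ne_zero (sub_ne_zero.2 hs1) h1
    · have : log |s.im| ^ 2 ≤ L ^ 2 := by gcongr
      nlinarith

/-! ### Gaussian mean values of Dirichlet polynomials -/

/-- Telescoping bound for a two-sided sum of inverse squares. -/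
lemma sum_inv_sq_le {c : ℝ} (hc : 0 < c) (n N : ℕ) :
    ∑ m ∈ Ioc 0 N, 1 / (1 + c * |(m : ℝ) - n|) ^ 2 ≤ 1 + 2 / c := by
  have key : ∀ N : ℕ, ∑ m ∈ Ioc 0 N, 1 / (1 + c * |(m : ℝ) - n|) ^ 2 ≤
      if n ≤ N then 1 + 1 / c + (1 / c) * (1 - 1 / (1 + c * ((N : ℝ) - n)))
        else (1 / c) * (1 / (1 + c * ((n : ℝ) - N - 1))) := by
    intro N
    induction N with
    | zero =>
      rw [Finset.Ioc_self, Finset.sum_empty]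
      split_ifs with h
      · have : n = 0 := by omega
        subst this
        simp; positivity
      · have : (1 : ℝ) ≤ n := by exact_mod_cast (show 1 ≤ n by omega)
        have h2 : 0 < 1 + c * ((n : ℝ) - (0 : ℕ) - 1) := by
          have : 0 ≤ c * ((n : ℝ) - (0 : ℕ) - 1) := by
            apply mul_nonneg hc.le; push_cast; linarith
          linarith
        positivity
    | succ N ih =>
      rw [sum_Ioc_succ_top (by omega)]
      -- `1/(1+c(j+1))² ≤ (1/c)(1/(1+cj) - 1/(1+c(j+1)))`
      have tel : ∀ j : ℝ, 0 ≤ j → 1 / (1 + c * (j + 1)) ^ 2 ≤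
          (1 / c) * (1 / (1 + c * j) - 1 / (1 + c * (j + 1))) := by
        intro j hj
        have h1 : 0 < 1 + c * j := by positivity
        have h2 : 0 < 1 + c * (j + 1) := by positivity
        have e : (1 / c) * (1 / (1 + c * j) - 1 / (1 + c * (j + 1))) =
            1 / ((1 + c * j) * (1 + c * (j + 1))) := by
          field_simp; ring
        rw [e, sq]
        apply one_div_le_one_div_of_le (by positivity)
        apply mul_le_mul_of_nonneg_right _ h2.le
        nlinarith
      by_cases h : n ≤ N
      · rw [if_pos h] at ih
        rw [if_pos (by omega)]
        have hN : (n : ℝ) ≤ N := by exact_mod_cast h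
        have := tel ((N : ℝ) - n) (by linarith)
        rw [show ((N + 1 : ℕ) : ℝ) - n = (N : ℝ) - n + 1 by push_cast; ring,
          abs_of_nonneg (by linarith)]
        linarith
      · rw [if_neg h] at ih
        by_cases h' : n = N + 1
        · rw [if_pos (by omega), h']
          rw [h'] at ih
          push_cast at ih ⊢
          simp only [sub_self, abs_zero, mul_zero, add_zero, add_sub_cancel_left] at ih ⊢
          norm_num at ih ⊢
          linarith
        · rw [if_neg (by omega)]
          have hN : (N : ℝ) + 2 ≤ n := by exact_mod_cast (show N + 2 ≤ n by omega)
          have := tel ((n : ℝ) - N - 2) (by linarith)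
          rw [abs_of_nonpos (by push_cast; linarith)]
          push_cast
          rw [show -((N : ℝ) + 1 - n) = (n : ℝ) - N - 2 + 1 by ring,
            show (n : ℝ) - (N + 1) - 1 = (n : ℝ) - N - 2 by ring]
          rw [show (n : ℝ) - N - 1 = (n : ℝ) - N - 2 + 1 by ring] at ih
          linarith
  refine (key N).trans ?_
  split_ifs with h
  · have hN : (n : ℝ) ≤ N := by exact_mod_cast h
    have : 0 ≤ 1 / (1 + c * ((N : ℝ) - n)) := by
      have : 0 ≤ c * ((N : ℝ) - n) := mul_nonneg hc.le (by linarith)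
      positivity
    have h3 : (1 / c) * (1 - 1 / (1 + c * ((N : ℝ) - n))) ≤ 1 / c * 1 :=
      mul_le_mul_of_nonneg_left (by linarith) (by positivity)
    have : 2 / c = 1 / c + 1 / c := by ring
    linarith
  · have hN : (N : ℝ) + 1 ≤ n := by exact_mod_cast (show N + 1 ≤ n by omega)
    have h1 : 1 / (1 + c * ((n : ℝ) - N - 1)) ≤ 1 := by
      rw [div_le_one] <;> nlinarith
    have h3 : (1 / c) * (1 / (1 + c * ((n : ℝ) - N - 1))) ≤ 1 / c * 1 :=
      mul_le_mul_of_nonneg_left h1 (by positivity)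
    have h4 : 2 / c = 1 / c + 1 / c := by ring
    have : 0 < 1 / c := by positivity
    linarith

/-- Decay of the Gaussian kernel at `log (m / n)`. -/
lemma gauss_kernel_le {Θ : ℝ} (hΘ : 2 ≤ Θ) {n m : ℕ} (hn : 0 < n) (hm : 0 < m) :
    exp (-(Θ ^ 2 * (log m - log n) ^ 2 / 4)) ≤
      exp 1 * (1 / (1 + Θ / (2 * n) * |(m : ℝ) - n|) ^ 2) := by
  have hn' : (0 : ℝ) < n := by exact_mod_cast hn
  have hm' : (0 : ℝ) < m := by exact_mod_cast hm
  set y : ℝ := |(m : ℝ) - n| / n with hy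
  have hy0 : 0 ≤ y := by positivity
  have h1 : log (1 + y) ≤ |log m - log n| := by
    rcases le_total (n : ℝ) m with h | h
    · rw [hy, abs_of_nonneg (by linarith), show 1 + ((m : ℝ) - n) / n = m / n by field_simp; ring,
        Real.log_div hm'.ne' hn'.ne']
      exact le_abs_self _
    · rw [abs_sub_comm, ← Real.log_div hn'.ne' hm'.ne']
      refine le_trans (Real.log_le_log (by positivity) ?_) (le_abs_self _)
      rw [hy, abs_of_nonpos (by linarith), le_div_iff₀ hm']
      field_simp
      nlinarith [sq_nonneg ((n : ℝ) - m)]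
  have h2 : 1 + Θ / 2 * y ≤ exp (Θ / 2 * log (1 + y)) := by
    have := one_add_mul_self_le_rpow_one_add (by linarith : -1 ≤ y) (by linarith : 1 ≤ Θ / 2)
    rwa [Real.rpow_def_of_pos (by linarith), mul_comm (log _)] at this
  have h3 : -(Θ ^ 2 * (log m - log n) ^ 2 / 4) ≤ 1 - 2 * (Θ / 2 * log (1 + y)) := by
    have h4 : (log m - log n) ^ 2 = |log m - log n| ^ 2 := (sq_abs _).symm
    rw [h4]
    set w := |log m - log n|
    nlinarith [sq_nonneg (Θ * w / 2 - 1)]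
  calc _ ≤ exp (1 - 2 * (Θ / 2 * log (1 + y))) := Real.exp_le_exp.2 h3
    _ = exp 1 * (1 / exp (Θ / 2 * log (1 + y)) ^ 2) := by
        rw [Real.exp_sub, ← Real.exp_nat_mul]; push_cast; ring
    _ ≤ _ := by
        rw [show Θ / (2 * n) * |(m : ℝ) - n| = Θ / 2 * y by rw [hy]; ring]
        gcongr

lemma gauss_integral {Θ : ℝ} (hΘ : 0 < Θ) (l : ℝ) :
    ∫ t : ℝ, Complex.exp (-(t ^ 2 / Θ ^ 2 : ℝ)) * Complex.exp (I * ((t * l : ℝ) : ℂ)) =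
      ((Real.sqrt π * Θ * exp (-(Θ ^ 2 * l ^ 2 / 4)) : ℝ) : ℂ) := by
  have h := fourierIntegral_gaussian (b := ((1 / Θ ^ 2 : ℝ) : ℂ))
    (by rw [Complex.ofReal_re]; positivity) (l : ℂ)
  have e : ((π : ℂ) / ((1 / Θ ^ 2 : ℝ) : ℂ)) ^ (1 / 2 : ℂ) =
      ((Real.sqrt π * Θ : ℝ) : ℂ) := by
    rw [← Complex.ofReal_div, show (1 / 2 : ℂ) = ((1 / 2 : ℝ) : ℂ) by push_cast; rfl,
      ← Complex.ofReal_cpow (by positivity), ← Real.sqrt_eq_rpow]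
    congr 1
    rw [show π / (1 / Θ ^ 2) = π * Θ ^ 2 by field_simp,
      Real.sqrt_mul Real.pi_pos.le, Real.sqrt_sq hΘ.le]
  rw [e] at h
  have hne : (Θ : ℂ) ≠ 0 := by exact_mod_cast hΘ.ne'
  calc _ = ∫ x : ℝ, Complex.exp (I * (l : ℂ) * x) *
        Complex.exp (-((1 / Θ ^ 2 : ℝ) : ℂ) * (x : ℂ) ^ 2) := by
        apply MeasureTheory.integral_congr_ae
        filter_upwards with t
        rw [mul_comm]
        push_cast
        congr 2 <;> ring
    _ = _ := by
        rw [h]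
        push_cast
        congr 2
        field_simp

lemma integrable_gauss {Θ : ℝ} (hΘ : 0 < Θ) :
    MeasureTheory.Integrable (fun t : ℝ => exp (-(t ^ 2 / Θ ^ 2))) := by
  have := integrable_exp_neg_mul_sq (b := 1 / Θ ^ 2) (by positivity)
  refine this.congr (Filter.Eventually.of_forall fun t => ?_)
  show exp _ = exp _
  congr 1; ring

lemma integrable_gauss_mul {Θ : ℝ} (hΘ : 0 < Θ) (l : ℝ) (z : ℂ) :
    MeasureTheory.Integrable (fun t : ℝ => z * (Complex.exp (-(t ^ 2 / Θ ^ 2 : ℝ)) *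
      Complex.exp (I * ((t * l : ℝ) : ℂ)))) := by
  apply MeasureTheory.Integrable.const_mul
  refine (integrable_gauss hΘ).mono' (by fun_prop) (Filter.Eventually.of_forall fun t => ?_)
  rw [norm_mul, Complex.norm_exp_I_mul_ofReal, mul_one, Complex.norm_exp, Complex.neg_re,
    Complex.ofReal_re]

/-- Gaussian-weighted mean value theorem for Dirichlet polynomials. -/
lemma mean_value {Θ : ℝ} (hΘ : 2 ≤ Θ) (N : ℕ) (a : ℕ → ℂ) :
    ∫ t : ℝ, exp (-(t ^ 2 / Θ ^ 2)) *
      ‖∑ n ∈ Ioc 0 N, a n * Complex.exp (I * ((-t * log n : ℝ) : ℂ))‖ ^ 2 ≤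
      20 * ∑ n ∈ Ioc 0 N, ‖a n‖ ^ 2 * (Θ + n) := by
  have hΘ0 : 0 < Θ := by linarith
  set K : ℕ → ℕ → ℝ := fun n m =>
    Real.sqrt π * Θ * exp (-(Θ ^ 2 * (log m - log n) ^ 2 / 4)) with hK
  have hK0 : ∀ n m, 0 ≤ K n m := fun n m => by positivity
  have hKs : ∀ n m, K n m = K m n := fun n m => by simp only [hK]; rw [← neg_sub, neg_sq]
  -- opening the square
  have expand : ((∫ t : ℝ, exp (-(t ^ 2 / Θ ^ 2)) *
      ‖∑ n ∈ Ioc 0 N, a n * Complex.exp (I * ((-t * log n : ℝ) : ℂ))‖ ^ 2 : ℝ) : ℂ) =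
      ∑ n ∈ Ioc 0 N, ∑ m ∈ Ioc 0 N, a n * (starRingEnd ℂ) (a m) * (K n m : ℂ) := by
    rw [← integral_complex_ofReal]
    have : ∀ t : ℝ, ((exp (-(t ^ 2 / Θ ^ 2)) *
      ‖∑ n ∈ Ioc 0 N, a n * Complex.exp (I * ((-t * log n : ℝ) : ℂ))‖ ^ 2 : ℝ) : ℂ) =
      ∑ n ∈ Ioc 0 N, ∑ m ∈ Ioc 0 N, a n * (starRingEnd ℂ) (a m) *
        (Complex.exp (-(t ^ 2 / Θ ^ 2 : ℝ)) *
          Complex.exp (I * ((t * (log m - log n) : ℝ) : ℂ))) := by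
      intro t
      rw [Complex.ofReal_mul, Complex.ofReal_pow, ← Complex.mul_conj', map_sum,
        sum_mul_sum, mul_sum]
      refine sum_congr rfl fun n _ => ?_
      rw [mul_sum]
      refine sum_congr rfl fun m _ => ?_
      rw [map_mul, ← Complex.exp_conj, map_mul, Complex.conj_I, Complex.conj_ofReal,
        show Complex.exp (I * ((t * (log m - log n) : ℝ) : ℂ)) =
          Complex.exp (I * ((-t * log n : ℝ) : ℂ)) *
          Complex.exp (-I * ((-t * log m : ℝ) : ℂ)) by
            rw [← Complex.exp_add]; congr 1; push_cast; ring]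
      push_cast
      ring
    simp_rw [this]
    rw [MeasureTheory.integral_finsetSum _ fun n _ => MeasureTheory.integrable_finsetSum _
      fun m _ => integrable_gauss_mul hΘ0 _ _]
    refine sum_congr rfl fun n _ => ?_
    rw [MeasureTheory.integral_finsetSum _ fun m _ => integrable_gauss_mul hΘ0 _ _]
    refine sum_congr rfl fun m _ => ?_
    rw [MeasureTheory.integral_const_mul, gauss_integral hΘ0]
  have row : ∀ n ∈ Ioc 0 N, ∑ m ∈ Ioc 0 N, K n m ≤ 20 * (Θ + n) := by
    intro n hn
    have hn0 : 0 < n := (mem_Ioc.1 hn).1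
    have hn' : (0 : ℝ) < n := by exact_mod_cast hn0
    have hπ : Real.sqrt π ≤ 1.78 := by
      rw [Real.sqrt_le_left (by norm_num)]; linarith [Real.pi_lt_d2]
    have he : exp 1 ≤ 2.72 := by linarith [Real.exp_one_lt_d9]
    have hsum := sum_inv_sq_le (c := Θ / (2 * n)) (by positivity) n N
    calc ∑ m ∈ Ioc 0 N, K n m ≤ ∑ m ∈ Ioc 0 N, Real.sqrt π * Θ *
          (exp 1 * (1 / (1 + Θ / (2 * n) * |(m : ℝ) - n|) ^ 2)) := by
          refine sum_le_sum fun m hm => ?_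
          exact mul_le_mul_of_nonneg_left (gauss_kernel_le hΘ hn0 (mem_Ioc.1 hm).1)
            (by positivity)
      _ = Real.sqrt π * exp 1 * (Θ *
          ∑ m ∈ Ioc 0 N, 1 / (1 + Θ / (2 * n) * |(m : ℝ) - n|) ^ 2) := by
          rw [mul_sum, mul_sum]
          exact sum_congr rfl fun m _ => by ring
      _ ≤ 1.78 * 2.72 * (Θ * (1 + 2 / (Θ / (2 * n)))) := by
          gcongr
      _ = 1.78 * 2.72 * (Θ + 4 * n) := by field_simp; ring
      _ ≤ _ := by nlinarith
  have h1 : ∫ t : ℝ, exp (-(t ^ 2 / Θ ^ 2)) *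
      ‖∑ n ∈ Ioc 0 N, a n * Complex.exp (I * ((-t * log n : ℝ) : ℂ))‖ ^ 2 ≤
      ∑ n ∈ Ioc 0 N, ∑ m ∈ Ioc 0 N, ‖a n‖ * ‖a m‖ * K n m := by
    refine (le_abs_self _).trans ?_
    rw [← Real.norm_eq_abs, ← Complex.norm_real, expand]
    refine (norm_sum_le _ _).trans (sum_le_sum fun n _ => ?_)
    refine (norm_sum_le _ _).trans (sum_le_sum fun m _ => ?_)
    rw [norm_mul, norm_mul, RCLike.norm_conj, Complex.norm_real, norm_of_nonneg (hK0 n m)]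
  refine h1.trans ?_
  have h2 : ∑ n ∈ Ioc 0 N, ∑ m ∈ Ioc 0 N, ‖a n‖ * ‖a m‖ * K n m ≤
      ∑ n ∈ Ioc 0 N, ∑ m ∈ Ioc 0 N, (‖a n‖ ^ 2 * K n m / 2 + ‖a m‖ ^ 2 * K m n / 2) := by
    refine sum_le_sum fun n _ => sum_le_sum fun m _ => ?_
    rw [hKs m n]
    nlinarith [mul_nonneg (sq_nonneg (‖a n‖ - ‖a m‖)) (hK0 n m)]
  refine h2.trans ?_
  simp_rw [sum_add_distrib]
  rw [sum_comm (f := fun n m => ‖a m‖ ^ 2 * K m n / 2), ← sum_add_distrib,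
    mul_sum]
  refine sum_le_sum fun n hn => ?_
  rw [← sum_add_distrib]
  calc _ = ‖a n‖ ^ 2 * ∑ m ∈ Ioc 0 N, K n m := by
        rw [mul_sum]; exact sum_congr rfl fun m _ => by ring
    _ ≤ ‖a n‖ ^ 2 * (20 * (Θ + n)) := mul_le_mul_of_nonneg_left (row n hn) (by positivity)
    _ = _ := by ring

/-- The mean value theorem on the vertical line of real part `σ`. -/
lemma mean_value' {Θ : ℝ} (hΘ : 2 ≤ Θ) (N : ℕ) (a : ℕ → ℂ) (σ : ℝ) :
    ∫ t : ℝ, exp (-(t ^ 2 / Θ ^ 2)) *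
      ‖∑ n ∈ Ioc 0 N, a n * (n : ℂ) ^ (-((σ : ℂ) + t * I))‖ ^ 2 ≤
      20 * ∑ n ∈ Ioc 0 N, ‖a n‖ ^ 2 * (n : ℝ) ^ (-2 * σ) * (Θ + n) := by
  have h := mean_value hΘ N (fun n => a n * ((n : ℝ) ^ (-σ) : ℝ))
  have e1 : ∀ t : ℝ, ∑ n ∈ Ioc 0 N, a n * (n : ℂ) ^ (-((σ : ℂ) + t * I)) =
      ∑ n ∈ Ioc 0 N, a n * (((n : ℝ) ^ (-σ) : ℝ) : ℂ) *
        Complex.exp (I * ((-t * log n : ℝ) : ℂ)) := by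
    intro t
    refine sum_congr rfl fun n hn => ?_
    rw [natCast_cpow_eq (mem_Ioc.1 hn).1]
    simp [mul_assoc]
  simp_rw [e1]
  refine h.trans (le_of_eq ?_)
  congr 1
  refine sum_congr rfl fun n hn => ?_
  have hn' : (0 : ℝ) < n := by exact_mod_cast (mem_Ioc.1 hn).1
  rw [norm_mul, Complex.norm_real, norm_of_nonneg (by positivity), mul_pow,
    ← rpow_natCast ((n : ℝ) ^ (-σ)), ← rpow_mul hn'.le]
  congr 3
  push_cast; ring

/-! ### Convexity of mean squares -/

lemma interval_cauchy_schwarz {A : ℝ} (hA : 0 ≤ A) {u v : ℝ → ℝ} (hu : Continuous u)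
    (hv : Continuous v) {X Y : ℝ} (hX : 0 < X) (hY : 0 < Y)
    (h1 : ∫ t in (-A)..A, u t ^ 2 ≤ X) (h2 : ∫ t in (-A)..A, v t ^ 2 ≤ Y) :
    ∫ t in (-A)..A, u t * v t ≤ Real.sqrt X * Real.sqrt Y := by
  have hx := Real.sqrt_pos.2 hX
  have hy := Real.sqrt_pos.2 hY
  set l := Real.sqrt Y / Real.sqrt X with hl
  have hl0 : 0 < l := by positivity
  have : ∫ t in (-A)..A, u t * v t ≤
      ∫ t in (-A)..A, (l / 2 * u t ^ 2 + 1 / (2 * l) * v t ^ 2) := by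
    apply intervalIntegral.integral_mono_on (by linarith)
      (Continuous.intervalIntegrable (by fun_prop) _ _)
      (Continuous.intervalIntegrable (by fun_prop) _ _)
    intro t _
    have e : l / 2 * u t ^ 2 + 1 / (2 * l) * v t ^ 2 - u t * v t =
        1 / (2 * l) * (l * u t - v t) ^ 2 := by field_simp; ring
    have : 0 ≤ 1 / (2 * l) * (l * u t - v t) ^ 2 := by positivity
    linarith
  refine this.trans ?_
  rw [intervalIntegral.integral_add (Continuous.intervalIntegrable (by fun_prop) _ _)
    (Continuous.intervalIntegrable (by fun_prop) _ _), intervalIntegral.integral_const_mul,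
    intervalIntegral.integral_const_mul]
  have a1 : l / 2 * ∫ t in (-A)..A, u t ^ 2 ≤ l / 2 * X := by gcongr
  have a2 : 1 / (2 * l) * ∫ t in (-A)..A, v t ^ 2 ≤ 1 / (2 * l) * Y := by gcongr
  have b1 : l / 2 * X = Real.sqrt X * Real.sqrt Y / 2 := by
    rw [hl]; nth_rewrite 2 [← Real.sq_sqrt hX.le]; field_simp
  have b2 : 1 / (2 * l) * Y = Real.sqrt X * Real.sqrt Y / 2 := by
    rw [hl]; nth_rewrite 2 [← Real.sq_sqrt hY.le]; field_simp
  linarith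

/-- Integrating a holomorphic function over a moving vertical segment against a continuous weight
gives a holomorphic function. -/
lemma hasDerivAt_segment {f : ℂ → ℂ} (hf : ∀ s : ℂ, 0 < s.re → DifferentiableAt ℂ f s)
    {k : ℝ → ℂ} (hk : Continuous k) (A : ℝ) {z : ℂ} (hz : 0 < z.re) :
    DifferentiableAt ℂ (fun z : ℂ => ∫ t in (-A)..A, f (z + t * I) * k t) z := by
  have hopen : IsOpen {s : ℂ | 0 < s.re} := isOpen_lt continuous_const Complex.continuous_re
  have hd : DifferentiableOn ℂ f {s : ℂ | 0 < s.re} := fun s hs =>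
    (hf s hs).differentiableWithinAt
  have hd' : ContinuousOn (deriv f) {s : ℂ | 0 < s.re} := (hd.deriv hopen).continuousOn
  have cont : ∀ {F : ℂ → ℂ}, ContinuousOn F {s : ℂ | 0 < s.re} → ∀ w : ℂ, 0 < w.re →
      Continuous fun t : ℝ => F (w + t * I) * k t := by
    intro F hF w hw
    refine Continuous.mul ?_ hk
    exact hF.comp_continuous (by fun_prop) fun t => by
      show 0 < (w + t * I).re
      simpa using hw
  obtain ⟨r, hr, hball⟩ : ∃ r > 0, Metric.closedBall z r ⊆ {s : ℂ | 0 < s.re} :=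
    Metric.nhds_basis_closedBall.mem_iff.1 (hopen.mem_nhds hz)
  -- a uniform bound for the derivative on the compact set swept out
  have hcomp : IsCompact ((fun p : ℂ × ℝ => p.1 + p.2 * I) ''
      (Metric.closedBall z r ×ˢ Set.uIcc (-A) A)) :=
    ((isCompact_closedBall z r).prod isCompact_uIcc).image (by fun_prop)
  have hsub : ((fun p : ℂ × ℝ => p.1 + p.2 * I) ''
      (Metric.closedBall z r ×ˢ Set.uIcc (-A) A)) ⊆ {s : ℂ | 0 < s.re} := by
    rintro _ ⟨⟨w, t⟩, ⟨hw, -⟩, rfl⟩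
    have : 0 < w.re := hball hw
    show 0 < (w + t * I).re
    simpa using this
  obtain ⟨B, hB⟩ := hcomp.exists_bound_of_continuousOn (hd'.mono hsub)
  have key := intervalIntegral.hasDerivAt_integral_of_dominated_loc_of_deriv_le
    (μ := MeasureTheory.volume) (a := -A) (b := A)
    (F := fun z t => f (z + t * I) * k t)
    (F' := fun z t => deriv f (z + t * I) * k t) (x₀ := z)
    (bound := fun t => B * ‖k t‖) (Metric.closedBall_mem_nhds z hr) ?_ ?_ ?_ ?_ ?_ ?_
  · exact key.2.differentiableAt
  · filter_upwards [hopen.mem_nhds hz] with w hw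
    exact (cont hd.continuousOn w hw).aestronglyMeasurable
  · exact (cont hd.continuousOn z hz).intervalIntegrable _ _
  · exact (cont hd' z hz).aestronglyMeasurable
  · refine Eventually.of_forall fun t ht w hw => ?_
    rw [norm_mul]
    exact mul_le_mul_of_nonneg_right
      (hB _ ⟨(w, t), ⟨hw, Set.uIoc_subset_uIcc ht⟩, rfl⟩) (norm_nonneg _)
  · exact Continuous.intervalIntegrable (by fun_prop) _ _
  · refine Eventually.of_forall fun t ht w hw => ?_
    have h1 : 0 < (w + t * I).re := by
      have : 0 < w.re := hball hw
      simpa using this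
    have h2 : HasDerivAt (fun x : ℂ => f (x + t * I)) (deriv f (w + t * I)) w := by
      have := (hf _ h1).hasDerivAt.comp_add_const w (t * I)
      exact this
    exact h2.mul_const _

/-- Convexity of mean squares on vertical lines: an `L²` form of the three lines theorem. -/
lemma l2_three_lines {f : ℂ → ℂ} (hf : ∀ s : ℂ, 0 < s.re → DifferentiableAt ℂ f s)
    {a b σ K X Y A : ℝ} (ha : 0 < a) (hab : a < b) (haσ : a ≤ σ) (hσb : σ ≤ b) (hA : 0 ≤ A)
    (hK : ∀ s : ℂ, a ≤ s.re → s.re ≤ b → ‖f s‖ ≤ K) (hX : 0 < X) (hY : 0 < Y)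
    (h1 : ∀ u : ℝ, ∫ t in (-A)..A, ‖f (a + (t + u : ℝ) * I)‖ ^ 2 ≤ X)
    (h2 : ∀ u : ℝ, ∫ t in (-A)..A, ‖f (b + (t + u : ℝ) * I)‖ ^ 2 ≤ Y) :
    ∫ t in (-A)..A, ‖f (σ + t * I)‖ ^ 2 ≤
      X ^ ((b - σ) / (b - a)) * Y ^ ((σ - a) / (b - a)) := by
  have hσ : 0 < σ := by linarith
  have hcont : ∀ c : ℝ, 0 < c → ∀ u : ℝ, Continuous fun t : ℝ => f (c + (t + u : ℝ) * I) := by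
    intro c hc u
    have : ContinuousOn f {s : ℂ | 0 < s.re} := fun s hs =>
      (hf s hs).continuousAt.continuousWithinAt
    exact this.comp_continuous (by fun_prop) fun t => by
      show 0 < (c + (t + u : ℝ) * I).re
      simpa using hc
  have hcσ : Continuous fun t : ℝ => f (σ + t * I) := by simpa using hcont σ hσ 0
  set J := ∫ t in (-A)..A, ‖f (σ + t * I)‖ ^ 2 with hJ
  rcases le_or_gt J 0 with hJ0 | hJ0
  · exact hJ0.trans (by positivity)
  set k : ℝ → ℂ := fun t => (starRingEnd ℂ) (f (σ + t * I)) with hk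
  have hkc : Continuous k := Complex.continuous_conj.comp hcσ
  set Φ : ℂ → ℂ := fun z => ∫ t in (-A)..A, f (z + t * I) * k t with hΦ
  have hΦd : ∀ z : ℂ, 0 < z.re → DifferentiableAt ℂ Φ z := fun z hz =>
    hasDerivAt_segment hf hkc A hz
  have hΦσ : Φ σ = (J : ℂ) := by
    rw [hΦ, hJ, ← intervalIntegral.integral_ofReal]
    refine intervalIntegral.integral_congr fun t _ => ?_
    show f _ * k t = _
    rw [hk]
    show f _ * (starRingEnd ℂ) _ = _
    rw [Complex.mul_conj']; push_cast; rfl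
  have edge : ∀ (c Z : ℝ), 0 < c → 0 < Z →
      (∀ u : ℝ, ∫ t in (-A)..A, ‖f (c + (t + u : ℝ) * I)‖ ^ 2 ≤ Z) →
      ∀ z : ℂ, z.re = c → ‖Φ z‖ ≤ Real.sqrt Z * Real.sqrt J := by
    intro c Z hc hZ h z hz
    have e : ∀ t : ℝ, z + t * I = c + (t + z.im : ℝ) * I := by
      intro t
      apply Complex.ext <;> simp [hz]
      ring
    have : ‖Φ z‖ ≤ ∫ t in (-A)..A, ‖f (c + (t + z.im : ℝ) * I)‖ *
        ‖f (σ + t * I)‖ := by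
      refine (intervalIntegral.norm_integral_le_integral_norm (by linarith)).trans (le_of_eq ?_)
      refine intervalIntegral.integral_congr fun t _ => ?_
      show ‖f _ * k t‖ = _
      rw [norm_mul, e, hk, RCLike.norm_conj]
    exact this.trans (interval_cauchy_schwarz hA (hcont c hc z.im).norm hcσ.norm hZ hJ0
      (h z.im) le_rfl)
  have hstrip : closure (Complex.HadamardThreeLines.verticalStrip a b) ⊆ {s : ℂ | 0 < s.re} := by
    intro s hs
    have h : s ∈ Complex.re ⁻¹' Set.Icc a b :=
      closure_minimal (Set.preimage_mono Set.Ioo_subset_Icc_self)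
        (isClosed_Icc.preimage Complex.continuous_re) hs
    exact lt_of_lt_of_le ha h.1
  have hInt := Complex.HadamardThreeLines.norm_le_interp_of_mem_verticalClosedStrip'
    (f := Φ) (z := (σ : ℂ)) (l := a) (u := b) hab (by
      show (σ : ℂ).re ∈ Set.Icc a b
      exact ⟨by simpa using haσ, by simpa using hσb⟩)
    (DifferentiableOn.diffContOnCl fun s hs => (hΦd s (hstrip hs)).differentiableWithinAt)
    (by
      refine ⟨K * K * |A - -A|, ?_⟩
      rintro _ ⟨z, hz, rfl⟩
      have hz' : a ≤ z.re ∧ z.re ≤ b := hz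
      show ‖Φ z‖ ≤ _
      refine intervalIntegral.norm_integral_le_of_norm_le_const fun t _ => ?_
      rw [norm_mul, hk, RCLike.norm_conj]
      have k1 := hK (z + t * I) (by simpa using hz'.1) (by simpa using hz'.2)
      have k2 := hK (σ + t * I) (by simpa using haσ) (by simpa using hσb)
      exact mul_le_mul k1 k2 (norm_nonneg _) ((norm_nonneg _).trans k1))
    (edge a X ha hX h1) (edge b Y (by linarith) hY h2)
  rw [hΦσ, Complex.norm_real, norm_of_nonneg hJ0.le, Complex.ofReal_re] at hInt
  set p := (σ - a) / (b - a) with hp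
  have hq : (b - σ) / (b - a) = 1 - p := by
    rw [hp, eq_sub_iff_add_eq, ← add_div]; exact (div_eq_one_iff_eq (by linarith)).2 (by ring)
  rw [hq]
  have hsJ := Real.sqrt_pos.2 hJ0
  rw [mul_rpow (Real.sqrt_nonneg _) (Real.sqrt_nonneg _),
    mul_rpow (Real.sqrt_nonneg _) (Real.sqrt_nonneg _)] at hInt
  have e : Real.sqrt X ^ (1 - p) * Real.sqrt J ^ (1 - p) * (Real.sqrt Y ^ p * Real.sqrt J ^ p) =
      Real.sqrt X ^ (1 - p) * Real.sqrt Y ^ p * Real.sqrt J := by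
    have : Real.sqrt J ^ (1 - p) * Real.sqrt J ^ p = Real.sqrt J := by
      rw [← rpow_add hsJ]; simp
    calc _ = Real.sqrt X ^ (1 - p) * Real.sqrt Y ^ p *
        (Real.sqrt J ^ (1 - p) * Real.sqrt J ^ p) := by ring
      _ = _ := by rw [this]
  rw [e] at hInt
  have h3 : Real.sqrt J ≤ Real.sqrt X ^ (1 - p) * Real.sqrt Y ^ p := by
    have : Real.sqrt J * Real.sqrt J ≤ (Real.sqrt X ^ (1 - p) * Real.sqrt Y ^ p) * Real.sqrt J := by
      rwa [Real.mul_self_sqrt hJ0.le]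
    exact le_of_mul_le_mul_right this hsJ
  calc J = Real.sqrt J ^ 2 := (Real.sq_sqrt hJ0.le).symm
    _ ≤ (Real.sqrt X ^ (1 - p) * Real.sqrt Y ^ p) ^ 2 := by gcongr
    _ = (Real.sqrt X ^ 2) ^ (1 - p) * (Real.sqrt Y ^ 2) ^ p := by
        rw [mul_pow, ← rpow_natCast, ← rpow_natCast, ← rpow_natCast (Real.sqrt X),
          ← rpow_natCast (Real.sqrt Y), ← rpow_mul (Real.sqrt_nonneg _),
          ← rpow_mul (Real.sqrt_nonneg _), ← rpow_mul (Real.sqrt_nonneg _),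
          ← rpow_mul (Real.sqrt_nonneg _), mul_comm (1 - p), mul_comm p]
    _ = _ := by rw [Real.sq_sqrt hX.le, Real.sq_sqrt hY.le]

/-! ### The mollifier -/

/-- The mollifier: the partial sum of length `U` of the Dirichlet series of `1/ζ`. -/
noncomputable def MM (U : ℕ) (s : ℂ) : ℂ :=
  ∑ n ∈ Ioc 0 U, ((ArithmeticFunction.moebius n : ℤ) : ℂ) * (n : ℂ) ^ (-s)

/-- The Dirichlet coefficients of `ζ · MM U`. -/
noncomputable def bb (U n : ℕ) : ℂ :=
  ∑ d ∈ Ioc 0 U, if d ∣ n then ((ArithmeticFunction.moebius d : ℤ) : ℂ) else 0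

lemma hasSum_zeta {s : ℂ} (hs : 1 < s.re) :
    HasSum (fun n : ℕ => (n : ℂ) ^ (-s)) (riemannZeta s) := by
  have := (LSeriesSummable_one_iff.2 hs).LSeriesHasSum
  rw [LSeries_one_eq_riemannZeta hs] at this
  refine HasSum.congr_fun this ?_
  intro n
  rcases eq_or_ne n 0 with rfl | hn
  · rw [Nat.cast_zero, Complex.zero_cpow, LSeries.term_zero]
    intro h; rw [neg_eq_zero] at h; rw [h] at hs; simp at hs; linarith
  · rw [LSeries.term_of_ne_zero hn, Complex.cpow_neg, Pi.one_apply, one_div]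

lemma hasSum_zeta_MM (U : ℕ) {s : ℂ} (hs : 1 < s.re) :
    HasSum (fun n : ℕ => bb U n * (n : ℂ) ^ (-s)) (riemannZeta s * MM U s) := by
  have h0 : -s ≠ 0 := by
    intro h; rw [neg_eq_zero] at h; rw [h] at hs; simp at hs; linarith
  have h1 : ∀ d ∈ Ioc 0 U, HasSum (fun n : ℕ =>
      (if d ∣ n then ((ArithmeticFunction.moebius d : ℤ) : ℂ) else 0) * (n : ℂ) ^ (-s))
      (riemannZeta s * (((ArithmeticFunction.moebius d : ℤ) : ℂ) * (d : ℂ) ^ (-s))) := by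
    intro d hd
    have hd0 : 0 < d := (mem_Ioc.1 hd).1
    have hinj : Function.Injective fun k : ℕ => d * k := fun a b h =>
      Nat.eq_of_mul_eq_mul_left hd0 h
    rw [← hinj.hasSum_iff]
    · have := (hasSum_zeta hs).mul_right (((ArithmeticFunction.moebius d : ℤ) : ℂ) * (d : ℂ) ^ (-s))
      refine HasSum.congr_fun this fun k => ?_
      show (if d ∣ d * k then _ else _) * ((d * k : ℕ) : ℂ) ^ (-s) = _
      rw [if_pos (dvd_mul_right d k), Nat.cast_mul, Complex.natCast_mul_natCast_cpow]
      ring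
    · intro n hn
      rw [if_neg, zero_mul]
      rintro ⟨k, rfl⟩
      exact hn ⟨k, rfl⟩
  have h2 := hasSum_sum h1
  rw [← mul_sum] at h2
  refine HasSum.congr_fun h2 fun n => ?_
  rw [bb, sum_mul]

lemma bb_eq {U n : ℕ} (hn : 0 < n) (hU : n ≤ U) : bb U n = if n = 1 then 1 else 0 := by
  have h : bb U n = ((∑ d ∈ n.divisors, ArithmeticFunction.moebius d : ℤ) : ℂ) := by
    rw [bb, ← sum_filter]
    push_cast
    refine sum_congr ?_ fun _ _ => rfl
    ext d
    simp only [mem_filter, mem_Ioc, Nat.mem_divisors]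
    constructor
    · rintro ⟨_, h⟩; exact ⟨h, hn.ne'⟩
    · rintro ⟨h, _⟩
      exact ⟨⟨Nat.pos_of_dvd_of_pos h hn, (Nat.le_of_dvd hn h).trans hU⟩, h⟩
  rw [h, ← ArithmeticFunction.coe_mul_zeta_apply, ArithmeticFunction.moebius_mul_coe_zeta,
    ArithmeticFunction.one_apply]
  split_ifs <;> simp

lemma norm_bb_le {U n : ℕ} (hn : 0 < n) : ‖bb U n‖ ≤ (n.divisors.card : ℝ) := by
  rw [bb, ← sum_filter]
  refine (norm_sum_le _ _).trans ?_
  have : ∀ d ∈ (Ioc 0 U).filter (· ∣ n), ‖((ArithmeticFunction.moebius d : ℤ) : ℂ)‖ ≤ 1 := by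
    intro d _
    rw [Complex.norm_intCast]; exact_mod_cast ArithmeticFunction.abs_moebius_le_one
  refine (sum_le_card_nsmul _ _ 1 this).trans ?_
  rw [nsmul_eq_mul, mul_one]
  exact_mod_cast card_le_card fun d hd => by
    rw [Nat.mem_divisors]; exact ⟨(mem_filter.1 hd).2, hn.ne'⟩

/-- `∑ τ(n)² n^{-w}` is at most the fourth power of `∑ n^{-w}`: a pair of divisors `(a, b)` of `n`
is determined by the factorisation `n = (a,b) · a/(a,b) · b/(a,b) · n/[a,b]`. -/
lemma sum_card_divisors_sq_le (N : ℕ) (w : ℝ) :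
    ∑ n ∈ Ioc 0 N, (n.divisors.card : ℝ) ^ 2 * (n : ℝ) ^ (-w) ≤
      (∑ n ∈ Ioc 0 N, (n : ℝ) ^ (-w)) ^ 4 := by
  classical
  set S : Finset (Σ _ : ℕ, ℕ × ℕ) := (Ioc 0 N).sigma fun n => n.divisors ×ˢ n.divisors with hS
  set φ : (Σ _ : ℕ, ℕ × ℕ) → (ℕ × ℕ) × (ℕ × ℕ) := fun x =>
    ((Nat.gcd x.2.1 x.2.2, x.2.1 / Nat.gcd x.2.1 x.2.2),
      (x.2.2 / Nat.gcd x.2.1 x.2.2, x.1 / Nat.lcm x.2.1 x.2.2)) with hφ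
  have prop : ∀ x ∈ S, 0 < x.1 ∧ x.1 ≤ N ∧ x.2.1 = (φ x).1.1 * (φ x).1.2 ∧
      x.2.2 = (φ x).1.1 * (φ x).2.1 ∧
      x.1 = (φ x).1.1 * (φ x).1.2 * (φ x).2.1 * (φ x).2.2 := by
    rintro ⟨n, a, b⟩ hx
    simp only [hS, Finset.mem_sigma, mem_product, Nat.mem_divisors, mem_Ioc] at hx
    obtain ⟨⟨hn, hN⟩, ⟨ha, -⟩, ⟨hb, -⟩⟩ := hx
    have e1 : a = Nat.gcd a b * (a / Nat.gcd a b) := (Nat.mul_div_cancel' (Nat.gcd_dvd_left a b)).symm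
    have e2 : b = Nat.gcd a b * (b / Nat.gcd a b) := (Nat.mul_div_cancel' (Nat.gcd_dvd_right a b)).symm
    refine ⟨hn, hN, e1, e2, ?_⟩
    show n = Nat.gcd a b * (a / Nat.gcd a b) * (b / Nat.gcd a b) * (n / Nat.lcm a b)
    rw [← e1]
    have hl : a * (b / Nat.gcd a b) = Nat.lcm a b := by
      rw [Nat.lcm, Nat.mul_div_assoc _ (Nat.gcd_dvd_right a b)]
    rw [hl]
    exact (Nat.mul_div_cancel' (Nat.lcm_dvd ha hb)).symm
  have inj : Set.InjOn φ S := by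
    intro x hx y hy hxy
    obtain ⟨-, -, hx1, hx2, hx3⟩ := prop x hx
    obtain ⟨-, -, hy1, hy2, hy3⟩ := prop y hy
    rw [← hxy] at hy1 hy2 hy3
    obtain ⟨n, a, b⟩ := x
    obtain ⟨n', a', b'⟩ := y
    have h1 : n = n' := hx3.trans hy3.symm
    have h2 : a = a' := hx1.trans hy1.symm
    have h3 : b = b' := hx2.trans hy2.symm
    subst h1 h2 h3; rfl
  set D : Finset ((ℕ × ℕ) × (ℕ × ℕ)) := ((Ioc 0 N) ×ˢ (Ioc 0 N)) ×ˢ ((Ioc 0 N) ×ˢ (Ioc 0 N)) with hD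
  have maps : ∀ x ∈ S, φ x ∈ D := by
    intro x hx
    obtain ⟨h0, hN, h1, h2, h3⟩ := prop x hx
    set g := φ x
    have hpos : 0 < g.1.1 * g.1.2 * g.2.1 * g.2.2 := h3 ▸ h0
    have p4 : 0 < g.2.2 := Nat.pos_of_ne_zero fun h => by simp [h] at hpos
    have p3 : 0 < g.2.1 := Nat.pos_of_ne_zero fun h => by simp [h] at hpos
    have p2 : 0 < g.1.2 := Nat.pos_of_ne_zero fun h => by simp [h] at hpos
    have p1 : 0 < g.1.1 := Nat.pos_of_ne_zero fun h => by simp [h] at hpos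
    have le : ∀ y, y ∣ x.1 → y ≤ N := fun y hy => (Nat.le_of_dvd h0 hy).trans hN
    simp only [hD, mem_product, mem_Ioc]
    refine ⟨⟨⟨p1, le _ ⟨g.1.2 * g.2.1 * g.2.2, by rw [h3]; ring⟩⟩,
      ⟨p2, le _ ⟨g.1.1 * g.2.1 * g.2.2, by rw [h3]; ring⟩⟩⟩,
      ⟨⟨p3, le _ ⟨g.1.1 * g.1.2 * g.2.2, by rw [h3]; ring⟩⟩,
      ⟨p4, le _ ⟨g.1.1 * g.1.2 * g.2.1, by rw [h3]; ring⟩⟩⟩⟩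
  set F : (ℕ × ℕ) × (ℕ × ℕ) → ℝ := fun y =>
    ((y.1.1 : ℝ) ^ (-w) * (y.1.2 : ℝ) ^ (-w)) * ((y.2.1 : ℝ) ^ (-w) * (y.2.2 : ℝ) ^ (-w)) with hF
  have hF0 : ∀ y, 0 ≤ F y := fun y => by positivity
  calc ∑ n ∈ Ioc 0 N, (n.divisors.card : ℝ) ^ 2 * (n : ℝ) ^ (-w)
      = ∑ x ∈ S, (x.1 : ℝ) ^ (-w) := by
        rw [hS, Finset.sum_sigma]
        refine sum_congr rfl fun n _ => ?_
        show _ = ∑ _s ∈ n.divisors ×ˢ n.divisors, (n : ℝ) ^ (-w)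
        rw [sum_const, card_product, nsmul_eq_mul]; push_cast; ring
    _ = ∑ x ∈ S, F (φ x) := by
        refine sum_congr rfl fun x hx => ?_
        obtain ⟨h0, hN, h1, h2, h3⟩ := prop x hx
        rw [h3, hF]
        push_cast
        rw [mul_rpow (by positivity) (by positivity), mul_rpow (by positivity) (by positivity),
          mul_rpow (by positivity) (by positivity)]
        ring
    _ = ∑ y ∈ S.image φ, F y := (Finset.sum_image inj).symm
    _ ≤ ∑ y ∈ D, F y := Finset.sum_le_sum_of_subset_of_nonneg
        (fun y hy => by obtain ⟨x, hx, rfl⟩ := Finset.mem_image.1 hy; exact maps x hx)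
        fun y _ _ => hF0 y
    _ = _ := by
        have e2 : ∀ f : ℕ → ℝ, ∑ y ∈ (Ioc 0 N) ×ˢ (Ioc 0 N), f y.1 * f y.2 =
            (∑ n ∈ Ioc 0 N, f n) ^ 2 := by
          intro f; rw [sq, sum_mul_sum, ← Finset.sum_product']
        have e3 : ∀ (E : Finset (ℕ × ℕ)) (f : ℕ × ℕ → ℝ), ∑ y ∈ E ×ˢ E, f y.1 * f y.2 =
            (∑ n ∈ E, f n) ^ 2 := by
          intro E f; rw [sq, sum_mul_sum, ← Finset.sum_product']
        rw [hD, hF, e3 _ (fun z : ℕ × ℕ => (z.1 : ℝ) ^ (-w) * (z.2 : ℝ) ^ (-w)),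
          e2 (fun n => (n : ℝ) ^ (-w)), ← pow_mul]

lemma sum_rpow_le (N : ℕ) {σ : ℝ} (hσ : 1 < σ) :
    ∑ n ∈ Ioc 0 N, (n : ℝ) ^ (-σ) ≤ 2 + 1 / (σ - 1) := by
  have hs : 1 < (σ : ℂ).re := by simpa using hσ
  have hre := Complex.hasSum_re (hasSum_zeta hs)
  have e0 : ∀ n : ℕ, ((n : ℂ) ^ (-(σ : ℂ))).re = (n : ℝ) ^ (-σ) := by
    intro n
    rw [← Complex.ofReal_natCast, ← Complex.ofReal_neg, ← Complex.ofReal_cpow (by positivity),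
      Complex.ofReal_re]
  simp_rw [e0] at hre
  have hle := sum_le_hasSum (Ioc 0 N) (fun n _ => by positivity) hre
  refine hle.trans ?_
  have hne : (σ : ℂ) ≠ 1 := by
    intro h; have := congrArg Complex.re h; simp at this; linarith
  have happ := zeta_approx (N := 1) le_rfl (s := (σ : ℂ)) (by simp; linarith) hne
  simp only [Nat.cast_one, Real.one_rpow, Complex.ofReal_re] at happ
  have e1 : ∑ n ∈ Finset.Ioc (0 : ℕ) 1, (n : ℂ) ^ (-(σ : ℂ)) = 1 := by
    rw [show Finset.Ioc (0 : ℕ) 1 = {1} by rfl]; simp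
  have e2 : ‖(σ : ℂ) - 1‖ = σ - 1 := by
    rw [← Complex.ofReal_one, ← Complex.ofReal_sub, Complex.norm_real, norm_of_nonneg (by linarith)]
  have e3 : ‖(σ : ℂ)‖ = σ := by rw [Complex.norm_real, norm_of_nonneg (by linarith)]
  rw [e1, e2, e3, div_self (by linarith), mul_one] at happ
  have := (Complex.abs_re_le_norm _).trans happ
  have := (abs_le.1 this).2
  simp at this; simp; linarith

/-- On the line `Re s = 1 + 1/log T` the mollified quantity `1 - ζ·MM U` is small in mean square. -/
lemma right_line {T Θ : ℝ} (hT : 2 ≤ T) (hΘ : 2 ≤ Θ) (hΘT : Θ ≤ 2 * T) {U : ℕ} (hU : T ≤ U) :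
    MeasureTheory.Integrable (fun t : ℝ => exp (-(t ^ 2 / Θ ^ 2)) *
      ‖1 - riemannZeta (((1 + 1 / log T : ℝ) : ℂ) + t * I) *
        MM U (((1 + 1 / log T : ℝ) : ℂ) + t * I)‖ ^ 2) ∧
    ∫ t : ℝ, exp (-(t ^ 2 / Θ ^ 2)) *
      ‖1 - riemannZeta (((1 + 1 / log T : ℝ) : ℂ) + t * I) *
        MM U (((1 + 1 / log T : ℝ) : ℂ) + t * I)‖ ^ 2 ≤
      60 * (2 + log T / 2) ^ 4 := by
  have hL : 0 < log T := Real.log_pos (by linarith)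
  set L := log T
  set σ : ℝ := 1 + 1 / L with hσ
  have hσ1 : 1 < σ := by rw [hσ]; have : 0 < 1 / L := by positivity
                         linarith
  have hre : ∀ t : ℝ, 1 < ((σ : ℂ) + t * I).re := by intro t; simpa using hσ1
  set a : ℕ → ℂ := fun n => if n ≤ U then 0 else -bb U n with ha
  have hsum : ∀ t : ℝ, HasSum (fun n : ℕ => a n * (n : ℂ) ^ (-((σ : ℂ) + t * I)))
      (1 - riemannZeta ((σ : ℂ) + t * I) * MM U ((σ : ℂ) + t * I)) := by
    intro t
    have h1 := hasSum_zeta_MM U (hre t)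
    have h2 : HasSum (fun n : ℕ => if n = 1 then (1 : ℂ) else 0) 1 := hasSum_ite_eq 1 1
    refine HasSum.congr_fun (h2.sub h1) fun n => ?_
    rcases Nat.eq_zero_or_pos n with rfl | hn
    · rw [Nat.cast_zero, Complex.zero_cpow]
      · simp
      · intro h
        have := congrArg Complex.re h
        simp at this; linarith
    · simp only [ha]
      split_ifs with h1 h2 h2
      · subst h2
        rw [bb_eq hn h1]; simp
      · rw [bb_eq hn h1, if_neg h2]; simp
      · exfalso; subst h2
        have : (1 : ℝ) ≤ U := by linarith
        exact h1 (by exact_mod_cast this)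
      · ring
  have hnorm : ∀ (t : ℝ) (n : ℕ), 0 < n → ‖a n * (n : ℂ) ^ (-((σ : ℂ) + t * I))‖ =
      ‖a n‖ * (n : ℝ) ^ (-σ) := by
    intro t n hn
    rw [norm_mul, Complex.norm_natCast_cpow_of_pos hn]
    congr 2; simp
  set D : ℝ := ∑' n : ℕ, ‖a n * (n : ℂ) ^ (-((σ : ℂ) + (0 : ℝ) * I))‖ with hD
  have hpart : ∀ (N : ℕ) (t : ℝ),
      ‖∑ n ∈ Ioc 0 N, a n * (n : ℂ) ^ (-((σ : ℂ) + t * I))‖ ≤ D := by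
    intro N t
    refine (norm_sum_le _ _).trans ?_
    rw [sum_congr rfl fun n hn => (hnorm t n (mem_Ioc.1 hn).1).trans
      (hnorm 0 n (mem_Ioc.1 hn).1).symm]
    exact (hsum 0).summable.norm.sum_le_tsum _ fun _ _ => norm_nonneg _
  have htend : ∀ t : ℝ, Tendsto
      (fun N : ℕ => ∑ n ∈ Ioc 0 N, a n * (n : ℂ) ^ (-((σ : ℂ) + t * I))) atTop
      (𝓝 (1 - riemannZeta ((σ : ℂ) + t * I) * MM U ((σ : ℂ) + t * I))) := by
    intro t
    refine ((tendsto_add_atTop_iff_nat 1).2 (hsum t).tendsto_sum_nat).congr fun N => ?_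
    symm
    apply Finset.sum_subset
    · intro n hn; rw [mem_Ioc] at hn; rw [mem_range]; omega
    · intro n hn hn'
      rw [mem_range] at hn; rw [mem_Ioc] at hn'
      have : n = 0 := by omega
      subst this
      simp [ha]
  have hcont : ∀ N : ℕ, Continuous fun t : ℝ =>
      ∑ n ∈ Ioc 0 N, a n * (n : ℂ) ^ (-((σ : ℂ) + t * I)) := by
    intro N
    refine continuous_finsetSum _ fun n hn => ?_
    refine continuous_const.mul ?_
    have : (n : ℂ) ≠ 0 := by exact_mod_cast (mem_Ioc.1 hn).1.ne'
    refine Continuous.const_cpow (by fun_prop) (Or.inl this)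
  have hmeas : ∀ N : ℕ, MeasureTheory.AEStronglyMeasurable (fun t : ℝ =>
      exp (-(t ^ 2 / Θ ^ 2)) *
        ‖∑ n ∈ Ioc 0 N, a n * (n : ℂ) ^ (-((σ : ℂ) + t * I))‖ ^ 2) := by
    intro N
    have he : Continuous fun t : ℝ => exp (-(t ^ 2 / Θ ^ 2)) := by fun_prop
    exact (he.mul ((hcont N).norm.pow 2)).aestronglyMeasurable
  have hlim : ∀ t : ℝ, Tendsto (fun N : ℕ => exp (-(t ^ 2 / Θ ^ 2)) *
        ‖∑ n ∈ Ioc 0 N, a n * (n : ℂ) ^ (-((σ : ℂ) + t * I))‖ ^ 2) atTop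
      (𝓝 (exp (-(t ^ 2 / Θ ^ 2)) *
        ‖1 - riemannZeta ((σ : ℂ) + t * I) * MM U ((σ : ℂ) + t * I)‖ ^ 2)) :=
    fun t => ((htend t).norm.pow 2).const_mul _
  have hbd : MeasureTheory.Integrable fun t : ℝ => exp (-(t ^ 2 / Θ ^ 2)) * D ^ 2 :=
    (integrable_gauss (by linarith)).mul_const _
  have hdom : ∀ N : ℕ, ∀ᵐ t : ℝ, ‖exp (-(t ^ 2 / Θ ^ 2)) *
        ‖∑ n ∈ Ioc 0 N, a n * (n : ℂ) ^ (-((σ : ℂ) + t * I))‖ ^ 2‖ ≤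
        exp (-(t ^ 2 / Θ ^ 2)) * D ^ 2 := by
    intro N
    refine Eventually.of_forall fun t => ?_
    rw [norm_of_nonneg (by positivity)]
    have := hpart N t
    gcongr
  constructor
  · refine hbd.mono' (aestronglyMeasurable_of_tendsto_ae atTop hmeas
      (Eventually.of_forall hlim)) (Eventually.of_forall fun t => ?_)
    rw [norm_of_nonneg (by positivity)]
    have : ‖1 - riemannZeta ((σ : ℂ) + t * I) * MM U ((σ : ℂ) + t * I)‖ ≤ D :=
      le_of_tendsto' (htend t).norm fun N => hpart N t
    gcongr
  · refine le_of_tendsto' (MeasureTheory.tendsto_integral_of_dominated_convergence _ hmeas hbd hdom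
      (Eventually.of_forall hlim)) fun N => ?_
    refine (mean_value' hΘ N a σ).trans ?_
    have h4 := sum_card_divisors_sq_le N (1 + 2 / L)
    have h5 := sum_rpow_le N (σ := 1 + 2 / L) (by have : 0 < 2 / L := by positivity
                                                  linarith)
    have h6 : ∑ n ∈ Ioc 0 N, ‖a n‖ ^ 2 * (n : ℝ) ^ (-2 * σ) * (Θ + n) ≤
        3 * ∑ n ∈ Ioc 0 N, (n.divisors.card : ℝ) ^ 2 * (n : ℝ) ^ (-(1 + 2 / L)) := by
      rw [mul_sum]
      refine sum_le_sum fun n hn => ?_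
      have hn0 := (mem_Ioc.1 hn).1
      have hn' : (0 : ℝ) < n := by exact_mod_cast hn0
      by_cases hnU : n ≤ U
      · simp only [ha, if_pos hnU, norm_zero]
        have : 0 ≤ (n.divisors.card : ℝ) ^ 2 * (n : ℝ) ^ (-(1 + 2 / L)) := by positivity
        rw [zero_pow two_ne_zero, zero_mul, zero_mul]; linarith
      · have hnU' : (U : ℝ) ≤ n := by exact_mod_cast (by omega : U ≤ n)
        have b1 : ‖a n‖ ≤ n.divisors.card := by
          simp only [ha, if_neg hnU, norm_neg]; exact norm_bb_le hn0
        have b2 : Θ + n ≤ 3 * n := by linarith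
        have e : (n : ℝ) ^ (-2 * σ) * n = (n : ℝ) ^ (-(1 + 2 / L)) := by
          rw [← Real.rpow_add_one hn'.ne']; congr 1; rw [hσ]; ring
        calc ‖a n‖ ^ 2 * (n : ℝ) ^ (-2 * σ) * (Θ + n)
            ≤ (n.divisors.card : ℝ) ^ 2 * (n : ℝ) ^ (-2 * σ) * (3 * n) := by gcongr
          _ = 3 * ((n.divisors.card : ℝ) ^ 2 * ((n : ℝ) ^ (-2 * σ) * n)) := by ring
          _ = _ := by rw [e]
    have h7 : (∑ n ∈ Ioc 0 N, (n : ℝ) ^ (-(1 + 2 / L))) ^ 4 ≤ (2 + L / 2) ^ 4 := by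
      gcongr
      refine h5.trans (le_of_eq ?_)
      rw [show (1 + 2 / L - 1) = 2 / L by ring, one_div_div]
    linarith

/-! ### Mean squares of `1 - ζM` -/

/-- A power saving over the convexity bound for `ζ` on the critical line and to its right. -/
def Subconvex (c C : ℝ) : Prop :=
  0 < c ∧ c ≤ 1 / 8 ∧ 0 < C ∧ ∀ s : ℂ, 1 / 2 ≤ s.re → 1 ≤ |s.im| →
    ‖riemannZeta s‖ ≤ C * |s.im| ^ (1 / 4 - c)

lemma differentiableAt_zeta_of_im {s : ℂ} (h : s.im ≠ 0) : DifferentiableAt ℂ riemannZeta s :=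
  differentiableAt_riemannZeta fun h1 => h (by rw [h1]; simp)

lemma deriv_zeta_le {c C : ℝ} (h : Subconvex c C) {s : ℂ} (hs : 1 / 2 + c / 6 ≤ s.re)
    (ht : 2 ≤ |s.im|) : ‖deriv riemannZeta s‖ ≤ 12 * C / c * |s.im| ^ (1 / 4 - c) := by
  obtain ⟨hc0, hc, hC, hz⟩ := h
  have hR : 0 < c / 6 := by positivity
  have him : ∀ w ∈ Metric.closedBall s (c / 6), |s.im| - 1 ≤ |w.im| ∧ |w.im| ≤ 2 * |s.im| ∧
      1 / 2 ≤ w.re := by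
    intro w hw
    rw [mem_closedBall_iff_norm] at hw
    have h1 := (Complex.abs_im_le_norm _).trans hw
    have h2 := (Complex.abs_re_le_norm _).trans hw
    rw [Complex.sub_im] at h1
    rw [Complex.sub_re] at h2
    have h3 := abs_sub_abs_le_abs_sub s.im w.im
    have h4 := abs_sub_abs_le_abs_sub w.im s.im
    rw [abs_sub_comm] at h3
    have h5 := (abs_le.1 h2).1
    refine ⟨by linarith, by linarith, by linarith⟩
  have hd : DifferentiableOn ℂ riemannZeta (Metric.closedBall s (c / 6)) := by
    intro w hw
    obtain ⟨h1, -, -⟩ := him w hw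
    refine (differentiableAt_zeta_of_im ?_).differentiableWithinAt
    intro h0; rw [h0, abs_zero] at h1; linarith
  have hsph : ∀ w ∈ Metric.sphere s (c / 6), ‖riemannZeta w‖ ≤ 2 * C * |s.im| ^ (1 / 4 - c) := by
    intro w hw
    obtain ⟨h1, h2, h3⟩ := him w (Metric.sphere_subset_closedBall hw)
    refine (hz w h3 (by linarith)).trans ?_
    have : |w.im| ^ (1 / 4 - c) ≤ 2 * |s.im| ^ (1 / 4 - c) := by
      refine (Real.rpow_le_rpow (abs_nonneg _) h2 (by linarith)).trans ?_
      rw [mul_rpow (by norm_num) (abs_nonneg _)]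
      gcongr
      calc (2 : ℝ) ^ (1 / 4 - c) ≤ 2 ^ (1 : ℝ) :=
            rpow_le_rpow_of_exponent_le (by norm_num) (by linarith)
        _ = 2 := by norm_num
    calc C * |w.im| ^ (1 / 4 - c) ≤ C * (2 * |s.im| ^ (1 / 4 - c)) := by gcongr
      _ = _ := by ring
  have := Complex.norm_deriv_le_of_forall_mem_sphere_norm_le hR
    (DifferentiableOn.diffContOnCl (by rw [closure_ball _ hR.ne']; exact hd)) hsph
  refine this.trans (le_of_eq ?_)
  field_simp
  ring

lemma weight_le {T a t : ℝ} (hT : 1 ≤ T) (ha0 : 0 ≤ a) (ha : a ≤ 1) :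
    (1 + |t|) ^ a * exp (-(t ^ 2 / (2 * T) ^ 2)) ≤ 2 * T ^ a := by
  have hT0 : 0 < T := by linarith
  set y := |t| / T with hy
  have hy0 : 0 ≤ y := by positivity
  have h1 : (1 + |t|) ^ a ≤ T ^ a * (1 + y) := by
    calc (1 + |t|) ^ a ≤ (T * (1 + y)) ^ a := by
          apply Real.rpow_le_rpow (by positivity) _ ha0
          rw [hy, mul_add, mul_div_cancel₀ _ hT0.ne']; linarith
      _ = T ^ a * (1 + y) ^ a := mul_rpow hT0.le (by positivity)
      _ ≤ T ^ a * (1 + y) ^ (1 : ℝ) := by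
          gcongr
          linarith
      _ = _ := by rw [rpow_one]
  have h2 : 1 + y ≤ 2 * exp (y ^ 2 / 4) := by
    have := Real.add_one_le_exp (y ^ 2 / 4)
    nlinarith [sq_nonneg (y - 1)]
  have h3 : t ^ 2 / (2 * T) ^ 2 = y ^ 2 / 4 := by
    rw [hy, div_pow, sq_abs]; ring
  rw [h3]
  calc (1 + |t|) ^ a * exp (-(y ^ 2 / 4)) ≤
      T ^ a * (2 * exp (y ^ 2 / 4)) * exp (-(y ^ 2 / 4)) := by
        gcongr; exact h1.trans (by gcongr)
    _ = 2 * T ^ a * (exp (y ^ 2 / 4) * exp (-(y ^ 2 / 4))) := by ring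
    _ = _ := by rw [← Real.exp_add]; simp

lemma continuous_MM_line (U : ℕ) (σ : ℝ) : Continuous fun t : ℝ => MM U (σ + t * I) := by
  refine continuous_finsetSum _ fun n hn => continuous_const.mul ?_
  have : (n : ℂ) ≠ 0 := by exact_mod_cast (mem_Ioc.1 hn).1.ne'
  exact Continuous.const_cpow (by fun_prop) (Or.inl this)

lemma differentiable_MM (U : ℕ) : Differentiable ℂ (MM U) := by
  unfold MM
  refine Differentiable.fun_sum fun n hn => ?_
  have : (n : ℂ) ≠ 0 := by exact_mod_cast (mem_Ioc.1 hn).1.ne'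
  exact (differentiable_const _).mul (Differentiable.const_cpow (by fun_prop) (Or.inl this))

lemma norm_MM_le (U : ℕ) (s : ℂ) :
    ‖MM U s‖ ≤ ∑ n ∈ Ioc 0 U, (n : ℝ) ^ (-s.re) := by
  refine (norm_sum_le _ _).trans (sum_le_sum fun n hn => ?_)
  rw [norm_mul, Complex.norm_natCast_cpow_of_pos (mem_Ioc.1 hn).1, Complex.neg_re]
  have : ‖((ArithmeticFunction.moebius n : ℤ) : ℂ)‖ ≤ 1 := by
    rw [Complex.norm_intCast]; exact_mod_cast ArithmeticFunction.abs_moebius_le_one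
  exact mul_le_of_le_one_left (by positivity) this

lemma norm_MM_le_card (U : ℕ) {s : ℂ} (hs : 0 ≤ s.re) : ‖MM U s‖ ≤ U := by
  refine (norm_MM_le U s).trans ?_
  calc ∑ n ∈ Ioc 0 U, (n : ℝ) ^ (-s.re) ≤ ∑ n ∈ Ioc 0 U, (1 : ℝ) := by
        refine sum_le_sum fun n hn => ?_
        have : (1 : ℝ) ≤ n := by exact_mod_cast (mem_Ioc.1 hn).1
        exact Real.rpow_le_one_of_one_le_of_nonpos this (by linarith)
    _ = U := by simp

/-- Mean square of the mollifier to the right of the critical line. -/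
lemma MM_mean {T : ℝ} (hT : 3 ≤ T) {U : ℕ} (hU1 : T ≤ U) (hU2 : (U : ℝ) ≤ 2 * T) {σ : ℝ}
    (hσ : 1 / 2 ≤ σ) :
    MeasureTheory.Integrable (fun t : ℝ => exp (-(t ^ 2 / (2 * T) ^ 2)) *
      (1 + ‖MM U (σ + t * I)‖ ^ 2)) ∧
    ∫ t : ℝ, exp (-(t ^ 2 / (2 * T) ^ 2)) * (1 + ‖MM U (σ + t * I)‖ ^ 2) ≤
      300 * T * log T := by
  have hInt := integrable_gauss (Θ := 2 * T) (by linarith)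
  have hint2 : MeasureTheory.Integrable (fun t : ℝ => exp (-(t ^ 2 / (2 * T) ^ 2)) *
      ‖MM U (σ + t * I)‖ ^ 2) := by
    refine (hInt.mul_const ((U : ℝ) ^ 2)).mono' ?_ (Eventually.of_forall fun t => ?_)
    · have := continuous_MM_line U σ
      exact Continuous.aestronglyMeasurable (by fun_prop)
    · rw [norm_of_nonneg (by positivity)]
      have := norm_MM_le_card U (s := σ + t * I) (by simp; linarith)
      gcongr
  have e : (fun t : ℝ => exp (-(t ^ 2 / (2 * T) ^ 2)) * (1 + ‖MM U (σ + t * I)‖ ^ 2)) =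
      fun t : ℝ => exp (-(t ^ 2 / (2 * T) ^ 2)) + exp (-(t ^ 2 / (2 * T) ^ 2)) *
      ‖MM U (σ + t * I)‖ ^ 2 := by funext t; ring
  rw [e]
  refine ⟨hInt.add hint2, ?_⟩
  rw [MeasureTheory.integral_add hInt hint2]
  have h1 : ∫ t : ℝ, exp (-(t ^ 2 / (2 * T) ^ 2)) ≤ 4 * T := by
    have := integral_gaussian (1 / (2 * T) ^ 2)
    have e2 : ∀ t : ℝ, -(t ^ 2 / (2 * T) ^ 2) = -(1 / (2 * T) ^ 2) * t ^ 2 := fun t => by ring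
    simp_rw [e2]
    rw [this, Real.sqrt_le_left (by linarith),
      show π / (1 / (2 * T) ^ 2) = π * (4 * T ^ 2) by field_simp; ring]
    nlinarith [Real.pi_lt_four, sq_nonneg T]
  have h2 := mean_value' (Θ := 2 * T) (by linarith) U
    (fun n => ((ArithmeticFunction.moebius n : ℤ) : ℂ)) σ
  have h3 : ∑ n ∈ Ioc 0 U, ‖((ArithmeticFunction.moebius n : ℤ) : ℂ)‖ ^ 2 *
      (n : ℝ) ^ (-2 * σ) * (2 * T + n) ≤ 4 * T * ∑ n ∈ Ioc 0 U, (n : ℝ)⁻¹ := by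
    rw [mul_sum]
    refine sum_le_sum fun n hn => ?_
    have hn1 : (1 : ℝ) ≤ n := by exact_mod_cast (mem_Ioc.1 hn).1
    have hnU : (n : ℝ) ≤ U := by exact_mod_cast (mem_Ioc.1 hn).2
    have a1 : ‖((ArithmeticFunction.moebius n : ℤ) : ℂ)‖ ≤ 1 := by
      rw [Complex.norm_intCast]; exact_mod_cast ArithmeticFunction.abs_moebius_le_one
    have a2 : (n : ℝ) ^ (-2 * σ) ≤ (n : ℝ)⁻¹ := by
      rw [← Real.rpow_neg_one]
      exact rpow_le_rpow_of_exponent_le hn1 (by linarith)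
    calc _ ≤ (1 : ℝ) ^ 2 * (n : ℝ)⁻¹ * (4 * T) := by
          gcongr; linarith
      _ = _ := by ring
  have h4 := sum_inv_le U
  have hL : 1 ≤ log T := by
    rw [Real.le_log_iff_exp_le (by linarith)]; linarith [Real.exp_one_lt_d9]
  have h5 : log U ≤ 1 + log T := by
    have : log U ≤ log (2 * T) := Real.log_le_log (by linarith) hU2
    rw [Real.log_mul (by norm_num) (by linarith)] at this
    linarith [Real.log_two_lt_d9]
  have h6 : 4 * T * ∑ n ∈ Ioc 0 U, (n : ℝ)⁻¹ ≤ 4 * T * (3 * log T) := by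
    gcongr; linarith
  have h7 : ∫ t : ℝ, exp (-(t ^ 2 / (2 * T) ^ 2)) * ‖MM U (σ + t * I)‖ ^ 2 ≤
      20 * (4 * T * (3 * log T)) := by
    refine le_trans h2 ?_
    linarith
  nlinarith

lemma interval_le_integral {φ ψ : ℝ → ℝ} (hφ : Continuous φ) (hψ : MeasureTheory.Integrable ψ)
    (h0 : ∀ t, 0 ≤ ψ t) (h : ∀ t, φ t ≤ ψ t) {p q : ℝ} (hpq : p ≤ q) :
    ∫ t in p..q, φ t ≤ ∫ t, ψ t := by
  calc ∫ t in p..q, φ t ≤ ∫ t in p..q, ψ t :=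
        intervalIntegral.integral_mono_on hpq (hφ.intervalIntegrable _ _)
          hψ.intervalIntegrable fun t _ => h t
    _ = ∫ t in Set.Ioc p q, ψ t := intervalIntegral.integral_of_le hpq
    _ ≤ _ := MeasureTheory.setIntegral_le_integral hψ (Eventually.of_forall h0)

/-- The holomorphic function `(s-1)/(s+1) · (1 - ζ(s) MM(s))`, free of the pole at `1`. -/
noncomputable def gg (U : ℕ) (s : ℂ) : ℂ := ((s - 1) - Zet s * MM U s) / (s + 1)

/-- `gg` with a Gaussian cut-off at height `T`. -/
noncomputable def ff (T : ℝ) (U : ℕ) (s : ℂ) : ℂ :=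
  gg U s * Complex.exp (s ^ 2 / ((4 * T ^ 2 : ℝ) : ℂ))

lemma gg_eq (U : ℕ) {s : ℂ} (hs : s ≠ 1) :
    gg U s = (s - 1) / (s + 1) * (1 - riemannZeta s * MM U s) := by
  rw [gg, Zet_of_ne hs]; ring

lemma norm_sub_le_norm_add {s : ℂ} (hs : 0 ≤ s.re) : ‖s - 1‖ ≤ ‖s + 1‖ := by
  rw [← sq_le_sq₀ (norm_nonneg _) (norm_nonneg _), Complex.sq_norm, Complex.sq_norm,
    Complex.normSq_apply, Complex.normSq_apply]
  simp
  nlinarith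

lemma norm_add_one_ge {s : ℂ} (hs : 0 ≤ s.re) : 1 ≤ ‖s + 1‖ := by
  have := Complex.re_le_norm (s + 1)
  simp at this; linarith

lemma differentiableAt_ff (T : ℝ) (U : ℕ) {s : ℂ} (hs : 0 < s.re) :
    DifferentiableAt ℂ (ff T U) s := by
  have h1 : s + 1 ≠ 0 := by
    have := norm_add_one_ge hs.le
    intro h; rw [h, norm_zero] at this; linarith
  unfold ff gg
  have h2 := differentiable_Zet s
  have h3 := differentiable_MM U s
  fun_prop (disch := assumption)

lemma norm_exp_sq (T : ℝ) (k : ℝ) (s : ℂ) :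
    ‖Complex.exp (s ^ 2 / ((k * T ^ 2 : ℝ) : ℂ))‖ = exp ((s.re ^ 2 - s.im ^ 2) / (k * T ^ 2)) := by
  rw [Complex.norm_exp]
  congr 1
  rw [Complex.div_ofReal_re, sq s, Complex.mul_re]
  ring

lemma gg_bound {c C : ℝ} (h : Subconvex c C) : ∃ K : ℝ, 1 ≤ K ∧ ∀ (U : ℕ) (s : ℂ), 1 / 2 ≤ s.re →
    s.re ≤ 2 → ‖gg U s‖ ≤ 1 + K * (1 + |s.im|) ^ (1 / 4 - c) * ‖MM U s‖ := by
  obtain ⟨hc0, hc, hC, hz⟩ := h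
  have hcomp : IsCompact (Set.Icc (1 / 2 : ℝ) 2 ×ℂ Set.Icc (-1 : ℝ) 1) :=
    isCompact_Icc.reProdIm isCompact_Icc
  obtain ⟨B, hB⟩ := hcomp.exists_bound_of_continuousOn differentiable_Zet.continuous.continuousOn
  refine ⟨1 + |B| + C, by have := abs_nonneg B; linarith, fun U s hs1 hs2 => ?_⟩
  have hge := norm_add_one_ge (s := s) (by linarith)
  have hle := norm_sub_le_norm_add (s := s) (by linarith)
  have hpos : 0 < ‖s + 1‖ := by linarith
  have hone : 1 ≤ (1 + |s.im|) ^ (1 / 4 - c) :=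
    Real.one_le_rpow (by have := abs_nonneg s.im; linarith) (by linarith)
  have hZ : ‖Zet s‖ ≤ (1 + |B| + C) * (1 + |s.im|) ^ (1 / 4 - c) * ‖s + 1‖ := by
    rcases le_or_gt 1 |s.im| with ht | ht
    · have hs : s ≠ 1 := by
        intro h; rw [h] at ht; simp at ht; linarith
      rw [Zet_of_ne hs, norm_mul, mul_comm]
      gcongr
      refine (hz s hs1 ht).trans ?_
      have : |s.im| ^ (1 / 4 - c) ≤ (1 + |s.im|) ^ (1 / 4 - c) :=
        Real.rpow_le_rpow (abs_nonneg _) (by linarith) (by linarith)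
      have := abs_nonneg B
      gcongr
      linarith
    · have hmem : s ∈ Set.Icc (1 / 2 : ℝ) 2 ×ℂ Set.Icc (-1 : ℝ) 1 := by
        rw [Complex.mem_reProdIm]
        exact ⟨⟨hs1, hs2⟩, abs_le.1 ht.le⟩
      have h0 := abs_nonneg B
      calc ‖Zet s‖ ≤ |B| := (hB s hmem).trans (le_abs_self B)
        _ ≤ (1 + |B| + C) * 1 * 1 := by linarith
        _ ≤ _ := by gcongr
  rw [gg, norm_div, div_le_iff₀ hpos]
  calc ‖s - 1 - Zet s * MM U s‖ ≤ ‖s - 1‖ + ‖Zet s‖ * ‖MM U s‖ := by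
        rw [← norm_mul]; exact norm_sub_le _ _
    _ ≤ ‖s + 1‖ + (1 + |B| + C) * (1 + |s.im|) ^ (1 / 4 - c) * ‖s + 1‖ * ‖MM U s‖ := by gcongr
    _ = _ := by ring

/-- Bound of `ff` in the strip `1/2 ≤ Re s ≤ 2`. -/
lemma ff_bdd {c C : ℝ} (h : Subconvex c C) {T : ℝ} (hT : 1 ≤ T) (U : ℕ) :
    ∃ K : ℝ, ∀ s : ℂ, 1 / 2 ≤ s.re → s.re ≤ 2 → ‖ff T U s‖ ≤ K := by
  obtain ⟨K, hK1, hK⟩ := gg_bound h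
  obtain ⟨hc0, hc, -, -⟩ := h
  refine ⟨(1 + K * U) * (2 * T * exp (1 / T ^ 2)), fun s hs1 hs2 => ?_⟩
  have h1 := hK U s hs1 hs2
  have h2 := norm_MM_le_card U (s := s) (by linarith)
  have hone : 1 ≤ 1 + |s.im| := by have := abs_nonneg s.im; linarith
  have h3 : (1 + |s.im|) ^ (1 / 4 - c) ≤ (1 + |s.im|) ^ (1 : ℝ) :=
    rpow_le_rpow_of_exponent_le hone (by linarith)
  have h4 : ‖gg U s‖ ≤ (1 + K * U) * (1 + |s.im|) ^ (1 : ℝ) := by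
    have h5 : K * (1 + |s.im|) ^ (1 / 4 - c) * ‖MM U s‖ ≤ K * (1 + |s.im|) ^ (1 : ℝ) * U := by gcongr
    rw [rpow_one] at *
    nlinarith
  have h5 := weight_le (T := T) (a := 1) (t := s.im) hT (by norm_num) le_rfl
  rw [ff, norm_mul, norm_exp_sq]
  have h6 : exp ((s.re ^ 2 - s.im ^ 2) / (4 * T ^ 2)) ≤
      exp (-(s.im ^ 2 / (2 * T) ^ 2)) * exp (1 / T ^ 2) := by
    rw [← Real.exp_add, Real.exp_le_exp]
    have : s.re ^ 2 ≤ 4 := by nlinarith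
    have hT2 : 0 < T ^ 2 := by positivity
    have e : -(s.im ^ 2 / (2 * T) ^ 2) + 1 / T ^ 2 = (4 - s.im ^ 2) / (4 * T ^ 2) := by
      field_simp; ring
    rw [e]
    gcongr
  rw [rpow_one T] at h5
  calc _ ≤ ((1 + K * U) * (1 + |s.im|) ^ (1 : ℝ)) *
        (exp (-(s.im ^ 2 / (2 * T) ^ 2)) * exp (1 / T ^ 2)) := by gcongr
    _ = (1 + K * U) * (((1 + |s.im|) ^ (1 : ℝ) * exp (-(s.im ^ 2 / (2 * T) ^ 2))) *
        exp (1 / T ^ 2)) := by ring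
    _ ≤ _ := by gcongr

/-- The mean square near the critical line, from subconvexity for `ζ` and the mean value of `M`. -/
lemma ff_left {c C : ℝ} (h : Subconvex c C) : ∃ K : ℝ, 1 ≤ K ∧ ∀ T : ℝ, 3 ≤ T → ∀ U : ℕ,
    T ≤ U → (U : ℝ) ≤ 2 * T → ∀ p q : ℝ, p ≤ q →
    ∫ t in p..q, ‖ff T U (((1 / 2 + c / 6 : ℝ) : ℂ) + t * I)‖ ^ 2 ≤
      K * T ^ (3 / 2 - 2 * c) * log T := by
  obtain ⟨K, hK1, hK⟩ := gg_bound h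
  obtain ⟨hc0, hc, -, -⟩ := h
  refine ⟨3000 * K ^ 2, by nlinarith, fun T hT U hU1 hU2 p q hpq => ?_⟩
  set σ : ℝ := 1 / 2 + c / 6 with hσ
  obtain ⟨hInt, hval⟩ := MM_mean hT hU1 hU2 (σ := σ) (by linarith)
  have hcont : Continuous fun t : ℝ => ‖ff T U ((σ : ℂ) + t * I)‖ ^ 2 := by
    refine (Continuous.norm ?_).pow 2
    have : ContinuousOn (ff T U) {s : ℂ | 0 < s.re} := fun s hs =>
      (differentiableAt_ff T U hs).continuousAt.continuousWithinAt
    exact this.comp_continuous (by fun_prop) fun t => by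
      show 0 < ((σ : ℂ) + t * I).re
      simp; linarith
  have hT0 : 0 < T := by linarith
  have key : ∀ t : ℝ, ‖ff T U ((σ : ℂ) + t * I)‖ ^ 2 ≤
      (10 * K ^ 2 * T ^ (1 / 2 - 2 * c)) * (exp (-(t ^ 2 / (2 * T) ^ 2)) *
      (1 + ‖MM U (σ + t * I)‖ ^ 2)) := by
    intro t
    set s : ℂ := (σ : ℂ) + t * I with hs
    have hre : s.re = σ := by simp [hs]
    have him : s.im = t := by simp [hs]
    have h1 := hK U s (by rw [hre]; linarith) (by rw [hre]; linarith)
    rw [him] at h1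
    have hone : 1 ≤ 1 + |t| := by have := abs_nonneg t; linarith
    set y := (1 + |t|) ^ (1 / 4 - c) with hy
    have hy1 : 1 ≤ y := Real.one_le_rpow hone (by linarith)
    have hy2 : y ^ 2 = (1 + |t|) ^ (1 / 2 - 2 * c) := by
      rw [hy, ← rpow_natCast, ← rpow_mul (by positivity)]; congr 1; push_cast; ring
    set m := ‖MM U s‖
    have hm : 0 ≤ m := norm_nonneg _
    have h2 : ‖gg U s‖ ^ 2 ≤ 2 * K ^ 2 * y ^ 2 * (1 + m ^ 2) := by
      calc ‖gg U s‖ ^ 2 ≤ (1 + K * y * m) ^ 2 := by gcongr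
        _ ≤ 2 * 1 + 2 * (K * y * m) ^ 2 := by nlinarith [sq_nonneg (1 - K * y * m)]
        _ ≤ 2 * (K * y) ^ 2 + 2 * (K * y * m) ^ 2 := by
            have : 1 ≤ (K * y) ^ 2 := one_le_pow₀ (by nlinarith)
            linarith
        _ = _ := by ring
    have h3 := weight_le (T := T) (a := 1 / 2 - 2 * c) (t := t) (by linarith) (by linarith)
      (by linarith)
    rw [← hy2] at h3
    have h4 : ‖Complex.exp (s ^ 2 / ((4 * T ^ 2 : ℝ) : ℂ))‖ ^ 2 ≤
        2 * (exp (-(t ^ 2 / (2 * T) ^ 2)) * exp (-(t ^ 2 / (2 * T) ^ 2))) := by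
      rw [norm_exp_sq, hre, him, ← Real.exp_nat_mul, ← Real.exp_add]
      have e : ((2 : ℕ) : ℝ) * ((σ ^ 2 - t ^ 2) / (4 * T ^ 2)) = σ ^ 2 / (2 * T ^ 2) +
          (-(t ^ 2 / (2 * T) ^ 2) + -(t ^ 2 / (2 * T) ^ 2)) := by
        push_cast; field_simp; ring
      rw [e, Real.exp_add]
      gcongr
      have : σ ^ 2 / (2 * T ^ 2) ≤ 1 / 2 := by
        rw [div_le_iff₀ (by positivity)]
        nlinarith
      calc exp (σ ^ 2 / (2 * T ^ 2)) ≤ exp (1 / 2) := Real.exp_le_exp.2 this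
        _ ≤ 2 := by
          rw [← Real.le_log_iff_exp_le (by norm_num)]; linarith [Real.log_two_gt_d9]
    rw [ff, norm_mul, mul_pow]
    set E := exp (-(t ^ 2 / (2 * T) ^ 2))
    have hE : 0 < E := Real.exp_pos _
    calc _ ≤ (2 * K ^ 2 * y ^ 2 * (1 + m ^ 2)) * (2 * (E * E)) := by gcongr
      _ = 4 * K ^ 2 * (y ^ 2 * E) * (E * (1 + m ^ 2)) := by ring
      _ ≤ 4 * K ^ 2 * (2 * T ^ (1 / 2 - 2 * c)) * (E * (1 + m ^ 2)) := by gcongr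
      _ = 8 * (K ^ 2 * T ^ (1 / 2 - 2 * c) * (E * (1 + m ^ 2))) := by ring
      _ ≤ 10 * (K ^ 2 * T ^ (1 / 2 - 2 * c) * (E * (1 + m ^ 2))) := by gcongr; norm_num
      _ = _ := by ring
  have := interval_le_integral hcont (hInt.const_mul (10 * K ^ 2 * T ^ (1 / 2 - 2 * c)))
    (fun t => by positivity) key hpq
  refine this.trans ?_
  rw [MeasureTheory.integral_const_mul]
  calc _ ≤ 10 * K ^ 2 * T ^ (1 / 2 - 2 * c) * (300 * T * log T) := by gcongr
    _ = 3000 * K ^ 2 * (T ^ (1 / 2 - 2 * c) * T) * log T := by ring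
    _ = _ := by
        rw [← Real.rpow_add_one hT0.ne']; congr 3; ring

lemma one_le_log {T : ℝ} (hT : 3 ≤ T) : 1 ≤ log T := by
  rw [Real.le_log_iff_exp_le (by linarith)]
  linarith [Real.exp_one_lt_d9]

lemma continuous_ff_line (T : ℝ) (U : ℕ) {σ : ℝ} (hσ : 0 < σ) :
    Continuous fun t : ℝ => ff T U ((σ : ℂ) + t * I) := by
  have : ContinuousOn (ff T U) {s : ℂ | 0 < s.re} := fun s hs =>
    (differentiableAt_ff T U hs).continuousAt.continuousWithinAt
  exact this.comp_continuous (by fun_prop) fun t => by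
    show 0 < ((σ : ℂ) + t * I).re
    simpa using hσ

/-- The mean square near `Re s = 1`, where `1 - ζM` is a Dirichlet series supported on `n > U`. -/
lemma ff_right {T : ℝ} (hT : 3 ≤ T) {U : ℕ} (hU : T ≤ U) {p q : ℝ} (hpq : p ≤ q) :
    ∫ t in p..q, ‖ff T U (((1 + 1 / log T : ℝ) : ℂ) + t * I)‖ ^ 2 ≤
      10000 * log T ^ 4 := by
  have hL := one_le_log hT
  obtain ⟨hInt, hval⟩ := right_line (T := T) (Θ := 2 * T) (by linarith) (by linarith) le_rfl hU
  set L := log T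
  set σ : ℝ := 1 + 1 / L with hσ
  have hσ1 : 1 < σ := by rw [hσ]; have : 0 < 1 / L := by positivity
                         linarith
  have hσ2 : σ ≤ 2 := by
    rw [hσ]; have : 1 / L ≤ 1 := by rw [div_le_one (by linarith)]; exact hL
    linarith
  have hT0 : 0 < T := by linarith
  have key : ∀ t : ℝ, ‖ff T U ((σ : ℂ) + t * I)‖ ^ 2 ≤
      2 * (exp (-(t ^ 2 / (2 * T) ^ 2)) * ‖1 - riemannZeta ((σ : ℂ) + t * I) *
        MM U ((σ : ℂ) + t * I)‖ ^ 2) := by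
    intro t
    set s : ℂ := (σ : ℂ) + t * I with hs
    have hre : s.re = σ := by simp [hs]
    have him : s.im = t := by simp [hs]
    have hs1 : s ≠ 1 := by
      intro h; rw [h] at hre; simp at hre; linarith
    have h4 : ‖Complex.exp (s ^ 2 / ((4 * T ^ 2 : ℝ) : ℂ))‖ ^ 2 ≤
        2 * exp (-(t ^ 2 / (2 * T) ^ 2)) := by
      rw [norm_exp_sq, hre, him, ← Real.exp_nat_mul]
      have e : ((2 : ℕ) : ℝ) * ((σ ^ 2 - t ^ 2) / (4 * T ^ 2)) ≤ 1 / 2 + -(t ^ 2 / (2 * T) ^ 2) := by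
        have h5 : σ ^ 2 / (2 * T ^ 2) ≤ 1 / 2 := by
          rw [div_le_iff₀ (by positivity)]
          nlinarith
        have h6 : 0 ≤ t ^ 2 / (2 * T) ^ 2 := by positivity
        have h7 : ((2 : ℕ) : ℝ) * ((σ ^ 2 - t ^ 2) / (4 * T ^ 2)) = σ ^ 2 / (2 * T ^ 2)
          - 2 * (t ^ 2 / (2 * T) ^ 2) := by push_cast; field_simp; ring
        linarith
      refine (Real.exp_le_exp.2 e).trans ?_
      rw [Real.exp_add]
      gcongr
      rw [← Real.le_log_iff_exp_le (by norm_num)]; linarith [Real.log_two_gt_d9]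
    have h5 : ‖gg U s‖ ≤ ‖1 - riemannZeta s * MM U s‖ := by
      rw [gg_eq U hs1, norm_mul, norm_div]
      have := norm_sub_le_norm_add (s := s) (by linarith)
      have h1 := norm_add_one_ge (s := s) (by linarith)
      exact mul_le_of_le_one_left (norm_nonneg _) (div_le_one_of_le₀ this (norm_nonneg _))
    rw [ff, norm_mul, mul_pow]
    calc _ ≤ ‖1 - riemannZeta s * MM U s‖ ^ 2 * (2 * exp (-(t ^ 2 / (2 * T) ^ 2))) := by gcongr
      _ = _ := by ring
  have := interval_le_integral ((continuous_ff_line T U (by linarith)).norm.pow 2)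
    (hInt.const_mul 2) (fun t => by positivity) key hpq
  refine this.trans ?_
  rw [MeasureTheory.integral_const_mul]
  calc _ ≤ 2 * (60 * (2 + L / 2) ^ 4) := by gcongr
    _ ≤ 2 * (60 * (3 * L) ^ 4) := by gcongr; linarith
    _ = 9720 * L ^ 4 := by ring
    _ ≤ _ := by gcongr; norm_num

/-- Second moment of `ff` to the left of the line `Re s = 1`. -/
lemma ff_mid {c C : ℝ} (h : Subconvex c C) : ∃ K : ℝ, 1 ≤ K ∧ ∀ T : ℝ, 3 ≤ T → ∀ U : ℕ,
    T ≤ U → (U : ℝ) ≤ 2 * T → ∀ η A : ℝ, 0 ≤ η → η ≤ 1 / 4 → 0 ≤ A →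
    ∫ t in (-A)..A, ‖ff T U (((1 - η : ℝ) : ℂ) + t * I)‖ ^ 2 ≤
      K * T ^ ((3 - 3 * c) * η) * log T ^ 5 := by
  obtain ⟨K, hK1, hK⟩ := ff_left h
  have h' := h
  obtain ⟨hc0, hc, -, -⟩ := h
  refine ⟨210000 * K, by linarith, fun T hT U hU1 hU2 η A hη0 hη hA => ?_⟩
  have hL := one_le_log hT
  have hT0 : 0 < T := by linarith
  obtain ⟨Kb, hKb⟩ := ff_bdd h' (T := T) (by linarith) U
  have hr := fun (p q : ℝ) (hpq : p ≤ q) => ff_right hT hU1 hpq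
  have hl := hK T hT U hU1 hU2
  have hTL : T = exp (log T) := (Real.exp_log hT0).symm
  set L := log T with hLdef
  set a : ℝ := 1 / 2 + c / 6 with ha
  set b : ℝ := 1 + 1 / L with hb
  have hL0 : 0 < 1 / L := by positivity
  have hL1 : 1 / L ≤ 1 := by rw [div_le_one (by linarith)]; exact hL
  have shift : ∀ (σ u : ℝ), ∫ t in (-A)..A, ‖ff T U ((σ : ℂ) + (t + u : ℝ) * I)‖ ^ 2 =
      ∫ t in (-A + u)..(A + u), ‖ff T U ((σ : ℂ) + t * I)‖ ^ 2 := fun σ u =>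
    intervalIntegral.integral_comp_add_right
      (fun t : ℝ => ‖ff T U ((σ : ℂ) + t * I)‖ ^ 2) u
  have hmain := l2_three_lines (f := ff T U) (fun s hs => differentiableAt_ff T U hs)
    (a := a) (b := b) (σ := 1 - η) (K := Kb) (X := K * T ^ (3 / 2 - 2 * c) * L)
    (Y := 10000 * L ^ 4) (A := A) (by linarith) (by linarith) (by linarith) (by linarith) hA
    (fun s h1 h2 => hKb s (by linarith) (by linarith)) (by positivity) (by positivity)
    (fun u => by rw [shift]; exact hl _ _ (by linarith))
    (fun u => by rw [shift]; exact hr _ _ (by linarith))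
  refine hmain.trans ?_
  set α := (b - (1 - η)) / (b - a) with hα
  have hba : 0 < b - a := by linarith
  have hα0 : 0 ≤ α := div_nonneg (by linarith) hba.le
  have hα1 : α ≤ 1 := (div_le_one hba).2 (by linarith)
  have hβ0 : 0 ≤ (1 - η - a) / (b - a) := div_nonneg (by linarith) hba.le
  have hβ1 : (1 - η - a) / (b - a) ≤ 1 := (div_le_one hba).2 (by linarith)
  have e1 : (K * T ^ (3 / 2 - 2 * c) * L) ^ α ≤ K * T ^ ((3 / 2 - 2 * c) * α) * L := by
    rw [mul_rpow (by positivity) (by positivity), mul_rpow (by positivity) (by positivity),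
      ← rpow_mul hT0.le]
    gcongr
    · calc K ^ α ≤ K ^ (1 : ℝ) := rpow_le_rpow_of_exponent_le hK1 hα1
        _ = K := rpow_one _
    · calc L ^ α ≤ L ^ (1 : ℝ) := rpow_le_rpow_of_exponent_le hL hα1
        _ = L := rpow_one _
  have hY1 : 1 ≤ 10000 * L ^ 4 := by nlinarith [one_le_pow₀ hL (n := 4)]
  have e2 : (10000 * L ^ 4) ^ ((1 - η - a) / (b - a)) ≤ 10000 * L ^ 4 := by
    calc _ ≤ (10000 * L ^ 4) ^ (1 : ℝ) := rpow_le_rpow_of_exponent_le hY1 hβ1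
      _ = _ := rpow_one _
  have e3 : T ^ ((3 / 2 - 2 * c) * α) ≤ T ^ ((3 - 3 * c) * η) * 21 := by
    have h1 : (3 / 2 - 2 * c) * α ≤ (3 - 3 * c) * η + 3 * (1 / L) := by
      have h2 : (3 / 2 - 2 * c) * α ≤ (3 - 3 * c) * (η + 1 / L) := by
        rw [hα, ← mul_div_assoc, div_le_iff₀ hba]
        have : 3 / 2 - 2 * c ≤ (3 - 3 * c) * (b - a) := by
          have : 1 / 2 - c / 6 ≤ b - a := by linarith
          nlinarith
        have h3 : b - (1 - η) = η + 1 / L := by rw [hb]; ring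
        rw [h3]
        have : 0 ≤ η + 1 / L := by linarith
        nlinarith
      nlinarith
    calc T ^ ((3 / 2 - 2 * c) * α) ≤ T ^ ((3 - 3 * c) * η + 3 * (1 / L)) :=
          rpow_le_rpow_of_exponent_le (by linarith) h1
      _ = T ^ ((3 - 3 * c) * η) * T ^ (3 * (1 / L)) := rpow_add hT0 _ _
      _ ≤ _ := by
        gcongr
        rw [Real.rpow_def_of_pos hT0, ← hLdef, show L * (3 * (1 / L)) = ((3 : ℕ) : ℝ) * 1 by
          field_simp; norm_num, Real.exp_nat_mul]
        calc exp 1 ^ 3 ≤ (2.75 : ℝ) ^ 3 := by gcongr; linarith [Real.exp_one_lt_d9]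
          _ ≤ 21 := by norm_num
  calc _ ≤ (K * T ^ ((3 / 2 - 2 * c) * α) * L) * (10000 * L ^ 4) := by gcongr
    _ ≤ (K * (T ^ ((3 - 3 * c) * η) * 21) * L) * (10000 * L ^ 4) := by gcongr
    _ = _ := by ring

/-! ### The contour shift -/

lemma rect_le {f : ℂ → ℂ} {a b p q : ℝ} (hab : a ≤ b) (hpq : p ≤ q)
    (hf : ∀ s : ℂ, a ≤ s.re → s.re ≤ b → p ≤ s.im → s.im ≤ q → DifferentiableAt ℂ f s) :
    ‖(∫ y in p..q, f (b + y * I)) - ∫ y in p..q, f (a + y * I)‖ ≤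
      ‖∫ x in a..b, f (x + p * I)‖ + ‖∫ x in a..b, f (x + q * I)‖ := by
  have h := Complex.integral_boundary_rect_eq_zero_of_differentiableOn f
    ((a : ℂ) + p * I) ((b : ℂ) + q * I) (by
      intro s hs
      rw [Complex.mem_reProdIm] at hs
      simp [Set.uIcc_of_le hab, Set.uIcc_of_le hpq] at hs
      exact (hf s hs.1.1 hs.1.2 hs.2.1 hs.2.2).differentiableWithinAt)
  simp at h
  set P := ∫ x in a..b, f (x + p * I)
  set Q := ∫ x in a..b, f (x + q * I)
  set R := ∫ y in p..q, f (b + y * I)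
  set S := ∫ y in p..q, f (a + y * I)
  have e : I * (R - S) = Q - P := by linear_combination h
  have e2 := congrArg norm e
  rw [norm_mul, Complex.norm_I, one_mul] at e2
  rw [e2, add_comm]
  exact norm_sub_le _ _

/-- The kernel `x^s exp(s²/(2T²))`. -/
noncomputable def EE (T x : ℝ) (s : ℂ) : ℂ :=
  (x : ℂ) ^ s * Complex.exp (s ^ 2 / ((2 * T ^ 2 : ℝ) : ℂ))

lemma differentiable_EE (T : ℝ) {x : ℝ} (hx : 0 < x) : Differentiable ℂ (EE T x) := by
  have hx' : (x : ℂ) ≠ 0 := by exact_mod_cast hx.ne'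
  intro s
  unfold EE
  refine DifferentiableAt.mul ?_ (by fun_prop)
  exact differentiableAt_id.const_cpow (Or.inl hx')

lemma norm_EE_eq (T : ℝ) {x : ℝ} (hx : 0 < x) (s : ℂ) :
    ‖EE T x s‖ = x ^ s.re * exp ((s.re ^ 2 - s.im ^ 2) / (2 * T ^ 2)) := by
  rw [EE, norm_mul, norm_exp_sq, Complex.norm_cpow_eq_rpow_re_of_pos hx]

lemma norm_EE_le {T x : ℝ} (hT : 3 ≤ T) (hx : 0 < x) {s : ℂ} (h0 : 0 ≤ s.re) (h2 : s.re ≤ 2) :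
    ‖EE T x s‖ ≤ 2 * x ^ s.re * exp (-(s.im ^ 2 / (2 * T ^ 2))) := by
  rw [norm_EE_eq T hx, mul_comm 2 (x ^ s.re), mul_assoc]
  gcongr
  rw [sub_div, sub_eq_add_neg, Real.exp_add]
  gcongr
  have : s.re ^ 2 / (2 * T ^ 2) ≤ 1 / 2 := by
    rw [div_le_iff₀ (by positivity)]
    nlinarith
  refine (Real.exp_le_exp.2 this).trans ?_
  rw [← Real.le_log_iff_exp_le (by norm_num)]; linarith [Real.log_two_gt_d9]

lemma norm_EE_le' {T x : ℝ} (hT : 3 ≤ T) (hx : 0 < x) {s : ℂ} (h0 : 0 ≤ s.re) (h2 : s.re ≤ 2) :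
    ‖EE T x s‖ ≤ 2 * x ^ s.re := by
  refine (norm_EE_le hT hx h0 h2).trans ?_
  have : exp (-(s.im ^ 2 / (2 * T ^ 2))) ≤ 1 := by
    rw [Real.exp_le_one_iff]; have : 0 ≤ s.im ^ 2 / (2 * T ^ 2) := by positivity
    linarith
  exact mul_le_of_le_one_right (by positivity) this

/-- The part of `-ζ'/ζ - ζ` which is left after the term with `(1 - ζ M)²` is removed. -/
noncomputable def HH (U : ℕ) (s : ℂ) : ℂ :=
  -2 * deriv riemannZeta s * MM U s + deriv riemannZeta s * riemannZeta s * MM U s ^ 2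
    - riemannZeta s

lemma zq_split (U : ℕ) {s : ℂ} (h : riemannZeta s ≠ 0) :
    zq s - riemannZeta s = zq s * (1 - riemannZeta s * MM U s) ^ 2 + HH U s := by
  rw [zq, HH]; field_simp; ring

lemma differentiableAt_HH (U : ℕ) {s : ℂ} (h : s.im ≠ 0) : DifferentiableAt ℂ (HH U) s := by
  have hopen : IsOpen {s : ℂ | s.im ≠ 0} := isOpen_ne_fun Complex.continuous_im continuous_const
  have hon : DifferentiableOn ℂ riemannZeta {s : ℂ | s.im ≠ 0} := fun w hw =>
    (differentiableAt_zeta_of_im hw).differentiableWithinAt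
  have h1 : DifferentiableAt ℂ (deriv riemannZeta) s :=
    ((hon.deriv hopen) s h).differentiableAt (hopen.mem_nhds h)
  have h2 := differentiableAt_zeta_of_im h
  have h3 := differentiable_MM U s
  unfold HH
  fun_prop

lemma HH_le {c C : ℝ} (h : Subconvex c C) : ∃ K : ℝ, 1 ≤ K ∧ ∀ (U : ℕ) (s : ℂ),
    1 / 2 + c / 6 ≤ s.re → 2 ≤ |s.im| →
    ‖HH U s‖ ≤ K * |s.im| ^ (1 / 2 - 2 * c) * (1 + ‖MM U s‖ ^ 2) := by
  have h' := h
  obtain ⟨hc0, hc, hC, hz⟩ := h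
  refine ⟨1 + 12 * C / c + 12 * C / c * C + C, ?_, fun U s hs hi => ?_⟩
  · have : 0 < 12 * C / c + 12 * C / c * C + C := by positivity
    linarith
  have h1 := deriv_zeta_le h' hs hi
  have h2 := hz s (by linarith) (by linarith)
  set y := |s.im| ^ (1 / 4 - c) with hy
  have hy1 : 1 ≤ y := Real.one_le_rpow (by linarith) (by linarith)
  have hy2 : |s.im| ^ (1 / 2 - 2 * c) = y ^ 2 := by
    rw [hy, ← rpow_natCast, ← rpow_mul (by positivity)]; congr 1; push_cast; ring
  rw [hy2]
  set D := 12 * C / c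
  have hD : 0 < D := by positivity
  set m := ‖MM U s‖ with hm
  have hm0 : 0 ≤ m := norm_nonneg _
  calc ‖HH U s‖ ≤ ‖-2 * deriv riemannZeta s * MM U s‖ +
        ‖deriv riemannZeta s * riemannZeta s * MM U s ^ 2‖ + ‖riemannZeta s‖ :=
        (norm_sub_le _ _).trans (by gcongr; exact norm_add_le _ _)
    _ = 2 * ‖deriv riemannZeta s‖ * m + ‖deriv riemannZeta s‖ * ‖riemannZeta s‖ * m ^ 2
        + ‖riemannZeta s‖ := by simp [hm]
    _ ≤ 2 * (D * y) * m + (D * y) * (C * y) * m ^ 2 + C * y := by gcongr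
    _ ≤ D * y * (1 + m ^ 2) + (D * C * y ^ 2) * (1 + m ^ 2) + C * y * (1 + m ^ 2) := by
        have e1 : 2 * m ≤ 1 + m ^ 2 := by nlinarith [sq_nonneg (m - 1)]
        have e2 : D * y * (2 * m) ≤ D * y * (1 + m ^ 2) := by gcongr
        have e3 : (D * C * y ^ 2) * m ^ 2 ≤ (D * C * y ^ 2) * (1 + m ^ 2) := by gcongr; linarith
        have e4 : C * y * 1 ≤ C * y * (1 + m ^ 2) := by gcongr; nlinarith
        linarith
    _ = (D * y + D * C * y ^ 2 + C * y) * (1 + m ^ 2) := by ring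
    _ ≤ ((1 + D + D * C + C) * y ^ 2) * (1 + m ^ 2) := by
        gcongr
        have : y ≤ y ^ 2 := by nlinarith
        nlinarith [mul_le_mul_of_nonneg_left this hD.le, mul_le_mul_of_nonneg_left this hC.le]
    _ = _ := by ring

lemma MM_le_log {T : ℝ} (hT : 3 ≤ T) {U : ℕ} (hU1 : T ≤ U) (hU2 : (U : ℝ) ≤ 2 * T) {s : ℂ}
    (hs : s.re ≤ 1) : ‖MM U s‖ ≤ (U : ℝ) ^ (1 - s.re) * (3 * log T) := by
  have hL := one_le_log hT
  refine (norm_MM_le U s).trans ?_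
  have hU0 : (0 : ℝ) < U := by linarith
  calc ∑ n ∈ Ioc 0 U, (n : ℝ) ^ (-s.re) ≤ ∑ n ∈ Ioc 0 U, (U : ℝ) ^ (1 - s.re) * (n : ℝ)⁻¹ := by
        refine sum_le_sum fun n hn => ?_
        rw [mem_Ioc] at hn
        have hn0 : (0 : ℝ) < n := by exact_mod_cast hn.1
        have : (n : ℝ) ^ (-s.re) = (n : ℝ) ^ (1 - s.re) * (n : ℝ)⁻¹ := by
          rw [← Real.rpow_neg_one, ← rpow_add hn0]; congr 1; ring
        rw [this]
        gcongr
        exact_mod_cast hn.2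
    _ = (U : ℝ) ^ (1 - s.re) * ∑ n ∈ Ioc 0 U, (n : ℝ)⁻¹ := by rw [mul_sum]
    _ ≤ _ := by
        gcongr
        refine (sum_inv_le U).trans ?_
        have : log U ≤ log 2 + log T := by
          rw [← Real.log_mul (by norm_num) (by linarith)]
          exact Real.log_le_log hU0 hU2
        linarith [Real.log_two_lt_d9]

lemma norm_interval_le {f : ℝ → ℂ} {g : ℝ → ℝ} {p q : ℝ} (hpq : p ≤ q)
    (h : ∀ t, p ≤ t → t ≤ q → ‖f t‖ ≤ g t) (hg : MeasureTheory.Integrable g) (h0 : ∀ t, 0 ≤ g t) :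
    ‖∫ t in p..q, f t‖ ≤ ∫ t, g t := by
  calc ‖∫ t in p..q, f t‖ ≤ ∫ t in p..q, g t :=
        intervalIntegral.norm_integral_le_of_norm_le hpq
          (Eventually.of_forall fun t ht => h t ht.1.le ht.2) hg.intervalIntegrable
    _ = ∫ t in Set.Ioc p q, g t := intervalIntegral.integral_of_le hpq
    _ ≤ _ := MeasureTheory.setIntegral_le_integral hg (Eventually.of_forall h0)

lemma norm_interval_le_const {f : ℝ → ℂ} {a b B : ℝ} (hab : a ≤ b) (hba : b ≤ a + 2) (hB : 0 ≤ B)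
    (h : ∀ t, a ≤ t → t ≤ b → ‖f t‖ ≤ B) : ‖∫ t in a..b, f t‖ ≤ 2 * B := by
  have := intervalIntegral.norm_integral_le_of_norm_le_const (f := f) (a := a) (b := b) (C := B)
    (fun t ht => by
      rw [Set.uIoc_of_le hab] at ht
      exact h t ht.1.le ht.2)
  refine this.trans ?_
  rw [abs_of_nonneg (by linarith), mul_comm]
  gcongr
  linarith

/-- The horizontal sides: those at height `2` and those at height `T²`, killed by the Gaussian. -/
lemma HH_hor {c C : ℝ} (h : Subconvex c C) : ∃ K : ℝ, 1 ≤ K ∧ ∀ T : ℝ, 3 ≤ T → ∀ U : ℕ,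
    T ≤ U → (U : ℝ) ≤ 2 * T → ∀ η x : ℝ, 0 ≤ η → η ≤ 1 / 4 → (U : ℝ) ^ 2 ≤ x →
    (∀ v : ℝ, |v| = 2 → ‖∫ u in (1 / 2 + c / 6)..(1 - η), HH U (u + v * I) *
      EE T x (u + v * I)‖ ≤ K * log T ^ 2 * (x * (U ^ 2 / x) ^ η)) ∧
    (∀ v : ℝ, |v| = T ^ 2 → ‖∫ u in (1 / 2 + c / 6)..(1 - η), HH U (u + v * I) *
      EE T x (u + v * I)‖ ≤ K * (x * T ^ 3 * exp (-(T ^ 2 / 2)))) := by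
  obtain ⟨K, hK1, hK⟩ := HH_le h
  obtain ⟨hc0, hc, -, -⟩ := h
  refine ⟨80 * K, by linarith, fun T hT U hU1 hU2 η x hη0 hη hx => ⟨fun v hv => ?_, fun v hv => ?_⟩⟩
  · have hL := one_le_log hT
    have hU0 : (0 : ℝ) < U := by linarith
    have hx0 : 0 < x := by nlinarith
    have : 80 * K * log T ^ 2 * (x * (U ^ 2 / x) ^ η) =
      2 * (40 * K * log T ^ 2 * (x * (U ^ 2 / x) ^ η)) := by ring
    rw [this]
    refine norm_interval_le_const (by linarith) (by linarith) (by positivity) fun u hu1 hu2 => ?_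
    set s : ℂ := (u : ℂ) + v * I with hs
    have hre : s.re = u := by simp [hs]
    have him : s.im = v := by simp [hs]
    have h1 := hK U s (by rw [hre]; exact hu1) (by rw [him, hv])
    have h2 := norm_EE_le' (T := T) (x := x) hT hx0 (s := s) (by rw [hre]; linarith)
      (by rw [hre]; linarith)
    have h3 := MM_le_log hT hU1 hU2 (s := s) (by rw [hre]; linarith)
    rw [him, hv] at h1
    rw [hre] at h2 h3
    have h4 : (2 : ℝ) ^ (1 / 2 - 2 * c) ≤ 2 := by
      calc (2 : ℝ) ^ (1 / 2 - 2 * c) ≤ 2 ^ (1 : ℝ) :=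
            rpow_le_rpow_of_exponent_le (by norm_num) (by linarith)
        _ = 2 := rpow_one _
    set L := log T
    have hy1 : 1 ≤ (U : ℝ) ^ (1 - u) := Real.one_le_rpow (by linarith) (by linarith)
    set y := (U : ℝ) ^ (1 - u) with hy
    have h5 : 1 + ‖MM U s‖ ^ 2 ≤ 10 * (y ^ 2 * L ^ 2) := by
      have : ‖MM U s‖ ^ 2 ≤ (y * (3 * L)) ^ 2 := by gcongr
      have : 1 ≤ (y * L) ^ 2 := one_le_pow₀ (by nlinarith)
      nlinarith
    have h6 : y ^ 2 * x ^ u ≤ x * (U ^ 2 / x) ^ η := by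
      have e1 : y ^ 2 = ((U : ℝ) ^ 2) ^ (1 - u) := by
        rw [hy, ← rpow_natCast, ← rpow_natCast, ← rpow_mul hU0.le,
          ← rpow_mul hU0.le, mul_comm]
      have e2 : x ^ u = x * x ^ (-(1 - u)) := by
        rw [← Real.rpow_one_add' hx0.le (by linarith)]
        congr 1; ring
      have e3 : ((U : ℝ) ^ 2 / x) ^ (1 - u) = ((U : ℝ) ^ 2) ^ (1 - u) * x ^ (-(1 - u)) := by
        rw [Real.div_rpow (by positivity) hx0.le, Real.rpow_neg hx0.le, div_eq_mul_inv]
      calc y ^ 2 * x ^ u = x * ((U : ℝ) ^ 2 / x) ^ (1 - u) := by rw [e1, e2, e3]; ring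
        _ ≤ _ := by
          gcongr x * ?_
          exact Real.rpow_le_rpow_of_exponent_ge (by positivity) ((div_le_one hx0).2 hx)
            (by linarith)
    rw [norm_mul]
    calc _ ≤ (K * 2 * (10 * (y ^ 2 * L ^ 2))) * (2 * x ^ u) := by
          gcongr
          exact h1.trans (by gcongr)
      _ = 40 * K * L ^ 2 * (y ^ 2 * x ^ u) := by ring
      _ ≤ _ := by gcongr
  · have hU0 : (0 : ℝ) < U := by linarith
    have hx0 : 0 < x := by nlinarith
    have hx1 : 1 ≤ x := by nlinarith
    have : 80 * K * (x * T ^ 3 * exp (-(T ^ 2 / 2))) =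
      2 * (40 * K * (x * T ^ 3 * exp (-(T ^ 2 / 2)))) := by ring
    rw [this]
    refine norm_interval_le_const (by linarith) (by linarith) (by positivity) fun u hu1 hu2 => ?_
    set s : ℂ := (u : ℂ) + v * I with hs
    have hre : s.re = u := by simp [hs]
    have him : s.im = v := by simp [hs]
    have h1 := hK U s (by rw [hre]; exact hu1) (by rw [him, hv]; nlinarith)
    have h2 := norm_EE_le (T := T) (x := x) hT hx0 (s := s) (by rw [hre]; linarith)
      (by rw [hre]; linarith)
    have h3 := norm_MM_le_card U (s := s) (by rw [hre]; linarith)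
    rw [him, hv] at h1
    rw [hre, him, ← sq_abs, hv] at h2
    have e0 : -((T ^ 2) ^ 2 / (2 * T ^ 2)) = -(T ^ 2 / 2) := by field_simp
    rw [e0] at h2
    have h4 : (T ^ 2) ^ (1 / 2 - 2 * c) ≤ T := by
      calc (T ^ 2) ^ (1 / 2 - 2 * c) ≤ (T ^ 2) ^ (1 / 2 : ℝ) :=
            rpow_le_rpow_of_exponent_le (by nlinarith) (by linarith)
        _ = T := by rw [← Real.sqrt_eq_rpow, Real.sqrt_sq (by linarith)]
    have h5 : 1 + ‖MM U s‖ ^ 2 ≤ 5 * T ^ 2 := by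
      have : ‖MM U s‖ ^ 2 ≤ (2 * T) ^ 2 := by
        have := h3.trans hU2
        gcongr
      nlinarith
    have h6 : x ^ u ≤ x := by
      calc x ^ u ≤ x ^ (1 : ℝ) := rpow_le_rpow_of_exponent_le hx1 (by linarith)
        _ = x := rpow_one _
    rw [norm_mul]
    calc _ ≤ (K * T * (5 * T ^ 2)) * (2 * x * exp (-(T ^ 2 / 2))) := by
          gcongr
          · exact h1.trans (by gcongr)
          · exact h2.trans (by gcongr)
      _ = 10 * (K * (x * T ^ 3 * exp (-(T ^ 2 / 2)))) := by ring
      _ ≤ 40 * (K * (x * T ^ 3 * exp (-(T ^ 2 / 2)))) := by gcongr; norm_num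
      _ = _ := by ring

lemma HH_vert {c C : ℝ} (h : Subconvex c C) : ∃ K : ℝ, 1 ≤ K ∧ ∀ T : ℝ, 3 ≤ T → ∀ U : ℕ,
    T ≤ U → (U : ℝ) ≤ 2 * T → ∀ x : ℝ, 0 < x → ∀ p q : ℝ, p ≤ q →
    (∀ t, p ≤ t → t ≤ q → 2 ≤ |t|) →
    ‖∫ t in p..q, HH U (((1 / 2 + c / 6 : ℝ) : ℂ) + t * I) *
      EE T x (((1 / 2 + c / 6 : ℝ) : ℂ) + t * I)‖ ≤
      K * (T ^ (3 / 2 - 2 * c) * log T * x ^ (1 / 2 + c / 6)) := by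
  obtain ⟨K, hK1, hK⟩ := HH_le h
  obtain ⟨hc0, hc, -, -⟩ := h
  refine ⟨1200 * K, by linarith, fun T hT U hU1 hU2 x hx p q hpq ht => ?_⟩
  set σ : ℝ := 1 / 2 + c / 6 with hσ
  obtain ⟨hInt, hval⟩ := MM_mean hT hU1 hU2 (σ := σ) (by linarith)
  have hT0 : 0 < T := by linarith
  refine (norm_interval_le hpq (g := fun t => (4 * K * T ^ (1 / 2 - 2 * c) * x ^ σ) *
    (exp (-(t ^ 2 / (2 * T) ^ 2)) * (1 + ‖MM U (σ + t * I)‖ ^ 2))) ?_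
    (hInt.const_mul _) (fun t => by positivity)).trans ?_
  · intro t ht1 ht2
    have ht2 := ht t ht1 ht2
    set s : ℂ := (σ : ℂ) + t * I with hs
    have hre : s.re = σ := by simp [hs]
    have him : s.im = t := by simp [hs]
    have h1 := hK U s (by rw [hre]) (by rw [him]; exact ht2)
    have h2 := norm_EE_le (T := T) (x := x) hT hx (s := s) (by rw [hre]; linarith)
      (by rw [hre]; linarith)
    rw [him] at h1
    rw [hre, him] at h2
    have h3 := weight_le (T := T) (a := 1 / 2 - 2 * c) (t := t) (by linarith) (by linarith)
      (by linarith)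
    have h4 : |t| ^ (1 / 2 - 2 * c) ≤ (1 + |t|) ^ (1 / 2 - 2 * c) :=
      Real.rpow_le_rpow (abs_nonneg _) (by linarith) (by linarith)
    have e : exp (-(t ^ 2 / (2 * T ^ 2))) =
        exp (-(t ^ 2 / (2 * T) ^ 2)) * exp (-(t ^ 2 / (2 * T) ^ 2)) := by
      rw [← Real.exp_add]; congr 1; field_simp; ring
    rw [e] at h2
    set E := exp (-(t ^ 2 / (2 * T) ^ 2))
    have hE : 0 < E := Real.exp_pos _
    rw [norm_mul]
    calc _ ≤ (K * (1 + |t|) ^ (1 / 2 - 2 * c) * (1 + ‖MM U s‖ ^ 2)) * (2 * x ^ σ * (E * E)) := by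
          gcongr
          exact h1.trans (by gcongr)
      _ = 2 * K * ((1 + |t|) ^ (1 / 2 - 2 * c) * E) * x ^ σ * (E * (1 + ‖MM U s‖ ^ 2)) := by ring
      _ ≤ 2 * K * (2 * T ^ (1 / 2 - 2 * c)) * x ^ σ * (E * (1 + ‖MM U s‖ ^ 2)) := by gcongr
      _ = _ := by ring
  · rw [MeasureTheory.integral_const_mul]
    calc _ ≤ 4 * K * T ^ (1 / 2 - 2 * c) * x ^ σ * (300 * T * log T) := by gcongr
      _ = 1200 * K * ((T ^ (1 / 2 - 2 * c) * T) * log T * x ^ σ) := by ring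
      _ = _ := by
        rw [← Real.rpow_add_one hT0.ne']; congr 4; ring

/-- The contribution of `HH` on the line `Re s = 1 - η`, estimated by moving the line of
integration to `Re s = 1/2 + c/6`. -/
lemma HH_shift {c C : ℝ} (h : Subconvex c C) : ∃ K : ℝ, 1 ≤ K ∧ ∀ T : ℝ, 3 ≤ T → ∀ U : ℕ,
    T ≤ U → (U : ℝ) ≤ 2 * T → ∀ η x : ℝ, 0 ≤ η → η ≤ 1 / 4 → (U : ℝ) ^ 2 ≤ x →
    ∀ p q : ℝ, (p = 2 ∧ q = T ^ 2 ∨ p = -T ^ 2 ∧ q = -2) →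
    ‖∫ t in p..q, HH U (((1 - η : ℝ) : ℂ) + t * I) *
      EE T x (((1 - η : ℝ) : ℂ) + t * I)‖ ≤
      K * (T ^ (3 / 2 - 2 * c) * log T * x ^ (1 / 2 + c / 6) +
        log T ^ 2 * (x * (U ^ 2 / x) ^ η) + x * T ^ 3 * exp (-(T ^ 2 / 2))) := by
  obtain ⟨K1, hK1, h1⟩ := HH_hor h
  obtain ⟨K2, hK2, h2⟩ := HH_vert h
  obtain ⟨hc0, hc, -, -⟩ := h
  refine ⟨K1 + K2, by linarith, fun T hT U hU1 hU2 η x hη0 hη hx p q hpq => ?_⟩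
  obtain ⟨ha, hb⟩ := h1 T hT U hU1 hU2 η x hη0 hη hx
  have hL := one_le_log hT
  have hx0 : 0 < x := by nlinarith
  have hpq' : p ≤ q := by
    rcases hpq with ⟨rfl, rfl⟩ | ⟨rfl, rfl⟩ <;> nlinarith
  have htt : ∀ t, p ≤ t → t ≤ q → 2 ≤ |t| := by
    intro t h3 h4
    rcases hpq with ⟨rfl, rfl⟩ | ⟨rfl, rfl⟩
    · exact h3.trans (le_abs_self t)
    · have := neg_abs_le t; linarith
  have hc' := h2 T hT U hU1 hU2 x hx0 p q hpq' htt
  have hr := rect_le (f := fun s => HH U s * EE T x s) (a := 1 / 2 + c / 6) (b := 1 - η) (p := p)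
    (q := q) (by linarith) hpq' (fun s _ _ h3 h4 => by
      have h5 : s.im ≠ 0 := by
        intro h0; have := htt s.im h3 h4; rw [h0] at this; simp at this; linarith
      exact (differentiableAt_HH U h5).mul (differentiable_EE T hx0 s))
  have hT2 : |T ^ 2| = T ^ 2 := abs_of_nonneg (by positivity)
  set X := log T ^ 2 * (x * (U ^ 2 / x) ^ η) with hX
  set Y := x * T ^ 3 * exp (-(T ^ 2 / 2)) with hY
  set Z := T ^ (3 / 2 - 2 * c) * log T * x ^ (1 / 2 + c / 6) with hZ
  have hX0 : 0 ≤ X := by positivity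
  have hY0 : 0 ≤ Y := by positivity
  have hZ0 : 0 ≤ Z := by positivity
  have hsum : ‖∫ u in (1 / 2 + c / 6)..(1 - η), HH U (u + p * I) *
      EE T x (u + p * I)‖ + ‖∫ u in (1 / 2 + c / 6)..(1 - η), HH U (u + q * I) *
      EE T x (u + q * I)‖ ≤ K1 * X + K1 * Y := by
    rcases hpq with ⟨rfl, rfl⟩ | ⟨rfl, rfl⟩
    · have e1 := ha 2 (by norm_num)
      have e2 := hb (T ^ 2) hT2
      rw [mul_assoc K1] at e1
      linarith
    · have e1 := ha (-2) (by norm_num)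
      have e2 := hb (-T ^ 2) (by rw [abs_neg, hT2])
      rw [mul_assoc K1] at e1
      linarith
  have := norm_sub_norm_le (∫ y in p..q, HH U (((1 - η : ℝ) : ℂ) + y * I) *
      EE T x (((1 - η : ℝ) : ℂ) + y * I)) (∫ y in p..q, HH U (((1 / 2 + c / 6 : ℝ) : ℂ) + y * I) *
      EE T x (((1 / 2 + c / 6 : ℝ) : ℂ) + y * I))
  nlinarith [this.trans (hr.trans hsum)]

/-- The data provided by the zero-free region: up to height `T²`, the half-plane `Re s ≥ 1 - η`
contains no zero of `ζ`, and the logarithmic derivative is under control there. -/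
def Region (B T η : ℝ) : Prop :=
  ∀ s : ℂ, |s.im| ≤ T ^ 2 → 1 - η ≤ s.re → s.re ≤ 2 → Zet s ≠ 0 ∧
    (1 ≤ |s.im| → ‖zq s‖ ≤ B * (2 * log T) ^ 2) ∧ (|s.im| ≤ 2 → ‖FF s‖ ≤ B)

lemma ff_weight {T x : ℝ} (hT : 3 ≤ T) (hx : 0 < x) (U : ℕ) {s : ℂ} (h0 : 0 ≤ s.re)
    (h1 : s.re ≤ 1) (ht : 2 ≤ |s.im|) :
    ‖1 - riemannZeta s * MM U s‖ ^ 2 * ‖EE T x s‖ ≤ 2 * x ^ s.re * ‖ff T U s‖ ^ 2 := by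
  have hs : s ≠ 1 := by
    intro h; rw [h] at ht; simp at ht; linarith
  have hE : ‖EE T x s‖ = x ^ s.re * ‖Complex.exp (s ^ 2 / ((4 * T ^ 2 : ℝ) : ℂ))‖ ^ 2 := by
    rw [norm_EE_eq T hx, norm_exp_sq, ← Real.exp_nat_mul]
    congr 2; push_cast; field_simp; norm_num
  have ht2 : 4 ≤ s.im ^ 2 := by rw [← sq_abs]; nlinarith
  have hn1 : ‖s + 1‖ ^ 2 ≤ 2 * ‖s - 1‖ ^ 2 := by
    rw [Complex.sq_norm, Complex.sq_norm, Complex.normSq_apply, Complex.normSq_apply]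
    simp
    nlinarith
  have hpos : 0 < ‖s - 1‖ := norm_pos_iff.2 (sub_ne_zero.2 hs)
  have hpos' : 0 < ‖s + 1‖ := by have := norm_add_one_ge h0; linarith
  have hG : ‖1 - riemannZeta s * MM U s‖ ^ 2 ≤ 2 * ‖gg U s‖ ^ 2 := by
    rw [gg_eq U hs, norm_mul, norm_div, mul_pow, div_pow]
    set m := ‖1 - riemannZeta s * MM U s‖ ^ 2
    have hm : 0 ≤ m := by positivity
    have : 1 / 2 ≤ ‖s - 1‖ ^ 2 / ‖s + 1‖ ^ 2 := by
      rw [div_le_div_iff₀ (by norm_num) (by positivity)]; linarith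
    nlinarith
  rw [hE, ff, norm_mul, mul_pow]
  calc _ ≤ 2 * ‖gg U s‖ ^ 2 * (x ^ s.re * ‖Complex.exp (s ^ 2 / ((4 * T ^ 2 : ℝ) : ℂ))‖ ^ 2) := by
        gcongr
    _ = _ := by ring

lemma continuous_lineC (σ : ℝ) : Continuous fun t : ℝ => (σ : ℂ) + t * I := by fun_prop

/-- The integral of `FF` along `Re s = 1 - η` over one of the ranges `2 ≤ ± Im s ≤ T²`. -/
lemma FF_outer {c C : ℝ} (h : Subconvex c C) : ∃ K : ℝ, 1 ≤ K ∧ ∀ T : ℝ, 3 ≤ T → ∀ U : ℕ,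
    T ≤ U → (U : ℝ) ≤ 2 * T → ∀ η x B : ℝ, 0 ≤ η → η ≤ 1 / 4 → (U : ℝ) ^ 2 ≤ x → 1 ≤ B →
    Region B T η → ∀ p q : ℝ, (p = 2 ∧ q = T ^ 2 ∨ p = -T ^ 2 ∧ q = -2) →
    ‖∫ t in p..q, FF (((1 - η : ℝ) : ℂ) + t * I) *
      EE T x (((1 - η : ℝ) : ℂ) + t * I)‖ ≤
      K * B * (T ^ (3 / 2 - 2 * c) * log T * x ^ (1 / 2 + c / 6) +
        log T ^ 2 * (x * (U ^ 2 / x) ^ η) + x * T ^ 3 * exp (-(T ^ 2 / 2)) +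
        x ^ (1 - η) * T ^ ((3 - 3 * c) * η) * log T ^ 7) := by
  obtain ⟨K1, hK1, h1⟩ := HH_shift h
  obtain ⟨K2, hK2, h2⟩ := ff_mid h
  refine ⟨K1 + 8 * K2, by linarith, fun T hT U hU1 hU2 η x B hη0 hη hx hB hreg p q hpq => ?_⟩
  have e1 := h1 T hT U hU1 hU2 η x hη0 hη hx p q hpq
  have e2 := h2 T hT U hU1 hU2 η (T ^ 2) hη0 hη (by positivity)
  have hL := one_le_log hT
  have hx0 : 0 < x := by nlinarith
  have hpq' : p ≤ q := by
    rcases hpq with ⟨rfl, rfl⟩ | ⟨rfl, rfl⟩ <;> nlinarith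
  have htt : ∀ t, p ≤ t → t ≤ q → 2 ≤ |t| ∧ |t| ≤ T ^ 2 := by
    intro t h3 h4
    rcases hpq with ⟨rfl, rfl⟩ | ⟨rfl, rfl⟩
    · exact ⟨h3.trans (le_abs_self t), abs_le.2 ⟨by nlinarith, h4⟩⟩
    · exact ⟨by have := neg_abs_le t; linarith, abs_le.2 ⟨by linarith, by nlinarith⟩⟩
  have hsub : -T ^ 2 ≤ p ∧ q ≤ T ^ 2 := by
    rcases hpq with ⟨rfl, rfl⟩ | ⟨rfl, rfl⟩ <;> constructor <;> nlinarith
  set σ : ℝ := 1 - η with hσ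
  have hre : ∀ t : ℝ, ((σ : ℂ) + t * I).re = σ := fun t => by simp
  have him : ∀ t : ℝ, ((σ : ℂ) + t * I).im = t := fun t => by simp
  have hr : ∀ t, p ≤ t → t ≤ q → Zet ((σ : ℂ) + t * I) ≠ 0 ∧
      ‖zq ((σ : ℂ) + t * I)‖ ≤ B * (2 * log T) ^ 2 := by
    intro t h3 h4
    obtain ⟨h5, h6⟩ := htt t h3 h4
    obtain ⟨h7, h8, -⟩ := hreg ((σ : ℂ) + t * I) (by rw [him]; exact h6) (by rw [hre])
      (by rw [hre]; linarith)
    exact ⟨h7, h8 (by rw [him]; linarith)⟩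
  have hcE : Continuous fun t : ℝ => EE T x ((σ : ℂ) + t * I) :=
    (differentiable_EE T hx0).continuous.comp (continuous_lineC σ)
  have hcF : ContinuousOn (fun t : ℝ => FF ((σ : ℂ) + t * I)) (Set.uIcc p q) := by
    rw [Set.uIcc_of_le hpq']
    intro t ht
    exact ((differentiableAt_FF (hr t ht.1 ht.2).1).continuousAt.comp_of_eq
      (continuous_lineC σ).continuousAt rfl).continuousWithinAt
  have hcH : ContinuousOn (fun t : ℝ => HH U ((σ : ℂ) + t * I)) (Set.uIcc p q) := by
    rw [Set.uIcc_of_le hpq']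
    intro t ht
    have : ((σ : ℂ) + t * I).im ≠ 0 := by
      rw [him]; intro h0; have := (htt t ht.1 ht.2).1; rw [h0] at this; simp at this; linarith
    exact ((differentiableAt_HH U this).continuousAt.comp_of_eq
      (continuous_lineC σ).continuousAt rfl).continuousWithinAt
  have iF : IntervalIntegrable (fun t : ℝ => FF ((σ : ℂ) + t * I) *
      EE T x ((σ : ℂ) + t * I)) MeasureTheory.volume p q :=
    (hcF.mul hcE.continuousOn).intervalIntegrable
  have iH : IntervalIntegrable (fun t : ℝ => HH U ((σ : ℂ) + t * I) *
      EE T x ((σ : ℂ) + t * I)) MeasureTheory.volume p q :=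
    (hcH.mul hcE.continuousOn).intervalIntegrable
  have hcf := (continuous_ff_line T U (σ := σ) (by linarith)).norm.pow 2
  have main : ‖∫ t in p..q, (FF ((σ : ℂ) + t * I) * EE T x ((σ : ℂ) + t * I) -
      HH U ((σ : ℂ) + t * I) * EE T x ((σ : ℂ) + t * I))‖ ≤
      ∫ t in p..q, (8 * B * log T ^ 2 * x ^ σ) * ‖ff T U ((σ : ℂ) + t * I)‖ ^ 2 := by
    refine intervalIntegral.norm_integral_le_of_norm_le hpq' (Eventually.of_forall fun t ht => ?_)
      ((continuous_const.mul hcf).intervalIntegrable _ _)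
    obtain ⟨h3, h4⟩ := hr t ht.1.le ht.2
    obtain ⟨h5, h6⟩ := htt t ht.1.le ht.2
    have h7 := ff_weight (T := T) (x := x) hT hx0 U (s := (σ : ℂ) + t * I)
      (by rw [hre]; linarith) (by rw [hre]; linarith) (by rw [him]; exact h5)
    rw [hre] at h7
    have him' := him t
    set s : ℂ := (σ : ℂ) + t * I
    have hs : s ≠ 1 := by
      intro h; rw [h] at him'; simp at him'; rw [← him'] at h5; simp at h5; linarith
    have hz : riemannZeta s ≠ 0 := by
      intro h0; rw [Zet_of_ne hs, h0, mul_zero] at h3; exact h3 rfl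
    have h8 : FF s * EE T x s - HH U s * EE T x s =
        zq s * ((1 - riemannZeta s * MM U s) ^ 2 * EE T x s) := by
      rw [FF_eq hs h3, zq_split U hz]; ring
    rw [h8, norm_mul, norm_mul, norm_pow]
    calc _ ≤ (B * (2 * log T) ^ 2) * (2 * x ^ σ * ‖ff T U s‖ ^ 2) := by gcongr
      _ = _ := by ring
  rw [intervalIntegral.integral_sub iF iH, intervalIntegral.integral_const_mul] at main
  have hmono : ∫ t in p..q, ‖ff T U ((σ : ℂ) + t * I)‖ ^ 2 ≤
      ∫ t in (-T ^ 2)..(T ^ 2), ‖ff T U ((σ : ℂ) + t * I)‖ ^ 2 :=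
    intervalIntegral.integral_mono_interval hsub.1 hpq' hsub.2
      (Eventually.of_forall fun t => by positivity) (hcf.intervalIntegrable _ _)
  have e3 := norm_sub_norm_le
    (∫ t in p..q, FF ((σ : ℂ) + t * I) * EE T x ((σ : ℂ) + t * I))
    (∫ t in p..q, HH U ((σ : ℂ) + t * I) * EE T x ((σ : ℂ) + t * I))
  have e4 : (8 * B * log T ^ 2 * x ^ σ) *
      ∫ t in p..q, ‖ff T U ((σ : ℂ) + t * I)‖ ^ 2 ≤
      (8 * B * log T ^ 2 * x ^ σ) * (K2 * T ^ ((3 - 3 * c) * η) * log T ^ 5) := by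
    gcongr
    exact hmono.trans e2
  set X := T ^ (3 / 2 - 2 * c) * log T * x ^ (1 / 2 + c / 6) +
        log T ^ 2 * (x * (U ^ 2 / x) ^ η) + x * T ^ 3 * exp (-(T ^ 2 / 2)) with hX
  have hX0 : 0 ≤ X := by positivity
  set Y := x ^ σ * T ^ ((3 - 3 * c) * η) * log T ^ 7 with hY
  have hY0 : 0 ≤ Y := by positivity
  have e5 : (8 * B * log T ^ 2 * x ^ σ) * (K2 * T ^ ((3 - 3 * c) * η) * log T ^ 5) =
      8 * K2 * B * Y := by rw [hY]; ring
  rw [e5] at e4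
  have e6 : K1 * X ≤ K1 * B * X := by
    have : 0 ≤ K1 * X := by positivity
    nlinarith
  have e7 : 0 ≤ K1 * B * Y := by positivity
  have e8 : 0 ≤ 8 * K2 * B * X := by positivity
  have e9 : (K1 + 8 * K2) * B * (X + Y) = K1 * B * X + 8 * K2 * B * Y + K1 * B * Y + 8 * K2 * B * X := by
    ring
  rw [e9]
  linarith

/-- The integral over `Re s = 2`, `|Im s| ≤ T²`. -/
lemma FF_main {c C : ℝ} (h : Subconvex c C) : ∃ K : ℝ, 1 ≤ K ∧ ∀ T : ℝ, 3 ≤ T → ∀ U : ℕ,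
    T ≤ U → (U : ℝ) ≤ 2 * T → ∀ η x B : ℝ, 0 ≤ η → η ≤ 1 / 4 → (U : ℝ) ^ 2 ≤ x → 1 ≤ B →
    Region B T η →
    ‖∫ t in (-T ^ 2)..(T ^ 2), FF (((2 : ℝ) : ℂ) + t * I) *
      EE T x (((2 : ℝ) : ℂ) + t * I)‖ ≤
      K * B * (T ^ (3 / 2 - 2 * c) * log T * x ^ (1 / 2 + c / 6) +
        log T ^ 2 * (x * (U ^ 2 / x) ^ η) + x * T ^ 3 * exp (-(T ^ 2 / 2)) +
        x ^ (1 - η) * T ^ ((3 - 3 * c) * η) * log T ^ 7 + x ^ (1 - η) +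
        x ^ 2 * T ^ 2 * log T ^ 2 * exp (-(T ^ 2 / 2))) := by
  obtain ⟨K1, hK1, h1⟩ := FF_outer h
  refine ⟨2 * K1 + 100, by linarith, fun T hT U hU1 hU2 η x B hη0 hη hx hB hreg => ?_⟩
  have o1 := h1 T hT U hU1 hU2 η x B hη0 hη hx hB hreg 2 (T ^ 2) (Or.inl ⟨rfl, rfl⟩)
  have o2 := h1 T hT U hU1 hU2 η x B hη0 hη hx hB hreg (-T ^ 2) (-2) (Or.inr ⟨rfl, rfl⟩)
  have hL := one_le_log hT
  have hT0 : 0 < T := by linarith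
  have hx0 : 0 < x := by nlinarith
  have hx1 : 1 ≤ x := by nlinarith
  have hT2 : 2 ≤ T ^ 2 := by nlinarith
  set σ : ℝ := 1 - η with hσ
  have hre : ∀ t : ℝ, ((σ : ℂ) + t * I).re = σ := fun t => by simp
  have him : ∀ t : ℝ, ((σ : ℂ) + t * I).im = t := fun t => by simp
  have hcE : Continuous fun t : ℝ => EE T x ((σ : ℂ) + t * I) :=
    (differentiable_EE T hx0).continuous.comp (continuous_lineC σ)
  have hii : ∀ p q : ℝ, p ≤ q → -T ^ 2 ≤ p → q ≤ T ^ 2 → IntervalIntegrable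
      (fun t : ℝ => FF ((σ : ℂ) + t * I) * EE T x ((σ : ℂ) + t * I))
      MeasureTheory.volume p q := by
    intro p q hpq hp hq
    refine ContinuousOn.intervalIntegrable (ContinuousOn.mul ?_ hcE.continuousOn)
    rw [Set.uIcc_of_le hpq]
    intro t ht
    have := (hreg ((σ : ℂ) + t * I) (by
      rw [him]; exact abs_le.2 ⟨by linarith [ht.1], by linarith [ht.2]⟩) (by rw [hre])
      (by rw [hre]; linarith)).1
    exact ((differentiableAt_FF this).continuousAt.comp_of_eq
      (continuous_lineC σ).continuousAt rfl).continuousWithinAt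
  have split : ∫ t in (-T ^ 2)..(T ^ 2), FF ((σ : ℂ) + t * I) *
      EE T x ((σ : ℂ) + t * I) = (∫ t in (-T ^ 2)..(-2), FF ((σ : ℂ) + t * I) *
      EE T x ((σ : ℂ) + t * I)) + (∫ t in (-2)..2, FF ((σ : ℂ) + t * I) *
      EE T x ((σ : ℂ) + t * I)) + ∫ t in (2)..(T ^ 2), FF ((σ : ℂ) + t * I) *
      EE T x ((σ : ℂ) + t * I) := by
    rw [intervalIntegral.integral_add_adjacent_intervals (hii _ _ (by linarith) le_rfl (by linarith))
      (hii _ _ (by norm_num) (by linarith) hT2), intervalIntegral.integral_add_adjacent_intervals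
      (hii _ _ (by linarith) le_rfl hT2) (hii _ _ hT2 (by linarith) le_rfl)]
  have mid : ‖∫ t in (-2 : ℝ)..2, FF ((σ : ℂ) + t * I) *
      EE T x ((σ : ℂ) + t * I)‖ ≤ 8 * B * x ^ σ := by
    have := intervalIntegral.norm_integral_le_of_norm_le_const (a := (-2 : ℝ)) (b := 2)
      (f := fun t : ℝ => FF ((σ : ℂ) + t * I) * EE T x ((σ : ℂ) + t * I))
      (C := 2 * B * x ^ σ) (fun t ht => by
        rw [Set.uIoc_of_le (by norm_num)] at ht
        have ha : |t| ≤ 2 := abs_le.2 ⟨by linarith [ht.1], ht.2⟩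
        have h3 := (hreg ((σ : ℂ) + t * I) (by rw [him]; linarith) (by rw [hre])
          (by rw [hre]; linarith)).2.2 (by rw [him]; exact ha)
        have h4 := norm_EE_le' (T := T) (x := x) hT hx0 (s := (σ : ℂ) + t * I)
          (by rw [hre]; linarith) (by rw [hre]; linarith)
        rw [hre] at h4
        rw [norm_mul]
        calc _ ≤ B * (2 * x ^ σ) := by gcongr
          _ = _ := by ring)
    refine this.trans (le_of_eq ?_)
    rw [show |(2 : ℝ) - -2| = 4 by norm_num]; ring
  have hor : ∀ v : ℝ, |v| = T ^ 2 → ‖∫ u in σ..2, FF (u + v * I) *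
      EE T x (u + v * I)‖ ≤ 2 * (18 * B *
        (x ^ 2 * T ^ 2 * log T ^ 2 * exp (-(T ^ 2 / 2)))) := by
    intro v hv
    refine norm_interval_le_const (by linarith) (by linarith) (by positivity) fun u hu1 hu2 => ?_
    set s : ℂ := (u : ℂ) + v * I with hs
    have hre : s.re = u := by simp [hs]
    have him : s.im = v := by simp [hs]
    obtain ⟨h3, h4, -⟩ := hreg s (by rw [him, hv]) (by rw [hre]; exact hu1) (by rw [hre]; exact hu2)
    have h4 := h4 (by rw [him, hv]; linarith)
    have h5 := zeta_crude_right (s := s) (by rw [hre]; linarith) (by rw [him, hv]; linarith)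
    rw [him, hv] at h5
    have h6 := norm_EE_le (T := T) (x := x) hT hx0 (s := s) (by rw [hre]; linarith)
      (by rw [hre]; linarith)
    rw [hre, him, ← sq_abs, hv] at h6
    have e0 : -((T ^ 2) ^ 2 / (2 * T ^ 2)) = -(T ^ 2 / 2) := by field_simp
    rw [e0] at h6
    have hs1 : s ≠ 1 := by
      intro h; rw [h] at him; simp at him; rw [← him] at hv; simp at hv; nlinarith
    have h7 : x ^ u ≤ x ^ 2 := by
      rw [← rpow_natCast]
      exact rpow_le_rpow_of_exponent_le hx1 (by exact_mod_cast hu2)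
    have h8 : ‖FF s‖ ≤ 9 * B * (T ^ 2 * log T ^ 2) := by
      rw [FF_eq hs1 h3]
      refine (norm_sub_le _ _).trans ?_
      have hl : 1 ≤ log T ^ 2 := one_le_pow₀ hL
      have e1 : B * (2 * log T) ^ 2 ≤ 4 * B * (T ^ 2 * log T ^ 2) := by
        have : 1 * (B * log T ^ 2) ≤ T ^ 2 * (B * log T ^ 2) := by gcongr; linarith
        nlinarith
      have e2 : 5 * (T ^ 2 * 1) ≤ 5 * B * (T ^ 2 * log T ^ 2) := by
        gcongr
        linarith
      linarith
    rw [norm_mul]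
    calc _ ≤ (9 * B * (T ^ 2 * log T ^ 2)) * (2 * x ^ 2 * exp (-(T ^ 2 / 2))) := by
          gcongr
          exact h6.trans (by gcongr)
      _ = _ := by ring
  have hr := rect_le (f := fun s => FF s * EE T x s) (a := σ) (b := 2) (p := -T ^ 2)
    (q := T ^ 2) (by linarith) (by linarith) (fun s h3 h4 h5 h6 =>
      (differentiableAt_FF (hreg s (abs_le.2 ⟨h5, h6⟩) h3 h4).1).mul (differentiable_EE T hx0 s))
  have hT2' : |T ^ 2| = T ^ 2 := abs_of_nonneg (by positivity)
  have r1 := hor (T ^ 2) hT2'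
  have r2 := hor (-T ^ 2) (by rw [abs_neg, hT2'])
  have e3 := norm_sub_norm_le
    (∫ t in (-T ^ 2)..(T ^ 2), FF (((2 : ℝ) : ℂ) + t * I) * EE T x (((2 : ℝ) : ℂ) + t * I))
    (∫ t in (-T ^ 2)..(T ^ 2), FF ((σ : ℂ) + t * I) * EE T x ((σ : ℂ) + t * I))
  have e4 := (congrArg norm split).le.trans norm_add₃_le
  set X := T ^ (3 / 2 - 2 * c) * log T * x ^ (1 / 2 + c / 6) +
        log T ^ 2 * (x * (U ^ 2 / x) ^ η) + x * T ^ 3 * exp (-(T ^ 2 / 2)) +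
        x ^ σ * T ^ ((3 - 3 * c) * η) * log T ^ 7 with hX
  have hX0 : 0 ≤ X := by positivity
  set Y := x ^ σ with hY
  have hY0 : 0 ≤ Y := by positivity
  set Z := x ^ 2 * T ^ 2 * log T ^ 2 * exp (-(T ^ 2 / 2)) with hZ
  have hZ0 : 0 ≤ Z := by positivity
  have e9 : (2 * K1 + 100) * B * (X + Y + Z) = 2 * (K1 * B * X) + 100 * (B * X) +
      2 * K1 * B * Y + 100 * (B * Y) + 2 * K1 * B * Z + 100 * (B * Z) := by ring
  have p1 : 0 ≤ B * X := by positivity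
  have p2 : 0 ≤ 2 * K1 * B * Y := by positivity
  have p3 : 0 ≤ 2 * K1 * B * Z := by positivity
  have p4 : 0 ≤ B * Z := by positivity
  have p5 : 0 ≤ B * Y := by positivity
  have q1 : 2 * (18 * B * Z) = 36 * (B * Z) := by ring
  have q2 : 8 * B * Y = 8 * (B * Y) := by ring
  rw [q1] at r1 r2
  rw [q2] at mid
  rw [e9]
  have r3 := e3.trans (hr.trans (add_le_add r2 r1))
  linarith

/-- The width of the zero-free region at height `T²`. -/
noncomputable def etaT (C T : ℝ) : ℝ := C * log (log (T ^ 2)) / log (T ^ 2)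

lemma log_sq' (T : ℝ) : log (T ^ 2) = 2 * log T := by
  rw [Real.log_pow]; norm_num

lemma rpow_eta {T : ℝ} (hT : 3 ≤ T) (C a : ℝ) (ha : 0 ≤ a) (hC : 0 ≤ C) :
    T ^ (-(a * etaT C T)) ≤ log T ^ (-(a * C / 2)) := by
  have hL := one_le_log hT
  have hT0 : 0 < T := by linarith
  have : T ^ (-(a * etaT C T)) = (2 * log T) ^ (-(a * C / 2)) := by
    rw [Real.rpow_def_of_pos hT0, Real.rpow_def_of_pos (by linarith), etaT, log_sq']
    congr 1
    field_simp
  rw [this]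
  exact Real.rpow_le_rpow_of_nonpos (by linarith) (by linarith)
    (by have : 0 ≤ a * C / 2 := by positivity
        linarith)

lemma ev_log_cube_le (c : ℝ) (hc : 0 < c) : ∀ᶠ T : ℝ in atTop, log T ^ 3 ≤ T ^ c := by
  obtain ⟨u₀, h⟩ := exists_pow_le_exp (1 / c ^ 3) 3
  filter_upwards [ev_log_ge (u₀ / c), eventually_gt_atTop 0] with T hT hT0
  have h1 : u₀ ≤ c * log T := by
    rw [div_le_iff₀ hc] at hT; linarith
  have h2 := h _ h1
  rw [Real.rpow_def_of_pos hT0, mul_comm (log T)]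
  refine le_trans (le_of_eq ?_) h2
  field_simp

lemma ev_exp_sq : ∀ᶠ T : ℝ in atTop, T ^ 5 * log T ^ 4 ≤ exp (T ^ 2 / 2) := by
  obtain ⟨u₀, h⟩ := exists_pow_le_exp 1 9
  filter_upwards [eventually_ge_atTop u₀, eventually_ge_atTop 3] with T hT hT3
  have h1 : log T ≤ T := by have := Real.log_le_sub_one_of_pos (show 0 < T by linarith); linarith
  have hL := one_le_log hT3
  calc T ^ 5 * log T ^ 4 ≤ T ^ 5 * T ^ 4 := by gcongr
    _ = 1 * T ^ 9 := by ring
    _ ≤ exp T := h T hT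
    _ ≤ _ := Real.exp_le_exp.2 (by nlinarith)

lemma ev_region {C : ℝ} (hC : 0 < C) : ∃ B : ℝ, 1 ≤ B ∧ ∀ᶠ T : ℝ in atTop,
    Region B T (etaT C T) ∧ 0 ≤ etaT C T ∧ etaT C T ≤ 1 / 4 := by
  obtain ⟨B, hB, h⟩ := zeta_region hC
  have hsq : Tendsto (fun T : ℝ => T ^ 2) atTop atTop := tendsto_pow_atTop (by norm_num)
  have h3 : ∀ᶠ T : ℝ in atTop, 4 * C * log (log T) ^ 1 ≤ log T := ev_loglog (4 * C) 1
  refine ⟨max B 1, le_max_right _ _, ?_⟩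
  filter_upwards [hsq.eventually h, hsq.eventually h3, eventually_ge_atTop 3] with T h1 h2 hT
  have hL := one_le_log hT
  have hl2 : 2 ≤ log (T ^ 2) := by rw [log_sq']; linarith
  refine ⟨fun s ha hb hc => ?_, ?_, ?_⟩
  · obtain ⟨h5, h6, h7⟩ := h1 s ha hb hc
    refine ⟨h5, fun h => ?_, fun h => (h7 h).trans (le_max_left _ _)⟩
    rw [← log_sq']
    refine (h6 h).trans ?_
    gcongr
    exact le_max_left _ _
  · have : 0 ≤ log (log (T ^ 2)) := Real.log_nonneg (by linarith)
    unfold etaT; positivity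
  · rw [etaT, div_le_iff₀ (by linarith)]; linarith

set_option maxHeartbeats 1000000 in
/-- `FF_main` with `η` a large multiple of `log log T / log T`. -/
lemma FF_asymp {c C : ℝ} (h : Subconvex c C) : ∀ᶠ T : ℝ in atTop, ∀ x : ℝ, T ^ (3 - c) ≤ x →
    x ≤ T ^ 3 →
    ‖∫ t in (-T ^ 2)..(T ^ 2), FF (((2 : ℝ) : ℂ) + t * I) *
      EE T x (((2 : ℝ) : ℂ) + t * I)‖ ≤ x / log T := by
  obtain ⟨K, hK1, hK⟩ := FF_main h
  obtain ⟨hc0, hc, -, -⟩ := h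
  obtain ⟨B, hB, hreg⟩ := ev_region (C := 10 / c) (by positivity)
  filter_upwards [hreg, ev_log_cube_le c hc0, ev_exp_sq, ev_log_ge (9 * K * B),
    eventually_ge_atTop 16] with T ⟨hR, hη0, hη⟩ hcube hexp hlog hT x hx1 hx2
  have hT3 : 3 ≤ T := by linarith
  have hT0 : 0 < T := by linarith
  have hL := one_le_log hT3
  set U := ⌈T⌉₊ with hU
  have hU1 : T ≤ U := Nat.le_ceil T
  have hU2 : (U : ℝ) ≤ 2 * T := by have := Nat.ceil_lt_add_one hT0.le; linarith
  have hT2 : 4 * T ^ 2 ≤ x := by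
    refine le_trans ?_ hx1
    have e1 : T ^ (2 + 1 / 2 : ℝ) ≤ T ^ (3 - c) :=
      rpow_le_rpow_of_exponent_le (by linarith) (by linarith)
    rw [rpow_add hT0, Real.rpow_two, ← Real.sqrt_eq_rpow] at e1
    have : 4 ≤ √T := Real.le_sqrt_of_sq_le (by linarith)
    nlinarith [sq_nonneg T]
  have hUx : (U : ℝ) ^ 2 ≤ x := by nlinarith
  have hx0 : 0 < x := by nlinarith
  have main := hK T hT3 U hU1 hU2 (etaT (10 / c) T) x B hη0 hη hUx hB hR
  refine main.trans ?_
  have hr1 := rpow_eta hT3 (10 / c) (2 * c) (by linarith) (by positivity)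
  have hr2 := rpow_eta hT3 (10 / c) (1 / 2) (by linarith) (by positivity)
  set η := etaT (10 / c) T
  set L := log T
  have e10 : L ^ (-(2 * c * (10 / c) / 2)) ≤ L⁻¹ ^ 9 := by
    have : -(2 * c * (10 / c) / 2) = -10 := by field_simp
    rw [this, inv_pow, ← rpow_natCast, ← Real.rpow_neg (by linarith)]
    exact rpow_le_rpow_of_exponent_le hL (by norm_num)
  have e20 : L ^ (-(1 / 2 * (10 / c) / 2)) ≤ L⁻¹ ^ 4 := by
    rw [inv_pow, ← rpow_natCast, ← Real.rpow_neg (by linarith)]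
    refine rpow_le_rpow_of_exponent_le hL ?_
    have : 8 ≤ 1 / c := by rw [le_div_iff₀ hc0]; linarith
    have e : 1 / 2 * (10 / c) / 2 = 5 / 2 * (1 / c) := by ring
    rw [e]; push_cast; linarith
  have hLi : 0 < L⁻¹ := by positivity
  have hLi1 : L⁻¹ ≤ 1 := inv_le_one_of_one_le₀ hL
  have hxη : ∀ a : ℝ, 0 ≤ a → x ^ (-a) ≤ T ^ (-((3 - c) * a)) := by
    intro a ha
    calc x ^ (-a) ≤ (T ^ (3 - c)) ^ (-a) :=
          Real.rpow_le_rpow_of_nonpos (by positivity) hx1 (by linarith)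
      _ = _ := by rw [← rpow_mul hT0.le]; congr 1; ring
  have hxs : ∀ a : ℝ, x ^ (1 - a) = x * x ^ (-a) := by
    intro a; rw [sub_eq_add_neg, rpow_add hx0, rpow_one]
  have t1 : T ^ (3 / 2 - 2 * c) * L * x ^ (1 / 2 + c / 6) ≤ x * L⁻¹ ^ 2 := by
    have e0 : x ^ (1 / 2 + c / 6) = x * x ^ (-(1 / 2 - c / 6)) := by rw [← hxs]; congr 1; ring
    have e1 := hxη (1 / 2 - c / 6) (by linarith)
    have e2 : T ^ (3 / 2 - 2 * c) * T ^ (-((3 - c) * (1 / 2 - c / 6))) ≤ T ^ (-c) := by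
      rw [← rpow_add hT0]
      exact rpow_le_rpow_of_exponent_le (by linarith) (by nlinarith)
    have e3 : T ^ (-c) ≤ L⁻¹ ^ 3 := by
      rw [Real.rpow_neg hT0.le, inv_pow]
      exact inv_anti₀ (by positivity) hcube
    calc _ = x * L * (T ^ (3 / 2 - 2 * c) * x ^ (-(1 / 2 - c / 6))) := by rw [e0]; ring
      _ ≤ x * L * (T ^ (3 / 2 - 2 * c) * T ^ (-((3 - c) * (1 / 2 - c / 6)))) := by gcongr
      _ ≤ x * L * L⁻¹ ^ 3 := by gcongr; exact e2.trans e3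
      _ = _ := by field_simp
  have hsmall : T ^ (-(1 / 2 * η)) ≤ L⁻¹ ^ 4 := hr2.trans e20
  have t5 : x ^ (1 - η) ≤ x * L⁻¹ ^ 2 := by
    rw [hxs]
    gcongr
    calc x ^ (-η) ≤ T ^ (-((3 - c) * η)) := hxη η hη0
      _ ≤ T ^ (-(1 / 2 * η)) := rpow_le_rpow_of_exponent_le (by linarith) (by nlinarith)
      _ ≤ L⁻¹ ^ 4 := hsmall
      _ ≤ L⁻¹ ^ 2 := pow_le_pow_of_le_one hLi.le hLi1 (by norm_num)
  have t2 : L ^ 2 * (x * (U ^ 2 / x) ^ η) ≤ 4 * (x * L⁻¹ ^ 2) := by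
    have e1 : ((U : ℝ) ^ 2 / x) ^ η ≤ 4 * L⁻¹ ^ 4 := by
      calc ((U : ℝ) ^ 2 / x) ^ η ≤ (4 * T ^ (-(1 / 2 : ℝ))) ^ η := by
            refine Real.rpow_le_rpow (by positivity) ?_ hη0
            rw [div_le_iff₀ hx0]
            calc (U : ℝ) ^ 2 ≤ (2 * T) ^ 2 := by gcongr
              _ = 4 * (T ^ (-(1 / 2 : ℝ)) * T ^ (2 + 1 / 2 : ℝ)) := by
                rw [← rpow_add hT0, show -(1 / 2 : ℝ) + (2 + 1 / 2) = 2 by norm_num,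
                  Real.rpow_two]; ring
              _ ≤ 4 * (T ^ (-(1 / 2 : ℝ)) * T ^ (3 - c)) := by
                gcongr
                · linarith
                · linarith
              _ ≤ 4 * (T ^ (-(1 / 2 : ℝ)) * x) := by gcongr
              _ = _ := by ring
        _ = 4 ^ η * T ^ (-(1 / 2 * η)) := by
            rw [mul_rpow (by norm_num) (by positivity), ← rpow_mul hT0.le]
            congr 2; ring
        _ ≤ 4 * L⁻¹ ^ 4 := by
            gcongr
            calc (4 : ℝ) ^ η ≤ 4 ^ (1 : ℝ) :=
                  rpow_le_rpow_of_exponent_le (by norm_num) (by linarith)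
              _ = 4 := rpow_one _
    calc _ ≤ L ^ 2 * (x * (4 * L⁻¹ ^ 4)) := by gcongr
      _ = _ := by field_simp
  have hexp0 : T ^ 5 * L ^ 4 * exp (-(T ^ 2 / 2)) ≤ 1 := by
    rw [Real.exp_neg, ← div_eq_mul_inv]
    exact (div_le_one (Real.exp_pos _)).2 hexp
  have t6 : x ^ 2 * T ^ 2 * L ^ 2 * exp (-(T ^ 2 / 2)) ≤ x * L⁻¹ ^ 2 := by
    calc _ = x * (x * T ^ 2 * L ^ 2 * exp (-(T ^ 2 / 2))) := by ring
      _ ≤ x * (T ^ 3 * T ^ 2 * L ^ 2 * exp (-(T ^ 2 / 2))) := by gcongr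
      _ = x * (T ^ 5 * L ^ 4 * exp (-(T ^ 2 / 2))) * L⁻¹ ^ 2 := by field_simp
      _ ≤ x * 1 * L⁻¹ ^ 2 := by gcongr
      _ = _ := by ring
  have t3 : x * T ^ 3 * exp (-(T ^ 2 / 2)) ≤ x * L⁻¹ ^ 2 := by
    refine le_trans ?_ t6
    have : T ≤ x := by nlinarith
    have hl2 : 1 ≤ L ^ 2 := one_le_pow₀ hL
    calc _ = x * T * T ^ 2 * 1 * exp (-(T ^ 2 / 2)) := by ring
      _ ≤ x * x * T ^ 2 * L ^ 2 * exp (-(T ^ 2 / 2)) := by gcongr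
      _ = _ := by ring
  have t4 : x ^ (1 - η) * T ^ ((3 - 3 * c) * η) * L ^ 7 ≤ x * L⁻¹ ^ 2 := by
    rw [hxs]
    calc _ ≤ x * T ^ (-((3 - c) * η)) * T ^ ((3 - 3 * c) * η) * L ^ 7 := by
          gcongr
          exact hxη η hη0
      _ = x * T ^ (-(2 * c * η)) * L ^ 7 := by
          rw [mul_assoc x, ← rpow_add hT0]; congr 3; ring
      _ ≤ x * L⁻¹ ^ 9 * L ^ 7 := by gcongr; exact hr1.trans e10
      _ = _ := by field_simp
  set Q := x * L⁻¹ ^ 2 with hQ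
  calc _ ≤ K * B * (Q + 4 * Q + Q + Q + Q + Q) := by gcongr
    _ = 9 * K * B * Q := by ring
    _ ≤ L * Q := by gcongr
    _ = _ := by rw [hQ]; field_simp

end VMT

namespace VMT
open Finset Filter Topology
open ArithmeticFunction hiding log
open Complex (I)
open Real (log exp rpow_natCast rpow_mul rpow_add rpow_one mul_rpow norm_of_nonneg
  rpow_le_rpow_of_exponent_le)
open scoped Real

/-! ### The smoothed prime sum -/

/-- The smooth weight selecting the integers `n` with `log (x / n) ≪ 1 / T`. -/
noncomputable def ww (T x : ℝ) (n : ℕ) : ℝ :=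
  if n = 0 then 0 else exp (-(T ^ 2 * log (x / n) ^ 2 / 2))

/-- The point `2 + it`. -/
noncomputable def two (t : ℝ) : ℂ := ((2 : ℝ) : ℂ) + t * I

lemma two_re (t : ℝ) : (two t).re = 2 := by simp [two]
lemma two_im (t : ℝ) : (two t).im = t := by simp [two]
lemma continuous_two : Continuous two := continuous_lineC 2
lemma two_ne (t : ℝ) : two t ≠ 1 := by
  intro h; have := two_re t; rw [h] at this; norm_num at this

lemma term_eq {T x : ℝ} (hT : 0 < T) (hx : 0 < x) {n : ℕ} (hn : 0 < n) (t : ℝ) :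
    (n : ℂ) ^ (-two t) * EE T x (two t) =
      (exp (2 * log (x / n) + 2 / T ^ 2) : ℂ) *
      (Complex.exp (-(t ^ 2 / (√2 * T) ^ 2 : ℝ)) *
        Complex.exp (I * ((t * (log (x / n) + 2 / T ^ 2) : ℝ) : ℂ))) := by
  have hn0 : (n : ℂ) ≠ 0 := by exact_mod_cast hn.ne'
  have hx0 : (x : ℂ) ≠ 0 := by exact_mod_cast hx.ne'
  have hnR : (n : ℝ) ≠ 0 := by exact_mod_cast hn.ne'
  rw [EE, Complex.cpow_def_of_ne_zero hn0, Complex.cpow_def_of_ne_zero hx0, ← Complex.natCast_log,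
    ← Complex.ofReal_log hx.le, ← Complex.exp_add, ← Complex.exp_add, Complex.ofReal_exp,
    ← Complex.exp_add, ← Complex.exp_add, Real.log_div hx.ne' hnR, mul_pow,
    Real.sq_sqrt (by norm_num)]
  congr 1
  have hT' : (T : ℂ) ≠ 0 := by exact_mod_cast hT.ne'
  rw [two]
  push_cast
  field_simp
  ring_nf
  rw [Complex.I_sq]
  ring

lemma term_integral {T x : ℝ} (hT : 0 < T) (hx : 0 < x) {n : ℕ} (hn : 0 < n) :
    ∫ t : ℝ, (n : ℂ) ^ (-two t) * EE T x (two t) =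
      ((√π * (√2 * T) * ww T x n : ℝ) : ℂ) := by
  simp_rw [term_eq hT hx hn]
  rw [MeasureTheory.integral_const_mul, gauss_integral (by positivity), ← Complex.ofReal_mul]
  congr 1
  rw [ww, if_neg hn.ne', mul_left_comm, ← Real.exp_add, mul_pow, Real.sq_sqrt (by norm_num)]
  congr 2
  field_simp
  ring

lemma EE_two_le {T x : ℝ} (hT : 3 ≤ T) (hx : 0 < x) (t : ℝ) :
    ‖EE T x (two t)‖ ≤ 2 * x ^ 2 * exp (-(t ^ 2 / (√2 * T) ^ 2)) := by
  have := norm_EE_le hT hx (s := two t) (by rw [two_re]; norm_num) (by rw [two_re])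
  rw [two_re, two_im] at this
  rw [mul_pow, Real.sq_sqrt (by norm_num)]
  exact_mod_cast this

lemma norm_natCast_cpow_two (n : ℕ) (t : ℝ) : ‖(n : ℂ) ^ (-two t)‖ = ‖(n : ℂ) ^ (-two 0)‖ := by
  rcases Nat.eq_zero_or_pos n with rfl | hn
  · have h : ∀ t, -two t ≠ 0 := by
      intro t h; have := congrArg Complex.re h; simp [two_re] at this
    rw [Nat.cast_zero, Complex.zero_cpow (h t), Complex.zero_cpow (h 0)]
  · rw [Complex.norm_natCast_cpow_of_pos hn, Complex.norm_natCast_cpow_of_pos hn]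
    simp [two_re]

lemma hasSum_FF (t : ℝ) :
    HasSum (fun n : ℕ => ((vonMangoldt n - 1 : ℝ) : ℂ) * (n : ℂ) ^ (-two t)) (FF (two t)) := by
  have h1 := (hasSum_zq (s := two t) (by rw [two_re]; norm_num)).sub
    (hasSum_zeta (s := two t) (by rw [two_re]; norm_num))
  rw [FF_eq (two_ne t) (Zet_ne_zero (by rw [two_re]; norm_num))]
  refine HasSum.congr_fun h1 fun n => ?_
  push_cast; ring

lemma summable_norm_FF :
    Summable fun n : ℕ => ‖((vonMangoldt n - 1 : ℝ) : ℂ) * (n : ℂ) ^ (-two 0)‖ :=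
  (hasSum_FF 0).summable.norm

lemma norm_FF_two_le : ∃ B : ℝ, 0 < B ∧ ∀ t : ℝ, ‖FF (two t)‖ ≤ B := by
  refine ⟨1 + ∑' n : ℕ, ‖((vonMangoldt n - 1 : ℝ) : ℂ) * (n : ℂ) ^ (-two 0)‖, ?_, fun t => ?_⟩
  · have : 0 ≤ ∑' n : ℕ, ‖((vonMangoldt n - 1 : ℝ) : ℂ) * (n : ℂ) ^ (-two 0)‖ :=
      tsum_nonneg fun n => norm_nonneg _
    linarith
  · rw [← (hasSum_FF t).tsum_eq]
    have := tsum_of_norm_bounded summable_norm_FF.hasSum (f := fun n : ℕ =>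
      ((vonMangoldt n - 1 : ℝ) : ℂ) * (n : ℂ) ^ (-two t)) fun n => by
        rw [norm_mul, norm_mul, norm_natCast_cpow_two n t]
    linarith

lemma continuous_FF_two : Continuous fun t => FF (two t) := by
  rw [continuous_iff_continuousAt]
  intro t
  exact (differentiableAt_FF (Zet_ne_zero (by rw [two_re]; norm_num))).continuousAt.comp_of_eq
    continuous_two.continuousAt rfl

lemma continuous_EE_two (T : ℝ) {x : ℝ} (hx : 0 < x) : Continuous fun t => EE T x (two t) :=
  (differentiable_EE T hx).continuous.comp continuous_two

lemma integrable_EE {T x : ℝ} (hT : 3 ≤ T) (hx : 0 < x) :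
    MeasureTheory.Integrable fun t => EE T x (two t) :=
  ((integrable_gauss (Θ := √2 * T) (by positivity)).const_mul (2 * x ^ 2)).mono'
    (continuous_EE_two T hx).aestronglyMeasurable (Eventually.of_forall (EE_two_le hT hx))

lemma hasSum_integral_FF {T x : ℝ} (hT : 3 ≤ T) (hx : 0 < x) :
    HasSum (fun n : ℕ => (((vonMangoldt n - 1) * (√π * (√2 * T) * ww T x n) : ℝ) : ℂ))
      (∫ t, FF (two t) * EE T x (two t)) := by
  have hT0 : 0 < T := by linarith
  have hInt := integrable_EE hT hx
  have hcp : ∀ n : ℕ, Continuous fun t => (n : ℂ) ^ (-two t) := by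
    intro n
    rcases Nat.eq_zero_or_pos n with rfl | hn
    · have h : ∀ t, -two t ≠ 0 := by
        intro t h; have := congrArg Complex.re h; simp [two_re] at this
      simp_rw [Nat.cast_zero, Complex.zero_cpow (h _)]
      exact continuous_const
    · exact (continuous_two.neg).const_cpow (Or.inl (by exact_mod_cast hn.ne'))
  have h1 : ∀ n : ℕ, MeasureTheory.Integrable fun t =>
      ((vonMangoldt n - 1 : ℝ) : ℂ) * (n : ℂ) ^ (-two t) * EE T x (two t) := by
    intro n
    refine hInt.bdd_mul (c := ‖((vonMangoldt n - 1 : ℝ) : ℂ) * (n : ℂ) ^ (-two 0)‖)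
      (continuous_const.mul (hcp n)).aestronglyMeasurable (Eventually.of_forall fun t => ?_)
    rw [norm_mul, norm_mul, norm_natCast_cpow_two n t]
  have h2 : Summable fun n : ℕ => ∫ t, ‖((vonMangoldt n - 1 : ℝ) : ℂ) * (n : ℂ) ^ (-two t) *
      EE T x (two t)‖ := by
    have := summable_norm_FF.mul_right (∫ t, ‖EE T x (two t)‖)
    refine this.congr fun n => ?_
    rw [← MeasureTheory.integral_const_mul]
    congr 1; ext t
    rw [norm_mul, norm_mul, norm_mul, norm_natCast_cpow_two n t]
  have h3 := MeasureTheory.hasSum_integral_of_summable_integral_norm h1 h2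
  have h4 : (∫ t, FF (two t) * EE T x (two t)) = ∫ t, ∑' n : ℕ,
      ((vonMangoldt n - 1 : ℝ) : ℂ) * (n : ℂ) ^ (-two t) * EE T x (two t) := by
    congr 1; ext t
    rw [← ((hasSum_FF t).mul_right _).tsum_eq]
  rw [h4]
  refine HasSum.congr_fun h3 fun n => ?_
  rcases Nat.eq_zero_or_pos n with rfl | hn
  · have h : ∀ t, -two t ≠ 0 := by
      intro t h; have := congrArg Complex.re h; simp [two_re] at this
    simp [ww, Complex.zero_cpow (h _)]
  · simp_rw [mul_assoc]
    rw [MeasureTheory.integral_const_mul, term_integral hT0 hx hn, ← Complex.ofReal_mul]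
    push_cast
    ring

lemma tail_le {B T x : ℝ} (hB : ∀ t : ℝ, ‖FF (two t)‖ ≤ B) (hT : 3 ≤ T) (hx : 0 < x) :
    ‖(∫ t, FF (two t) * EE T x (two t)) -
      ∫ t in (-T ^ 2)..(T ^ 2), FF (two t) * EE T x (two t)‖ ≤
      8 * B * x ^ 2 * T * exp (-(T ^ 2 / 4)) := by
  have hT0 : 0 < T := by linarith
  have hB0 : 0 ≤ B := (norm_nonneg _).trans (hB 0)
  have hInt : MeasureTheory.Integrable fun t => FF (two t) * EE T x (two t) :=
    (integrable_EE hT hx).bdd_mul continuous_FF_two.aestronglyMeasurable (Eventually.of_forall hB)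
  have hle : -T ^ 2 ≤ T ^ 2 := by nlinarith
  have hms : MeasurableSet (Set.Ioc (-T ^ 2) (T ^ 2)) := measurableSet_Ioc
  rw [intervalIntegral.integral_of_le hle, ← MeasureTheory.integral_indicator hms,
    ← MeasureTheory.integral_sub hInt (hInt.indicator hms)]
  have hg := (integrable_gauss (Θ := 2 * T) (by positivity)).const_mul
    (2 * B * x ^ 2 * exp (-(T ^ 2 / 4)))
  have hI : ∫ t : ℝ, exp (-(t ^ 2 / (2 * T) ^ 2)) ≤ 4 * T := by
    have h := integral_gaussian (1 / (2 * T) ^ 2)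
    have e : ∀ t : ℝ, -(1 / (2 * T) ^ 2) * t ^ 2 = -(t ^ 2 / (2 * T) ^ 2) := fun t => by ring
    simp_rw [e] at h
    rw [h, div_div_eq_mul_div, div_one, Real.sqrt_mul Real.pi_pos.le, Real.sqrt_sq (by linarith)]
    have : √π ≤ 2 := Real.sqrt_le_iff.2 ⟨by norm_num, by linarith [Real.pi_le_four]⟩
    nlinarith
  refine (MeasureTheory.norm_integral_le_of_norm_le hg (Eventually.of_forall fun t => ?_)).trans ?_
  · by_cases ht : t ∈ Set.Ioc (-T ^ 2) (T ^ 2)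
    · rw [Set.indicator_of_mem ht, sub_self, norm_zero]; positivity
    · rw [Set.indicator_of_notMem ht, sub_zero, norm_mul]
      have ht2 : T ^ 4 ≤ t ^ 2 := by
        have : T ^ 2 ≤ |t| := by
          by_contra hlt
          push Not at hlt
          rw [abs_lt] at hlt
          exact ht ⟨hlt.1, hlt.2.le⟩
        rw [← sq_abs t]
        nlinarith [sq_nonneg T]
      have h1 := EE_two_le hT hx t
      have h2 : exp (-(t ^ 2 / (√2 * T) ^ 2)) ≤
          exp (-(T ^ 2 / 4)) * exp (-(t ^ 2 / (2 * T) ^ 2)) := by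
        rw [← Real.exp_add, mul_pow, Real.sq_sqrt (by norm_num)]
        refine Real.exp_le_exp.2 ?_
        have : T ^ 2 / 4 ≤ t ^ 2 / (2 * T) ^ 2 := by
          rw [div_le_div_iff₀ (by norm_num) (by positivity)]; nlinarith
        have e : t ^ 2 / (2 * T ^ 2) = t ^ 2 / (2 * T) ^ 2 + t ^ 2 / (2 * T) ^ 2 := by
          field_simp; ring
        linarith
      calc _ ≤ B * (2 * x ^ 2 * (exp (-(T ^ 2 / 4)) * exp (-(t ^ 2 / (2 * T) ^ 2)))) := by
            gcongr
            · exact hB t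
            · exact h1.trans (by gcongr)
        _ = _ := by ring
  · rw [MeasureTheory.integral_const_mul]
    calc _ ≤ 2 * B * x ^ 2 * exp (-(T ^ 2 / 4)) * (4 * T) := by gcongr
      _ = _ := by ring

/-- The smoothed prime number theorem in intervals of length `x / T` around `x`. -/
lemma sum_asymp : ∃ c : ℝ, 0 < c ∧ c ≤ 1 / 8 ∧ ∀ᶠ T : ℝ in atTop, ∀ x : ℝ, T ^ (3 - c) ≤ x →
    x ≤ T ^ 3 → Summable (fun n : ℕ => (vonMangoldt n - 1) * ww T x n) ∧
      |∑' n : ℕ, (vonMangoldt n - 1) * ww T x n| ≤ x / (T * log T) := by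
  obtain ⟨c, hc0, hc, C, hC, hz⟩ := zeta_subconvex
  have hS : Subconvex c C := ⟨hc0, hc, hC, hz⟩
  obtain ⟨B, hB0, hB⟩ := norm_FF_two_le
  refine ⟨c, hc0, hc, ?_⟩
  obtain ⟨u₀, hu⟩ := exists_pow_le_exp (8 * B) 5
  filter_upwards [FF_asymp hS, eventually_ge_atTop 4, eventually_ge_atTop u₀] with T h1 hT4 hTu x hx1 hx2
  have hT : 3 ≤ T := by linarith
  have hT0 : 0 < T := by linarith
  have hL := one_le_log hT
  have hx0 : 0 < x := lt_of_lt_of_le (by positivity) hx1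
  have h2 := h1 x hx1 hx2
  have h3 := tail_le hB hT hx0
  have hs := hasSum_integral_FF hT hx0
  set J := ∫ t, FF (two t) * EE T x (two t)
  have h4 : 8 * B * x ^ 2 * T * exp (-(T ^ 2 / 4)) ≤ x / log T := by
    rw [le_div_iff₀ (by linarith), Real.exp_neg, ← div_eq_mul_inv, div_mul_eq_mul_div,
      div_le_iff₀ (Real.exp_pos _)]
    have h5 : log T ≤ T := by have := Real.log_le_sub_one_of_pos hT0; linarith
    have h6 : exp T ≤ exp (T ^ 2 / 4) := Real.exp_le_exp.2 (by nlinarith)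
    calc 8 * B * x ^ 2 * T * log T = x * (8 * B * (x * T * log T)) := by ring
      _ ≤ x * (8 * B * (T ^ 3 * T * T)) := by gcongr
      _ = x * (8 * B * T ^ 5) := by ring
      _ ≤ x * exp (T ^ 2 / 4) := by gcongr; exact (hu T hTu).trans h6
  have h5 : ‖J‖ ≤ 2 * (x / log T) := by
    have := norm_sub_norm_le J (∫ t in (-T ^ 2)..(T ^ 2), FF (two t) * EE T x (two t))
    have h2' : ‖∫ t in (-T ^ 2)..(T ^ 2), FF (two t) * EE T x (two t)‖ ≤ x / log T := h2
    linarith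
  set k : ℝ := √π * (√2 * T) with hk
  have hk2 : 2 * T ≤ k := by
    have e1 : (1.7 : ℝ) ≤ √π := Real.le_sqrt_of_sq_le (by linarith [Real.pi_gt_three])
    have e2 : (1.4 : ℝ) ≤ √2 := Real.le_sqrt_of_sq_le (by norm_num)
    calc 2 * T ≤ 1.7 * (1.4 * T) := by linarith
      _ ≤ k := by rw [hk]; gcongr
  have hk0 : 0 < k := by linarith
  have hsr := Complex.hasSum_re hs
  simp only [Complex.ofReal_re] at hsr
  have hsr2 : HasSum (fun n : ℕ => (vonMangoldt n - 1) * ww T x n) (J.re / k) := by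
    refine HasSum.congr_fun (hsr.div_const k) fun n => ?_
    field_simp
  refine ⟨hsr2.summable, ?_⟩
  rw [hsr2.tsum_eq, abs_div, abs_of_pos hk0, div_le_div_iff₀ hk0 (by positivity)]
  have h6 := (Complex.abs_re_le_norm J).trans h5
  calc |J.re| * (T * log T) ≤ 2 * (x / log T) * (T * log T) := by gcongr
    _ = x * (2 * T) := by field_simp
    _ ≤ x * k := by gcongr

/-! ### Primes between consecutive cubes -/

lemma abs_log_ge {q n : ℕ} (hq : 2 ≤ q) (hn : n ≠ 0) (hA : n ∉ Ico (q ^ 3) ((q + 1) ^ 3)) :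
    1 / (4 * (q : ℝ)) ≤ |log (((q : ℝ) ^ 3 + 3 / 2 * q ^ 2) / n)| := by
  have hQ : (2 : ℝ) ≤ q := by exact_mod_cast hq
  have hn0 : (0 : ℝ) < n := by positivity
  set Q : ℝ := (q : ℝ) with hQd
  have hx : 0 < Q ^ 3 + 3 / 2 * Q ^ 2 := by positivity
  rw [mem_Ico, not_and_or, not_le, not_lt] at hA
  rcases hA with h | h
  · have h1 : (n : ℝ) ≤ (q : ℝ) ^ 3 := by exact_mod_cast h.le
    refine le_trans ?_ (le_abs_self _)
    refine le_trans ?_ (Real.one_sub_inv_le_log_of_pos (by positivity))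
    rw [inv_div, le_sub_iff_add_le, ← le_sub_iff_add_le', div_le_iff₀ hx]
    refine h1.trans ?_
    rw [← sub_nonneg]
    have : (1 - 1 / (4 * Q)) * (Q ^ 3 + 3 / 2 * Q ^ 2) - Q ^ 3 = Q * (Q * 5 / 4 - 3 / 8) := by
      field_simp; ring
    rw [this]; nlinarith
  · have h1 : ((q : ℝ) + 1) ^ 3 ≤ n := by exact_mod_cast h
    refine le_trans ?_ (neg_le_abs _)
    rw [← Real.log_inv, inv_div]
    refine le_trans ?_ (Real.one_sub_inv_le_log_of_pos (by positivity))
    rw [inv_div, le_sub_iff_add_le, ← le_sub_iff_add_le', div_le_iff₀ hn0]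
    have h0 : 0 ≤ 1 - 1 / (4 * Q) := by
      rw [sub_nonneg, div_le_one (by positivity)]; linarith
    refine le_trans ?_ (mul_le_mul_of_nonneg_left h1 h0)
    rw [← sub_nonneg]
    have : (1 - 1 / (4 * Q)) * (Q + 1) ^ 3 - (Q ^ 3 + 3 / 2 * Q ^ 2) =
      (5 * Q ^ 3 + 9 * Q ^ 2 + Q - 1) / (4 * Q) := by
      field_simp; ring
    rw [this]
    have : 0 ≤ 5 * Q ^ 3 + 9 * Q ^ 2 + Q - 1 := by nlinarith [sq_nonneg Q, pow_nonneg (by linarith : (0:ℝ) ≤ Q) 3]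
    positivity

/-- Terms off the window: half of the Gaussian exponent supplies the exponential factor, the other
half dominates `(x / n) ^ 3`, which makes the sum over `n` converge. -/
lemma term_le {q n : ℕ} {T : ℝ} (hT : 6 ≤ T) (hq : 2 ≤ q)
    (hA : n ∉ Ico (q ^ 3) ((q + 1) ^ 3)) :
    (vonMangoldt n - 1) * ww T ((q : ℝ) ^ 3 + 3 / 2 * q ^ 2) n ≤
      2 * exp (-(T ^ 2 / (64 * q ^ 2))) * ((q : ℝ) ^ 3 + 3 / 2 * q ^ 2) ^ 3 *
        (1 / (n : ℝ) ^ 2) := by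
  rcases eq_or_ne n 0 with rfl | hn
  · simp [ww]
  have hl := abs_log_ge hq hn hA
  have hQ : (0 : ℝ) < q := by positivity
  have hn0 : (0 : ℝ) < n := by positivity
  set x : ℝ := (q : ℝ) ^ 3 + 3 / 2 * q ^ 2
  have hx : 0 < x := by positivity
  set l := log (x / n) with hl'
  have h1 : vonMangoldt n - 1 ≤ n := by
    have := vonMangoldt_le_log (n := n)
    have := Real.log_le_sub_one_of_pos hn0
    linarith
  have h2 : ww T x n ≤ 2 * exp (-(T ^ 2 / (64 * q ^ 2))) * (x / n) ^ 3 := by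
    have e1 : (x / n) ^ 3 = exp (3 * l) := by
      rw [mul_comm, hl', Real.exp_mul, Real.exp_log (by positivity)]; norm_cast
    have e2 : exp (1 / 4) ≤ 2 := by
      have := Real.exp_bound_div_one_sub_of_interval (x := 1 / 4) (by norm_num) (by norm_num)
      norm_num at this ⊢; linarith
    have h3 : T ^ 2 / (64 * q ^ 2) ≤ T ^ 2 * l ^ 2 / 4 := by
      have : (1 / (4 * (q : ℝ))) ^ 2 ≤ l ^ 2 := by
        rw [← sq_abs l]; gcongr
      calc T ^ 2 / (64 * q ^ 2) = T ^ 2 * (1 / (4 * (q : ℝ))) ^ 2 / 4 := by field_simp; norm_num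
        _ ≤ _ := by gcongr
    have h4 : 9 * l ^ 2 ≤ T ^ 2 * l ^ 2 / 4 := by
      nlinarith [sq_nonneg l, mul_le_mul hT hT (by norm_num) (by linarith)]
    rw [ww, if_neg hn, e1]
    calc _ ≤ exp (1 / 4 + -(T ^ 2 / (64 * q ^ 2)) + 3 * l) := by
          apply Real.exp_le_exp.2
          nlinarith [sq_nonneg (3 * l + 1 / 2)]
      _ ≤ _ := by rw [Real.exp_add, Real.exp_add]; gcongr
  have h0 : 0 ≤ ww T x n := by rw [ww, if_neg hn]; positivity
  calc _ ≤ (n : ℝ) * (2 * exp (-(T ^ 2 / (64 * q ^ 2))) * (x / n) ^ 3) := by gcongr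
    _ = _ := by field_simp

/-- The weights near the centre of the window contribute `≫ x / T`. -/
lemma sum_ww_ge {q : ℕ} {T : ℝ} (hT : 6 ≤ T) (hq : 2 ≤ q) (hqT : (q : ℝ) ≤ T) :
    ((q : ℝ) ^ 3 + 3 / 2 * q ^ 2) / (4 * T) - 1 / 2 ≤
      ∑ n ∈ Ico (q ^ 3) ((q + 1) ^ 3), ww T ((q : ℝ) ^ 3 + 3 / 2 * q ^ 2) n := by
  have hQ : (2 : ℝ) ≤ q := by exact_mod_cast hq
  set Q : ℝ := (q : ℝ) with hQd
  set x : ℝ := Q ^ 3 + 3 / 2 * Q ^ 2 with hxd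
  have hx : 0 < x := by positivity
  have hT0 : 0 < T := by linarith
  set y : ℝ := x / (4 * T) with hy
  have hy0 : 0 < y := by positivity
  have hyT : y * T = x / 4 := by rw [hy]; field_simp
  have hy1 : y ≤ Q ^ 2 / 2 := by
    rw [hy, div_le_iff₀ (by positivity)]
    nlinarith [mul_le_mul_of_nonneg_left hqT (sq_nonneg Q)]
  have hy2 : y ≤ x / 2 := by nlinarith
  have hsub : Icc ⌈x - y⌉₊ ⌊x + y⌋₊ ⊆ Ico (q ^ 3) ((q + 1) ^ 3) := by
    intro n hn
    rw [mem_Icc, Nat.ceil_le, Nat.le_floor_iff (by positivity)] at hn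
    rw [mem_Ico]
    have h1 : (q : ℝ) ^ 3 ≤ n := by nlinarith [hn.1]
    have h2 : (n : ℝ) < ((q : ℝ) + 1) ^ 3 := by nlinarith [hn.2]
    exact ⟨by exact_mod_cast h1, by exact_mod_cast h2⟩
  have hnn : ∀ n, 0 ≤ ww T x n := fun n => by rw [ww]; split_ifs <;> positivity
  refine le_trans ?_ (sum_le_sum_of_subset_of_nonneg hsub fun n _ _ => hnn n)
  have hge : ∀ n ∈ Icc ⌈x - y⌉₊ ⌊x + y⌋₊, 1 / 2 ≤ ww T x n := by
    intro n hn
    rw [mem_Icc, Nat.ceil_le, Nat.le_floor_iff (by positivity)] at hn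
    have hn0 : (0 : ℝ) < n := by linarith
    have hn1 : n ≠ 0 := by rintro rfl; simp at hn0
    have hl1 : log (x / n) ≤ 1 / T := by
      refine (Real.log_le_sub_one_of_pos (by positivity)).trans ?_
      rw [sub_le_iff_le_add, div_le_iff₀ hn0, ← sub_nonneg]
      have : (1 / T + 1) * n - x = ((n : ℝ) - x / 2 + (n - x + y) * T + (x / 2 - y * T)) / T := by
        field_simp; ring
      rw [this, hyT]
      have := mul_nonneg (by linarith : 0 ≤ (n : ℝ) - x + y) hT0.le
      apply div_nonneg _ hT0.le
      linarith
    have hl2 : -(1 / T) ≤ log (x / n) := by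
      rw [neg_le, ← Real.log_inv, inv_div]
      refine (Real.log_le_sub_one_of_pos (by positivity)).trans ?_
      rw [sub_le_iff_le_add, div_le_iff₀ hx, ← sub_nonneg]
      have : (1 / T + 1) * x - n = ((x + y - n) * T + (x - y * T)) / T := by
        field_simp; ring
      rw [this, hyT]
      have := mul_nonneg (by linarith : 0 ≤ x + y - n) hT0.le
      apply div_nonneg _ hT0.le
      linarith
    rw [ww, if_neg hn1]
    have h1 : T ^ 2 * log (x / n) ^ 2 ≤ 1 := by
      have := sq_le_sq' hl2 hl1
      calc _ ≤ T ^ 2 * (1 / T) ^ 2 := by gcongr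
        _ = 1 := by field_simp
    have := Real.add_one_le_exp (-(T ^ 2 * log (x / n) ^ 2 / 2))
    linarith
  refine le_trans ?_ (card_nsmul_le_sum _ _ _ hge)
  rw [Nat.card_Icc, nsmul_eq_mul]
  have h1 : (⌈x - y⌉₊ : ℝ) < x - y + 1 := Nat.ceil_lt_add_one (by linarith)
  have h2 : x + y < ⌊x + y⌋₊ + 1 := Nat.lt_floor_add_one _
  have h3 : ((⌊x + y⌋₊ + 1 : ℕ) : ℝ) ≤ ((⌊x + y⌋₊ + 1 - ⌈x - y⌉₊ : ℕ) : ℝ) + (⌈x - y⌉₊ : ℕ) := by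
    exact_mod_cast le_tsub_add
  push_cast at h3
  linarith

/-- Lower bound for the von Mangoldt sum over the window from the smoothed asymptotic. -/
lemma exists_sum_ge : ∃ K : ℝ, 0 < K ∧ ∀ (q : ℕ) (T : ℝ), 6 ≤ T → 2 ≤ q → (q : ℝ) ≤ T →
    Summable (fun n : ℕ => (vonMangoldt n - 1) * ww T ((q : ℝ) ^ 3 + 3 / 2 * q ^ 2) n) →
    ((q : ℝ) ^ 3 + 3 / 2 * q ^ 2) / (4 * T) - 1 / 2 +
      ∑' n : ℕ, (vonMangoldt n - 1) * ww T ((q : ℝ) ^ 3 + 3 / 2 * q ^ 2) n -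
      K * (exp (-(T ^ 2 / (64 * q ^ 2))) * ((q : ℝ) ^ 3 + 3 / 2 * q ^ 2) ^ 3)
      ≤ ∑ n ∈ Ico (q ^ 3) ((q + 1) ^ 3), vonMangoldt n := by
  have hz : Summable fun n : ℕ => 1 / (n : ℝ) ^ 2 := Real.summable_one_div_nat_pow.2 one_lt_two
  refine ⟨2 * ∑' n : ℕ, 1 / (n : ℝ) ^ 2, ?_, fun q T hT hq hqT hs => ?_⟩
  · exact mul_pos two_pos (hz.tsum_pos (fun n => by positivity) 1 (by norm_num))
  have h1 := sum_ww_ge hT hq hqT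
  set x : ℝ := (q : ℝ) ^ 3 + 3 / 2 * q ^ 2
  have hx : 0 ≤ x := by positivity
  set A := Ico (q ^ 3) ((q + 1) ^ 3)
  set E := exp (-(T ^ 2 / (64 * q ^ 2))) with hE
  have hnn : ∀ n, 0 ≤ ww T x n := fun n => by rw [ww]; split_ifs <;> positivity
  have hle : ∀ n, ww T x n ≤ 1 := fun n => by
    rw [ww]; split_ifs
    · norm_num
    · exact Real.exp_le_one_iff.2 (neg_nonpos.2 (by positivity))
  have hg : Summable fun n : ℕ => 2 * E * x ^ 3 * (1 / (n : ℝ) ^ 2) := hz.mul_left _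
  have hsA : Summable fun n : ℕ => if n ∈ A then (vonMangoldt n - 1) * ww T x n else 0 :=
    summable_of_ne_finset_zero (s := A) fun n hn => by simp [hn]
  have h2 : ∑' n : ℕ, (vonMangoldt n - 1) * ww T x n ≤
      ∑' n : ℕ, ((if n ∈ A then (vonMangoldt n - 1) * ww T x n else 0) +
        2 * E * x ^ 3 * (1 / (n : ℝ) ^ 2)) := by
    refine hs.tsum_le_tsum (fun n => ?_) (hsA.add hg)
    split_ifs with h
    · exact le_add_of_nonneg_right (by positivity)
    · rw [zero_add]; exact term_le hT hq h
  have h4 : (∑' n : ℕ, if n ∈ A then (vonMangoldt n - 1) * ww T x n else 0) =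
      ∑ n ∈ A, (vonMangoldt n - 1) * ww T x n := by
    rw [tsum_eq_sum (s := A) (fun n hn => if_neg hn), sum_congr rfl (fun n hn => if_pos hn)]
  rw [hsA.tsum_add hg, tsum_mul_left, h4] at h2
  have h3 : ∑ n ∈ A, (vonMangoldt n - 1) * ww T x n ≤
      ∑ n ∈ A, vonMangoldt n - ∑ n ∈ A, ww T x n := by
    rw [← sum_sub_distrib]
    refine sum_le_sum fun n _ => ?_
    have := mul_le_mul_of_nonneg_left (hle n) (vonMangoldt_nonneg (n := n))
    linarith
  linarith

/-- Passing from the von Mangoldt sum to the number of primes. -/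
lemma sum_vonMangoldt_le_card {q : ℕ} (hq : 2 ≤ q) :
    ∑ n ∈ Ico (q ^ 3) ((q + 1) ^ 3), vonMangoldt n ≤
      6 * log q * (#{n ∈ Ico (q ^ 3) ((q + 1) ^ 3) | n.Prime} + 4 * (q : ℝ) ^ (3 / 2 : ℝ)) := by
  have hQ : (2 : ℝ) ≤ q := by exact_mod_cast hq
  have hQ0 : (0 : ℝ) < q := by linarith
  set A := Ico (q ^ 3) ((q + 1) ^ 3)
  set N : ℝ := ((q : ℝ) + 1) ^ 3 with hN
  have hN1 : 1 ≤ N := one_le_pow₀ (by linarith)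
  have hNf : ⌊N⌋₊ = (q + 1) ^ 3 := by
    rw [show N = (((q + 1) ^ 3 : ℕ) : ℝ) by push_cast; rfl, Nat.floor_natCast]
  have hlogN : log N ≤ 6 * log q := by
    rw [hN, Real.log_pow]
    have : log ((q : ℝ) + 1) ≤ log ((q : ℝ) ^ 2) :=
      Real.log_le_log (by positivity) (by nlinarith)
    rw [Real.log_pow] at this
    push_cast at this ⊢; linarith
  have hlogN0 : 0 ≤ log N := Real.log_nonneg hN1
  have hsq : √N ≤ 2 * (q : ℝ) ^ (3 / 2 : ℝ) := by
    apply Real.sqrt_le_iff.2 ⟨by positivity, ?_⟩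
    have : ((q : ℝ) ^ (3 / 2 : ℝ)) ^ 2 = (q : ℝ) ^ 3 := by
      rw [← rpow_natCast, ← rpow_mul hQ0.le]; norm_num
    rw [mul_pow, this, hN]
    nlinarith [mul_nonneg hQ0.le (by linarith : (0 : ℝ) ≤ q - 2), mul_nonneg (mul_nonneg hQ0.le hQ0.le) (by linarith : (0 : ℝ) ≤ q - 2)]
  have hsub : A ⊆ Ioc 0 ⌊N⌋₊ := by
    intro n hn
    rw [mem_Ico] at hn
    rw [mem_Ioc, hNf]
    exact ⟨lt_of_lt_of_le (by positivity) hn.1, hn.2.le⟩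
  have hpp : ∑ n ∈ A with ¬n.Prime, vonMangoldt n ≤ 2 * √N * log N := by
    refine le_trans ?_ (Chebyshev.psi_sub_theta_le hN1)
    have h1 : Chebyshev.psi N - Chebyshev.theta N =
        ∑ n ∈ Ioc 0 ⌊N⌋₊ with ¬n.Prime, vonMangoldt n := by
      rw [Chebyshev.psi, Chebyshev.theta, ← sum_filter_add_sum_filter_not _ Nat.Prime,
        sum_congr rfl (fun p hp => (vonMangoldt_apply_prime (mem_filter.1 hp).2).symm)]
      ring
    rw [h1]
    exact sum_le_sum_of_subset_of_nonneg (filter_subset_filter _ hsub)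
      fun _ _ _ => vonMangoldt_nonneg
  have hp : ∑ n ∈ A with n.Prime, vonMangoldt n ≤ #{n ∈ A | n.Prime} * log N := by
    rw [← nsmul_eq_mul]
    refine sum_le_card_nsmul _ _ _ fun n hn => ?_
    have hn := (mem_filter.1 hn).1
    have h0 := mem_Ioc.1 (hsub hn)
    refine vonMangoldt_le_log.trans (Real.log_le_log (by exact_mod_cast h0.1) ?_)
    exact (Nat.le_floor_iff (by positivity)).1 h0.2
  rw [← sum_filter_add_sum_filter_not A Nat.Prime]
  calc _ ≤ #{n ∈ A | n.Prime} * log N + 2 * √N * log N := add_le_add hp hpp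
    _ ≤ #{n ∈ A | n.Prime} * (6 * log q) +
        2 * (2 * (q : ℝ) ^ (3 / 2 : ℝ)) * (6 * log q) := by gcongr
    _ = _ := by ring

set_option maxHeartbeats 1000000 in
/-- **Primes between consecutive cubes.** The window parameter `T = q ^ (1 + e)` is slightly larger
than `q`, so that the Gaussian weight is concentrated well inside `[q ^ 3, (q + 1) ^ 3)`. -/
theorem card_primes_ge (δ : ℝ) (hδ : 0 < δ) (hδ1 : δ < 1) : ∃ n₀ : ℕ, ∀ q : ℕ, n₀ ≤ q →
    (q : ℝ) ^ (2 - δ) ≤ #{n ∈ Ico (q ^ 3) ((q + 1) ^ 3) | n.Prime} := by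
  obtain ⟨c, hc, hc8, hasymp⟩ := sum_asymp
  obtain ⟨K, hK, hsum⟩ := exists_sum_ge
  set e : ℝ := c * δ / 6 with he
  have he0 : 0 < e := by positivity
  have hec : e ≤ c / 6 := by rw [he]; nlinarith
  have heδ : e ≤ δ / 48 := by rw [he]; nlinarith
  obtain ⟨u₀, hu₀⟩ := exists_pow_le_exp (54 * K) ⌈9 / e⌉₊
  have hlog : ∀ᶠ y : ℝ in atTop, 768 * log y ≤ y ^ e := by
    filter_upwards [(isLittleO_log_rpow_atTop he0).bound (c := 1 / 768) (by norm_num),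
      eventually_ge_atTop 1] with y hy hy1
    rw [norm_of_nonneg (Real.log_nonneg hy1), norm_of_nonneg (by positivity)] at hy
    linarith
  have hev := (tendsto_rpow_atTop (by positivity : 0 < 1 + e)).eventually hasymp
  have hall := tendsto_natCast_atTop_atTop.eventually (hlog.and (hev.and ((ev_log_ge 16).and
    (((tendsto_rpow_atTop he0).eventually_ge_atTop u₀).and (eventually_ge_atTop 16)))))
  obtain ⟨n₀, hn₀⟩ := eventually_atTop.1 hall
  refine ⟨n₀, fun q hq => ?_⟩
  obtain ⟨hlog, hev, hl16, hu, hq16⟩ := hn₀ q hq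
  have hq2 : 2 ≤ q := by
    have : (2 : ℝ) ≤ q := by linarith
    exact_mod_cast this
  have hcard := sum_vonMangoldt_le_card hq2
  have hsum := hsum q
  set Q : ℝ := (q : ℝ) with hQd
  have hQ0 : 0 < Q := by linarith
  have hQ1 : 1 ≤ Q := by linarith
  set x : ℝ := Q ^ 3 + 3 / 2 * Q ^ 2 with hx
  set T : ℝ := Q ^ (1 + e) with hT
  set u : ℝ := Q ^ e with hud
  have hTu : T = Q * u := by rw [hT, rpow_add hQ0, rpow_one]
  have hu768 : 768 ≤ u := by linarith
  have hQT : Q ≤ T := by rw [hTu]; nlinarith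
  have hT0 : 0 < T := by linarith
  have huQ : u ≤ Q := by
    calc u ≤ Q ^ (1 : ℝ) := rpow_le_rpow_of_exponent_le hQ1 (by linarith)
      _ = Q := rpow_one _
  have hxQ : Q ^ 3 ≤ x := by rw [hx]; nlinarith [sq_nonneg Q]
  have hxQ3 : x ≤ 3 * Q ^ 3 := by rw [hx]; nlinarith [sq_nonneg Q]
  have hx0 : 0 < x := lt_of_lt_of_le (by positivity) hxQ
  have hx1 : T ^ (3 - c) ≤ x := by
    refine le_trans ?_ hxQ
    rw [hT, ← rpow_mul hQ0.le, ← rpow_natCast]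
    exact rpow_le_rpow_of_exponent_le hQ1 (by push_cast; nlinarith)
  have hx2 : x ≤ T ^ 3 := by
    refine hxQ3.trans ?_
    rw [hTu, mul_pow, mul_comm]
    gcongr
    nlinarith [one_le_pow₀ (n := 2) (by linarith : 1 ≤ u)]
  obtain ⟨hs, habs⟩ := hev x hx1 hx2
  have h1 := hsum T (by linarith) hq2 hQT hs
  have h2 := (abs_le.1 habs).1
  have h3 : x / (T * log T) ≤ x / (T * 16) := by
    gcongr
    exact hl16.trans (Real.log_le_log hQ0 hQT)
  have h4 : K * (exp (-(T ^ 2 / (64 * Q ^ 2))) * x ^ 3) ≤ 1 / 2 := by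
    have e1 : u ≤ T ^ 2 / (64 * Q ^ 2) := by
      rw [hTu, le_div_iff₀ (by positivity)]
      nlinarith [mul_nonneg (sq_nonneg Q) (mul_nonneg (by linarith : 0 ≤ u) (by linarith : 0 ≤ u - 64))]
    have e2 : Q ^ 9 ≤ u ^ ⌈9 / e⌉₊ := by
      rw [hud, ← rpow_natCast, ← rpow_natCast, ← rpow_mul hQ0.le]
      apply rpow_le_rpow_of_exponent_le hQ1
      have := Nat.le_ceil (9 / e)
      rw [div_le_iff₀ he0] at this
      push_cast; linarith
    have e3 : 54 * K * Q ^ 9 ≤ exp u :=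
      (mul_le_mul_of_nonneg_left e2 (by positivity)).trans (hu₀ u hu)
    calc K * (exp (-(T ^ 2 / (64 * Q ^ 2))) * x ^ 3)
        ≤ K * (exp (-u) * (3 * Q ^ 3) ^ 3) := by gcongr
      _ = 54 * K * Q ^ 9 * exp (-u) / 2 := by ring
      _ ≤ exp u * exp (-u) / 2 := by gcongr
      _ = 1 / 2 := by rw [← Real.exp_add]; simp
  have h5 : 1 ≤ x / (16 * T) := by
    rw [le_div_iff₀ (by positivity), hTu]
    have := mul_le_mul_of_nonneg_left huQ hQ0.le
    have := mul_le_mul_of_nonneg_left hq16 (sq_nonneg Q)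
    linarith
  have h6 : Q ^ (2 - e) / 8 ≤ x / (8 * T) := by
    have : Q ^ (2 - e) * T = Q ^ 3 := by
      rw [hT, ← rpow_add hQ0, ← rpow_natCast]; congr 1; push_cast; ring
    rw [div_le_div_iff₀ (by norm_num) (by positivity)]
    nlinarith
  have h7 : x / (4 * T) - x / (T * 16) - x / (16 * T) = x / (8 * T) := by field_simp; norm_num
  have h8 : Q ^ (2 - e) / 8 ≤ 6 * log Q *
      (#{n ∈ Ico (q ^ 3) ((q + 1) ^ 3) | n.Prime} + 4 * Q ^ (3 / 2 : ℝ)) := by linarith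
  by_contra! hlt
  have h9 : Q ^ (2 - δ) * u ≤ Q ^ (2 - e) := by
    rw [hud, ← rpow_add hQ0]
    exact rpow_le_rpow_of_exponent_le hQ1 (by linarith)
  have h10 : Q ^ (3 / 2 : ℝ) * u ≤ Q ^ (2 - e) := by
    rw [hud, ← rpow_add hQ0]
    exact rpow_le_rpow_of_exponent_le hQ1 (by linarith)
  have h11 : 0 < Q ^ (2 - e) := by positivity
  have hl0 : 0 ≤ log Q := by linarith
  have : Q ^ (2 - e) / 8 ≤ Q ^ (2 - e) / 16 := by
    calc _ ≤ _ := h8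
      _ ≤ 6 * log Q * (Q ^ (2 - δ) + 4 * Q ^ (3 / 2 : ℝ)) := by gcongr
      _ = 768 * log Q * (Q ^ (2 - δ) + 4 * Q ^ (3 / 2 : ℝ)) / 128 := by ring
      _ ≤ u * (Q ^ (2 - δ) + 4 * Q ^ (3 / 2 : ℝ)) / 128 := by gcongr
      _ ≤ _ := by linarith
  linarith

end VMT

namespace VMT
open Finset

/-! ### The tree of primes -/

/-- The primes in `[q ^ 3, (q + 1) ^ 3)`. -/
def primesIn (q : ℕ) : Finset ℕ := {n ∈ Ico (q ^ 3) ((q + 1) ^ 3) | n.Prime}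

/-- The `i`-th prime (counted from `1`) in `[q ^ 3, (q + 1) ^ 3)`. -/
def nthP (q i : ℕ) : ℕ := ((primesIn q).sort).getD (i - 1) 0

lemma nthP_eq {q i : ℕ} (h1 : 1 ≤ i) (h2 : i ≤ #(primesIn q)) :
    ∃ h : i - 1 < ((primesIn q).sort).length, nthP q i = ((primesIn q).sort)[i - 1] := by
  have h : i - 1 < ((primesIn q).sort).length := by rw [length_sort]; omega
  exact ⟨h, by rw [nthP, List.getD_eq_getElem _ _ h]⟩

lemma nthP_mem {q i : ℕ} (h1 : 1 ≤ i) (h2 : i ≤ #(primesIn q)) : nthP q i ∈ primesIn q := by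
  obtain ⟨h, e⟩ := nthP_eq h1 h2
  rw [e, ← mem_sort (· ≤ ·)]
  exact List.getElem_mem h

lemma nthP_lt {q i i' : ℕ} (h1 : 1 ≤ i) (h : i < i') (h2 : i' ≤ #(primesIn q)) :
    nthP q i < nthP q i' := by
  obtain ⟨_, e⟩ := nthP_eq h1 (h.le.trans h2)
  obtain ⟨_, e'⟩ := nthP_eq (h1.trans h.le) h2
  rw [e, e']
  exact (sortedLT_sort (primesIn q)).getElem_lt_getElem_of_lt (by omega)

/-- The value at an index: the root carries `p`, and each further entry `i` selects the `i`-th prime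
in the window of the parent's value. -/
def aval (p : ℕ) (j : List ℕ) : ℕ := j.tail.foldl nthP p

lemma aval_append {p : ℕ} {j : List ℕ} (hj : j ≠ []) (i : ℕ) :
    aval p (j ++ [i]) = nthP (aval p j) i := by
  rw [aval, List.tail_append_of_ne_nil hj, List.foldl_append]; rfl

/-- The index sets of the tree of iterated choices. -/
def idx (p : ℕ) : ℕ → Finset (List ℕ)
  | 0 => ∅
  | 1 => {[1]}
  | k + 2 => (idx p (k + 1)).biUnion fun j =>
      (Icc 1 #(primesIn (aval p j))).image fun i => j ++ [i]

lemma mem_idx {p k : ℕ} {l : List ℕ} : l ∈ idx p (k + 2) ↔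
    ∃ j ∈ idx p (k + 1), ∃ i, 1 ≤ i ∧ i ≤ #(primesIn (aval p j)) ∧ l = j ++ [i] := by
  simp only [idx, mem_biUnion, mem_image, mem_Icc]
  constructor
  · rintro ⟨j, hj, i, ⟨h1, h2⟩, rfl⟩; exact ⟨j, hj, i, h1, h2, rfl⟩
  · rintro ⟨j, hj, i, h1, h2, rfl⟩; exact ⟨j, hj, i, ⟨h1, h2⟩, rfl⟩

lemma idx_length {p k : ℕ} {j : List ℕ} (hj : j ∈ idx p (k + 1)) : j.length = k + 1 := by
  induction k generalizing j with
  | zero => rw [idx, mem_singleton] at hj; simp [hj]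
  | succ k ih =>
    obtain ⟨j', hj', i, -, -, rfl⟩ := mem_idx.1 hj
    simp [ih hj']

lemma idx_ne_nil {p k : ℕ} {j : List ℕ} (hj : j ∈ idx p (k + 1)) : j ≠ [] := by
  rintro rfl; simpa using idx_length hj

lemma aval_prime {p k : ℕ} (hp : p.Prime) {j : List ℕ} (hj : j ∈ idx p (k + 1)) :
    (aval p j).Prime ∧ p ≤ aval p j := by
  induction k generalizing j with
  | zero => rw [idx, mem_singleton] at hj; subst hj; exact ⟨hp, le_rfl⟩
  | succ k ih =>
    obtain ⟨j', hj', i, h1, h2, rfl⟩ := mem_idx.1 hj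
    rw [aval_append (idx_ne_nil hj')]
    have h := mem_filter.1 (nthP_mem h1 h2)
    refine ⟨h.2, (ih hj').2.trans (le_trans ?_ (mem_Ico.1 h.1).1)⟩
    exact Nat.le_self_pow (by norm_num) _

/-- Distinct indices of one level carry distinct primes, because windows of distinct parents are
disjoint. -/
lemma aval_injOn {p k : ℕ} {j l : List ℕ} (hj : j ∈ idx p (k + 1)) (hl : l ∈ idx p (k + 1))
    (h : aval p j = aval p l) : j = l := by
  induction k generalizing j l with
  | zero => rw [idx, mem_singleton] at hj hl; rw [hj, hl]
  | succ k ih =>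
    obtain ⟨j', hj', i, h1, h2, rfl⟩ := mem_idx.1 hj
    obtain ⟨l', hl', i', h1', h2', rfl⟩ := mem_idx.1 hl
    rw [aval_append (idx_ne_nil hj'), aval_append (idx_ne_nil hl')] at h
    have e : aval p j' = aval p l' := by
      have a1 := mem_Ico.1 (mem_filter.1 (nthP_mem h1 h2)).1
      have a2 := mem_Ico.1 (mem_filter.1 (nthP_mem h1' h2')).1
      rw [h] at a1
      have b1 := lt_of_pow_lt_pow_left₀ 3 (by positivity) (a1.1.trans_lt a2.2)
      have b2 := lt_of_pow_lt_pow_left₀ 3 (by positivity) (a2.1.trans_lt a1.2)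
      omega
    obtain rfl := ih hj' hl' e
    rcases lt_trichotomy i i' with hi | rfl | hi
    · exact absurd h (nthP_lt h1 hi h2').ne
    · rfl
    · exact absurd h (nthP_lt h1' hi h2).ne'

lemma two_le_abs_sub {a b : ℕ} (ha : a.Prime) (hb : b.Prime) (ha3 : 3 ≤ a) (hb3 : 3 ≤ b)
    (h : a ≠ b) : 2 ≤ |(a : ℝ) - b| := by
  have e1 := ha.eq_two_or_odd
  have e2 := hb.eq_two_or_odd
  have : (2 : ℤ) ≤ |(a : ℤ) - b| := by rw [le_abs]; omega
  exact_mod_cast this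

end VMT


open Real Set
/-- **Lemma 3.3.** Tuples in `ℕ^k` are encoded as lists of length `k`; `(j, i)` is `j ++ [i]`,
and the one-entry tuple `(1)` is `[1]`.

There is a constant `d₁ > 0` such that for every `0 < δ < 1` there is `n₀ ∈ ℕ` such that for
every prime `p ≥ n₀` one can construct index sets `I_k ⊆ ℕ^k`, a prime-valued function `a`
with `a((1)) = p`, and `m : ⋃_k I_k → ℕ` satisfying (A1)–(A4). -/
theorem construction_simple_case :
    ∃ d₁ : ℝ, 0 < d₁ ∧ ∀ δ : ℝ, 0 < δ → δ < 1 → ∃ n₀ : ℕ, ∀ p : ℕ, p.Prime → n₀ ≤ p →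
      ∃ (I : ℕ → Finset (List ℕ)) (a m : List ℕ → ℕ),
        -- index sets live in ℕ^k
        (∀ k ≥ 1, ∀ j ∈ I k, j.length = k) ∧
        -- `a` takes prime values
        (∀ k ≥ 1, ∀ j ∈ I k, (a j).Prime) ∧
        -- `a((1)) = p`
        a [1] = p ∧
        -- (A1)
        I 1 = {[1]} ∧
        (∀ k, 2 ≤ k → ∀ l : List ℕ,
          l ∈ I k ↔ ∃ j ∈ I (k - 1), ∃ i : ℕ, 1 ≤ i ∧ i ≤ m j ∧ l = j ++ [i]) ∧
        -- (A2)
        (∀ k, 2 ≤ k → ∀ j ∈ I (k - 1),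
          ((a j : ℝ) ^ (3 : ℝ) ≤ (a (j ++ [1]) : ℝ)) ∧
          (∀ i : ℕ, 1 ≤ i → i < m j → a (j ++ [i]) < a (j ++ [i + 1])) ∧
          ((a (j ++ [m j]) : ℝ) ≤ ((a j : ℝ) + 1) ^ (3 : ℝ) - 1)) ∧
        -- (A3)
        (∀ k, 2 ≤ k → ∀ j ∈ I (k - 1), ∀ j' ∈ I (k - 1), j ≠ j' →
          2 ≤ |(a j : ℝ) - (a j' : ℝ)|) ∧
        -- (A4)
        (∀ k, 2 ≤ k → ∀ j ∈ I (k - 1), d₁ * (a j : ℝ) ^ (2 - δ) ≤ (m j : ℝ)) := by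
  refine ⟨1, one_pos, fun δ hδ hδ1 => ?_⟩
  obtain ⟨n₀, hn₀⟩ := VMT.card_primes_ge δ hδ hδ1
  refine ⟨max n₀ 3, fun p hp hpn => ?_⟩
  have hcard : ∀ k, ∀ j ∈ VMT.idx p (k + 1),
      (VMT.aval p j : ℝ) ^ (2 - δ) ≤ (VMT.primesIn (VMT.aval p j)).card := fun k j hj =>
    hn₀ _ ((le_max_left _ _).trans (hpn.trans (VMT.aval_prime hp hj).2))
  have hpos : ∀ k, ∀ j ∈ VMT.idx p (k + 1), 1 ≤ (VMT.primesIn (VMT.aval p j)).card := by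
    intro k j hj
    have h0 : (0 : ℝ) < VMT.aval p j := by exact_mod_cast (VMT.aval_prime hp hj).1.pos
    exact_mod_cast (Real.rpow_pos_of_pos h0 (2 - δ)).trans_le (hcard k j hj)
  refine ⟨VMT.idx p, VMT.aval p, fun j => (VMT.primesIn (VMT.aval p j)).card,
    ?_, ?_, rfl, rfl, ?_, ?_, ?_, ?_⟩
  · intro k hk j hj
    obtain ⟨k, rfl⟩ := Nat.exists_eq_add_of_le' hk
    exact VMT.idx_length hj
  · intro k hk j hj
    obtain ⟨k, rfl⟩ := Nat.exists_eq_add_of_le' hk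
    exact (VMT.aval_prime hp hj).1
  all_goals
    intro k hk
    obtain ⟨k, rfl⟩ := Nat.exists_eq_add_of_le' hk
    rw [show k + 2 - 1 = k + 1 from rfl]
  · exact fun l => VMT.mem_idx
  · intro j hj
    have hne := VMT.idx_ne_nil hj
    have h1 := hpos k j hj
    refine ⟨?_, fun i hi hi' => ?_, ?_⟩
    · rw [VMT.aval_append hne]
      have := (Finset.mem_Ico.1 (Finset.mem_filter.1 (VMT.nthP_mem le_rfl h1)).1).1
      exact_mod_cast this
    · rw [VMT.aval_append hne, VMT.aval_append hne]
      exact VMT.nthP_lt hi (Nat.lt_succ_self i) hi'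
    · rw [VMT.aval_append hne, le_sub_iff_add_le]
      have := (Finset.mem_Ico.1 (Finset.mem_filter.1 (VMT.nthP_mem h1 le_rfl)).1).2
      exact_mod_cast this
  · intro j hj l hl hjl
    have h3 := (le_max_right n₀ 3).trans hpn
    have hj' := VMT.aval_prime hp hj
    have hl' := VMT.aval_prime hp hl
    exact VMT.two_le_abs_sub hj'.1 hl'.1 (h3.trans hj'.2) (h3.trans hl'.2)
      fun h => hjl (VMT.aval_injOn hj hl h)
  · intro j hj
    rw [one_mul]
    exact hcard k j hj
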